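/- (Mann–Su) Let M be a compact topological manifold (a compact Hausdorff space locally homeomorphic to ℝⁿ for some n) and let p be a prime. Then there exists k = k(M) ∈ ℕ such that for every n > k there is no injective group homomorphism from (ℤ/pℤ)ⁿ into the group of homeomorphisms of M; equivalently, every faithful action of (ℤ/pℤ)ⁿ on M by homeomorphisms forces n ≤ k. -/

import Mathlib

/-!
The proof is by Smith theory. Topology enters through a homology theory that needs no subdivision:
a *chain* is a formal combination of finite lists of points, and one works with sequences of chains
whose mesh tends to zero along a fixed non-principal ultrafilter (`small`), modulo the sequences
that stay away from a filter `𝓕` (`null`). For `𝓕 = ⊤` this is global homology, for `𝓕 = 𝓝 x` local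
homology at `x`. If a finite abelian group `G` acts on `M`, then for a subgroup `L` the lists fixed
pointwise by `L` span a complex `CI L` over the group algebra of `G`, playing the role of the chains
of the fixed set of `L`.

*Facts about the chains.* On a compact manifold the complexes have no homology in high degrees,
even equivariantly (`te_ok`): points can be moved into a discrete set whose small simplices are
coloured by boundedly many colours, and sorting a list by colour is chain homotopic to the identity
but kills long lists. Global homology is finite (`fin_all`, `glob_base`), and local homology at a
point is one-dimensional, with a generator that is also nonzero at all nearby points
(`loc_manifold`).

*Algebra.* For a single element of order `p` one has the Smith inequality (`Sm.vanish`, `Sm.sum_le`,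
applied through `smith`). For several elements the input is `free_acyclic`: a bounded complex which
is free over the group algebra of an elementary abelian group of rank `w` and whose homology has
total length at most `w` is acyclic. For chains with prescribed stabilizers this becomes `ns_free`.

*Groups with a fixed point.* Let `M` be connected of dimension `n` and let `G` fix `x`. By the Smith
inequality and `ns_free`, the fixed chains of every subgroup `L` have one-dimensional local homology
at `x`, in some degree `d(L)`, and `d` is decreasing (`hs_le`). Newman's theorem (`int_empty`) gives
`d(L) < n` for `L` nontrivial. If `J` is maximal in `L` with `d(J) > d(L)`, then `J` has index `p` in
`L`: otherwise some rank two extension of `J` would act freely on a complex whose homology has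
length at most two, forcing `d(J) = d(L)` (`stage1_key`). By induction
`p ^ d(L) * |L| ≤ p ^ n`, so `|G| ≤ p ^ n` (`stage1`).

*The general case.* Let `B` bound the total global homology of the connected manifold `M`, and let
`L` be maximal among the subgroups with a fixed point. If `|G| > p ^ B * p ^ n`, there is a subgroup
of rank `B` independent of `L`; by maximality it acts freely on `CI L`, whose homology has total
length at most `B` by the Smith inequality, so `CI L` is acyclic, contradicting the existence of
a fixed point (`core`). A manifold with finitely many components is handled by splitting off the
permutation of the components (`bound`). Finally `p ^ n ≤ k` is impossible for `n > k`.
-/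

/-- The group of homeomorphisms of a topological space, under composition
(`f * g` is `f ∘ g`). -/
instance homeomorphGroup (M : Type*) [TopologicalSpace M] : Group (M ≃ₜ M) where
  mul f g := g.trans f
  one := Homeomorph.refl M
  inv := Homeomorph.symm
  mul_assoc _ _ _ := Homeomorph.ext fun _ => rfl
  one_mul _ := Homeomorph.ext fun _ => rfl
  mul_one _ := Homeomorph.ext fun _ => rfl
  inv_mul_cancel f := f.self_trans_symm

/-! ### Chain complexes and the length of homology -/

namespace MannSu
universe u v

/-- A (non-negatively indexed) chain complex of `R`-modules. -/
structure Cx (R : Type v) [CommRing R] where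
  X : ℕ → Type u
  [ac : ∀ k, AddCommGroup (X k)]
  [md : ∀ k, Module R (X k)]
  d : ∀ k, X (k + 1) →ₗ[R] X k
  dd : ∀ k x, d k (d (k + 1) x) = 0

attribute [instance] Cx.ac Cx.md

variable {R : Type v} [CommRing R]

/-- A chain map. -/
structure Cx.Hom (A B : Cx.{u} R) where
  f : ∀ k, A.X k →ₗ[R] B.X k
  comm : ∀ k x, f k (A.d k x) = B.d k (f (k + 1) x)

/-- Boundaries inside the cycles of `X (k + 1)`. -/
def Cx.B (C : Cx.{u} R) (k : ℕ) : Submodule R (LinearMap.ker (C.d k)) :=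
  (LinearMap.range (C.d (k + 1))).comap (LinearMap.ker (C.d k)).subtype

/-- Homology in degree `k`; it is the homology at the spot `X (k + 1)`. -/
abbrev Cx.H (C : Cx.{u} R) (k : ℕ) : Type u := LinearMap.ker (C.d k) ⧸ C.B k

/-- Length of the homology in degree `k`. -/
noncomputable def Cx.h (C : Cx.{u} R) (k : ℕ) : ℕ∞ := Module.length R (C.H k)

lemma Cx.mem_B (C : Cx.{u} R) (k : ℕ) (z : LinearMap.ker (C.d k)) :
    z ∈ C.B k ↔ ∃ y, C.d (k + 1) y = z.1 := Iff.rfl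

lemma Cx.h_eq_zero_iff (C : Cx.{u} R) (k : ℕ) :
    C.h k = 0 ↔ ∀ z, C.d k z = 0 → ∃ y, C.d (k + 1) y = z := by
  rw [Cx.h, Module.length_eq_zero_iff, Submodule.Quotient.subsingleton_iff, eq_top_iff]
  constructor
  · intro h z hz
    exact (C.mem_B k ⟨z, hz⟩).1 (h (Submodule.mem_top))
  · rintro h ⟨z, hz⟩ -
    exact h z hz

/-- The length estimate behind all inequalities extracted from long exact sequences. -/
lemma len_rel {P Q V W W' : Type*} [AddCommGroup P] [Module R P] [AddCommGroup Q] [Module R Q]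
    [AddCommGroup V] [Module R V] [AddCommGroup W] [Module R W] [AddCommGroup W'] [Module R W']
    (f : P →ₗ[R] V) (g : P →ₗ[R] W) (f' : Q →ₗ[R] V) (g' : Q →ₗ[R] W')
    (hf : Function.Surjective f) (hk : ∀ y, g' y = 0 → f' y = 0)
    (hx : ∀ x, g x = 0 → ∃ y, f' y = f x) :
    Module.length R V ≤ Module.length R W + Module.length R W' := by
  -- `V` is an extension of `V ⧸ range f'` by `range f'`
  have e := Module.length_eq_add_of_exact (R := R) (LinearMap.range f').subtype
    (LinearMap.range f').mkQ (Submodule.subtype_injective _) (Submodule.mkQ_surjective _)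
    (LinearMap.exact_subtype_mkQ _)
  rw [e, add_comm]
  have h1 : Module.length R (LinearMap.range f') ≤ Module.length R W' := by
    have hle : LinearMap.ker g' ≤ LinearMap.ker f' := fun y hy => hk y hy
    let s : LinearMap.range g' →ₗ[R] V :=
      ((LinearMap.ker g').liftQ f' hle) ∘ₗ (g'.quotKerEquivRange.symm : _ →ₗ[R] _)
    have hs : LinearMap.range f' ≤ LinearMap.range s := by
      rintro _ ⟨y, rfl⟩
      refine ⟨⟨g' y, y, rfl⟩, ?_⟩
      have : (g'.quotKerEquivRange.symm ⟨g' y, y, rfl⟩) = (LinearMap.ker g').mkQ y := by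
        rw [LinearEquiv.symm_apply_eq]; rfl
      simp [s, this]
    calc _ ≤ Module.length R (LinearMap.range s) :=
          Module.length_le_of_injective (Submodule.inclusion hs) (Submodule.inclusion_injective hs)
      _ ≤ Module.length R (LinearMap.range g') :=
          Module.length_le_of_surjective s.rangeRestrict s.surjective_rangeRestrict
      _ ≤ _ := Module.length_le_of_injective _ (Submodule.subtype_injective _)
  have h2 : Module.length R (V ⧸ LinearMap.range f') ≤ Module.length R W := by
    let q := (LinearMap.range f').mkQ ∘ₗ f
    have hle : LinearMap.ker g ≤ LinearMap.ker q := by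
      intro x hxx
      obtain ⟨y, hy⟩ := hx x hxx
      simp only [q, LinearMap.mem_ker, LinearMap.comp_apply, ← hy, Submodule.mkQ_apply,
        Submodule.Quotient.mk_eq_zero]
      exact ⟨y, rfl⟩
    let s : LinearMap.range g →ₗ[R] (V ⧸ LinearMap.range f') :=
      ((LinearMap.ker g).liftQ q hle) ∘ₗ (g.quotKerEquivRange.symm : _ →ₗ[R] _)
    have hs : Function.Surjective s := by
      intro v
      obtain ⟨w, rfl⟩ := Submodule.mkQ_surjective _ v
      obtain ⟨x, rfl⟩ := hf w
      refine ⟨⟨g x, x, rfl⟩, ?_⟩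
      have : (g.quotKerEquivRange.symm ⟨g x, x, rfl⟩) = (LinearMap.ker g).mkQ x := by
        rw [LinearEquiv.symm_apply_eq]; rfl
      simp [s, q, this]
    calc _ ≤ Module.length R (LinearMap.range g) := Module.length_le_of_surjective s hs
      _ ≤ _ := Module.length_le_of_injective _ (Submodule.subtype_injective _)
  exact add_le_add h2 h1

/-- The class of a cycle. -/
noncomputable def Cx.cls (C : Cx.{u} R) (k : ℕ) : LinearMap.ker (C.d k) →ₗ[R] C.H k := (C.B k).mkQ

lemma Cx.cls_eq_zero (C : Cx.{u} R) (k : ℕ) (z : LinearMap.ker (C.d k)) :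
    C.cls k z = 0 ↔ ∃ y, C.d (k + 1) y = z.1 := by
  rw [Cx.cls, Submodule.mkQ_apply, Submodule.Quotient.mk_eq_zero, C.mem_B]

lemma Cx.cls_surj (C : Cx.{u} R) (k : ℕ) : Function.Surjective (C.cls k) :=
  Submodule.mkQ_surjective _

/-- A short exact sequence of complexes. -/
structure Cx.SES {A B C : Cx.{u} R} (f : A.Hom B) (g : B.Hom C) : Prop where
  inj : ∀ k x, f.f k x = 0 → x = 0
  surj : ∀ k y, ∃ x, g.f k x = y
  zero : ∀ k x, g.f k (f.f k x) = 0
  exact : ∀ k x, g.f k x = 0 → ∃ y, f.f k y = x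

/-- Cycles map to cycles. -/
def Cx.Hom.mapZ {A B : Cx.{u} R} (f : A.Hom B) (k : ℕ) :
    LinearMap.ker (A.d k) →ₗ[R] LinearMap.ker (B.d k) :=
  ((f.f (k + 1)) ∘ₗ (LinearMap.ker (A.d k)).subtype).codRestrict _ (by
    rintro ⟨x, hx⟩
    rw [LinearMap.mem_ker] at hx
    simp [← f.comm, hx])

lemma Cx.Hom.mapZ_coe {A B : Cx.{u} R} (f : A.Hom B) (k : ℕ) (z) :
    (f.mapZ k z).1 = f.f (k + 1) z.1 := rfl

lemma Cx.SES.h_mid {A B C : Cx.{u} R} {f : A.Hom B} {g : B.Hom C} (S : Cx.SES f g) (k : ℕ) :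
    B.h k ≤ A.h k + C.h k := by
  rw [add_comm]
  refine len_rel (B.cls k) (C.cls k ∘ₗ g.mapZ k) (B.cls k ∘ₗ f.mapZ k) (A.cls k) (B.cls_surj k) ?_ ?_
  · intro y hy
    obtain ⟨w, hw⟩ := (A.cls_eq_zero k y).1 hy
    refine (B.cls_eq_zero k _).2 ⟨f.f _ w, ?_⟩
    rw [← f.comm, hw, f.mapZ_coe]
  · intro x hx
    obtain ⟨w, hw⟩ := (C.cls_eq_zero k _).1 hx
    obtain ⟨w, rfl⟩ := S.surj _ w
    rw [g.mapZ_coe, ← g.comm] at hw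
    obtain ⟨y, hy⟩ := S.exact (k + 1) (x.1 - B.d _ w) (by rw [map_sub, hw, sub_self])
    have hyz : A.d k y = 0 := by
      apply S.inj
      rw [f.comm, hy, map_sub, B.dd, sub_zero]; exact x.2
    refine ⟨⟨y, hyz⟩, ?_⟩
    rw [← sub_eq_zero, LinearMap.comp_apply, ← map_sub, B.cls_eq_zero]
    refine ⟨-w, ?_⟩
    simp [f.mapZ_coe, hy]

lemma Cx.SES.h_left {A B C : Cx.{u} R} {f : A.Hom B} {g : B.Hom C} (S : Cx.SES f g) (k : ℕ) :
    A.h k ≤ B.h k + C.h (k + 1) := by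
  -- pairs `(a, b)` with `f a = ∂ b`
  let Q : Submodule R (LinearMap.ker (A.d k) × B.X (k + 2)) :=
    LinearMap.eqLocus ((f.f (k + 1)) ∘ₗ (LinearMap.ker (A.d k)).subtype ∘ₗ LinearMap.fst R _ _)
      (B.d (k + 1) ∘ₗ LinearMap.snd R _ _)
  have hQ : ∀ q : Q, f.f (k + 1) q.1.1.1 = B.d (k + 1) q.1.2 := fun q => q.2
  let g' : Q →ₗ[R] LinearMap.ker (C.d (k + 1)) :=
    ((g.f (k + 2)) ∘ₗ LinearMap.snd R _ _ ∘ₗ Q.subtype).codRestrict _ (by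
      intro q
      simp only [LinearMap.mem_ker, LinearMap.comp_apply, Submodule.subtype_apply, LinearMap.snd_apply]
      rw [← g.comm, ← hQ, S.zero])
  refine len_rel (A.cls k) (B.cls k ∘ₗ f.mapZ k) (A.cls k ∘ₗ LinearMap.fst R _ _ ∘ₗ Q.subtype)
    (C.cls (k + 1) ∘ₗ g') (A.cls_surj k) ?_ ?_
  · intro q hq
    obtain ⟨w, hw⟩ := (C.cls_eq_zero _ _).1 hq
    obtain ⟨w, rfl⟩ := S.surj _ w
    have hw : g.f (k + 2) (B.d _ w) = g.f (k + 2) q.1.2 := by rw [g.comm]; exact hw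
    obtain ⟨y, hy⟩ := S.exact (k + 2) (q.1.2 - B.d _ w) (by rw [map_sub, hw, sub_self])
    refine (A.cls_eq_zero _ _).2 ⟨y, ?_⟩
    rw [← sub_eq_zero]
    apply S.inj
    rw [map_sub, f.comm, hy, map_sub, B.dd, sub_zero, sub_eq_zero]
    exact (hQ q).symm
  · intro x hx
    obtain ⟨w, hw⟩ := (B.cls_eq_zero _ _).1 hx
    exact ⟨⟨(x, w), hw.symm⟩, rfl⟩

lemma Cx.SES.h_right {A B C : Cx.{u} R} {f : A.Hom B} {g : B.Hom C} (S : Cx.SES f g) (k : ℕ) :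
    C.h (k + 1) ≤ B.h (k + 1) + A.h k := by
  rw [add_comm (B.h (k + 1))]
  -- triples `b ∈ B`, `a ∈ A` with `∂ b = f a`
  let Q : Submodule R (LinearMap.ker (A.d k) × B.X (k + 2)) :=
    LinearMap.eqLocus ((f.f (k + 1)) ∘ₗ (LinearMap.ker (A.d k)).subtype ∘ₗ LinearMap.fst R _ _)
      (B.d (k + 1) ∘ₗ LinearMap.snd R _ _)
  have hQ : ∀ q : Q, f.f (k + 1) q.1.1.1 = B.d (k + 1) q.1.2 := fun q => q.2
  let g' : Q →ₗ[R] LinearMap.ker (C.d (k + 1)) :=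
    ((g.f (k + 2)) ∘ₗ LinearMap.snd R _ _ ∘ₗ Q.subtype).codRestrict _ (by
      intro q
      simp only [LinearMap.mem_ker, LinearMap.comp_apply, Submodule.subtype_apply, LinearMap.snd_apply]
      rw [← g.comm, ← hQ, S.zero])
  refine len_rel (C.cls (k + 1) ∘ₗ g') (A.cls k ∘ₗ LinearMap.fst R _ _ ∘ₗ Q.subtype)
    (C.cls (k + 1) ∘ₗ g.mapZ (k + 1)) (B.cls (k + 1)) ?_ ?_ ?_
  · intro c
    obtain ⟨c, rfl⟩ := C.cls_surj _ c
    obtain ⟨b, hb⟩ := S.surj _ c.1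
    obtain ⟨a, ha⟩ := S.exact _ (B.d _ b) (by rw [g.comm, hb]; exact c.2)
    have haz : A.d k a = 0 := by
      apply S.inj; rw [f.comm, ha, B.dd]
    refine ⟨⟨(⟨a, haz⟩, b), ha⟩, ?_⟩
    rw [LinearMap.comp_apply]; congr 1; exact Subtype.ext hb
  · intro y hy
    obtain ⟨w, hw⟩ := (B.cls_eq_zero _ y).1 hy
    refine (C.cls_eq_zero _ _).2 ⟨g.f _ w, ?_⟩
    rw [← g.comm, hw, g.mapZ_coe]
  · intro q hq
    obtain ⟨w, hw⟩ := (A.cls_eq_zero _ _).1 hq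
    have hw : A.d _ w = q.1.1.1 := hw
    refine ⟨⟨q.1.2 - f.f _ w, ?_⟩, ?_⟩
    · rw [LinearMap.mem_ker, map_sub, ← hQ, ← f.comm, hw, sub_self]
    · rw [LinearMap.comp_apply, LinearMap.comp_apply]
      congr 1
      apply Subtype.ext
      rw [g.mapZ_coe]
      simp [g', S.zero]

/-- Product of complexes. -/
def Cx.prod (A B : Cx.{u} R) : Cx.{u} R where
  X k := A.X k × B.X k
  d k := (A.d k).prodMap (B.d k)
  dd k x := by simp [A.dd, B.dd]

lemma Cx.h_prod (A B : Cx.{u} R) (k : ℕ) : A.h k + B.h k ≤ (A.prod B).h k := by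
  unfold Cx.h
  rw [← Module.length_prod]
  let e : LinearMap.ker ((A.prod B).d k) →ₗ[R] A.H k × B.H k :=
    LinearMap.prod (A.cls k ∘ₗ ((LinearMap.fst R _ _) ∘ₗ
      (LinearMap.ker ((A.prod B).d k)).subtype).codRestrict _ (by
        rintro ⟨x, hx⟩; exact (Prod.ext_iff.1 hx).1))
     (B.cls k ∘ₗ ((LinearMap.snd R _ _) ∘ₗ
      (LinearMap.ker ((A.prod B).d k)).subtype).codRestrict _ (by
        rintro ⟨x, hx⟩; exact (Prod.ext_iff.1 hx).2))
  have he : Function.Surjective e := by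
    rintro ⟨a, b⟩
    obtain ⟨a, rfl⟩ := A.cls_surj k a
    obtain ⟨b, rfl⟩ := B.cls_surj k b
    refine ⟨⟨(a.1, b.1), ?_⟩, rfl⟩
    exact Prod.ext a.2 b.2
  have hk : (A.prod B).B k ≤ LinearMap.ker e := by
    rintro ⟨z, hz⟩ ⟨y, hy⟩
    refine Prod.ext ((A.cls_eq_zero _ _).2 ⟨y.1, (Prod.ext_iff.1 hy).1⟩)
      ((B.cls_eq_zero _ _).2 ⟨y.2, (Prod.ext_iff.1 hy).2⟩)
  refine Module.length_le_of_surjective (((A.prod B).B k).liftQ e hk) ?_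
  intro v
  obtain ⟨x, rfl⟩ := he v
  exact ⟨Submodule.Quotient.mk x, by simp⟩

/-- A subcomplex given by submodules. -/
def Cx.sub (C : Cx.{u} R) (S : ∀ k, Submodule R (C.X k))
    (hS : ∀ k x, x ∈ S (k + 1) → C.d k x ∈ S k) : Cx.{u} R where
  X k := S k
  d k := (C.d k).restrict (hS k)
  dd k x := Subtype.ext (C.dd k x.1)

lemma Cx.h_le_of_iso {A B : Cx.{u} R} (f : A.Hom B) (inj : ∀ k x, f.f k x = 0 → x = 0)
    (surj : ∀ k y, ∃ x, f.f k x = y) (k : ℕ) : A.h k ≤ B.h k ∧ B.h k ≤ A.h k := by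
  let O : Cx.{u} R := { X := fun _ => PUnit, d := fun _ => 0, dd := fun _ _ => rfl }
  have hO : ∀ k, O.h k = 0 := fun k => (O.h_eq_zero_iff k).2 fun z _ => ⟨0, rfl⟩
  let g : B.Hom O := { f := fun _ => 0, comm := fun _ _ => rfl }
  have S : Cx.SES f g := ⟨inj, fun _ _ => ⟨0, rfl⟩, fun _ _ => rfl, fun k x _ => surj k x⟩
  refine ⟨?_, ?_⟩
  · simpa [hO] using S.h_left k
  · simpa [hO] using S.h_mid k

end MannSu

/-! ### Smith theory -/

namespace MannSu
universe u v
variable {R : Type v} [CommRing R]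

/-- Smith data: a subcomplex `T` of `C` killed by `a` and `b`, where `a * b = 0` and modulo `T`
the kernel of `a` is the image of `b` and conversely. -/
structure Sm (C : Cx.{u} R) (T : ∀ k, Submodule R (C.X k)) (a b : R) : Prop where
  dT : ∀ k x, x ∈ T (k + 1) → C.d k x ∈ T k
  ab : a * b = 0
  aT : ∀ k, ∀ x ∈ T k, a • x = 0
  bT : ∀ k, ∀ x ∈ T k, b • x = 0
  fa : ∀ k (x : C.X k), a • x ∈ T k → ∃ y, x - b • y ∈ T k
  fb : ∀ k (x : C.X k), b • x ∈ T k → ∃ y, x - a • y ∈ T k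

lemma Sm.symm {C : Cx.{u} R} {T : ∀ k, Submodule R (C.X k)} {a b : R} (S : Sm C T a b) :
    Sm C T b a := ⟨S.dT, by rw [mul_comm, S.ab], S.bT, S.aT, S.fb, S.fa⟩

/-- The subcomplex `a C`. -/
def imCx (C : Cx.{u} R) (a : R) : Cx.{u} R :=
  C.sub (fun k => LinearMap.range (LinearMap.lsmul R (C.X k) a)) (by
    rintro k _ ⟨y, rfl⟩
    exact ⟨C.d k y, by simp⟩)

section
variable {C : Cx.{u} R} {T : ∀ k, Submodule R (C.X k)} {a b : R}

lemma Sm.disj (S : Sm C T a b) {k : ℕ} {u : C.X k} (h : a • u ∈ T k) : a • u = 0 := by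
  obtain ⟨y, hy⟩ := S.fa k u h
  have := S.aT k _ hy
  rwa [smul_sub, smul_smul, S.ab, zero_smul, sub_zero] at this

lemma Sm.ba (S : Sm C T a b) : b * a = 0 := S.symm.ab

/-- `ker b = a C ⊕ T`. -/
lemma Sm.kerb (S : Sm C T a b) {k : ℕ} {x : C.X k} (h : b • x = 0) :
    ∃ y, ∃ t ∈ T k, x = a • y + t := by
  obtain ⟨y, hy⟩ := S.fb k x (by rw [h]; exact zero_mem _)
  exact ⟨y, _, hy, by abel⟩

/-- In a sum `a u + t` with `t ∈ T` both parts vanish if the sum does. -/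
lemma Sm.split (S : Sm C T a b) {k : ℕ} {u t : C.X k} (ht : t ∈ T k) (h : a • u + t = 0) :
    a • u = 0 ∧ t = 0 := by
  have : a • u = 0 := S.disj (by rw [eq_neg_of_add_eq_zero_left h]; exact neg_mem ht)
  exact ⟨this, by rwa [this, zero_add] at h⟩

lemma Sm.ineq (S : Sm C T a b) (k : ℕ) :
    (imCx C a).h k + (C.sub T S.dT).h k ≤ C.h k + (imCx C b).h (k + 1) := by
  let f : ((imCx C a).prod (C.sub T S.dT)).Hom C :=
    { f := fun k => LinearMap.coprod (Submodule.subtype _) (Submodule.subtype _)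
      comm := fun k x => by
        obtain ⟨⟨x, hx⟩, ⟨y, hy⟩⟩ := x
        exact (map_add (C.d k) x y).symm }
  let g : C.Hom (imCx C b) :=
    { f := fun k => (LinearMap.lsmul R (C.X k) b).rangeRestrict
      comm := fun k x => Subtype.ext (by
        change b • C.d k x = C.d k (b • x); simp) }
  have E : Cx.SES f g := by
    refine ⟨?_, ?_, ?_, ?_⟩
    · rintro k ⟨⟨_, u, rfl⟩, ⟨t, ht⟩⟩ h
      have := S.split ht h
      exact Prod.ext (Subtype.ext this.1) (Subtype.ext this.2)
    · rintro k ⟨_, u, rfl⟩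
      exact ⟨u, rfl⟩
    · rintro k ⟨⟨_, u, rfl⟩, ⟨t, ht⟩⟩
      apply Subtype.ext
      change b • (a • u + t) = 0
      rw [smul_add, S.bT k t ht, smul_smul, S.ba, zero_smul, add_zero]
    · intro k x hx
      obtain ⟨y, t, ht, rfl⟩ := S.kerb (congrArg Subtype.val hx)
      exact ⟨(⟨_, y, rfl⟩, ⟨t, ht⟩), rfl⟩
  exact (Cx.h_prod _ _ k).trans (E.h_left k)

/-- Smith theory: vanishing above `m` passes to the fixed subcomplex. -/
lemma Sm.vanish (S : Sm C T a b) {K m : ℕ} (hK : ∀ k ≥ K, (imCx C a).h k = 0)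
    (hm : ∀ k ≥ m, C.h k = 0) :
    ∀ k ≥ m, (imCx C a).h k = 0 ∧ (imCx C b).h k = 0 ∧ (C.sub T S.dT).h k = 0 := by
  have key : ∀ j k, K ≤ k + j → m ≤ k → (imCx C a).h k = 0 ∧ (imCx C b).h k = 0 := by
    intro j
    induction j using Nat.strong_induction_on with
    | _ j ih =>
      intro k hk hmk
      by_cases hKk : K ≤ k
      · refine ⟨hK k hKk, ?_⟩
        have := S.symm.ineq k
        rw [hm k hmk, hK (k + 1) (by omega)] at this
        simp at this; exact this.1
      · obtain ⟨j, rfl⟩ : ∃ i, j = i + 1 := ⟨j - 1, by omega⟩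
        have hh := ih j (by omega) (k + 1) (by omega) (by omega)
        have h1 := S.symm.ineq k
        have h2 := S.ineq k
        rw [hm k hmk, hh.1] at h1
        rw [hm k hmk, hh.2] at h2
        simp at h1 h2
        exact ⟨h2.1, h1.1⟩
  intro k hk
  refine ⟨(key K k (by omega) hk).1, (key K k (by omega) hk).2, ?_⟩
  have h2 := S.ineq k
  rw [hm k hk, (key K (k + 1) (by omega) (by omega)).2] at h2
  simp at h2
  exact h2.2

/-- The Smith inequality. -/
lemma Sm.sum_le (S : Sm C T a b) {N : ℕ} (ha : (imCx C a).h N = 0) (hb : (imCx C b).h N = 0) :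
    ∑ k ∈ Finset.range N, (C.sub T S.dT).h k ≤ ∑ k ∈ Finset.range N, C.h k := by
  have key : ∀ j k, k + j = N →
      ∑ i ∈ Finset.Ico k N, (C.sub T S.dT).h i + (imCx C a).h k ≤ ∑ i ∈ Finset.Ico k N, C.h i ∧
      ∑ i ∈ Finset.Ico k N, (C.sub T S.dT).h i + (imCx C b).h k ≤ ∑ i ∈ Finset.Ico k N, C.h i := by
    intro j
    induction j with
    | zero => intro k hk; obtain rfl : k = N := by omega
              simp [ha, hb]
    | succ j ih =>
      intro k hk
      obtain ⟨i1, i2⟩ := ih (k + 1) (by omega)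
      have hkN : k < N := by omega
      rw [Finset.sum_eq_sum_Ico_succ_bot hkN C.h, Finset.sum_eq_sum_Ico_succ_bot hkN (C.sub T S.dT).h]
      have h1 := S.ineq k
      have h2 := S.symm.ineq k
      set t := (C.sub T S.dT).h k
      set q := ∑ i ∈ Finset.Ico (k + 1) N, (C.sub T S.dT).h i
      constructor
      · calc t + q + (imCx C a).h k = q + ((imCx C a).h k + t) := by ring
          _ ≤ q + (C.h k + (imCx C b).h (k + 1)) := by gcongr
          _ = C.h k + (q + (imCx C b).h (k + 1)) := by ring
          _ ≤ _ := by gcongr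
      · calc t + q + (imCx C b).h k = q + ((imCx C b).h k + t) := by ring
          _ ≤ q + (C.h k + (imCx C a).h (k + 1)) := by gcongr
          _ = C.h k + (q + (imCx C a).h (k + 1)) := by ring
          _ ≤ _ := by gcongr
  have := (key N 0 (by omega)).1
  rw [Finset.range_eq_Ico]
  exact le_self_add.trans this

lemma Cx.sub_h_zero {C : Cx.{u} R} {S : ∀ k, Submodule R (C.X k)} {hS} {k : ℕ}
    (h : (C.sub S hS).h k = 0) {z : C.X (k + 1)} (hz : z ∈ S (k + 1)) (dz : C.d k z = 0) :
    ∃ y ∈ S (k + 2), C.d (k + 1) y = z := by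
  obtain ⟨y, hy⟩ := ((C.sub S hS).h_eq_zero_iff k).1 h ⟨z, hz⟩ (Subtype.ext dz)
  exact ⟨y.1, y.2, congrArg Subtype.val hy⟩

lemma Cx.sub_h_zero' {C : Cx.{u} R} {S : ∀ k, Submodule R (C.X k)} {hS} {k : ℕ}
    (h : ∀ z ∈ S (k + 1), C.d k z = 0 → ∃ y ∈ S (k + 2), C.d (k + 1) y = z) :
    (C.sub S hS).h k = 0 := by
  refine ((C.sub S hS).h_eq_zero_iff k).2 fun z hz => ?_
  obtain ⟨y, hy, e⟩ := h z.1 z.2 (congrArg Subtype.val hz)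
  exact ⟨⟨y, hy⟩, Subtype.ext e⟩

/-- Injectivity of `H_m(a C) ⊕ H_m(T) → H_m(C)` in the top degree. -/
lemma Sm.inj (S : Sm C T a b) {m : ℕ} (hb : (imCx C b).h (m + 1) = 0)
    {u t : C.X (m + 1)} (ht : t ∈ T (m + 1)) {x : C.X (m + 2)} (h : a • u + t = C.d (m + 1) x) :
    ∃ v, ∃ t' ∈ T (m + 2), a • u = C.d (m + 1) (a • v) ∧ t = C.d (m + 1) t' := by
  have h1 : C.d (m + 1) (b • x) = 0 := by
    rw [map_smul, ← h, smul_add, smul_smul, S.ba, zero_smul, S.bT _ t ht, add_zero]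
  obtain ⟨_, ⟨v, rfl⟩, hv⟩ := Cx.sub_h_zero hb (z := b • x) ⟨x, rfl⟩ h1
  have hv : C.d (m + 2) (b • v) = b • x := hv
  obtain ⟨y, t', ht', e⟩ := S.kerb (x := x - C.d (m + 2) v) (by
    rw [smul_sub, ← hv, map_smul, sub_self])
  have e2 : C.d (m + 1) x = a • C.d (m + 1) y + C.d (m + 1) t' := by
    have := congrArg (C.d (m + 1)) e
    rwa [map_sub, C.dd, sub_zero, map_add, map_smul] at this
  have := S.split (u := u - C.d (m + 1) y) (t := t - C.d (m + 1) t')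
    (sub_mem ht (S.dT _ _ ht')) (by
      rw [smul_sub, sub_add_sub_comm, h, e2, sub_self])
  refine ⟨y, t', ht', ?_, sub_eq_zero.1 this.2⟩
  rw [map_smul, ← sub_eq_zero, ← smul_sub]; exact this.1

/-- Transfer in the top degree: a class fixed in homology is a norm if `H_m(T) = 0`. -/
lemma Sm.newman (S : Sm C T a b) {m : ℕ} (ha : (imCx C a).h (m + 1) = 0)
    (hT : (C.sub T S.dT).h m = 0) {z : C.X (m + 1)} (dz : C.d m z = 0) {x : C.X (m + 2)}
    (hz : b • z = C.d (m + 1) x) :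
    ∃ y w, z = a • y + C.d (m + 1) w ∧ C.d m (a • y) = 0 := by
  obtain ⟨v, -, -, hv, -⟩ := S.symm.inj ha (u := z) (zero_mem (T (m + 1))) (x := x) (by rw [hz, add_zero])
  obtain ⟨y, t, ht, e⟩ := S.kerb (x := z - C.d (m + 1) v) (by
    rw [smul_sub, hv, map_smul, sub_self])
  have e2 := congrArg (C.d m) e
  rw [map_sub, dz, C.dd, sub_zero, map_add, map_smul] at e2
  have h2 := S.split (S.dT _ _ ht) e2.symm
  obtain ⟨t', -, rfl⟩ := Cx.sub_h_zero hT ht h2.2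
  refine ⟨y, v + t', ?_, by rw [map_smul]; exact h2.1⟩
  rw [map_add, sub_eq_iff_eq_add.1 e]; abel

/-- Eventual vanishing of the homology of `a C` from eventual relative vanishing of the
`b`-invariant homology. -/
lemma Sm.te (S : Sm C T a b) {k : ℕ}
    (h : ∀ c : C.X (k + 1), b • c = 0 → C.d k c = 0 →
      ∃ w, b • w = 0 ∧ C.d (k + 1) w - c ∈ T (k + 1)) : (imCx C a).h k = 0 := by
  refine Cx.sub_h_zero' ?_
  rintro _ ⟨u, rfl⟩ hz
  obtain ⟨w, hw, hd⟩ := h (a • u) (by rw [smul_smul, S.ba, zero_smul]) hz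
  obtain ⟨y, t, ht, rfl⟩ := S.kerb hw
  refine ⟨a • y, ⟨y, rfl⟩, ?_⟩
  have e : a • (C.d (k + 1) y - u) ∈ T (k + 1) := by
    have := sub_mem hd (S.dT _ _ ht)
    rwa [map_add, add_sub_right_comm, add_sub_cancel_right, map_smul, ← smul_sub] at this
  have := S.disj e
  rw [smul_sub, sub_eq_zero, ← map_smul] at this
  exact this

end
end MannSu

/-! ### Differential modules, invariants and ghost maps -/

namespace MannSu
universe u v
variable {R : Type v} [CommRing R]

/-- A differential module. -/
structure DM (R : Type v) [CommRing R] where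
  X : Type u
  [ac : AddCommGroup X]
  [md : Module R X]
  d : X →ₗ[R] X
  dd : ∀ x, d (d x) = 0

attribute [instance] DM.ac DM.md

/-- A morphism of differential modules. -/
structure DM.Hom (A B : DM.{u} R) where
  f : A.X →ₗ[R] B.X
  comm : ∀ x, f (A.d x) = B.d (f x)

/-- Elements of `R` of exponent `p`. -/
abbrev El (R : Type v) [CommRing R] (p : ℕ) := {s : R // s ^ p = 1}

variable {p : ℕ}

/-- `τ = s - 1`. -/
def ta (s : El R p) : R := s.1 - 1

/-- The norm `1 + s + ... + s ^ (p - 1)`. -/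
def nm (s : El R p) : R := ∑ j ∈ Finset.range p, s.1 ^ j

lemma ta_mul_nm (s : El R p) : ta s * nm s = 0 := by
  rw [ta, nm, mul_geom_sum, s.2, sub_self]

lemma nm_mul_ta (s : El R p) : nm s * ta s = 0 := by rw [mul_comm, ta_mul_nm]

/-- The differentials of the periodic resolution. -/
def th (s : El R p) (i : ℕ) : R := if Even i then nm s else ta s

lemma th_mul (s : El R p) (i : ℕ) : th s i * th s (i + 1) = 0 := by
  unfold th
  by_cases h : Even i
  · rw [if_pos h, if_neg (by rw [Nat.even_add_one]; exact not_not.2 h), nm_mul_ta]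
  · rw [if_neg h, if_pos (by rw [Nat.even_add_one]; exact h), ta_mul_nm]

/-- Eventually zero sequences. -/
def evz (X : Type u) [AddCommGroup X] [Module R X] : Submodule R (ℕ → X) where
  carrier := {x | ∃ m, ∀ i ≥ m, x i = 0}
  add_mem' := by
    rintro x y ⟨m, hm⟩ ⟨n, hn⟩
    exact ⟨max m n, fun i hi => by
      simp [hm i (le_trans (le_max_left _ _) hi), hn i (le_trans (le_max_right _ _) hi)]⟩
  zero_mem' := ⟨0, fun _ _ => rfl⟩
  smul_mem' := by
    rintro c x ⟨m, hm⟩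
    exact ⟨m, fun i hi => by simp [hm i hi]⟩

/-- The homotopy orbits of `C` under the cyclic group generated by `s`: the total complex of
the tensor product of `C` with the periodic resolution. -/
def Phi (s : El R p) (C : DM.{u} R) : DM.{u} R where
  X := evz (R := R) C.X
  d := LinearMap.restrict
    { toFun := fun (x : ℕ → C.X) i => (-1 : R) ^ i • C.d (x i) + th s (i + 1) • x (i + 1)
      map_add' := fun x y => by funext i; simp only [Pi.add_apply, map_add, smul_add]; abel
      map_smul' := fun c x => by
        funext i
        simp only [Pi.smul_apply, map_smul, smul_add, RingHom.id_apply, smul_comm c] }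
    (by
      rintro x ⟨m, hm⟩
      exact ⟨m, fun i hi => by simp [hm i hi, hm (i + 1) (by omega)]⟩)
  dd x := by
    apply Subtype.ext
    funext i
    change (-1 : R) ^ i • C.d ((-1 : R) ^ i • C.d (x.1 i) + th s (i + 1) • x.1 (i + 1)) +
      th s (i + 1) • ((-1 : R) ^ (i + 1) • C.d (x.1 (i + 1)) + th s (i + 1 + 1) • x.1 (i + 1 + 1)) = 0
    rw [map_add, map_smul, C.dd, smul_zero, zero_add, map_smul, smul_add, smul_smul, smul_smul,
      smul_smul, th_mul, zero_smul, add_zero, ← add_smul, pow_succ]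
    ring_nf
    simp

lemma Phi_d (s : El R p) (C : DM.{u} R) (x : (Phi s C).X) (i : ℕ) :
    ((Phi s C).d x).1 i = (-1 : R) ^ i • C.d (x.1 i) + th s (i + 1) • x.1 (i + 1) := rfl

/-- Functoriality of `Phi`. -/
def Phi.map (s : El R p) {A B : DM.{u} R} (f : A.Hom B) : (Phi s A).Hom (Phi s B) where
  f := LinearMap.restrict
    { toFun := fun (x : ℕ → A.X) i => f.f (x i)
      map_add' := fun x y => by funext i; simp
      map_smul' := fun c x => by funext i; simp }
    (by
      rintro x ⟨m, hm⟩
      exact ⟨m, fun i hi => by simp [hm i hi]⟩)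
  comm x := by
    apply Subtype.ext
    funext i
    change f.f ((-1 : R) ^ i • A.d (x.1 i) + th s (i + 1) • x.1 (i + 1)) =
      (-1 : R) ^ i • B.d (f.f (x.1 i)) + th s (i + 1) • f.f (x.1 (i + 1))
    rw [map_add, map_smul, map_smul, f.comm]

lemma Phi.map_apply (s : El R p) {A B : DM.{u} R} (f : A.Hom B) (x : (Phi s A).X) (i : ℕ) :
    ((Phi.map s f).f x).1 i = f.f (x.1 i) := rfl

/-- The trace `x ↦ N x₀`. -/
def tra (s : El R p) (C : DM.{u} R) : (Phi s C).Hom C where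
  f := LinearMap.lsmul R C.X (nm s) ∘ₗ LinearMap.proj 0 ∘ₗ (evz (R := R) C.X).subtype
  comm x := by
    change nm s • ((-1 : R) ^ 0 • C.d (x.1 0) + th s (0 + 1) • x.1 (0 + 1)) = C.d (nm s • x.1 0)
    have : nm s * th s (0 + 1) = 0 := th_mul s 0
    rw [smul_add, smul_smul, smul_smul, this, zero_smul, add_zero, map_smul]
    simp

lemma tra_apply (s : El R p) (C : DM.{u} R) (x : (Phi s C).X) : (tra s C).f x = nm s • x.1 0 := rfl

/-- Composition. -/
def DM.Hom.comp {A B C : DM.{u} R} (g : B.Hom C) (f : A.Hom B) : A.Hom C where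
  f := g.f ∘ₗ f.f
  comm x := by simp [f.comm, g.comm]

/-- Iterated homotopy orbits. -/
def PhiL : List (El R p) → DM.{u} R → DM.{u} R
  | [], C => C
  | s :: l, C => PhiL l (Phi s C)

/-- Functoriality of `PhiL`. -/
def PhiL.map : ∀ (l : List (El R p)) {A B : DM.{u} R}, A.Hom B → (PhiL l A).Hom (PhiL l B)
  | [], _, _, f => f
  | s :: l, _, _, f => PhiL.map l (Phi.map s f)

/-- The iterated trace. -/
def trL : ∀ (l : List (El R p)) (C : DM.{u} R), (PhiL l C).Hom C
  | [], _ => ⟨LinearMap.id, fun _ => rfl⟩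
  | s :: l, C => (tra s C).comp (trL l (Phi s C))

lemma tra_nat (s : El R p) {A B : DM.{u} R} (f : A.Hom B) (x : (Phi s A).X) :
    f.f ((tra s A).f x) = (tra s B).f ((Phi.map s f).f x) := by
  rw [tra_apply, tra_apply, map_smul, Phi.map_apply]

lemma trL_nat (l : List (El R p)) {A B : DM.{u} R} (f : A.Hom B) (x : (PhiL l A).X) :
    f.f ((trL l A).f x) = (trL l B).f ((PhiL.map l f).f x) := by
  induction l generalizing A B with
  | nil => rfl
  | cons s l ih =>
    change f.f ((tra s A).f ((trL l (Phi s A)).f x)) =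
      (tra s B).f ((trL l (Phi s B)).f ((PhiL.map l (Phi.map s f)).f x))
    rw [tra_nat]
    exact congrArg _ (ih (Phi.map s f) x)

/-- An injective morphism with acyclic cokernel. -/
structure DM.Hom.W {A B : DM.{u} R} (f : A.Hom B) : Prop where
  inj : ∀ x, f.f x = 0 → x = 0
  ac : ∀ x, (∃ y, f.f y = B.d x) → ∃ w y, f.f y = x - B.d w

lemma Phi.mapW (s : El R p) {A B : DM.{u} R} (f : A.Hom B) (h : f.W) : (Phi.map s f).W := by
  refine ⟨fun x hx => Subtype.ext (funext fun i => h.inj _ (congrFun (congrArg Subtype.val hx) i)), ?_⟩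
  have key : ∀ m, ∀ x : (Phi s B).X, (∀ i ≥ m, x.1 i = 0) →
      (∃ y, (Phi.map s f).f y = (Phi s B).d x) → ∃ w y, (Phi.map s f).f y = x - (Phi s B).d w := by
    intro m
    induction m with
    | zero =>
      intro x hx _
      have : x = 0 := Subtype.ext (funext fun i => hx i (Nat.zero_le _))
      exact ⟨0, 0, by rw [this]; simp⟩
    | succ m ih =>
      rintro x hx ⟨y, hy⟩
      have h1 : f.f (y.1 m) = (-1 : R) ^ m • B.d (x.1 m) := by
        have := congrFun (congrArg Subtype.val hy) m
        rw [Phi.map_apply, Phi_d, hx (m + 1) le_rfl, smul_zero, add_zero] at this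
        exact this
      have hsq : ((-1 : R) ^ m) * (-1) ^ m = 1 := by rw [← mul_pow]; simp
      obtain ⟨w, v, hv⟩ := h.ac (x.1 m) ⟨(-1 : R) ^ m • y.1 m, by
        rw [map_smul, h1, smul_smul, hsq, one_smul]⟩
      let w' : (Phi s B).X := ⟨Pi.single m ((-1 : R) ^ m • w), m + 1, fun i hi =>
        Pi.single_eq_of_ne (by omega) _⟩
      let v' : (Phi s A).X := ⟨Pi.single m v, m + 1, fun i hi =>
        Pi.single_eq_of_ne (by omega) _⟩
      let x' := x - (Phi s B).d w' - (Phi.map s f).f v'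
      have hx' : ∀ i ≥ m, x'.1 i = 0 := by
        intro i hi
        change x.1 i - ((-1 : R) ^ i • B.d (w'.1 i) + th s (i + 1) • w'.1 (i + 1)) - f.f (v'.1 i) = 0
        have e1 : w'.1 (i + 1) = 0 := Pi.single_eq_of_ne (by omega) _
        rw [e1]
        rcases eq_or_lt_of_le hi with rfl | hi
        · have e2 : w'.1 m = (-1 : R) ^ m • w := Pi.single_eq_same _ _
          have e3 : v'.1 m = v := Pi.single_eq_same _ _
          rw [e2, e3, hv, map_smul, smul_smul, hsq, one_smul, smul_zero, add_zero, sub_self]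
        · have e2 : w'.1 i = 0 := Pi.single_eq_of_ne (by omega) _
          have e3 : v'.1 i = 0 := Pi.single_eq_of_ne (by omega) _
          rw [e2, e3, hx i (by omega)]
          simp
      obtain ⟨w2, y2, h2⟩ := ih x' hx' ⟨y - (Phi s A).d v', by
        rw [map_sub, hy, (Phi.map s f).comm, map_sub, map_sub, (Phi s B).dd, sub_zero]⟩
      refine ⟨w' + w2, y2 + v', ?_⟩
      rw [map_add, h2, map_add]
      simp only [x']
      abel
  rintro x hx
  obtain ⟨m, hm⟩ := x.2
  exact key m x hm hx

lemma PhiL.mapW (l : List (El R p)) {A B : DM.{u} R} (f : A.Hom B) (h : f.W) :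
    (PhiL.map l f).W := by
  induction l generalizing A B with
  | nil => exact h
  | cons s l ih => exact ih _ (Phi.mapW s f h)

/-- The traces of all lists of length at least `w` from a set `E` vanish on homology. -/
def Ghost (E : Set (El R p)) (w : ℕ) (C : DM.{u} R) : Prop :=
  ∀ l : List (El R p), (∀ s ∈ l, s ∈ E) → w ≤ l.length → ∀ x, (PhiL l C).d x = 0 →
    ∃ b, (trL l C).f x = C.d b

lemma ghost_of_acyclic (E : Set (El R p)) {C : DM.{u} R} (h : ∀ x, C.d x = 0 → ∃ b, x = C.d b) :
    Ghost E 0 C := fun l _ _ x hx => h _ (by rw [← (trL l C).comm, hx, map_zero])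

lemma Ghost.mono {E : Set (El R p)} {w w' : ℕ} (h : w ≤ w') {C : DM.{u} R} (g : Ghost E w C) :
    Ghost E w' C := fun l hl hw => g l hl (h.trans hw)

lemma Ghost.of_W {E : Set (El R p)} {w : ℕ} {A B : DM.{u} R} (f : A.Hom B) (h : f.W)
    (g : Ghost E w A) : Ghost E w B := by
  intro l hl hw x hx
  have hW := PhiL.mapW l f h
  obtain ⟨v, y, hy⟩ := hW.ac x ⟨0, by rw [hx, map_zero]⟩
  have hyc : (PhiL l A).d y = 0 := hW.inj _ (by
    rw [(PhiL.map l f).comm, hy, map_sub, hx, (PhiL l B).dd, sub_zero])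
  obtain ⟨b, hb⟩ := g l hl hw y hyc
  refine ⟨f.f b + (trL l B).f v, ?_⟩
  have := trL_nat l f y
  rw [hb, hy, map_sub, (trL l B).comm, f.comm] at this
  rw [map_add, this]
  abel

/-- If the norms carry `B` into `A`, the trace along one more element is a composite through `A`. -/
lemma Ghost.step {E : Set (El R p)} {w : ℕ} {A B : DM.{u} R} (f : A.Hom B)
    (hinj : ∀ x, f.f x = 0 → x = 0) (hN : ∀ s ∈ E, ∀ x : B.X, ∃ y, f.f y = nm s • x)
    (g : Ghost E w A) : Ghost E (w + 1) B := by
  intro l hl hw x hx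
  match l, hl, hw, x, hx with
  | s :: l, hl, hw, x', hx' =>
    let x : (PhiL l (Phi s B)).X := x'
    have hx : (PhiL l (Phi s B)).d x = 0 := hx'
    have hinj' : Function.Injective f.f := (injective_iff_map_eq_zero f.f).2 hinj
    have hr : ∀ y, (tra s B).f y ∈ LinearMap.range f.f := fun y => hN s (hl s (by simp)) _
    let e := LinearEquiv.ofInjective f.f hinj'
    let t : (Phi s B).Hom A :=
      { f := e.symm.toLinearMap ∘ₗ (tra s B).f.codRestrict _ hr
        comm := fun y => by
          apply hinj'
          have : ∀ z, f.f ((e.symm.toLinearMap ∘ₗ (tra s B).f.codRestrict _ hr) z) = (tra s B).f z := by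
            intro z
            have := congrArg Subtype.val (e.apply_symm_apply ((tra s B).f.codRestrict _ hr z))
            exact this
          rw [this, f.comm, this, (tra s B).comm] }
    have ht : ∀ z, f.f (t.f z) = (tra s B).f z := by
      intro z
      exact congrArg Subtype.val (e.apply_symm_apply ((tra s B).f.codRestrict _ hr z))
    obtain ⟨b, hb⟩ := g l (fun s hs => hl s (by simp [hs])) (by simpa using hw)
      ((PhiL.map l t).f x) (by
        rw [← (PhiL.map l t).comm, hx, map_zero])
    refine ⟨f.f b, ?_⟩
    change (tra s B).f ((trL l (Phi s B)).f x) = _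
    rw [← ht, trL_nat, hb, f.comm]

/-- Product of norms. -/
def nmL (l : List (El R p)) : R := (l.map nm).prod

/-- Freeness on invariants, with respect to a filtration. -/
def FreeOn (l : List (El R p)) (C : DM.{u} R) (Fi : ℕ → Submodule R C.X) : Prop :=
  ∀ l₁ s l₂, l = l₁ ++ s :: l₂ → ∀ m, ∀ x ∈ Fi m, (∀ r ∈ l₂, ta r • x = 0) →
    (nm s • x = 0 → ∃ y ∈ Fi m, (∀ r ∈ l₂, ta r • y = 0) ∧ x = ta s • y) ∧
    (ta s • x = 0 → ∃ y ∈ Fi m, (∀ r ∈ l₂, ta r • y = 0) ∧ x = nm s • y)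

lemma FreeOn.tail {s : El R p} {l : List (El R p)} {C : DM.{u} R} {Fi : ℕ → Submodule R C.X}
    (h : FreeOn (s :: l) C Fi) : FreeOn l C Fi := by
  intro l₁ r l₂ e
  exact h (s :: l₁) r l₂ (by rw [e]; rfl)

lemma FreeOn.norm {l : List (El R p)} {C : DM.{u} R} {Fi : ℕ → Submodule R C.X}
    (h : FreeOn l C Fi) {m : ℕ} {x : C.X} (hx : x ∈ Fi m) (hi : ∀ r ∈ l, ta r • x = 0) :
    ∃ y ∈ Fi m, x = nmL l • y := by
  induction l generalizing x with
  | nil => exact ⟨x, hx, by simp [nmL]⟩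
  | cons s l ih =>
    obtain ⟨y, hy, hyi, e⟩ := (h [] s l rfl m x hx (fun r hr => hi r (by simp [hr]))).2 (hi s (by simp))
    obtain ⟨z, hz, rfl⟩ := ih h.tail hy hyi
    exact ⟨z, hz, by rw [e, smul_smul]; simp [nmL]⟩

lemma ta_nmL {l : List (El R p)} {r : El R p} (hr : r ∈ l) : ta r * nmL l = 0 := by
  induction l with
  | nil => simp at hr
  | cons s l ih =>
    have e : nmL (s :: l) = nm s * nmL l := by simp [nmL]
    rcases List.mem_cons.1 hr with rfl | hr
    · rw [e, ← mul_assoc, ta_mul_nm, zero_mul]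
    · rw [e, mul_left_comm, ih hr, mul_zero]

/-- A cycle `N y` of a free differential module lifts to a cycle of the homotopy orbits. -/
lemma lift_cycle (l : List (El R p)) (C : DM.{u} R) (Fi : ℕ → Submodule R C.X) (h0 : Fi 0 = ⊥)
    (hd : ∀ m, ∀ x ∈ Fi (m + 1), C.d x ∈ Fi m) (hfree : FreeOn l C Fi) (m : ℕ) (y : C.X)
    (hy : y ∈ Fi m) (hc : C.d (nmL l • y) = 0) :
    ∃ Y, (PhiL l C).d Y = 0 ∧ (trL l C).f Y = nmL l • y := by
  induction l generalizing C y m with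
  | nil =>
    have e : nmL ([] : List (El R p)) • y = y := by simp [nmL]
    rw [e] at hc ⊢
    exact ⟨y, hc, rfl⟩
  | cons s l ih =>
    have enm : nmL (s :: l) = nm s * nmL l := by simp [nmL]
    -- successive terms of the lift, with `x i` in the filtration step `m - i`
    have step : ∀ (i : ℕ) (x : C.X), x ∈ Fi (m - i) → C.d (th s i • nmL l • x) = 0 →
        ∃ x' ∈ Fi (m - (i + 1)), (-1 : R) ^ i • C.d (nmL l • x) + th s (i + 1) • nmL l • x' = 0 := by
      intro i x hx hdx
      have hdm : C.d x ∈ Fi (m - (i + 1)) := by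
        rcases Nat.eq_zero_or_pos (m - i) with hz | hz
        · rw [hz, h0, Submodule.mem_bot] at hx
          rw [hx, map_zero]; exact zero_mem _
        · have : m - i = m - (i + 1) + 1 := by omega
          rw [this] at hx
          exact hd _ _ hx
      have hdm' : (-(-1 : R) ^ i) • nmL l • C.d x ∈ Fi (m - (i + 1)) :=
        Submodule.smul_mem _ _ (Submodule.smul_mem _ _ hdm)
      have hinv : ∀ r ∈ l, ta r • ((-(-1 : R) ^ i) • nmL l • C.d x) = 0 := by
        intro r hr
        rw [smul_comm, smul_smul (ta r), ta_nmL hr, zero_smul, smul_zero]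
      have hth : th s i • ((-(-1 : R) ^ i) • nmL l • C.d x) = 0 := by
        rw [smul_comm, ← map_smul C.d, ← map_smul C.d, hdx, smul_zero]
      have := hfree [] s l rfl _ _ hdm' hinv
      have h2 : ∃ y ∈ Fi (m - (i + 1)), (∀ r ∈ l, ta r • y = 0) ∧
          (-(-1 : R) ^ i) • nmL l • C.d x = th s (i + 1) • y := by
        unfold th at hth ⊢
        by_cases he : Even i
        · rw [if_neg (by rw [Nat.even_add_one]; exact not_not.2 he)]
          rw [if_pos he] at hth
          exact this.1 hth
        · rw [if_pos (by rw [Nat.even_add_one]; exact he)]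
          rw [if_neg he] at hth
          exact this.2 hth
      obtain ⟨y', hy', hyi, e⟩ := h2
      obtain ⟨z, hz, rfl⟩ := hfree.tail.norm hy' hyi
      refine ⟨z, hz, ?_⟩
      rw [← e, map_smul, neg_smul]
      abel
    have cont : ∀ (i : ℕ) (x x' : C.X),
        (-1 : R) ^ i • C.d (nmL l • x) + th s (i + 1) • nmL l • x' = 0 →
        C.d (th s (i + 1) • nmL l • x') = 0 := by
      intro i x x' h
      have := congrArg C.d h
      rwa [map_add, map_smul, C.dd, smul_zero, zero_add, map_zero] at this
    let St (i : ℕ) := {x : C.X // x ∈ Fi (m - i) ∧ C.d (th s i • nmL l • x) = 0}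
    have nxt : ∀ i (x : St i), ∃ x' : St (i + 1),
        (-1 : R) ^ i • C.d (nmL l • x.1) + th s (i + 1) • nmL l • x'.1 = 0 := by
      rintro i ⟨x, hx, hdx⟩
      obtain ⟨x', h1, h2⟩ := step i x hx hdx
      exact ⟨⟨x', h1, cont i x x' h2⟩, h2⟩
    choose nx hnx using nxt
    let x0 : St 0 := ⟨y, by simpa using hy, by
      have : th s 0 = nm s := by simp [th]
      rw [this, smul_smul, ← enm]; exact hc⟩
    let xs : ∀ i, St i := fun i => Nat.rec x0 (fun i x => nx i x) i
    have hxs : ∀ i, (-1 : R) ^ i • C.d (nmL l • (xs i).1) + th s (i + 1) • nmL l • (xs (i + 1)).1 = 0 :=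
      fun i => hnx i (xs i)
    let Y : (Phi s C).X := ⟨fun i => (xs i).1, m, fun i hi => by
      have h1 := (xs i).2.1
      have h2 : Fi (m - i) = ⊥ := by rw [Nat.sub_eq_zero_of_le hi, h0]
      exact (Submodule.mem_bot R).1 (h2.le h1)⟩
    let Fi' : ℕ → Submodule R (Phi s C).X := fun n =>
      { carrier := {x | ∀ i, x.1 i ∈ Fi (n - i)}
        add_mem' := fun {a b} ha hb i => add_mem (ha i) (hb i)
        zero_mem' := fun i => zero_mem _
        smul_mem' := fun c x hx i => Submodule.smul_mem _ _ (hx i) }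
    have hFi' : ∀ n x, x ∈ Fi' n ↔ ∀ i, x.1 i ∈ Fi (n - i) := fun n x => Iff.rfl
    have key : ∃ Z, (PhiL l (Phi s C)).d Z = 0 ∧ (trL l (Phi s C)).f Z = nmL l • Y := by
      refine ih (Phi s C) Fi' ?_ ?_ ?_ m Y ?_ ?_
      · rw [eq_bot_iff]
        intro x hx
        apply Subtype.ext; funext i
        have := hx i
        rwa [Nat.zero_sub, h0, Submodule.mem_bot] at this
      · intro n x hx i
        rw [Phi_d]
        refine add_mem (Submodule.smul_mem _ _ ?_) (Submodule.smul_mem _ _ ?_)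
        · have := hx i
          rcases Nat.lt_or_ge n i with hz | hz
          · rw [show n + 1 - i = 0 by omega, h0, Submodule.mem_bot] at this
            rw [this, map_zero]; exact zero_mem _
          · rw [show n + 1 - i = (n - i) + 1 by omega] at this
            exact hd _ _ this
        · have := hx (i + 1)
          rwa [show n + 1 - (i + 1) = n - i by omega] at this
      · intro l₁ r l₂ e n x hx hxi
        have hi : ∀ i, _ := fun i => hfree.tail l₁ r l₂ e _ _ (hx i)
          (fun q hq => congrFun (congrArg Subtype.val (hxi q hq)) i)
        have hz : ∀ i, n ≤ i → Fi (n - i) = ⊥ := fun i hi => by rw [Nat.sub_eq_zero_of_le hi, h0]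
        constructor
        · intro h
          choose f hf1 hf2 hf3 using fun i => (hi i).1 (congrFun (congrArg Subtype.val h) i)
          refine ⟨⟨f, n, fun i hin => ?_⟩, hf1, fun q hq => Subtype.ext (funext fun i => hf2 i q hq),
            Subtype.ext (funext hf3)⟩
          have := hf1 i
          rwa [hz i hin, Submodule.mem_bot] at this
        · intro h
          choose f hf1 hf2 hf3 using fun i => (hi i).2 (congrFun (congrArg Subtype.val h) i)
          refine ⟨⟨f, n, fun i hin => ?_⟩, hf1, fun q hq => Subtype.ext (funext fun i => hf2 i q hq),
            Subtype.ext (funext hf3)⟩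
          have := hf1 i
          rwa [hz i hin, Submodule.mem_bot] at this
      · exact fun i => (xs i).2.1
      · apply Subtype.ext; funext i
        exact hxs i
    obtain ⟨Z, hZ1, hZ2⟩ := key
    refine ⟨Z, hZ1, ?_⟩
    change (tra s C).f ((trL l (Phi s C)).f Z) = _
    rw [hZ2, tra_apply, enm, ← smul_smul]
    rfl

end MannSu

/-! ### Free complexes with small homology are acyclic -/

namespace MannSu
universe u v
variable {R : Type v} [CommRing R] {p : ℕ}

/-- The total differential module of a complex. -/
def tot (C : Cx.{u} R) : DM.{u} R where
  X := ∀ k, C.X k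
  d := LinearMap.pi fun k => C.d k ∘ₗ LinearMap.proj (k + 1)
  dd x := by funext k; exact C.dd k _

lemma tot_d (C : Cx.{u} R) (x : (tot C).X) (k : ℕ) : (tot C).d x k = C.d k (x (k + 1)) := rfl

/-- A differential submodule. -/
def DM.sub (C : DM.{u} R) (S : Submodule R C.X) (hS : ∀ x ∈ S, C.d x ∈ S) : DM.{u} R where
  X := S
  d := C.d.restrict hS
  dd x := Subtype.ext (C.dd x.1)

/-- Inclusion of differential submodules. -/
def DM.incl (C : DM.{u} R) {S S' : Submodule R C.X} (h : S ≤ S') (hS) (hS') :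
    (C.sub S hS).Hom (C.sub S' hS') where
  f := Submodule.inclusion h
  comm _ := rfl

/-- The truncation of `C` which is zero below `q + 1`, consists in spot `q + 1` of the cycles
with class in `V`, and is everything above. -/
def trunc (C : Cx.{u} R) (q : ℕ) (V : Submodule R (C.H q)) : Submodule R (tot C).X where
  carrier := {x | (∀ k ≤ q, x k = 0) ∧ ∃ z : LinearMap.ker (C.d q), C.cls q z ∈ V ∧ z.1 = x (q + 1)}
  add_mem' := by
    rintro x y ⟨h1, z, hz, e⟩ ⟨h2, z', hz', e'⟩
    refine ⟨fun k hk => ?_, z + z', by rw [map_add]; exact add_mem hz hz', ?_⟩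
    · change x k + y k = 0
      rw [h1 k hk, h2 k hk, add_zero]
    · change z.1 + z'.1 = x (q + 1) + y (q + 1)
      rw [e, e']
  zero_mem' := ⟨fun _ _ => rfl, 0, by simp, rfl⟩
  smul_mem' := by
    rintro c x ⟨h1, z, hz, e⟩
    refine ⟨fun k hk => ?_, c • z, by rw [map_smul]; exact V.smul_mem _ hz, ?_⟩
    · change c • x k = 0
      rw [h1 k hk, smul_zero]
    · change c • z.1 = c • x (q + 1)
      rw [e]

lemma trunc_d (C : Cx.{u} R) (q : ℕ) (V : Submodule R (C.H q)) :
    ∀ x ∈ trunc C q V, (tot C).d x ∈ trunc C q V := by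
  rintro x ⟨h1, z, hz, e⟩
  refine ⟨fun k hk => ?_, ⟨C.d (q + 1) (x (q + 2)), C.dd _ _⟩, ?_, rfl⟩
  · rw [tot_d]
    rcases eq_or_lt_of_le hk with rfl | hk
    · rw [← e]; exact z.2
    · rw [h1 (k + 1) hk, map_zero]
  · rw [(C.cls_eq_zero q _).2 ⟨_, rfl⟩]; exact zero_mem _

lemma ta_nilp [CharP R p] [Fact p.Prime] (s : El R p) : (ta s) ^ p = 0 := by
  rw [ta, sub_pow_char, s.2, one_pow, sub_self]

lemma ta_dvd_nm [CharP R p] (s : El R p) : ta s ∣ nm s := by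
  have : nm s = ∑ j ∈ Finset.range p, (s.1 ^ j - 1) := by
    rw [Finset.sum_sub_distrib, nm]
    simp
  rw [this]
  refine Finset.dvd_sum fun j _ => ?_
  have := sub_dvd_pow_sub_pow s.1 1 j
  rwa [one_pow] at this

lemma nakayama_lt {H : Type*} [AddCommGroup H] [Module R H] {J : Ideal R} (hJ : IsNilpotent J)
    {V : Submodule R H} (hV : V ≠ ⊥) : J • V < V := by
  refine lt_of_le_of_ne Submodule.smul_le_right fun h => hV ?_
  obtain ⟨n, hn⟩ := hJ
  have : ∀ n, J ^ n • V = V := by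
    intro n
    induction n with
    | zero => simp
    | succ n ih => rw [pow_succ, Submodule.mul_smul, h, ih]
  rw [← this n, hn]
  simp

lemma trunc_acyclic (C : Cx.{u} R) (q : ℕ) (hz : ∀ k ≥ q + 1, C.h k = 0) :
    ∀ x : ((tot C).sub (trunc C q ⊥) (trunc_d C q ⊥)).X,
      ((tot C).sub (trunc C q ⊥) (trunc_d C q ⊥)).d x = 0 →
        ∃ b, x = ((tot C).sub (trunc C q ⊥) (trunc_d C q ⊥)).d b := by
  rintro ⟨x, h1, z, hzz, e⟩ hx
  have hx : ∀ k, C.d k (x (k + 1)) = 0 := fun k => congrFun (congrArg Subtype.val hx) k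
  have ex : ∀ k, ∃ y : C.X (k + 1), q + 1 ≤ k → C.d k y = x k := by
    intro k
    by_cases hk : q + 1 ≤ k
    · obtain ⟨k, rfl⟩ : ∃ i, k = i + 1 := ⟨k - 1, by omega⟩
      rcases eq_or_lt_of_le hk with hk' | hk'
      · obtain rfl : k = q := by omega
        obtain ⟨y, hy⟩ := (C.cls_eq_zero k z).1 hzz
        exact ⟨y, fun _ => by rw [hy, e]⟩
      · obtain ⟨y, hy⟩ := (C.h_eq_zero_iff k).1 (hz k (by omega)) _ (hx k)
        exact ⟨y, fun _ => hy⟩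
    · exact ⟨0, fun h => absurd h hk⟩
  choose y hy using ex
  let b : ∀ k, C.X k := fun k => match k with
    | 0 => 0
    | k + 1 => if q + 1 ≤ k then y k else 0
  refine ⟨⟨b, ?_, 0, by simp, ?_⟩, ?_⟩
  · intro k hk
    cases k with
    | zero => rfl
    | succ k => exact if_neg (by omega)
  · exact (if_neg (by omega) : (if q + 1 ≤ q then y q else 0) = 0).symm
  · apply Subtype.ext
    funext k
    change x k = C.d k (if q + 1 ≤ k then y k else 0)
    by_cases hk : q + 1 ≤ k
    · rw [if_pos hk, hy k hk]
    · rw [if_neg hk, map_zero, h1 k (by omega)]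

lemma trunc_W (C : Cx.{u} R) (q : ℕ) :
    ∃ f : ((tot C).sub (trunc C (q + 1) ⊤) (trunc_d C (q + 1) ⊤)).Hom
      ((tot C).sub (trunc C q ⊥) (trunc_d C q ⊥)), f.W := by
  have hle : trunc C (q + 1) ⊤ ≤ trunc C q ⊥ := by
    rintro x ⟨h1, -⟩
    exact ⟨fun k hk => h1 k (by omega), 0, by simp, (h1 (q + 1) le_rfl).symm⟩
  refine ⟨(tot C).incl hle _ _, ⟨fun x hx => ?_, ?_⟩⟩
  · have hx' : x.1 = 0 := congrArg Subtype.val hx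
    exact Subtype.ext hx'
  · rintro ⟨x, h1, z, hz, e⟩ ⟨⟨y, hy1, hy2⟩, hy⟩
    have hy : ∀ k, y k = C.d k (x (k + 1)) := fun k => congrFun (congrArg Subtype.val hy) k
    obtain ⟨w, hw⟩ := (C.cls_eq_zero q z).1 hz
    have hws : ∀ k, k ≠ q + 2 → (Pi.single (q + 2) w : ∀ k, C.X k) k = 0 :=
      fun k hk => Pi.single_eq_of_ne hk _
    have hwm : (Pi.single (q + 2) w : ∀ k, C.X k) ∈ trunc C q ⊥ :=
      ⟨fun k hk => hws k (by omega), 0, by simp, (hws (q + 1) (by omega)).symm⟩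
    have hm : (x - (tot C).d (Pi.single (q + 2) w)) ∈ trunc C (q + 1) ⊤ := by
      refine ⟨fun k hk => ?_, ⟨(x - (tot C).d (Pi.single (q + 2) w)) (q + 2), ?_⟩, trivial, rfl⟩
      · change x k - C.d k ((Pi.single (q + 2) w : ∀ k, C.X k) (k + 1)) = 0
        rcases eq_or_lt_of_le hk with rfl | hk
        · rw [← e, ← hw]
          have : (Pi.single (q + 2) w : ∀ k, C.X k) (q + 1 + 1) = w := Pi.single_eq_same _ _
          rw [this, sub_self]
        · rw [hws (k + 1) (by omega), h1 k (by omega), map_zero, sub_zero]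
      · change C.d (q + 1) (x (q + 2) - C.d (q + 2) ((Pi.single (q + 2) w : ∀ k, C.X k) (q + 3))) = 0
        rw [map_sub, C.dd, sub_zero, ← hy, hy1 (q + 1) le_rfl]
    exact ⟨⟨_, hwm⟩, ⟨_, hm⟩, rfl⟩

lemma ghost_trunc (C : Cx.{u} R) {E : Set (El R p)} {J : Ideal R} (hJ : IsNilpotent J)
    (hE : ∀ s ∈ E, nm s ∈ J) {N : ℕ} (hN : ∀ k ≥ N, C.h k = 0) :
    ∀ j q, N ≤ q + j → ∀ (t : ℕ) (V : Submodule R (C.H q)),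
      Module.length R V + ∑ k ∈ Finset.Ico (q + 1) N, C.h k ≤ t →
      Ghost E t ((tot C).sub (trunc C q V) (trunc_d C q V)) := by
  intro j
  induction j with
  | zero =>
    intro q hq t V _
    have hV : V = ⊥ := by
      have : Subsingleton (C.H q) := (Module.length_eq_zero_iff).1 (hN q (by omega))
      exact Subsingleton.elim _ _
    subst hV
    exact (ghost_of_acyclic E (trunc_acyclic C q (fun k hk => hN k (by omega)))).mono (Nat.zero_le _)
  | succ j ih =>
    intro q hq t
    have base : ∀ t : ℕ, ∑ k ∈ Finset.Ico (q + 1) N, C.h k ≤ t →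
        Ghost E t ((tot C).sub (trunc C q ⊥) (trunc_d C q ⊥)) := by
      intro t ht
      by_cases hqN : N ≤ q + 1
      · exact (ghost_of_acyclic E (trunc_acyclic C q (fun k hk => hN k (by omega)))).mono
          (Nat.zero_le _)
      · obtain ⟨f, hf⟩ := trunc_W C q
        refine Ghost.of_W f hf (ih (q + 1) (by omega) t ⊤ ?_)
        rw [Finset.sum_eq_sum_Ico_succ_bot (by omega)] at ht
        rwa [Module.length_top]
    induction t with
    | zero =>
      intro V hV
      have h0 : Module.length R V = 0 := by
        have := le_self_add.trans hV
        simpa using this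
      have hb : V = ⊥ := by
        have := Module.length_eq_zero_iff.1 h0
        exact Submodule.eq_bot_of_subsingleton
      subst hb
      exact base 0 (le_trans le_add_self hV)
    | succ t iht =>
      intro V hV
      by_cases hb : V = ⊥
      · subst hb
        exact base _ (le_trans le_add_self hV)
      · have hlt := nakayama_lt hJ hb
        have hle : trunc C q (J • V) ≤ trunc C q V := by
          rintro x ⟨h1, z, hz, e⟩
          exact ⟨h1, z, hlt.le hz, e⟩
        refine Ghost.step ((tot C).incl hle (trunc_d _ _ _) (trunc_d _ _ _)) ?_ ?_ (iht (J • V) ?_)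
        · intro x hx
          have hx' : x.1 = 0 := congrArg Subtype.val hx
          exact Subtype.ext hx'
        · rintro s hs ⟨x, h1, z, hz, e⟩
          refine ⟨⟨nm s • x, fun k hk => ?_, nm s • z, ?_, ?_⟩, rfl⟩
          · change nm s • x k = 0
            rw [h1 k hk, smul_zero]
          · rw [map_smul]; exact Submodule.smul_mem_smul (hE s hs) hz
          · change nm s • z.1 = nm s • x (q + 1)
            rw [e]
        · have h1 : Module.length R (J • V : Submodule R (C.H q)) + 1 ≤ Module.length R V := by
            rw [Module.length_submodule, Module.length_submodule]
            exact Order.height_add_one_le hlt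
          have h2 : (Module.length R (J • V : Submodule R (C.H q)) +
              ∑ k ∈ Finset.Ico (q + 1) N, C.h k) + 1 ≤ (t : ℕ∞) + 1 := by
            calc _ = (Module.length R (J • V : Submodule R (C.H q)) + 1) +
                  ∑ k ∈ Finset.Ico (q + 1) N, C.h k := by ring
              _ ≤ Module.length R V + ∑ k ∈ Finset.Ico (q + 1) N, C.h k := by gcongr
              _ ≤ _ := by exact_mod_cast hV
          exact (ENat.add_le_add_iff_right (by simp)).1 h2

lemma socle [CharP R p] [Fact p.Prime] {H : Type*} [AddCommGroup H] [Module R H]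
    (l : List (El R p)) {v : H} (hv : v ≠ 0) :
    ∃ r : R, r • v ≠ 0 ∧ ∀ s ∈ l, ta s • r • v = 0 := by
  induction l with
  | nil => exact ⟨1, by simpa using hv, by simp⟩
  | cons s l ih =>
    obtain ⟨r, hr, hl⟩ := ih
    have hex : ∃ n, (ta s) ^ n • r • v = 0 := ⟨p, by rw [ta_nilp, zero_smul]⟩
    classical
    obtain ⟨n, hn⟩ : ∃ n, Nat.find hex = n + 1 := by
      refine Nat.exists_eq_succ_of_ne_zero fun h => hr ?_
      have := Nat.find_spec hex
      rwa [h, pow_zero, one_smul] at this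
    refine ⟨(ta s) ^ n * r, ?_, ?_⟩
    · rw [mul_smul]
      exact Nat.find_min hex (by omega)
    · intro t ht
      rw [mul_smul]
      rcases List.mem_cons.1 ht with rfl | ht
      · have := Nat.find_spec hex
        rwa [hn, pow_succ', mul_smul] at this
      · rw [smul_comm, hl t ht, smul_zero]

/-- The invariants of a list of elements. -/
def inv (C : Cx.{u} R) (l : List (El R p)) (k : ℕ) : Submodule R (C.X k) where
  carrier := {x | ∀ r ∈ l, ta r • x = 0}
  add_mem' := fun hx hy r hr => by rw [smul_add, hx r hr, hy r hr, add_zero]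
  zero_mem' := fun r _ => smul_zero _
  smul_mem' := fun c x hx r hr => by rw [smul_comm, hx r hr, smul_zero]

lemma inv_d (C : Cx.{u} R) (l : List (El R p)) : ∀ k x, x ∈ inv C l (k + 1) → C.d k x ∈ inv C l k :=
  fun k x hx r hr => by rw [← map_smul, hx r hr, map_zero]

/-- A complex which is free over the group algebra of an elementary abelian group of rank `w`
(in the sense that the Tate cohomology of the successive invariants vanishes) is acyclic as soon as
the total length of its homology is at most `w`. -/
theorem free_acyclic [CharP R p] [Fact p.Prime] (C : Cx.{u} R) (h0 : Subsingleton (C.X 0))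
    (l : List (El R p))
    (hfree : ∀ l₁ s l₂, l = l₁ ++ s :: l₂ → ∀ k, ∀ x ∈ inv C l₂ k,
      (nm s • x = 0 → ∃ y ∈ inv C l₂ k, x = ta s • y) ∧
      (ta s • x = 0 → ∃ y ∈ inv C l₂ k, x = nm s • y))
    (K : ℕ)
    (hK : ∀ l₁ l₂, l = l₁ ++ l₂ → ∀ k ≥ K, ∀ c ∈ inv C l₂ (k + 1), C.d k c = 0 →
      ∃ w ∈ inv C l₂ (k + 2), C.d (k + 1) w = c)
    (hlen : ∑ k ∈ Finset.range K, C.h k ≤ l.length) : ∀ k, C.h k = 0 := by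
  have hKz : ∀ k ≥ K, C.h k = 0 := by
    intro k hk
    refine (C.h_eq_zero_iff k).2 fun z hz => ?_
    obtain ⟨w, -, hw⟩ := hK l [] (by simp) k hk z (by intro r hr; simp at hr) hz
    exact ⟨w, hw⟩
  by_contra hne
  push Not at hne
  -- the top degree with nonvanishing homology
  obtain ⟨m, hm, hmax⟩ : ∃ m, C.h m ≠ 0 ∧ ∀ k ≥ m + 1, C.h k = 0 := by
    classical
    obtain ⟨k0, hk0⟩ := hne
    refine ⟨Nat.findGreatest (fun k => C.h k ≠ 0) K, ?_, ?_⟩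
    · refine Nat.findGreatest_spec (P := fun k => C.h k ≠ 0) (m := k0) ?_ hk0
      by_contra h
      exact hk0 (hKz k0 (by omega))
    · intro k hk
      by_cases hkK : K ≤ k
      · exact hKz k hkK
      · have := Nat.findGreatest_is_greatest (P := fun k => C.h k ≠ 0) (n := K) (k := k)
          (by omega) (by omega)
        exact not_not.1 this
  have hKpos : 0 < K := by
    rcases Nat.eq_zero_or_pos K with h | h
    · exact absurd (hKz m (by omega)) hm
    · exact h
  obtain ⟨z, hznb, hzs⟩ : ∃ z : LinearMap.ker (C.d m), C.cls m z ≠ 0 ∧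
      ∀ s ∈ l, C.cls m (ta s • z) = 0 := by
    have : Nontrivial (C.H m) := by
      rw [← Module.length_pos_iff (R := R)]
      exact pos_iff_ne_zero.2 hm
    obtain ⟨v, hv⟩ := exists_ne (0 : C.H m)
    obtain ⟨z, rfl⟩ := C.cls_surj m v
    obtain ⟨r, hr1, hr2⟩ := socle l hv
    exact ⟨r • z, by rwa [map_smul], fun s hs => by rw [map_smul, map_smul]; exact hr2 s hs⟩
  -- the class is represented by an invariant cycle, by transfer in the top degree
  have lift : ∀ l₂ l₁, l = l₁ ++ l₂ →
      (∀ k ≥ m + 1, (C.sub (inv C l₂) (inv_d C l₂)).h k = 0) ∧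
      (∀ x ∈ inv C l₂ (m + 1), ∀ y, x = C.d (m + 1) y → ∃ y' ∈ inv C l₂ (m + 2), x = C.d (m + 1) y') ∧
      ∃ z' ∈ inv C l₂ (m + 1), C.d m z' = 0 ∧ ∃ w, z.1 = z' + C.d (m + 1) w := by
    intro l₂
    induction l₂ with
    | nil =>
      intro l₁ _
      have htop : ∀ k (x : C.X k), x ∈ inv C ([] : List (El R p)) k := fun k x r hr => by simp at hr
      refine ⟨fun k hk => ?_, fun x _ y hy => ⟨y, htop _ _, hy⟩, z.1, htop _ _, z.2, 0, by simp⟩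
      refine Cx.sub_h_zero' fun z _ hz => ?_
      obtain ⟨y, hy⟩ := (C.h_eq_zero_iff k).1 (hmax k hk) z hz
      exact ⟨y, htop _ _, hy⟩
    | cons s l₂ ih =>
      intro l₁ e
      obtain ⟨i1, i2, z', hz', dz', w, hw⟩ := ih (l₁ ++ [s]) (by simp [e])
      set D := C.sub (inv C l₂) (inv_d C l₂) with hD
      have hfr := hfree l₁ s l₂ e
      have S : Sm D (fun k => ⊥) (nm s) (ta s) := by
        refine ⟨?_, nm_mul_ta s, ?_, ?_, ?_, ?_⟩
        · rintro k x hx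
          rw [Submodule.mem_bot] at hx ⊢
          rw [hx, map_zero]
        · rintro k x hx; rw [(Submodule.mem_bot R).1 hx, smul_zero]
        · rintro k x hx; rw [(Submodule.mem_bot R).1 hx, smul_zero]
        · intro k x hx0
          have hx1 := (Submodule.mem_bot R).1 hx0
          obtain ⟨y, hy, e⟩ := (hfr k x.1 x.2).1 (congrArg Subtype.val hx1)
          refine ⟨⟨y, hy⟩, (Submodule.mem_bot R).2 (Subtype.ext ?_)⟩
          change x.1 - ta s • y = 0
          rw [e, sub_self]
        · intro k x hx0
          have hx1 := (Submodule.mem_bot R).1 hx0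
          obtain ⟨y, hy, e⟩ := (hfr k x.1 x.2).2 (congrArg Subtype.val hx1)
          refine ⟨⟨y, hy⟩, (Submodule.mem_bot R).2 (Subtype.ext ?_)⟩
          change x.1 - nm s • y = 0
          rw [e, sub_self]
      have hmem : ∀ k (x : C.X k), x ∈ inv C (s :: l₂) k ↔ x ∈ inv C l₂ k ∧ ta s • x = 0 := by
        intro k x
        constructor
        · intro h; exact ⟨fun r hr => h r (by simp [hr]), h s (by simp)⟩
        · rintro ⟨h1, h2⟩ r hr
          rcases List.mem_cons.1 hr with rfl | hr
          exacts [h2, h1 r hr]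
      have hnmem : ∀ k (x : D.X k), (nm s • x).1 ∈ inv C (s :: l₂) k := by
        intro k x
        refine (hmem _ _).2 ⟨(nm s • x).2, ?_⟩
        change ta s • nm s • x.1 = 0
        rw [smul_smul, ta_mul_nm, zero_smul]
      have hte : ∀ k ≥ K, (imCx D (nm s)).h k = 0 := by
        intro k hk
        refine S.te ?_
        rintro ⟨c, hc⟩ hc1 hc2
        obtain ⟨w, hw, hwd⟩ := hK l₁ (s :: l₂) e k hk c
          ((hmem _ _).2 ⟨hc, congrArg Subtype.val hc1⟩) (congrArg Subtype.val hc2)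
        refine ⟨⟨w, ((hmem _ _).1 hw).1⟩, Subtype.ext ((hmem _ _).1 hw).2, ?_⟩
        refine (Submodule.mem_bot R).2 (Subtype.ext ?_)
        change C.d (k + 1) w - c = 0
        rw [hwd, sub_self]
      have hv := S.vanish hte i1
      have j2 : ∀ x ∈ inv C (s :: l₂) (m + 1), ∀ y, x = C.d (m + 1) y →
          ∃ y' ∈ inv C (s :: l₂) (m + 2), x = C.d (m + 1) y' := by
        intro x hx y hxy
        obtain ⟨hx1, hx2⟩ := (hmem _ _).1 hx
        obtain ⟨y', hy', e'⟩ := i2 x hx1 y hxy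
        obtain ⟨u, hu, rfl⟩ := (hfr _ x hx1).2 hx2
        obtain ⟨v, t, -, e2, -⟩ := S.inj (m := m) (hv _ le_rfl).2.1 (u := ⟨u, hu⟩)
          (zero_mem _) (x := ⟨y', hy'⟩) (Subtype.ext (by
            change nm s • u + 0 = C.d (m + 1) y'
            rw [add_zero, e']))
        exact ⟨(nm s • v).1, hnmem _ v, congrArg Subtype.val e2⟩
      refine ⟨?_, j2, ?_⟩
      · intro k hk
        refine Cx.sub_h_zero' fun x hx dx => ?_
        obtain ⟨hx1, hx2⟩ := (hmem _ _).1 hx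
        obtain ⟨u, hu, rfl⟩ := (hfr _ x hx1).2 hx2
        let u' : D.X (k + 1) := ⟨u, hu⟩
        have du : D.d k (nm s • u') = 0 := Subtype.ext dx
        obtain ⟨_, ⟨v, rfl⟩, e2⟩ := Cx.sub_h_zero (hv k hk).1 (z := nm s • u') ⟨u', rfl⟩ du
        exact ⟨(nm s • v).1, hnmem _ v, congrArg Subtype.val e2⟩
      · have hb : ta s • z' ∈ inv C l₂ (m + 1) := Submodule.smul_mem _ _ hz'
        obtain ⟨y0, hy0⟩ := (C.cls_eq_zero m _).1 (hzs s (by rw [e]; simp))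
        have hy0 : C.d (m + 1) y0 = ta s • z.1 := hy0
        obtain ⟨x, hx, ex⟩ := i2 _ hb (y0 - ta s • w) (by
          rw [map_sub, hy0, hw, map_smul, smul_add]; abel)
        have hbot : (D.sub (fun _ => ⊥) S.dT).h m = 0 := by
          refine Cx.sub_h_zero' fun x hx _ => ⟨0, zero_mem _, ?_⟩
          rw [map_zero]; exact ((Submodule.mem_bot R).1 hx).symm
        obtain ⟨y, w', e1, e2⟩ := S.newman (m := m) (hv _ le_rfl).1 hbot (z := ⟨z', hz'⟩)
          (Subtype.ext dz') (x := ⟨x, hx⟩) (Subtype.ext ex)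
        refine ⟨(nm s • y).1, hnmem _ y, congrArg Subtype.val e2, w'.1 + w, ?_⟩
        have e1 : z' = (nm s • y).1 + C.d (m + 1) w'.1 := congrArg Subtype.val e1
        rw [hw, e1, map_add]; abel
  obtain ⟨-, -, z', hz', dz', w, hw⟩ := lift l [] rfl
  -- the total complex with the filtration by degree
  let Fi : ℕ → Submodule R (tot C).X := fun n =>
    { carrier := {x | ∀ k ≥ n, x k = 0}
      add_mem' := fun {x y} hx hy k hk => by
        change x k + y k = 0
        rw [hx k hk, hy k hk, add_zero]
      zero_mem' := fun k _ => rfl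
      smul_mem' := fun c x hx k hk => by
        change c • x k = 0
        rw [hx k hk, smul_zero] }
  have hF : FreeOn l (tot C) Fi := by
    intro l₁ s l₂ e n x hx hxi
    have hfr : ∀ k, _ := fun k => hfree l₁ s l₂ e k (x k) (fun r hr => congrFun (hxi r hr) k)
    classical
    constructor
    · intro hx0
      choose y hy1 hy2 using fun k => (hfr k).1 (congrFun hx0 k)
      refine ⟨fun k => if k < n then y k else 0, fun k hk => if_neg (by omega),
        fun r hr => funext fun k => ?_, funext fun k => ?_⟩
      · change ta r • (if k < n then y k else 0) = 0
        split_ifs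
        exacts [hy1 k r hr, smul_zero _]
      · change x k = ta s • (if k < n then y k else 0)
        split_ifs with h
        exacts [hy2 k, by rw [smul_zero]; exact hx k (by omega)]
    · intro hx0
      choose y hy1 hy2 using fun k => (hfr k).2 (congrFun hx0 k)
      refine ⟨fun k => if k < n then y k else 0, fun k hk => if_neg (by omega),
        fun r hr => funext fun k => ?_, funext fun k => ?_⟩
      · change ta r • (if k < n then y k else 0) = 0
        split_ifs
        exacts [hy1 k r hr, smul_zero _]
      · change x k = nm s • (if k < n then y k else 0)
        split_ifs with h
        exacts [hy2 k, by rw [smul_zero]; exact hx k (by omega)]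
  let Z : (tot C).X := (Pi.single (m + 1) z' : ∀ k, C.X k)
  have hZ1 : Z (m + 1) = z' := Pi.single_eq_same _ _
  have hZ2 : ∀ k, k ≠ m + 1 → Z k = 0 := fun k hk => Pi.single_eq_of_ne hk _
  obtain ⟨y, hy, eZ⟩ := hF.norm (m := m + 2) (x := Z) (fun k hk => hZ2 k (by omega)) (by
    intro r hr
    funext k
    change ta r • Z k = 0
    by_cases hk : k = m + 1
    · subst hk; rw [hZ1]; exact hz' r hr
    · rw [hZ2 k hk, smul_zero])
  have dZ : (tot C).d Z = 0 := by
    funext k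
    rw [tot_d]
    by_cases hk : k = m
    · subst hk; rw [hZ1]; exact dz'
    · rw [hZ2 (k + 1) (by omega), map_zero]; rfl
  obtain ⟨Y, hY1, hY2⟩ := lift_cycle l (tot C) Fi (by
      rw [eq_bot_iff]; intro x hx; exact funext fun k => hx k (Nat.zero_le _))
    (by
      intro n x hx k hk
      rw [tot_d, hx (k + 1) (by omega), map_zero]) hF (m + 2) y hy (by rw [← eZ]; exact dZ)
  -- the ghost estimate
  let J : Ideal R := Ideal.span {t | ∃ s ∈ l, t = ta s}
  have hJ : IsNilpotent J := by
    have hfg : J.FG := by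
      refine Submodule.fg_span ?_
      have : {t | ∃ s ∈ l, t = ta s} = ta '' {s | s ∈ l} := by
        ext t; simp [eq_comm]
      rw [this]
      exact (List.finite_toSet l).image _
    rw [Ideal.FG.isNilpotent_iff_le_nilradical hfg, Ideal.span_le]
    rintro _ ⟨s, -, rfl⟩
    exact ⟨p, ta_nilp s⟩
  have hG := ghost_trunc (E := {s | s ∈ l}) C hJ (fun s hs =>
    (Ideal.mem_of_dvd J (ta_dvd_nm s) (Ideal.subset_span ⟨s, hs, rfl⟩)))
    hKz K 0 (by omega) l.length ⊤ (by
      rw [Module.length_top]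
      rw [Finset.range_eq_Ico, Finset.sum_eq_sum_Ico_succ_bot hKpos] at hlen
      exact hlen)
  let ι : ((tot C).sub (trunc C 0 ⊤) (trunc_d C 0 ⊤)).Hom (tot C) :=
    ⟨Submodule.subtype _, fun _ => rfl⟩
  have hW : ι.W := by
    refine ⟨fun x hx => Subtype.ext hx, fun x _ => ⟨0, ⟨x, ?_, ⟨x 1, ?_⟩, trivial, rfl⟩, ?_⟩⟩
    · intro k hk
      obtain rfl : k = 0 := by omega
      exact Subsingleton.elim _ _
    · exact Subsingleton.elim _ _
    · rw [map_zero, sub_zero]; rfl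
  obtain ⟨b, hb⟩ := (hG.of_W ι hW) l (fun s hs => hs) le_rfl Y hY1
  rw [hY2, ← eZ] at hb
  have hfin := congrFun hb (m + 1)
  rw [tot_d, hZ1] at hfin
  apply hznb
  rw [C.cls_eq_zero]
  exact ⟨b (m + 2) + w, by rw [map_add, ← hfin, hw]⟩

end MannSu

/-! ### Ordered chains -/

namespace MannSu
universe u v

open Finsupp

/-- Ordered chains: formal combinations of finite lists of points. -/
abbrev Ch (F : Type*) [CommRing F] (V : Type*) := List V →₀ F

section
variable {F : Type*} [CommRing F] {V W : Type*}

/-- Lists all of whose entries lie in `A`. -/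
def LS (A : Set V) : Set (List V) := {l | ∀ x ∈ l, x ∈ A}

/-- Prepending a vertex. -/
noncomputable def cone (x : V) : Ch F V →ₗ[F] Ch F V := lmapDomain F F (List.cons x)

@[simp] lemma cone_single (x : V) (l : List V) (a : F) :
    cone x (single l a) = single (x :: l) a := by simp [cone]

/-- The boundary of a list. -/
noncomputable def bdL : List V → Ch F V
  | [] => 0
  | x :: l => single l 1 - cone x (bdL l)

/-- The boundary operator (it removes vertices with alternating signs). -/
noncomputable def bd : Ch F V →ₗ[F] Ch F V := linearCombination F bdL

lemma ext_single {N : Type*} [AddCommGroup N] [Module F N] {f g : Ch F V →ₗ[F] N}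
    (h : ∀ l, f (single l 1) = g (single l 1)) : f = g := by
  ext l; simpa using h l

@[simp] lemma bd_nil : bd (single ([] : List V) (1 : F)) = 0 := by simp [bd, bdL]

lemma bd_cons (x : V) (l : List V) :
    bd (single (x :: l) (1 : F)) = single l 1 - cone x (bd (single l 1)) := by
  simp [bd, bdL]

lemma bd_cone (x : V) (c : Ch F V) : bd (cone x c) = c - cone x (bd c) := by
  have : bd ∘ₗ cone x = LinearMap.id - cone x ∘ₗ (bd : Ch F V →ₗ[F] Ch F V) :=
    ext_single fun l => by simp [bd_cons]
  simpa using LinearMap.congr_fun this c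

lemma bd_bd (c : Ch F V) : bd (bd c) = 0 := by
  have : bd ∘ₗ (bd : Ch F V →ₗ[F] Ch F V) = 0 := ext_single fun l => by
    induction l with
    | nil => simp
    | cons x l ih =>
      simp only [LinearMap.comp_apply, LinearMap.zero_apply] at ih
      simp [bd_cons, bd_cone, ih]
  simpa using LinearMap.congr_fun this c

/-- Induced map on chains. -/
noncomputable def mp (f : V → W) : Ch F V →ₗ[F] Ch F W := lmapDomain F F (List.map f)

@[simp] lemma mp_single (f : V → W) (l : List V) (a : F) :
    mp f (single l a) = single (l.map f) a := by simp [mp]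

lemma mp_cone (f : V → W) (x : V) (c : Ch F V) : mp f (cone x c) = cone (f x) (mp f c) := by
  have : mp f ∘ₗ cone x = cone (f x) ∘ₗ (mp f : Ch F V →ₗ[F] Ch F W) := ext_single fun l => by simp
  simpa using LinearMap.congr_fun this c

lemma mp_bd (f : V → W) (c : Ch F V) : mp f (bd c) = bd (mp f c) := by
  have : mp f ∘ₗ bd = bd ∘ₗ (mp f : Ch F V →ₗ[F] Ch F W) := ext_single fun l => by
    induction l with
    | nil => simp
    | cons x l ih =>
      simp only [LinearMap.comp_apply, mp_single] at ih
      simp [bd_cons, mp_cone, ih]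
  simpa using LinearMap.congr_fun this c

lemma mp_mp {U : Type*} (f : V → W) (g : W → U) (c : Ch F V) : mp g (mp f c) = mp (g ∘ f) c := by
  have : mp g ∘ₗ mp f = (mp (g ∘ f) : Ch F V →ₗ[F] Ch F U) := ext_single fun l => by simp
  simpa using LinearMap.congr_fun this c

lemma mp_id (c : Ch F V) : mp id c = c := by
  have : mp id = (LinearMap.id : Ch F V →ₗ[F] Ch F V) := ext_single fun l => by simp
  simpa using LinearMap.congr_fun this c

/-- Prism of a list between two maps. -/
noncomputable def prL (f g : V → W) : List V → Ch F W
  | [] => 0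
  | x :: l => single (f x :: g x :: l.map g) 1 - cone (f x) (prL f g l)

/-- The prism operator, a chain homotopy between the maps induced by `f` and `g`. -/
noncomputable def pr (f g : V → W) : Ch F V →ₗ[F] Ch F W := linearCombination F (prL f g)

@[simp] lemma pr_nil (f g : V → W) : pr f g (single ([] : List V) (1 : F)) = 0 := by simp [pr, prL]

lemma pr_cons (f g : V → W) (x : V) (l : List V) :
    pr f g (single (x :: l) (1 : F))
      = single (f x :: g x :: l.map g) 1 - cone (f x) (pr f g (single l 1)) := by
  simp [pr, prL]

lemma pr_cone (f g : V → W) (x : V) (c : Ch F V) :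
    pr f g (cone x c) = cone (f x) (cone (g x) (mp g c)) - cone (f x) (pr f g c) := by
  have : pr f g ∘ₗ cone x = cone (f x) ∘ₗ cone (g x) ∘ₗ mp g -
      cone (f x) ∘ₗ (pr f g : Ch F V →ₗ[F] Ch F W) := ext_single fun l => by simp [pr_cons]
  simpa using LinearMap.congr_fun this c

lemma pr_bd (f g : V → W) (c : Ch F V) : bd (pr f g c) + pr f g (bd c) = mp g c - mp f c := by
  have : bd ∘ₗ pr f g + pr f g ∘ₗ bd = mp g - (mp f : Ch F V →ₗ[F] Ch F W) :=
    ext_single fun l => by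
    induction l with
    | nil => simp
    | cons x l ih =>
      simp only [LinearMap.add_apply, LinearMap.comp_apply, LinearMap.sub_apply, mp_single] at ih
      rw [← eq_sub_iff_add_eq] at ih
      simp only [LinearMap.add_apply, LinearMap.comp_apply, LinearMap.sub_apply, mp_single,
        List.map_cons, pr_cons, bd_cons, map_sub, bd_cone, pr_cone, ih, mp_bd, cone_single]
      abel
  simpa using LinearMap.congr_fun this c

/-- Naturality of the prism. -/
lemma pr_nat {V' W' : Type*} (f g : V → W) (f' g' : V' → W') (a : V → V') (b : W → W')
    (hf : ∀ x, f' (a x) = b (f x)) (hg : ∀ x, g' (a x) = b (g x)) (c : Ch F V) :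
    pr f' g' (mp a c) = mp b (pr f g c) := by
  have : pr f' g' ∘ₗ mp a = mp b ∘ₗ (pr f g : Ch F V →ₗ[F] Ch F W) := ext_single fun l => by
    induction l with
    | nil => simp
    | cons x l ih =>
      simp only [LinearMap.comp_apply, mp_single] at ih
      have : List.map (g' ∘ a) l = List.map (b ∘ g) l := by
        apply List.map_congr_left; intro x _; exact hg x
      simp [pr_cons, mp_cone, ih, hf, hg, this]
  simpa using LinearMap.congr_fun this c

/-- Chains supported on the set `P` of lists. -/
abbrev sup (F : Type*) [CommRing F] (P : Set (List V)) : Submodule F (Ch F V) := supported F F P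

lemma single_mem_sup {P : Set (List V)} {l : List V} (h : l ∈ P) : single l (1 : F) ∈ sup F P :=
  single_mem_supported F 1 h

/-- A linear map sends chains on `P` to a submodule as soon as it does so for lists. -/
lemma sup_le {N : Type*} [AddCommGroup N] [Module F N] {P : Set (List V)} {S : Submodule F N}
    {f : Ch F V →ₗ[F] N} (h : ∀ l ∈ P, f (single l 1) ∈ S) {c : Ch F V} (hc : c ∈ sup F P) :
    f c ∈ S := by
  have : sup F P ≤ S.comap f := by
    rw [sup, supported_eq_span_single, Submodule.span_le]
    rintro _ ⟨l, hl, rfl⟩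
    exact h l hl
  exact this hc

lemma eq_on_sup {N : Type*} [AddCommGroup N] [Module F N] {P : Set (List V)}
    {f g : Ch F V →ₗ[F] N} (h : ∀ l ∈ P, f (single l 1) = g (single l 1)) {c : Ch F V}
    (hc : c ∈ sup F P) : f c = g c := by
  have := sup_le (S := (⊥ : Submodule F N)) (f := f - g)
    (fun l hl => by simp [h l hl]) hc
  simpa [sub_eq_zero] using this

lemma cone_sup {P Q : Set (List V)} {x : V} (h : ∀ l ∈ P, x :: l ∈ Q) {c : Ch F V}
    (hc : c ∈ sup F P) : cone x c ∈ sup F Q :=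
  sup_le (fun l hl => by simpa using single_mem_sup (h l hl)) hc

lemma mp_sup {P : Set (List V)} {Q : Set (List W)} {f : V → W} (h : ∀ l ∈ P, l.map f ∈ Q)
    {c : Ch F V} (hc : c ∈ sup F P) : mp f c ∈ sup F Q :=
  sup_le (fun l hl => by simpa using single_mem_sup (h l hl)) hc

lemma bd_single_sup (l : List V) :
    bd (single l (1 : F)) ∈ sup F {l' | l'.Sublist l ∧ l'.length + 1 = l.length} := by
  induction l with
  | nil => simp
  | cons x l ih =>
    rw [bd_cons]
    refine Submodule.sub_mem _ (single_mem_sup ?_) (cone_sup ?_ ih)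
    · exact ⟨List.sublist_cons_self x l, rfl⟩
    · rintro l' ⟨h1, h2⟩
      exact ⟨h1.cons_cons x, by simp [h2]⟩

lemma bd_sup {P Q : Set (List V)} (h : ∀ l ∈ P, ∀ l', l'.Sublist l → l'.length + 1 = l.length → l' ∈ Q)
    {c : Ch F V} (hc : c ∈ sup F P) : bd c ∈ sup F Q :=
  sup_le (fun l hl => supported_mono (fun l' h' => h l hl l' h'.1 h'.2) (bd_single_sup l)) hc

lemma pr_single_sup (f g : V → W) (l : List V) :
    pr f g (single l (1 : F)) ∈
      sup F {l' | (∀ y ∈ l', ∃ x ∈ l, y = f x ∨ y = g x) ∧ l'.length = l.length + 1} := by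
  induction l with
  | nil => simp
  | cons x l ih =>
    rw [pr_cons]
    refine Submodule.sub_mem _ (single_mem_sup ?_) (cone_sup ?_ ih)
    · constructor
      · simp only [List.mem_cons, List.mem_map]
        rintro y (rfl | rfl | ⟨a, ha, rfl⟩)
        exacts [⟨x, .inl rfl, .inl rfl⟩, ⟨x, .inl rfl, .inr rfl⟩, ⟨a, .inr ha, .inr rfl⟩]
      · simp
    · rintro l' ⟨h1, h2⟩
      refine ⟨?_, by simp [h2]⟩
      simp only [List.mem_cons]
      rintro y (rfl | hy)
      · exact ⟨x, .inl rfl, .inl rfl⟩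
      · obtain ⟨a, ha, h⟩ := h1 y hy
        exact ⟨a, .inr ha, h⟩

lemma pr_sup {f g : V → W} {P : Set (List V)} {Q : Set (List W)}
    (h : ∀ l ∈ P, ∀ l', (∀ y ∈ l', ∃ x ∈ l, y = f x ∨ y = g x) → l'.length = l.length + 1 → l' ∈ Q)
    {c : Ch F V} (hc : c ∈ sup F P) : pr f g c ∈ sup F Q :=
  sup_le (fun l hl => supported_mono (fun l' h' => h l hl l' h'.1 h'.2) (pr_single_sup f g l)) hc

/-- Restriction of a chain to the lists in `P`. -/
noncomputable def rs (F : Type*) [CommRing F] (P : Set (List V)) : Ch F V →ₗ[F] Ch F V := by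
  classical exact (Finsupp.supported F F P).subtype ∘ₗ Finsupp.restrictDom F F P

lemma rs_mem (P : Set (List V)) (c : Ch F V) : rs F P c ∈ sup F P := by
  classical
  simp only [rs, LinearMap.comp_apply]; exact Subtype.prop _

lemma rs_single_of_mem {P : Set (List V)} {l : List V} (h : l ∈ P) (a : F) :
    rs F P (single l a) = single l a := by
  classical
  simp [rs, restrictDom_apply, Finsupp.filter_single_of_pos, h]

lemma rs_single_of_notMem {P : Set (List V)} {l : List V} (h : l ∉ P) (a : F) :
    rs F P (single l a) = 0 := by
  classical
  simp [rs, restrictDom_apply, Finsupp.filter_single_of_neg, h]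

lemma rs_eq_self {P : Set (List V)} {c : Ch F V} (h : c ∈ sup F P) : rs F P c = c :=
  eq_on_sup (g := LinearMap.id) (fun l hl => by simp [rs_single_of_mem hl]) h

lemma rs_eq_zero {P Q : Set (List V)} (hPQ : Disjoint P Q) {c : Ch F V} (h : c ∈ sup F Q) :
    rs F P c = 0 :=
  eq_on_sup (g := 0)
    (fun l hl => by simp [rs_single_of_notMem (fun h' => Set.disjoint_left.1 hPQ h' hl)]) h

lemma rs_sup {P Q R : Set (List V)} {c : Ch F V} (h : c ∈ sup F Q) (hR : ∀ l ∈ Q, l ∈ P → l ∈ R) :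
    rs F P c ∈ sup F R := by
  refine sup_le (fun l hl => ?_) h
  by_cases hP : l ∈ P
  · rw [rs_single_of_mem hP]; exact single_mem_sup (hR l hl hP)
  · rw [rs_single_of_notMem hP]; exact zero_mem _

lemma sub_rs_sup {P Q R : Set (List V)} {c : Ch F V} (h : c ∈ sup F Q)
    (hR : ∀ l ∈ Q, l ∉ P → l ∈ R) : c - rs F P c ∈ sup F R := by
  refine sup_le (f := LinearMap.id - rs F P) (fun l hl => ?_) h
  by_cases hP : l ∈ P
  · simp [rs_single_of_mem hP]
  · simpa [rs_single_of_notMem hP] using single_mem_sup (hR l hl hP)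

end
end MannSu

/-! ### The sorting homotopy -/

namespace MannSu
set_option linter.unusedSectionVars false
universe u v
open Finsupp

section
variable {F : Type*} [CommRing F] {V W : Type*} {B : Type*} [LinearOrder B]

/-- Signed insertion of a vertex into a list sorted by the colour `β`; zero if the colour of `x`
already occurs. -/
noncomputable def insL (F : Type*) [CommRing F] (β : V → B) (x : V) : List V → Ch F V
  | [] => single [x] 1
  | y :: l => if β x < β y then single (x :: y :: l) 1 else if β x = β y then 0 else
      - cone y (insL F β x l)

/-- The linear extension of `insL`. -/
noncomputable def ins (β : V → B) (x : V) : Ch F V →ₗ[F] Ch F V := linearCombination F (insL F β x)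

/-- Chain homotopy between `cone x` and `ins β x`. -/
noncomputable def KL (F : Type*) [CommRing F] (β : V → B) (x : V) : List V → Ch F V
  | [] => 0
  | y :: l => if β x < β y then 0 else if β x = β y then single (x :: x :: x :: l) 1 else
      single (y :: x :: y :: l) 1 + single (y :: y :: y :: l) 1 + cone y (KL F β x l)

/-- The linear extension of `KL`. -/
noncomputable def Kh (β : V → B) (x : V) : Ch F V →ₗ[F] Ch F V := linearCombination F (KL F β x)

/-- Signed sorting of a list by colours (insertion sort); lists with repeated colours go to `0`. -/
noncomputable def srtL (F : Type*) [CommRing F] (β : V → B) : List V → Ch F V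
  | [] => single [] 1
  | x :: l => ins β x (srtL F β l)

/-- The linear extension of `srtL`. -/
noncomputable def srt (β : V → B) : Ch F V →ₗ[F] Ch F V := linearCombination F (srtL F β)

/-- The homotopy `Hh` between the identity and sorting, on a single list. -/
noncomputable def HhL (F : Type*) [CommRing F] (β : V → B) : List V → Ch F V
  | [] => 0
  | x :: l => - cone x (HhL F β l) + Kh β x (srtL F β l)

/-- Chain homotopy between the identity and sorting. -/
noncomputable def Hh (β : V → B) : Ch F V →ₗ[F] Ch F V := linearCombination F (HhL F β)

variable (β : V → B)

lemma ins_nil (x : V) : ins β x (single [] (1 : F)) = single [x] 1 := by simp [ins, insL]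

lemma ins_cone_lt {x y : V} (h : β x < β y) (c : Ch F V) :
    ins β x (cone y c) = cone x (cone y c) := by
  have : ins β x ∘ₗ cone y = cone x ∘ₗ (cone y : Ch F V →ₗ[F] Ch F V) :=
    ext_single fun l => by simp [ins, insL, h]
  simpa using LinearMap.congr_fun this c

lemma ins_cone_eq {x y : V} (h : β x = β y) (c : Ch F V) : ins β x (cone y c) = 0 := by
  have : ins β x ∘ₗ cone y = (0 : Ch F V →ₗ[F] Ch F V) :=
    ext_single fun l => by simp [ins, insL, h]
  simpa using LinearMap.congr_fun this c

lemma ins_cone_gt {x y : V} (h : β y < β x) (c : Ch F V) :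
    ins β x (cone y c) = - cone y (ins β x c) := by
  have : ins β x ∘ₗ cone y = - cone y ∘ₗ (ins β x : Ch F V →ₗ[F] Ch F V) :=
    ext_single fun l => by simp [ins, insL, h.not_gt, h.ne']
  simpa using LinearMap.congr_fun this c

lemma Kh_nil (x : V) : Kh β x (single [] (1 : F)) = 0 := by simp [Kh, KL]

lemma Kh_cone_lt {x y : V} (h : β x < β y) (c : Ch F V) : Kh β x (cone y c) = 0 := by
  have : Kh β x ∘ₗ cone y = (0 : Ch F V →ₗ[F] Ch F V) :=
    ext_single fun l => by simp [Kh, KL, h]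
  simpa using LinearMap.congr_fun this c

lemma Kh_cone_eq {x y : V} (h : β x = β y) (c : Ch F V) :
    Kh β x (cone y c) = cone x (cone x (cone x c)) := by
  have : Kh β x ∘ₗ cone y = cone x ∘ₗ cone x ∘ₗ (cone x : Ch F V →ₗ[F] Ch F V) :=
    ext_single fun l => by simp [Kh, KL, h]
  simpa using LinearMap.congr_fun this c

lemma Kh_cone_gt {x y : V} (h : β y < β x) (c : Ch F V) :
    Kh β x (cone y c) = cone y (cone x (cone y c)) + cone y (cone y (cone y c))
      + cone y (Kh β x c) := by
  have : Kh β x ∘ₗ cone y = cone y ∘ₗ cone x ∘ₗ cone y + cone y ∘ₗ cone y ∘ₗ cone y +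
      cone y ∘ₗ (Kh β x : Ch F V →ₗ[F] Ch F V) :=
    ext_single fun l => by simp [Kh, KL, h.not_gt, h.ne']
  simpa using LinearMap.congr_fun this c

lemma srt_nil : srt β (single [] (1 : F)) = single [] 1 := by simp [srt, srtL]

lemma srt_cone (x : V) (c : Ch F V) : srt β (cone x c) = ins β x (srt β c) := by
  have : srt β ∘ₗ cone x = ins β x ∘ₗ (srt β : Ch F V →ₗ[F] Ch F V) :=
    ext_single fun l => by simp [srt, srtL]
  simpa using LinearMap.congr_fun this c

lemma Hh_nil : Hh β (single [] (1 : F)) = 0 := by simp [Hh, HhL]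

lemma Hh_cone (x : V) (c : Ch F V) :
    Hh β (cone x c) = - cone x (Hh β c) + Kh β x (srt β c) := by
  have : Hh β ∘ₗ cone x = - ((cone x : Ch F V →ₗ[F] Ch F V) ∘ₗ Hh β) + Kh β x ∘ₗ (srt β : Ch F V →ₗ[F] Ch F V) :=
    ext_single fun l => by simp [Hh, HhL, srt]
  simpa using LinearMap.congr_fun this c

/-- Lists strictly sorted by colour, in which only `x` may have the colour of `x`. -/
def Srt (x : V) : Set (List V) :=
  {l | l.Pairwise (fun a b => β a < β b) ∧ ∀ y ∈ l, β x = β y → x = y}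

variable {β}

lemma Srt_sub {x : V} {l l' : List V} (h : l ∈ Srt β x) (hs : l'.Sublist l) : l' ∈ Srt β x :=
  ⟨h.1.sublist hs, fun y hy => h.2 y (hs.subset hy)⟩

lemma ins_lt {x : V} {l : List V} (h : ∀ y ∈ l, β x < β y) :
    ins β x (single l (1 : F)) = single (x :: l) 1 := by
  cases l with
  | nil => exact ins_nil β x
  | cons y l =>
    have := ins_cone_lt (F := F) β (h y (by simp)) (single l 1)
    simpa using this

lemma Kh_lt {x : V} {l : List V} (h : ∀ y ∈ l, β x < β y) :
    Kh β x (single l (1 : F)) = 0 := by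
  cases l with
  | nil => exact Kh_nil β x
  | cons y l =>
    have := Kh_cone_lt (F := F) β (h y (by simp)) (single l 1)
    simpa using this

lemma bd_sub_sup {x : V} {c : Ch F V} (hc : c ∈ sup F (Srt β x)) : bd c ∈ sup F (Srt β x) :=
  bd_sup (fun _ hl _ hs _ => Srt_sub hl hs) hc

lemma bd_ins_single {x : V} {l : List V} (hl : l ∈ Srt β x) :
    bd (ins β x (single l (1 : F))) = single l 1 - ins β x (bd (single l 1)) := by
  induction l with
  | nil => simp [ins_nil, bd_cons]
  | cons y l ih =>
    have hl' : l ∈ Srt β x := Srt_sub hl (List.sublist_cons_self y l)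
    have hy := List.pairwise_cons.1 hl.1
    rcases lt_trichotomy (β x) (β y) with h | h | h
    · have h1 : ∀ z ∈ l, β x < β z := fun z hz => h.trans (hy.1 z hz)
      rw [← cone_single, ins_cone_lt β h, bd_cone, bd_cone, map_sub, map_sub, ins_lt h1,
        ins_cone_lt β h]
      simp
    · have hxy : x = y := hl.2 y (by simp) h
      subst hxy
      rw [← cone_single, ins_cone_eq β h, bd_cone, map_sub, ins_lt hy.1, ins_cone_eq β h]
      simp
    · rw [← cone_single, ins_cone_gt β h, bd_cone, map_neg, bd_cone, ih hl', map_sub,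
        map_sub, ins_cone_gt β h]
      abel

lemma bd_ins {x : V} {c : Ch F V} (hc : c ∈ sup F (Srt β x)) :
    bd (ins β x c) = c - ins β x (bd c) :=
  eq_on_sup (f := bd ∘ₗ ins β x) (g := LinearMap.id - ins β x ∘ₗ bd)
    (fun l hl => by simpa using bd_ins_single hl) hc

lemma bd_Kh_single {x : V} {l : List V} (hl : l ∈ Srt β x) :
    bd (Kh β x (single l (1 : F))) - Kh β x (bd (single l 1))
      = cone x (single l 1) - ins β x (single l 1) := by
  induction l with
  | nil => simp [ins_nil, Kh_nil]
  | cons y l ih =>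
    have hl' : l ∈ Srt β x := Srt_sub hl (List.sublist_cons_self y l)
    have hy := List.pairwise_cons.1 hl.1
    rcases lt_trichotomy (β x) (β y) with h | h | h
    · have h1 : ∀ z ∈ l, β x < β z := fun z hz => h.trans (hy.1 z hz)
      rw [← cone_single y, ins_cone_lt β h, bd_cone, Kh_cone_lt β h, map_sub, Kh_lt h1,
        Kh_cone_lt β h]
      simp
    · have hxy : x = y := hl.2 y (by simp) h
      subst hxy
      rw [← cone_single x, ins_cone_eq β h, Kh_cone_eq β h, bd_cone x (single l 1), map_sub,
        Kh_lt hy.1, Kh_cone_eq β h]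
      simp only [bd_cone, map_sub]
      abel
    · have e := sub_eq_iff_eq_add.1 (ih hl')
      rw [← cone_single y, ins_cone_gt β h, Kh_cone_gt β h, bd_cone y (single l 1), map_sub,
        Kh_cone_gt β h]
      simp only [bd_cone, map_sub, map_add, e]
      abel

lemma bd_Kh {x : V} {c : Ch F V} (hc : c ∈ sup F (Srt β x)) :
    bd (Kh β x c) - Kh β x (bd c) = cone x c - ins β x c :=
  eq_on_sup (f := bd ∘ₗ Kh β x - Kh β x ∘ₗ bd) (g := cone x - ins β x)
    (fun l hl => by simpa using bd_Kh_single hl) hc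

lemma ins_single_sup (x : V) (l : List V) : ins β x (single l (1 : F)) ∈
    sup F {l' | (∀ y ∈ l', y ∈ x :: l) ∧ l'.length = l.length + 1 ∧
      (l.Pairwise (fun a b => β a < β b) → l'.Pairwise (fun a b => β a < β b))} := by
  induction l with
  | nil => rw [ins_nil]; exact single_mem_sup ⟨by simp, by simp, by simp⟩
  | cons y l ih =>
    rcases lt_trichotomy (β x) (β y) with h | h | h
    · rw [← cone_single, ins_cone_lt β h, cone_single, cone_single]
      refine single_mem_sup ⟨fun _ => id, rfl, fun hp => List.pairwise_cons.2 ⟨?_, hp⟩⟩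
      have hp := List.pairwise_cons.1 hp
      simp only [List.mem_cons]
      rintro z (rfl | hz)
      · exact h
      · exact h.trans (hp.1 z hz)
    · rw [← cone_single, ins_cone_eq β h]; exact zero_mem _
    · rw [← cone_single, ins_cone_gt β h]
      refine Submodule.neg_mem _ (cone_sup ?_ ih)
      rintro l' ⟨h1, h2, h3⟩
      refine ⟨?_, by simp [h2], fun hp => List.pairwise_cons.2 ⟨?_, h3 (List.pairwise_cons.1 hp).2⟩⟩
      · simp only [List.mem_cons] at h1 ⊢
        rintro z (rfl | hz)
        · simp
        · rcases h1 z hz with h | h <;> simp [h]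
      · intro z hz
        rcases List.mem_cons.1 (h1 z hz) with rfl | hz
        · exact h
        · exact (List.pairwise_cons.1 hp).1 z hz

lemma srt_single_sup (l : List V) : srt β (single l (1 : F)) ∈
    sup F {l' | (∀ y ∈ l', y ∈ l) ∧ l'.length = l.length ∧
      l'.Pairwise (fun a b => β a < β b)} := by
  induction l with
  | nil => rw [srt_nil]; exact single_mem_sup ⟨by simp, rfl, by simp⟩
  | cons x l ih =>
    rw [← cone_single, srt_cone]
    refine sup_le (fun l' hl' => ?_) ih
    refine supported_mono ?_ (ins_single_sup x l')
    rintro l'' ⟨h1, h2, h3⟩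
    refine ⟨fun y hy => ?_, by simp [h2, hl'.2.1], h3 hl'.2.2⟩
    rcases List.mem_cons.1 (h1 y hy) with rfl | h
    · simp
    · exact List.mem_cons_of_mem _ (hl'.1 y h)

lemma srt_long [DecidableEq B] {l : List V} (h : (l.map β).toFinset.card < l.length) :
    srt β (single l (1 : F)) = 0 := by
  have : srt β (single l (1 : F)) ∈ sup F (∅ : Set (List V)) := by
    refine supported_mono ?_ (srt_single_sup l)
    rintro l' ⟨h1, h2, h3⟩
    have h4 : (l'.map β).Nodup := by
      rw [List.Nodup, List.pairwise_map]; exact h3.imp fun h => h.ne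
    have h5 : (l'.map β).toFinset ⊆ (l.map β).toFinset := by
      intro b hb
      simp only [List.mem_toFinset, List.mem_map] at hb ⊢
      obtain ⟨a, ha, rfl⟩ := hb
      exact ⟨a, h1 a ha, rfl⟩
    have := Finset.card_le_card h5
    rw [List.toFinset_card_of_nodup h4, List.length_map] at this
    omega
  simpa using this

variable (β) in
/-- Lists in which equal colours occur only at equal vertices. -/
def GLi : Set (List V) := {l | ∀ x ∈ l, ∀ y ∈ l, β x = β y → x = y}

lemma srt_Srt {x : V} {l : List V} (h : x :: l ∈ GLi β) {c : Ch F V}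
    (hc : c ∈ sup F {l' | ∀ y ∈ l', y ∈ l}) : srt β c ∈ sup F (Srt β x) := by
  refine sup_le (fun l' hl' => supported_mono ?_ (srt_single_sup l')) hc
  rintro l'' ⟨h1, h2, h3⟩
  exact ⟨h3, fun y hy => h x (by simp) y (List.mem_cons_of_mem _ (hl' y (h1 y hy)))⟩

lemma GLi_tail {x : V} {l : List V} (h : x :: l ∈ GLi β) : l ∈ GLi β :=
  fun a ha b hb => h a (List.mem_cons_of_mem _ ha) b (List.mem_cons_of_mem _ hb)

lemma self_sup (l : List V) : single l (1 : F) ∈ sup F {l' | ∀ y ∈ l', y ∈ l} :=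
  single_mem_sup fun _ => id

lemma bd_self_sup (l : List V) : bd (single l (1 : F)) ∈ sup F {l' | ∀ y ∈ l', y ∈ l} :=
  supported_mono (fun _ h => fun _ hy => h.1.subset hy) (bd_single_sup l)

lemma srt_bd_single {l : List V} (h : l ∈ GLi β) :
    srt β (bd (single l (1 : F))) = bd (srt β (single l 1)) := by
  induction l with
  | nil => simp [srt_nil]
  | cons x l ih =>
    rw [← cone_single, bd_cone, map_sub, srt_cone, srt_cone, ih (GLi_tail h),
      bd_ins (srt_Srt h (self_sup l))]

lemma Hh_bd_single {l : List V} (h : l ∈ GLi β) :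
    bd (Hh β (single l (1 : F))) + Hh β (bd (single l 1)) = single l 1 - srt β (single l 1) := by
  induction l with
  | nil => simp [srt_nil, Hh_nil]
  | cons x l ih =>
    have e := eq_sub_of_add_eq (ih (GLi_tail h))
    have e2 := eq_add_of_sub_eq (bd_Kh (srt_Srt h (self_sup l) : srt β (single l (1 : F)) ∈ _))
    rw [← cone_single, bd_cone, map_sub, Hh_cone, Hh_cone, srt_cone, srt_bd_single (GLi_tail h)]
    simp only [map_add, map_neg, bd_cone, e, e2, map_sub]
    abel

lemma Hh_single_sup (l : List V) : Hh β (single l (1 : F)) ∈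
    sup F {l' | (∀ y ∈ l', y ∈ l) ∧ l'.length = l.length + 1} := by
  have hK : ∀ x : V, ∀ l : List V, Kh β x (single l (1 : F)) ∈
      sup F {l' | (∀ y ∈ l', y ∈ x :: l) ∧ l'.length = l.length + 2} := by
    intro x l
    induction l with
    | nil => rw [Kh_nil]; exact zero_mem _
    | cons y l ih =>
      rcases lt_trichotomy (β x) (β y) with h | h | h
      · rw [← cone_single, Kh_cone_lt β h]; exact zero_mem _
      · rw [← cone_single, Kh_cone_eq β h]; simp only [cone_single]
        exact single_mem_sup ⟨by simp +contextual, by simp⟩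
      · rw [← cone_single, Kh_cone_gt β h]; simp only [cone_single]
        refine Submodule.add_mem _ (Submodule.add_mem _ ?_ ?_) (cone_sup ?_ ih)
        · exact single_mem_sup ⟨by simp +contextual, by simp⟩
        · exact single_mem_sup ⟨by simp +contextual, by simp⟩
        · rintro l' ⟨h1, h2⟩
          refine ⟨?_, by simp [h2]⟩
          simp only [List.mem_cons] at h1 ⊢
          rintro z (rfl | hz)
          · simp
          · rcases h1 z hz with h | h <;> simp [h]
  induction l with
  | nil => rw [Hh_nil]; exact zero_mem _
  | cons x l ih =>
    rw [← cone_single, Hh_cone]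
    refine Submodule.add_mem _ (Submodule.neg_mem _ (cone_sup ?_ ih)) ?_
    · rintro l' ⟨h1, h2⟩
      refine ⟨?_, by simp [h2]⟩
      simp only [List.mem_cons]
      rintro z (rfl | hz)
      · simp
      · exact .inr (h1 z hz)
    · refine sup_le (fun l' hl' => ?_) (srt_single_sup l)
      refine supported_mono ?_ (hK x l')
      rintro l'' ⟨h1, h2⟩
      refine ⟨fun y hy => ?_, by simp [h2, hl'.2.1]⟩
      rcases List.mem_cons.1 (h1 y hy) with rfl | h
      · simp
      · exact List.mem_cons_of_mem _ (hl'.1 y h)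

section nat
variable {β' : W → B} {a : V → W}

lemma ins_nat (ha : ∀ x, β' (a x) = β x) (x : V) (c : Ch F V) : ins β' (a x) (mp a c) = mp a (ins β x c) := by
  have : ins β' (a x) ∘ₗ mp a = mp a ∘ₗ (ins β x : Ch F V →ₗ[F] Ch F V) := ext_single fun l => by
    induction l with
    | nil => simp [ins_nil]
    | cons y l ih =>
      simp only [LinearMap.comp_apply] at ih ⊢
      rw [← cone_single, mp_cone]
      rcases lt_trichotomy (β x) (β y) with h | h | h
      · rw [ins_cone_lt β h, ins_cone_lt β' (by rwa [ha, ha])]; simp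
      · rw [ins_cone_eq β h, ins_cone_eq β' (by rwa [ha, ha])]; simp
      · rw [ins_cone_gt β h, ins_cone_gt β' (by rwa [ha, ha]), ih]; simp [mp_cone]
  simpa using LinearMap.congr_fun this c

lemma Kh_nat (ha : ∀ x, β' (a x) = β x) (x : V) (c : Ch F V) : Kh β' (a x) (mp a c) = mp a (Kh β x c) := by
  have : Kh β' (a x) ∘ₗ mp a = mp a ∘ₗ (Kh β x : Ch F V →ₗ[F] Ch F V) := ext_single fun l => by
    induction l with
    | nil => simp [Kh_nil]
    | cons y l ih =>
      simp only [LinearMap.comp_apply] at ih ⊢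
      rw [← cone_single, mp_cone]
      rcases lt_trichotomy (β x) (β y) with h | h | h
      · rw [Kh_cone_lt β h, Kh_cone_lt β' (by rwa [ha, ha])]; simp
      · rw [Kh_cone_eq β h, Kh_cone_eq β' (by rwa [ha, ha])]; simp
      · rw [Kh_cone_gt β h, Kh_cone_gt β' (by rwa [ha, ha]), ih]; simp [mp_cone]
  simpa using LinearMap.congr_fun this c

lemma srt_nat (ha : ∀ x, β' (a x) = β x) (c : Ch F V) : srt β' (mp a c) = mp a (srt β c) := by
  have : srt β' ∘ₗ mp a = mp a ∘ₗ (srt β : Ch F V →ₗ[F] Ch F V) := ext_single fun l => by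
    induction l with
    | nil => simp [srt_nil]
    | cons y l ih =>
      simp only [LinearMap.comp_apply] at ih ⊢
      rw [← cone_single, mp_cone, srt_cone, srt_cone, ih, ins_nat ha]
  simpa using LinearMap.congr_fun this c

lemma Hh_nat (ha : ∀ x, β' (a x) = β x) (c : Ch F V) : Hh β' (mp a c) = mp a (Hh β c) := by
  have : Hh β' ∘ₗ mp a = mp a ∘ₗ (Hh β : Ch F V →ₗ[F] Ch F V) := ext_single fun l => by
    induction l with
    | nil => simp [Hh_nil]
    | cons y l ih =>
      simp only [LinearMap.comp_apply] at ih ⊢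
      rw [← cone_single, mp_cone, Hh_cone, Hh_cone, ih, srt_nat ha, Kh_nat ha]
      simp [mp_cone]
  simpa using LinearMap.congr_fun this c

end nat
end
end MannSu

/-! ### Sequences of chains with mesh tending to zero -/

namespace MannSu
universe u v
open Finsupp Filter Uniformity

/-- The non-principal ultrafilter along which sequences of chains are considered. -/
noncomputable def om : Filter ℕ := (hyperfilter ℕ : Filter ℕ)

instance : NeBot om := by unfold om; infer_instance

lemma om_le : om ≤ atTop := by
  unfold om; rw [← Nat.cofinite_eq_atTop]; exact hyperfilter_le_cofinite

lemma ev_ge (n : ℕ) : ∀ᶠ j in om, n ≤ j := om_le (eventually_ge_atTop n)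

/-- A countable family of properties that hold eventually holds along a slowly increasing index. -/
lemma diag {P : ℕ → ℕ → Prop} (h : ∀ n, ∀ᶠ j in om, P n j) :
    ∃ f : ℕ → ℕ, (∀ n, ∀ᶠ j in om, n ≤ f j) ∧ ∀ᶠ j in om, P (f j) j := by
  classical
  refine ⟨fun j => Nat.findGreatest (fun n => P n j) j, fun n => ?_, ?_⟩
  · filter_upwards [h n, ev_ge n] with j h1 h2
    exact Nat.le_findGreatest h2 h1
  · filter_upwards [h 0] with j h1
    exact Nat.findGreatest_spec (P := fun n => P n j) (Nat.zero_le j) h1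

/-- Any sequence in a finite type is constant along the ultrafilter. -/
lemma om_const {α : Type*} [Finite α] (f : ℕ → α) : ∃ a, ∀ᶠ j in om, f j = a := by
  have := (hyperfilter ℕ).eventually_exists_iff (P := fun a j => f j = a)
  exact this.1 (Eventually.of_forall fun j => ⟨f j, rfl⟩)

section
variable {F : Type*} [CommRing F] {M N : Type*}

/-- Sequences of chains. -/
abbrev Sq (F : Type*) [CommRing F] (M : Type*) := ℕ → Ch F M

/-- Sequences eventually supported on the set `P` of lists. -/
def ev (F : Type*) [CommRing F] (P : Set (List M)) : Submodule F (Sq F M) where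
  carrier := {c | ∀ᶠ j in om, c j ∈ sup F P}
  add_mem' h1 h2 := by filter_upwards [h1, h2] with j h1 h2 using add_mem h1 h2
  zero_mem' := Eventually.of_forall fun _ => zero_mem _
  smul_mem' a c h := by filter_upwards [h] with j h using Submodule.smul_mem _ a h

/-- Lists of size at most `U`. -/
def SmL (U : Set (M × M)) : Set (List M) := {l | ∀ x ∈ l, ∀ y ∈ l, (x, y) ∈ U}

/-- Sequences of chains with mesh tending to zero. -/
noncomputable def small (F : Type*) [CommRing F] (M : Type*) [UniformSpace M] : Submodule F (Sq F M) :=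
  ⨅ U ∈ 𝓤 M, ev F (SmL U)

lemma mem_small [UniformSpace M] {c : Sq F M} : c ∈ small F M ↔ ∀ U ∈ 𝓤 M, c ∈ ev F (SmL U) := by
  simp [small, Submodule.mem_iInf]

/-- Sequences of chains that stay away from the filter `𝓕`. -/
def null (F : Type*) [CommRing F] (𝓕 : Filter M) : Submodule F (Sq F M) where
  carrier := {c | ∃ W ∈ 𝓕, c ∈ ev F (LS Wᶜ)}
  add_mem' := by
    rintro a b ⟨W, hW, h1⟩ ⟨W', hW', h2⟩
    refine ⟨W ∩ W', inter_mem hW hW', ?_⟩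
    filter_upwards [h1, h2] with j h1 h2
    exact add_mem (supported_mono (s := LS Wᶜ) (fun l hl => fun x hx h => hl x hx h.1) h1)
      (supported_mono (s := LS W'ᶜ) (fun l hl => fun x hx h => hl x hx h.2) h2)
  zero_mem' := ⟨Set.univ, univ_mem, zero_mem _⟩
  smul_mem' := by
    rintro a c ⟨W, hW, h⟩
    exact ⟨W, hW, Submodule.smul_mem _ a h⟩

/-- Chains of length `k`. -/
abbrev len (F : Type*) [CommRing F] (M : Type*) (k : ℕ) : Submodule F (Sq F M) :=
  ev F {l | l.length = k}

/-- Termwise application of a sequence of linear maps. -/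
noncomputable def sq (f : ℕ → Ch F M →ₗ[F] Ch F N) : Sq F M →ₗ[F] Sq F N :=
  LinearMap.pi fun j => f j ∘ₗ LinearMap.proj j

@[simp] lemma sq_apply (f : ℕ → Ch F M →ₗ[F] Ch F N) (c : Sq F M) (j : ℕ) :
    sq f c j = f j (c j) := rfl

lemma ev_mono {P Q : Set (List M)} (h : P ⊆ Q) {c : Sq F M} (hc : c ∈ ev F P) : c ∈ ev F Q := by
  filter_upwards [hc] with j hj using supported_mono h hj

lemma ev_inter {P Q : Set (List M)} {c : Sq F M} (h1 : c ∈ ev F P) (h2 : c ∈ ev F Q) :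
    c ∈ ev F (P ∩ Q) := by
  filter_upwards [h1, h2] with j h1 h2
  rw [sup, supported_inter]; exact ⟨h1, h2⟩

lemma ev_congr {P : Set (List M)} {c d : Sq F M} (h : ∀ᶠ j in om, c j = d j) (hc : c ∈ ev F P) :
    d ∈ ev F P := by
  filter_upwards [hc, h] with j h1 h2 using h2 ▸ h1

lemma ev_zero {P : Set (List M)} {c : Sq F M} (h : ∀ᶠ j in om, c j = 0) : c ∈ ev F P := by
  filter_upwards [h] with j h; rw [h]; exact zero_mem _

lemma sq_ev {f : ℕ → Ch F M →ₗ[F] Ch F N} {P : Set (List M)} {Q : Set (List N)}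
    (h : ∀ᶠ j in om, ∀ l ∈ P, f j (single l 1) ∈ sup F Q) {c : Sq F M} (hc : c ∈ ev F P) :
    sq f c ∈ ev F Q := by
  filter_upwards [h, hc] with j h1 h2 using sup_le h1 h2

lemma sq_small [UniformSpace M] [UniformSpace N] {f : ℕ → Ch F M →ₗ[F] Ch F N} {P : Set (List M)}
    (h : ∀ U ∈ 𝓤 N, ∃ V ∈ 𝓤 M, ∀ᶠ j in om, ∀ l ∈ P, l ∈ SmL V → f j (single l 1) ∈ sup F (SmL U))
    {c : Sq F M} (hc : c ∈ small F M) (hP : c ∈ ev F P) : sq f c ∈ small F N := by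
  rw [mem_small] at hc ⊢
  intro U hU
  obtain ⟨V, hV, hj⟩ := h U hU
  refine sq_ev (P := P ∩ SmL V) ?_ (ev_inter hP (hc V hV))
  filter_upwards [hj] with j hj l hl using hj l hl.1 hl.2

lemma ev_univ (c : Sq F M) : c ∈ ev F (Set.univ : Set (List M)) :=
  Eventually.of_forall fun j => by simp [sup, supported_univ]

lemma small_congr [UniformSpace M] {c d : Sq F M} (h : ∀ᶠ j in om, c j = d j)
    (hc : c ∈ small F M) : d ∈ small F M := by
  rw [mem_small] at hc ⊢
  exact fun U hU => ev_congr h (hc U hU)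

lemma small_zero [UniformSpace M] {c : Sq F M} (h : ∀ᶠ j in om, c j = 0) : c ∈ small F M :=
  mem_small.2 fun _ _ => ev_zero h

lemma null_congr {𝓕 : Filter M} {c d : Sq F M} (h : ∀ᶠ j in om, c j = d j)
    (hc : c ∈ null F 𝓕) : d ∈ null F 𝓕 := by
  obtain ⟨W, hW, hc⟩ := hc
  exact ⟨W, hW, ev_congr h hc⟩

lemma null_zero {𝓕 : Filter M} {c : Sq F M} (h : ∀ᶠ j in om, c j = 0) : c ∈ null F 𝓕 :=
  ⟨Set.univ, univ_mem, ev_zero h⟩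

lemma null_mono {𝓕 𝓖 : Filter M} (h : 𝓕 ≤ 𝓖) {c : Sq F M} (hc : c ∈ null F 𝓖) : c ∈ null F 𝓕 := by
  obtain ⟨W, hW, hc⟩ := hc
  exact ⟨W, h hW, hc⟩

/-- Termwise boundary. -/
noncomputable abbrev bdq : Sq F M →ₗ[F] Sq F M := sq fun _ => bd

lemma bdq_bdq (c : Sq F M) : bdq (bdq c) = 0 := by ext1 j; simp [bd_bd]

lemma bdq_ev {P Q : Set (List M)}
    (h : ∀ l ∈ P, ∀ l', l'.Sublist l → l'.length + 1 = l.length → l' ∈ Q) {c : Sq F M}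
    (hc : c ∈ ev F P) : bdq c ∈ ev F Q := by
  filter_upwards [hc] with j hc using bd_sup h hc

lemma LS_sub {A : Set M} {l l' : List M} (h : l ∈ LS A) (hs : l'.Sublist l) : l' ∈ LS A :=
  fun x hx => h x (hs.subset hx)

lemma SmL_sub {A : Set (M × M)} {l l' : List M} (h : l ∈ SmL A) (hs : l'.Sublist l) : l' ∈ SmL A :=
  fun x hx y hy => h x (hs.subset hx) y (hs.subset hy)

lemma bdq_LS {A : Set M} {c : Sq F M} (hc : c ∈ ev F (LS A)) : bdq c ∈ ev F (LS A) :=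
  bdq_ev (fun _ h _ hs _ => LS_sub h hs) hc

lemma bdq_len {k : ℕ} {c : Sq F M} (hc : c ∈ len F M (k + 1)) : bdq c ∈ len F M k :=
  bdq_ev (fun l h l' _ h' => by simp only [Set.mem_ofPred_eq] at h ⊢; omega) hc

lemma bdq_small [UniformSpace M] {c : Sq F M} (hc : c ∈ small F M) : bdq c ∈ small F M := by
  rw [mem_small] at hc ⊢
  exact fun U hU => bdq_ev (fun _ h _ hs _ => SmL_sub h hs) (hc U hU)

lemma bdq_null {𝓕 : Filter M} {c : Sq F M} (hc : c ∈ null F 𝓕) : bdq c ∈ null F 𝓕 := by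
  obtain ⟨W, hW, hc⟩ := hc
  exact ⟨W, hW, bdq_LS hc⟩

/-- Termwise restriction to the lists in `P`. -/
noncomputable abbrev rsq (P : Set (List M)) : Sq F M →ₗ[F] Sq F M := sq fun _ => rs F P

lemma rsq_ev {P Q R : Set (List M)} {c : Sq F M} (h : c ∈ ev F Q) (hR : ∀ l ∈ Q, l ∈ P → l ∈ R) :
    rsq P c ∈ ev F R := by
  filter_upwards [h] with j h using rs_sup h hR

lemma rsq_self (P : Set (List M)) (c : Sq F M) : rsq P c ∈ ev F P :=
  Eventually.of_forall fun _ => rs_mem P _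

lemma sub_rsq_ev {P Q R : Set (List M)} {c : Sq F M} (h : c ∈ ev F Q)
    (hR : ∀ l ∈ Q, l ∉ P → l ∈ R) : c - rsq P c ∈ ev F R := by
  filter_upwards [h] with j h using sub_rs_sup h hR

lemma rsq_small [UniformSpace M] (P : Set (List M)) {c : Sq F M} (hc : c ∈ small F M) :
    rsq P c ∈ small F M := by
  rw [mem_small] at hc ⊢
  exact fun U hU => rsq_ev (hc U hU) fun _ h _ => h

lemma rsq_null {𝓕 : Filter M} (P : Set (List M)) {c : Sq F M} (hc : c ∈ null F 𝓕) :
    rsq P c ∈ null F 𝓕 := by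
  obtain ⟨W, hW, hc⟩ := hc
  exact ⟨W, hW, rsq_ev hc fun _ h _ => h⟩

/-- Termwise induced map. -/
noncomputable abbrev mq (f : ℕ → M → N) : Sq F M →ₗ[F] Sq F N := sq fun j => mp (f j)

lemma mq_bdq (f : ℕ → M → N) (c : Sq F M) : mq f (bdq c) = bdq (mq f c) := by
  ext1 j; simp [mp_bd]

lemma mq_LS {f : ℕ → M → N} {A : Set M} {B : Set N} (h : ∀ᶠ j in om, ∀ x ∈ A, f j x ∈ B)
    {c : Sq F M} (hc : c ∈ ev F (LS A)) : mq f c ∈ ev F (LS B) := by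
  filter_upwards [h, hc] with j h hc
  refine mp_sup (fun l hl => ?_) hc
  intro y hy
  obtain ⟨x, hx, rfl⟩ := List.mem_map.1 hy
  exact h x (hl x hx)

lemma mq_len {f : ℕ → M → N} {k : ℕ} {c : Sq F M} (hc : c ∈ len F M k) : mq f c ∈ len F N k := by
  filter_upwards [hc] with j hc
  exact mp_sup (fun l hl => by simpa using hl) hc

lemma mq_small [UniformSpace M] [UniformSpace N] {f : ℕ → M → N} {A : Set M}
    (h : ∀ U ∈ 𝓤 N, ∃ V ∈ 𝓤 M, ∀ᶠ j in om, ∀ x ∈ A, ∀ y ∈ A, (x, y) ∈ V → (f j x, f j y) ∈ U)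
    {c : Sq F M} (hc : c ∈ small F M) (hA : c ∈ ev F (LS A)) : mq f c ∈ small F N := by
  refine sq_small (P := LS A) (fun U hU => ?_) hc hA
  obtain ⟨V, hV, hj⟩ := h U hU
  refine ⟨V, hV, ?_⟩
  filter_upwards [hj] with j hj l hl hs
  rw [mp_single]
  refine single_mem_sup ?_
  intro x' hx' y' hy'
  obtain ⟨x, hx, rfl⟩ := List.mem_map.1 hx'
  obtain ⟨y, hy, rfl⟩ := List.mem_map.1 hy'
  exact hj x (hl x hx) y (hl y hy) (hs x hx y hy)

/-- Sum of prisms along a finite chain of maps. -/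
noncomputable def Hs (f : ℕ → M → N) (q : ℕ) : Ch F M →ₗ[F] Ch F N :=
  ∑ i ∈ Finset.range q, pr (f i) (f (i + 1))

lemma Hs_bd (f : ℕ → M → N) (q : ℕ) (c : Ch F M) :
    bd (Hs f q c) + Hs f q (bd c) = mp (f q) c - mp (f 0) c := by
  simp only [Hs, LinearMap.sum_apply, map_sum, ← Finset.sum_add_distrib, pr_bd]
  rw [Finset.sum_range_sub (fun i => mp (f i) c)]

lemma Hs_sup {f : ℕ → M → N} {q : ℕ} {P : Set (List M)} {Q : Set (List N)}
    (h : ∀ l ∈ P, ∀ l', ∀ i < q, (∀ y ∈ l', ∃ x ∈ l, y = f i x ∨ y = f (i + 1) x) →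
      l'.length = l.length + 1 → l' ∈ Q)
    {c : Ch F M} (hc : c ∈ sup F P) : Hs f q c ∈ sup F Q := by
  simp only [Hs, LinearMap.sum_apply]
  refine Submodule.sum_mem _ fun i hi => pr_sup ?_ hc
  exact fun l hl l' h1 h2 => h l hl l' i (Finset.mem_range.1 hi) h1 h2

/-- Termwise homotopy. -/
noncomputable abbrev Hq (f : ℕ → ℕ → M → N) (q : ℕ → ℕ) : Sq F M →ₗ[F] Sq F N :=
  sq fun j => Hs (f j) (q j)

lemma Hq_bd (f : ℕ → ℕ → M → N) (q : ℕ → ℕ) (c : Sq F M) :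
    bdq (Hq f q c) + Hq f q (bdq c) = mq (fun j => f j (q j)) c - mq (fun j => f j 0) c := by
  ext1 j; simp [Hs_bd]

lemma Hq_len {f : ℕ → ℕ → M → N} {q : ℕ → ℕ} {k : ℕ} {c : Sq F M} (hc : c ∈ len F M k) :
    Hq f q c ∈ len F N (k + 1) := by
  filter_upwards [hc] with j hc
  refine Hs_sup (fun l hl l' i _ _ h => ?_) hc
  simp only [Set.mem_ofPred_eq] at hl ⊢; omega

lemma Hq_LS {f : ℕ → ℕ → M → N} {q : ℕ → ℕ} {A : Set M} {B : Set N}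
    (h : ∀ᶠ j in om, ∀ i ≤ q j, ∀ x ∈ A, f j i x ∈ B)
    {c : Sq F M} (hc : c ∈ ev F (LS A)) : Hq f q c ∈ ev F (LS B) := by
  filter_upwards [h, hc] with j h hc
  refine Hs_sup (fun l hl l' i hi h1 _ => ?_) hc
  intro y hy
  obtain ⟨x, hx, rfl | rfl⟩ := h1 y hy
  · exact h i hi.le x (hl x hx)
  · exact h (i + 1) hi x (hl x hx)

lemma Hq_small [UniformSpace M] [UniformSpace N] {f : ℕ → ℕ → M → N} {q : ℕ → ℕ} {A : Set M}
    (h : ∀ U ∈ 𝓤 N, ∃ V ∈ 𝓤 M, ∀ᶠ j in om, ∀ i ≤ q j, ∀ x ∈ A, ∀ y ∈ A,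
      (x, y) ∈ V → (f j i x, f j i y) ∈ U)
    (h' : ∀ U ∈ 𝓤 N, ∀ᶠ j in om, ∀ i < q j, ∀ x ∈ A, (f j i x, f j (i + 1) x) ∈ U)
    {c : Sq F M} (hc : c ∈ small F M) (hA : c ∈ ev F (LS A)) : Hq f q c ∈ small F N := by
  refine sq_small (P := LS A) (fun U hU => ?_) hc hA
  obtain ⟨U1, hU1, hs1, hc1⟩ := comp_symm_mem_uniformity_sets hU
  obtain ⟨U2, hU2, hs2, hc2⟩ := comp_symm_mem_uniformity_sets hU1
  obtain ⟨V, hV, hj⟩ := h U2 hU2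
  refine ⟨V, hV, ?_⟩
  filter_upwards [hj, h' U2 hU2] with j hj hj' l hl hs
  refine Hs_sup (P := {l}) (fun l hl' l' i hi h1 _ => ?_) (single_mem_sup rfl)
  subst hl'
  -- every vertex is close to its companion under `f j i`
  have key : ∀ y ∈ l', ∃ x ∈ l, (f j i x, y) ∈ U2 := by
    intro y hy
    obtain ⟨x, hx, rfl | rfl⟩ := h1 y hy
    · exact ⟨x, hx, refl_mem_uniformity hU2⟩
    · exact ⟨x, hx, hj' i hi x (hl x hx)⟩
  intro y hy z hz
  obtain ⟨a, ha, h1⟩ := key y hy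
  obtain ⟨b, hb, h2⟩ := key z hz
  have h3 := hj i hi.le a (hl a ha) b (hl b hb) (hs a ha b hb)
  have h4 : (f j i a, z) ∈ U1 := hc2 ⟨_, h3, h2⟩
  have h5 : (y, f j i a) ∈ U1 := hc2 ⟨_, hs2.symm _ _ h1, refl_mem_uniformity hU2⟩
  exact hc1 ⟨_, h5, h4⟩

end
end MannSu

/-! ### Finiteness of homology -/

namespace MannSu
universe u v
open Finsupp Filter Uniformity Topology
set_option linter.unusedSectionVars false

section
variable {F : Type*} [CommRing F] {M : Type*} [UniformSpace M]

/-- Small chains of lists of length `n` in `Y`. -/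
noncomputable def Ac (F : Type*) [CommRing F] {M : Type*} [UniformSpace M] (n : ℕ) (Y : Set M) :
    Submodule F (Sq F M) := small F M ⊓ ev F (LS Y) ⊓ len F M n

/-- Cycles modulo null chains. -/
noncomputable def Zc (F : Type*) [CommRing F] {M : Type*} [UniformSpace M] (𝓕 : Filter M) (n : ℕ)
    (Y : Set M) : Submodule F (Sq F M) := Ac F n Y ⊓ (null F 𝓕).comap bdq

/-- Boundaries modulo null chains. -/
noncomputable def Bc (F : Type*) [CommRing F] {M : Type*} [UniformSpace M] (𝓕 : Filter M) (n : ℕ)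
    (Y : Set M) : Submodule F (Sq F M) := (Ac F (n + 1) Y).map bdq ⊔ null F 𝓕

lemma mem_Ac {n : ℕ} {Y : Set M} {c : Sq F M} :
    c ∈ Ac F n Y ↔ c ∈ small F M ∧ c ∈ ev F (LS Y) ∧ c ∈ len F M n := by
  simp [Ac, and_assoc]

lemma mem_Zc {𝓕 : Filter M} {n : ℕ} {Y : Set M} {c : Sq F M} :
    c ∈ Zc F 𝓕 n Y ↔ c ∈ Ac F n Y ∧ bdq c ∈ null F 𝓕 := by simp [Zc]

lemma mem_Bc {𝓕 : Filter M} {n : ℕ} {Y : Set M} {c : Sq F M} :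
    c ∈ Bc F 𝓕 n Y ↔ ∃ b ∈ Ac F (n + 1) Y, c - bdq b ∈ null F 𝓕 := by
  rw [Bc, Submodule.mem_sup]
  constructor
  · rintro ⟨_, ⟨b, hb, rfl⟩, z, hz, rfl⟩
    exact ⟨b, hb, by simpa using hz⟩
  · rintro ⟨b, hb, h⟩
    exact ⟨_, ⟨b, hb, rfl⟩, _, h, by simp⟩

lemma LS_mono {A B : Set M} (h : A ⊆ B) : LS A ⊆ LS B := fun _ hl => fun x hx => h (hl x hx)

lemma Ac_mono {n : ℕ} {Y Y' : Set M} (h : Y ⊆ Y') : Ac F n Y ≤ Ac F n Y' := by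
  intro c hc
  rw [mem_Ac] at hc ⊢
  exact ⟨hc.1, ev_mono (LS_mono h) hc.2.1, hc.2.2⟩

lemma Zc_mono {𝓕 : Filter M} {n : ℕ} {Y Y' : Set M} (h : Y ⊆ Y') : Zc F 𝓕 n Y ≤ Zc F 𝓕 n Y' :=
  inf_le_inf_right _ (Ac_mono h)

lemma Bc_mono {𝓕 : Filter M} {n : ℕ} {Y Y' : Set M} (h : Y ⊆ Y') : Bc F 𝓕 n Y ≤ Bc F 𝓕 n Y' :=
  sup_le_sup_right (Submodule.map_mono (Ac_mono h)) _

lemma null_top_LS {c : Sq F M} (h : c ∈ null F (⊤ : Filter M)) (Y : Set M) : c ∈ ev F (LS Y) := by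
  obtain ⟨W, hW, h⟩ := h
  rw [mem_top] at hW; subst hW
  exact ev_mono (LS_mono (by simp)) h

lemma null_top_of_LS {c : Sq F M} (h : c ∈ ev F (LS (∅ : Set M))) : c ∈ null F (⊤ : Filter M) :=
  ⟨Set.univ, univ_mem, by simpa using h⟩

lemma null_len_zero {𝓕 : Filter M} {c : Sq F M} (h : c ∈ len F M 0) : c ∈ null F 𝓕 :=
  ⟨Set.univ, univ_mem, ev_mono (fun l hl => by
    simp only [Set.mem_ofPred_eq, List.length_eq_zero_iff] at hl; subst hl; simp [LS]) h⟩

/-- A subset contracted to a point through small steps. -/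
def Ctr {M : Type*} [UniformSpace M] (W : Set M) : Prop :=
  ∃ (f : ℕ → ℕ → M → M) (q : ℕ → ℕ) (x₀ : M),
    (∀ j, ∀ x ∈ W, f j 0 x = x) ∧ (∀ j, ∀ x ∈ W, f j (q j) x = x₀) ∧
    (∀ j, ∀ i ≤ q j, ∀ x ∈ W, f j i x ∈ W) ∧
    (∀ U ∈ 𝓤 M, ∃ V ∈ 𝓤 M, ∀ᶠ j in om, ∀ i ≤ q j, ∀ x ∈ W, ∀ y ∈ W,
      (x, y) ∈ V → (f j i x, f j i y) ∈ U) ∧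
    (∀ U ∈ 𝓤 M, ∀ᶠ j in om, ∀ i < q j, ∀ x ∈ W, (f j i x, f j (i + 1) x) ∈ U)

lemma mq_id_on {f : ℕ → M → M} {A : Set M} (h : ∀ j, ∀ x ∈ A, f j x = x) {c : Sq F M}
    (hc : c ∈ ev F (LS A)) : ∀ᶠ j in om, mq f c j = c j := by
  filter_upwards [hc] with j hc
  refine eq_on_sup (f := mp (f j)) (g := LinearMap.id) (fun l hl => ?_) hc
  rw [mp_single, LinearMap.id_apply]
  congr 1
  conv_rhs => rw [← List.map_id l]
  exact List.map_congr_left fun x hx => h j x (hl x hx)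

lemma Ctr.fin [Finite F] {W : Set M} (h : Ctr W) (n : ℕ) :
    ∃ S : Submodule F (Sq F M), S.FG ∧ Zc F ⊤ n W ≤ Bc F ⊤ n W ⊔ S := by
  obtain ⟨f, q, x₀, h0, h1, h2, h3, h4⟩ := h
  let s : Sq F M := fun _ => single (List.replicate n x₀) 1
  refine ⟨Submodule.span F {s}, Submodule.fg_span_singleton s, fun c hc => ?_⟩
  obtain ⟨hA, hb⟩ := mem_Zc.1 hc
  obtain ⟨hs, hW, hl⟩ := mem_Ac.1 hA
  -- the end of the contraction is a multiple of a constant list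
  have hend : ∀ᶠ j in om, ∃ a : F, mq (fun j => f j (q j)) c j = a • single (List.replicate n x₀) 1 := by
    filter_upwards [hW, hl] with j hW hl
    have hWl : c j ∈ sup F (LS W ∩ {l | l.length = n}) := by
      rw [sup, supported_inter]; exact ⟨hW, hl⟩
    have := sup_le (f := mp (f j (q j)))
      (S := Submodule.span F {single (List.replicate n x₀) (1 : F)}) (fun l hl => ?_) hWl
    · obtain ⟨a, ha⟩ := Submodule.mem_span_singleton.1 this
      exact ⟨a, ha.symm⟩
    · rw [mp_single]
      have : l.map (f j (q j)) = List.replicate n x₀ := by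
        rw [List.eq_replicate_iff]
        refine ⟨by simpa using hl.2, ?_⟩
        intro b hb
        obtain ⟨x, hx, rfl⟩ := List.mem_map.1 hb
        exact h1 j x (hl.1 x hx)
      rw [this]; exact Submodule.mem_span_singleton_self _
  obtain ⟨a, ha⟩ : ∃ a : F, ∀ᶠ j in om, mq (fun j => f j (q j)) c j = a • s j := by
    classical
    choose! a ha using fun j (hj : ∃ a : F,
      mq (fun j => f j (q j)) c j = a • single (List.replicate n x₀) 1) => hj
    obtain ⟨b, hb⟩ := om_const a
    refine ⟨b, ?_⟩
    filter_upwards [hend, hb] with j h1 h2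
    rw [ha j h1, h2]
  have hH := Hq_bd f q c
  have e1 : Hq f q c ∈ Ac F (n + 1) W :=
    mem_Ac.2 ⟨Hq_small h3 h4 hs hW, Hq_LS (Eventually.of_forall h2) hW, Hq_len hl⟩
  have e2 : Hq f q (bdq c) ∈ null F (⊤ : Filter M) :=
    null_top_of_LS (Hq_LS (A := ∅) (by simp) (null_top_LS hb ∅))
  have e3 : mq (fun j => f j (q j)) c - a • s ∈ null F (⊤ : Filter M) := null_zero (by
    filter_upwards [ha] with j h; simp [← h])
  have e4 : c - mq (fun j => f j 0) c ∈ null F (⊤ : Filter M) := null_zero (by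
    filter_upwards [mq_id_on h0 hW] with j h
    rw [Pi.sub_apply, h, sub_self])
  have : c = (c - a • s) + a • s := by abel
  rw [this]
  refine Submodule.add_mem_sup (mem_Bc.2 ⟨- Hq f q c, neg_mem e1, ?_⟩)
    (Submodule.smul_mem _ _ (Submodule.mem_span_singleton_self s))
  have : c - a • s - bdq (- Hq f q c) = (c - mq (fun j => f j 0) c)
      + (mq (fun j => f j (q j)) c - a • s) - Hq f q (bdq c) := by
    rw [map_neg, eq_sub_of_add_eq hH]; abel
  rw [this]
  exact sub_mem (add_mem e4 e3) e2
end

/-- If `E` maps `Z` into `D` up to something finitely generated, then `Z` lies in the preimage of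
`D` up to something finitely generated. -/
lemma fg_lift {F V W : Type*} [Field F] [AddCommGroup V] [Module F V] [AddCommGroup W] [Module F W]
    (E : V →ₗ[F] W) (Z : Submodule F V) (D S : Submodule F W) (hS : S.FG)
    (h : ∀ z ∈ Z, E z ∈ D ⊔ S) : ∃ S' : Submodule F V, S'.FG ∧ Z ≤ (Z ⊓ D.comap E) ⊔ S' := by
  classical
  have h1 : Z.map (D.mkQ ∘ₗ E) ≤ S.map D.mkQ := by
    rintro _ ⟨z, hz, rfl⟩
    obtain ⟨d, hd, s, hs, e⟩ := Submodule.mem_sup.1 (h z hz)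
    refine ⟨s, hs, ?_⟩
    rw [LinearMap.comp_apply, ← e, map_add, (Submodule.Quotient.mk_eq_zero D).2 hd |> fun h =>
      (show D.mkQ d = 0 from h), zero_add]
  have h2 : (Z.map (D.mkQ ∘ₗ E)).FG := by
    have hf : (S.map D.mkQ).FG := hS.map _
    have : Module.Finite F (S.map D.mkQ) := Module.Finite.iff_fg.2 hf
    have := (IsNoetherian.noetherian ((Z.map (D.mkQ ∘ₗ E)).comap (S.map D.mkQ).subtype)).map
      (S.map D.mkQ).subtype
    rwa [Submodule.map_comap_subtype, inf_eq_right.2 h1] at this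
  obtain ⟨t, ht⟩ := h2
  have h3 : (t : Set (W ⧸ D)) ⊆ (D.mkQ ∘ₗ E) '' (Z : Set V) := by
    rw [← Submodule.map_coe, ← ht]; exact Submodule.subset_span
  obtain ⟨s, hs, rfl⟩ := Finset.subset_set_image_iff.1 h3
  refine ⟨Submodule.span F s, ⟨s, rfl⟩, fun z hz => ?_⟩
  have h4 : (D.mkQ ∘ₗ E) z ∈ (Submodule.span F (s : Set V)).map (D.mkQ ∘ₗ E) := by
    rw [Submodule.map_span, ← Finset.coe_image, ht]; exact ⟨z, hz, rfl⟩
  obtain ⟨w, hw, e⟩ := h4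
  have hwZ : w ∈ Z := Submodule.span_le.2 hs hw
  have : z = (z - w) + w := by abel
  rw [this]
  refine Submodule.add_mem_sup ⟨sub_mem hz hwZ, ?_⟩ hw
  have : D.mkQ (E (z - w)) = 0 := by
    simp only [LinearMap.comp_apply] at e
    rw [map_sub, map_sub, e, sub_self]
  exact (Submodule.Quotient.mk_eq_zero D).1 this

section
variable {F : Type*} [Field F] [Finite F] {M : Type*} [UniformSpace M] [CompactSpace M] [T2Space M]

/-- Mayer–Vietoris step for finiteness. -/
lemma fin_union {n : ℕ} {Y' V₁ V₂ X₂ W₁ W₂ : Set M} (hV₂ : IsClosed V₂)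
    (h₁ : V₁ ⊆ W₁) (h₂ : V₂ ⊆ interior X₂) (h₃ : X₂ ⊆ W₂)
    (ih : ∃ S : Submodule F (Sq F M), S.FG ∧ Zc F ⊤ n (V₁ ∩ X₂) ≤ Bc F ⊤ n (W₁ ∩ W₂) ⊔ S)
    (hW₁ : ∃ S : Submodule F (Sq F M), S.FG ∧ Zc F ⊤ (n + 1) W₁ ≤ Bc F ⊤ (n + 1) Y' ⊔ S)
    (hW₂ : ∃ S : Submodule F (Sq F M), S.FG ∧ Zc F ⊤ (n + 1) W₂ ≤ Bc F ⊤ (n + 1) Y' ⊔ S) :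
    ∃ S : Submodule F (Sq F M), S.FG ∧ Zc F ⊤ (n + 1) (V₁ ∪ V₂) ≤ Bc F ⊤ (n + 1) Y' ⊔ S := by
  obtain ⟨S, hS, hZ⟩ := ih
  obtain ⟨S₁, hS₁, hZ₁⟩ := hW₁
  obtain ⟨S₂, hS₂, hZ₂⟩ := hW₂
  obtain ⟨U, hU, -, hball⟩ := lebesgue_number_of_compact_open hV₂.isCompact isOpen_interior h₂
  -- the two halves of a cycle
  have c1 : ∀ c ∈ Zc F ⊤ (n + 1) (V₁ ∪ V₂), rsq (LS V₁) c ∈ Ac F (n + 1) V₁ := by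
    intro c hc
    obtain ⟨hs, hW, hl⟩ := mem_Ac.1 (mem_Zc.1 hc).1
    exact mem_Ac.2 ⟨rsq_small _ hs, rsq_self _ c, rsq_ev hl fun _ h _ => h⟩
  have c2 : ∀ c ∈ Zc F ⊤ (n + 1) (V₁ ∪ V₂), c - rsq (LS V₁) c ∈ Ac F (n + 1) X₂ := by
    intro c hc
    obtain ⟨hs, hW, hl⟩ := mem_Ac.1 (mem_Zc.1 hc).1
    refine mem_Ac.2 ⟨sub_mem hs (rsq_small _ hs), ?_, sub_mem hl (rsq_ev hl fun _ h _ => h)⟩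
    refine sub_rsq_ev (ev_inter hW (mem_small.1 hs U hU)) ?_
    rintro l ⟨hl1, hl2⟩ hl3
    simp only [LS, Set.mem_ofPred_eq, not_forall] at hl3
    obtain ⟨x, hx, hx1⟩ := hl3
    have hx2 : x ∈ V₂ := (hl1 x hx).resolve_left hx1
    exact fun y hy => interior_subset (hball x hx2 (hl2 x hx y hy))
  obtain ⟨S', hS', hS'Z⟩ := fg_lift (bdq ∘ₗ rsq (LS V₁)) (Zc F ⊤ (n + 1) (V₁ ∪ V₂))
    (Bc F ⊤ n (W₁ ∩ W₂)) S hS (fun c hc => hZ (by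
      obtain ⟨hs1, hl1, hn1⟩ := mem_Ac.1 (c1 c hc)
      obtain ⟨hs2, hl2, hn2⟩ := mem_Ac.1 (c2 c hc)
      refine mem_Zc.2 ⟨mem_Ac.2 ⟨bdq_small hs1, ?_, bdq_len hn1⟩, ?_⟩
      · have e : bdq (rsq (LS V₁) c) = bdq c - bdq (c - rsq (LS V₁) c) := by
          rw [map_sub]; abel
        refine ev_mono ?_ (ev_inter (P := LS V₁) (Q := LS X₂) (bdq_LS hl1) ?_)
        · exact fun l hl => fun x hx => ⟨hl.1 x hx, hl.2 x hx⟩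
        · rw [LinearMap.comp_apply, e]
          exact sub_mem (null_top_LS (mem_Zc.1 hc).2 _) (bdq_LS hl2)
      · rw [LinearMap.comp_apply, bdq_bdq]; exact zero_mem _))
  refine ⟨S₁ ⊔ S₂ ⊔ S', (hS₁.sup hS₂).sup hS', hS'Z.trans ?_⟩
  refine _root_.sup_le ?_ (le_sup_of_le_right le_sup_right)
  rintro c ⟨hc, hcD⟩
  obtain ⟨f, hf, hν⟩ := mem_Bc.1 hcD
  rw [LinearMap.comp_apply] at hν
  have e : c = (rsq (LS V₁) c - f) + (c - rsq (LS V₁) c + f) := by abel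
  rw [e]
  have a1 : rsq (LS V₁) c - f ∈ Zc F ⊤ (n + 1) W₁ := mem_Zc.2
    ⟨sub_mem (Ac_mono h₁ (c1 c hc)) (Ac_mono Set.inter_subset_left hf), by rwa [map_sub]⟩
  have a2 : c - rsq (LS V₁) c + f ∈ Zc F ⊤ (n + 1) W₂ := mem_Zc.2
    ⟨add_mem (Ac_mono h₃ (c2 c hc)) (Ac_mono Set.inter_subset_right hf), by
      have : bdq (c - rsq (LS V₁) c + f) = bdq c - (bdq (rsq (LS V₁) c) - bdq f) := by
        rw [map_add, map_sub]; abel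
      rw [this]
      exact sub_mem (mem_Zc.1 hc).2 hν⟩
  have b1 : Bc F ⊤ (n + 1) Y' ⊔ S₁ ≤ Bc F ⊤ (n + 1) Y' ⊔ (S₁ ⊔ S₂ ⊔ S') :=
    sup_le_sup_left (le_sup_of_le_left le_sup_left) _
  have b2 : Bc F ⊤ (n + 1) Y' ⊔ S₂ ≤ Bc F ⊤ (n + 1) Y' ⊔ (S₁ ⊔ S₂ ⊔ S') :=
    sup_le_sup_left (le_sup_of_le_left le_sup_right) _
  exact add_mem (b1 (hZ₁ a1)) (b2 (hZ₂ a2))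

/-- Finiteness of homology: in a space that is locally contractible in the sense of `Ctr`, the cycles in a
closed set span, modulo boundaries in a neighbourhood of it, a finite-dimensional space. -/
theorem fin_all (hM : ∀ x : M, ∀ O ∈ 𝓝 x, ∃ W ∈ 𝓝 x, W ⊆ O ∧ Ctr W) (n : ℕ) :
    ∀ Y Y' : Set M, IsClosed Y → Y ⊆ interior Y' →
      ∃ S : Submodule F (Sq F M), S.FG ∧ Zc F ⊤ n Y ≤ Bc F ⊤ n Y' ⊔ S := by
  induction n with
  | zero =>
    intro Y Y' _ _
    refine ⟨⊥, Submodule.fg_bot, fun c hc => ?_⟩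
    refine Submodule.mem_sup_left (Submodule.mem_sup_right (null_len_zero ?_))
    exact (mem_Ac.1 (mem_Zc.1 hc).1).2.2
  | succ n ih =>
    intro Y Y' hY hYY'
    -- each compact piece has a neighbourhood with the finiteness property
    have key : ∃ V W, IsClosed V ∧ Y ⊆ V ∧ V ⊆ interior W ∧
        ∃ S : Submodule F (Sq F M), S.FG ∧ Zc F ⊤ (n + 1) W ≤ Bc F ⊤ (n + 1) Y' ⊔ S := by
      refine hY.isCompact.induction_on (p := fun Z => ∃ V W, IsClosed V ∧ Z ⊆ V ∧ V ⊆ interior W ∧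
        ∃ S : Submodule F (Sq F M), S.FG ∧ Zc F ⊤ (n + 1) W ≤ Bc F ⊤ (n + 1) Y' ⊔ S) ?_ ?_ ?_ ?_
      · refine ⟨∅, ∅, isClosed_empty, le_rfl, by simp, ⊥, Submodule.fg_bot, fun c hc => ?_⟩
        exact Submodule.mem_sup_left (Submodule.mem_sup_right
          (null_top_of_LS (mem_Ac.1 (mem_Zc.1 hc).1).2.1))
      · rintro s t hst ⟨V, W, h1, h2, h3⟩
        exact ⟨V, W, h1, hst.trans h2, h3⟩
      · rintro s t ⟨V₁, W₁, hc1, hs1, hy1, hf1⟩ ⟨V₂, W₂, hc2, hs2, hy2, hf2⟩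
        obtain ⟨A₁, hA₁, hVA₁, hAW₁⟩ := normal_exists_closure_subset hc1 isOpen_interior hy1
        obtain ⟨A₂, hA₂, hVA₂, hAW₂⟩ := normal_exists_closure_subset hc2 isOpen_interior hy2
        obtain ⟨X₂, hX₂, hVX₂, hXW₂⟩ :=
          normal_exists_closure_subset isClosed_closure isOpen_interior hAW₂
        refine ⟨V₁ ∪ V₂, closure A₁ ∪ closure A₂, hc1.union hc2, Set.union_subset_union hs1 hs2,
          ?_, ?_⟩
        · refine Set.union_subset (hVA₁.trans ?_) (hVA₂.trans ?_)
          · exact interior_maximal (subset_closure.trans Set.subset_union_left) hA₁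
          · exact interior_maximal (subset_closure.trans Set.subset_union_right) hA₂
        · refine fin_union (X₂ := closure X₂) isClosed_closure (hAW₁.trans interior_subset)
            (hVX₂.trans (interior_maximal subset_closure hX₂)) (hXW₂.trans interior_subset)
            (ih _ _ (isClosed_closure.inter isClosed_closure) ?_) hf1 hf2
          rw [interior_inter]
          exact Set.inter_subset_inter hAW₁ hXW₂
      · intro x hx
        obtain ⟨W, hW, hWY, hC⟩ := hM x (interior Y') (isOpen_interior.mem_nhds (hYY' hx))
        obtain ⟨V, hV, hVc, hVW⟩ := exists_mem_nhds_isClosed_subset (interior_mem_nhds.2 hW)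
        refine ⟨V, mem_nhdsWithin_of_mem_nhds hV, V, W, hVc, le_rfl, hVW, ?_⟩
        obtain ⟨S, hS, h⟩ := hC.fin (F := F) (n + 1)
        exact ⟨S, hS, h.trans (sup_le_sup_right (Bc_mono (hWY.trans interior_subset)) _)⟩
    obtain ⟨V, W, -, h1, h2, S, hS, h3⟩ := key
    exact ⟨S, hS, (Zc_mono (h1.trans (h2.trans interior_subset))).trans h3⟩
end

lemma uc_mem {α β : Type*} [UniformSpace α] [UniformSpace β] {f : α → β} {s : Set α}
    (h : UniformContinuousOn f s) {U : Set (β × β)} (hU : U ∈ 𝓤 β) :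
    ∃ V ∈ 𝓤 α, ∀ x ∈ s, ∀ y ∈ s, (x, y) ∈ V → (f x, f y) ∈ U := by
  have := h hU
  rw [mem_map, mem_inf_principal] at this
  exact ⟨_, this, fun x hx y hy hxy => hxy ⟨hx, hy⟩⟩

/-- Balls in a chart are contractible through small steps. -/
lemma ctr_chart {n : ℕ} {M : Type*} [UniformSpace M]
    [CompactSpace M] [T2Space M] [ChartedSpace (EuclideanSpace ℝ (Fin n)) M] (x : M) (O : Set M)
    (hO : O ∈ 𝓝 x) : ∃ W ∈ 𝓝 x, W ⊆ O ∧ Ctr W := by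
  let e := chartAt (EuclideanSpace ℝ (Fin n)) x
  have hx : x ∈ e.source := mem_chart_source _ x
  have h1 : e.target ∩ e.symm ⁻¹' O ∈ 𝓝 (e x) := by
    refine inter_mem (e.open_target.mem_nhds (e.map_source hx)) ?_
    exact (e.symm.continuousAt (e.map_source hx)).preimage_mem_nhds (by
      rw [e.left_inv hx]; exact hO)
  obtain ⟨r, hr, hball⟩ := Metric.nhds_basis_closedBall.mem_iff.1 h1
  let D := Metric.closedBall (e x) r
  have hDt : D ⊆ e.target := fun y hy => (hball hy).1
  have hcD : IsCompact D := isCompact_closedBall _ _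
  have hcont : ContinuousOn e.symm D := e.symm.continuousOn.mono hDt
  have hW : e.symm '' D ∈ 𝓝 x := by
    have : e.symm '' D = e.source ∩ e ⁻¹' D := by
      rw [e.symm_image_eq_source_inter_preimage hDt]
    rw [this]
    exact inter_mem (e.open_source.mem_nhds hx)
      ((e.continuousAt hx).preimage_mem_nhds (Metric.closedBall_mem_nhds _ hr))
  have hcW : IsCompact (e.symm '' D) := hcD.image_of_continuousOn hcont
  have hWs : e.symm '' D ⊆ e.source := by
    rintro _ ⟨y, hy, rfl⟩; exact e.map_target (hDt hy)
  have heW : ∀ y ∈ e.symm '' D, e y ∈ D := by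
    rintro _ ⟨y, hy, rfl⟩; rwa [e.right_inv (hDt hy)]
  have u1 : UniformContinuousOn e (e.symm '' D) :=
    hcW.uniformContinuousOn_of_continuous (e.continuousOn.mono hWs)
  have u2 : UniformContinuousOn e.symm D := hcD.uniformContinuousOn_of_continuous hcont
  let g : ℕ → ℕ → EuclideanSpace ℝ (Fin n) → EuclideanSpace ℝ (Fin n) := fun j i y =>
    e x + (1 - (i : ℝ) / (j + 1)) • (y - e x)
  have hco : ∀ j i : ℕ, i ≤ j + 1 → 0 ≤ 1 - (i : ℝ) / (j + 1) ∧ 1 - (i : ℝ) / (j + 1) ≤ 1 := by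
    intro j i hi
    have h1 : (i : ℝ) / (j + 1) ≤ 1 := by
      rw [div_le_one (by positivity)]; exact_mod_cast hi
    have h2 : 0 ≤ (i : ℝ) / (j + 1) := by positivity
    constructor <;> linarith
  have hgD : ∀ j i, i ≤ j + 1 → ∀ y ∈ D, g j i y ∈ D := by
    intro j i hi y hy
    simp only [D, Metric.mem_closedBall, dist_eq_norm, g, add_sub_cancel_left, norm_smul,
      Real.norm_eq_abs] at hy ⊢
    obtain ⟨h1, h2⟩ := hco j i hi
    rw [abs_of_nonneg h1]
    nlinarith [norm_nonneg (y - e x)]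
  refine ⟨e.symm '' D, hW, ?_, fun j i y => e.symm (g j i (e y)), fun j => j + 1, x, ?_, ?_, ?_,
    ?_, ?_⟩
  · rintro _ ⟨y, hy, rfl⟩; exact (hball hy).2
  · intro j y hy
    simp [g, e.left_inv (hWs hy)]
  · intro j y hy
    have : ((j : ℝ) + 1) ≠ 0 := by positivity
    simp [g, div_self this, e.left_inv hx]
  · intro j i hi y hy
    exact ⟨_, hgD j i hi _ (heW y hy), rfl⟩
  · intro U hU
    obtain ⟨V₁, hV₁, h⟩ := uc_mem u2 hU
    obtain ⟨δ, hδ, hδV⟩ := Metric.mem_uniformity_dist.1 hV₁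
    obtain ⟨V, hV, h'⟩ := uc_mem u1 (Metric.dist_mem_uniformity hδ)
    refine ⟨V, hV, Eventually.of_forall fun j i hi y hy z hz hyz => ?_⟩
    refine h _ (hgD j i hi _ (heW y hy)) _ (hgD j i hi _ (heW z hz)) (hδV ?_)
    have h3 : dist (e y) (e z) < δ := h' y hy z hz hyz
    refine lt_of_le_of_lt ?_ h3
    obtain ⟨h1, h2⟩ := hco j i hi
    have : g j i (e y) - g j i (e z) = (1 - (i : ℝ) / (j + 1)) • (e y - e z) := by
      simp only [g, smul_sub]; abel
    rw [dist_eq_norm, dist_eq_norm, this, norm_smul, Real.norm_eq_abs, abs_of_nonneg h1]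
    nlinarith [norm_nonneg (e y - e z)]
  · intro U hU
    obtain ⟨V₁, hV₁, h⟩ := uc_mem u2 hU
    obtain ⟨δ, hδ, hδV⟩ := Metric.mem_uniformity_dist.1 hV₁
    obtain ⟨m, hm⟩ := exists_nat_gt (r / δ)
    filter_upwards [ev_ge m] with j hj i hi y hy
    refine h _ (hgD j i hi.le _ (heW y hy)) _ (hgD j (i + 1) hi _ (heW y hy)) (hδV ?_)
    have hpos : (0 : ℝ) < j + 1 := by positivity
    have : g j i (e y) - g j (i + 1) (e y) = (1 / ((j : ℝ) + 1)) • (e y - e x) := by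
      simp only [g, add_sub_add_left_eq_sub, ← sub_smul]
      congr 1; push_cast; field_simp; ring
    have hr' : ‖e y - e x‖ ≤ r := by
      have := heW y hy
      rwa [Metric.mem_closedBall, dist_eq_norm] at this
    rw [dist_eq_norm, this, norm_smul, Real.norm_eq_abs, abs_of_nonneg (by positivity), one_div,
      inv_mul_lt_iff₀ hpos]
    have h5 : (m : ℝ) ≤ j := by exact_mod_cast hj
    rw [div_lt_iff₀ hδ] at hm
    nlinarith
end MannSu

/-! ### Equivariant discretisation -/

namespace MannSu
universe u v
open Finsupp Filter Uniformity Topology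
set_option linter.unusedSectionVars false

section orbits
variable {M : Type*} {G : Type*} [Group G] [Finite G] [MulAction G M]

/-- Finitely many invariant polynomials in the translates of finitely many separating functions
separate the orbits. -/
lemma sep_orbits [TopologicalSpace M] [ContinuousConstSMul G M] {N : ℕ} (f : M → Fin N → ℝ)
    (hf : Continuous f) (hinj : Function.Injective f) :
    ∃ (ι : Type) (_ : Fintype ι) (u : M → ι → ℝ), Continuous u ∧ (∀ (g : G) x, u (g • x) = u x) ∧
      ∀ x y, u x = u y → ∃ g : G, y = g • x := by
  classical
  have := Fintype.ofFinite G
  let m := Fintype.card G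
  let fs : ℕ → M → ℝ := fun s x => ∑ i : Fin N, (s : ℝ) ^ (i : ℕ) * f x i
  have hfs : ∀ s, Continuous (fs s) := fun s => by
    refine continuous_finsetSum _ fun i _ => continuous_const.mul ?_
    exact (continuous_apply i).comp hf
  let u : M → Fin (m * N + 1) × Fin (m + 1) → ℝ := fun x st => ∏ g : G, ((st.2 : ℕ) - fs st.1 (g • x))
  refine ⟨_, inferInstance, u, ?_, ?_, ?_⟩
  · refine continuous_pi fun st => continuous_finsetProd _ fun g _ => continuous_const.sub ?_
    exact (hfs _).comp (continuous_const_smul g)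
  · intro g x
    funext st
    simp only [u, smul_smul]
    exact Fintype.prod_equiv (Equiv.mulRight g) _ _ fun _ => rfl
  · intro x y hxy
    have h1 : ∀ s : Fin (m * N + 1), ∃ g : G, fs s y = fs s (g • x) := by
      intro s
      have hP : ∀ w : M, (∏ g : G, (Polynomial.X - Polynomial.C (fs s (g • w)))).degree
          < ((Finset.univ : Finset (Fin (m + 1))).card : WithBot ℕ) := by
        intro w
        rw [Polynomial.degree_prod]
        simp only [Polynomial.degree_X_sub_C, Finset.sum_const, Finset.card_univ, Fintype.card_fin]
        simp only [nsmul_eq_mul, mul_one]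
        exact_mod_cast Nat.lt_succ_self m
      have h := Polynomial.eq_of_degrees_lt_of_eval_index_eq (s := (Finset.univ : Finset (Fin (m+1))))
        (v := fun t : Fin (m + 1) => ((t : ℕ) : ℝ)) (by intro a _ b _ h; exact Fin.ext (Nat.cast_injective (R := ℝ) h))
        (hP x) (hP y) (fun t _ => by
          have := congrFun hxy (s, t)
          simp only [u] at this
          simp only [Polynomial.eval_prod, Polynomial.eval_sub, Polynomial.eval_X, Polynomial.eval_C]
          exact this)
      have h0 := congrArg (Polynomial.eval (fs s y)) h
      simp only [Polynomial.eval_prod, Polynomial.eval_sub, Polynomial.eval_X,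
        Polynomial.eval_C] at h0
      rw [Finset.prod_eq_zero (i := (1 : G)) (f := fun g => fs s y - fs s (g • y)) (Finset.mem_univ _)
        (by simp), Finset.prod_eq_zero_iff] at h0
      obtain ⟨g, -, hg⟩ := h0
      exact ⟨g, sub_eq_zero.1 hg⟩
    choose a ha using h1
    obtain ⟨g, hg⟩ := Fintype.exists_lt_card_fiber_of_mul_lt_card (f := a) (n := N) (by simp [m])
    refine ⟨g, hinj ?_⟩
    let e := Finset.orderEmbOfCardLe _ hg.le
    have := Matrix.eq_zero_of_forall_index_sum_pow_mul_eq_zero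
      (f := fun i : Fin N => (((e i : Fin _) : ℕ) : ℝ)) (v := fun i => f y i - f (g • x) i) ?_ ?_
    · funext i
      exact sub_eq_zero.1 (congrFun this i)
    · intro i i' h
      exact e.injective (Fin.ext (Nat.cast_injective (R := ℝ) h))
    · intro i
      have h2 : a (e i) = g := (Finset.mem_filter.1 (Finset.orderEmbOfCardLe_mem _ hg.le i)).2
      have h3 := ha (e i)
      rw [h2] at h3
      simp only [mul_sub, Finset.sum_sub_distrib]
      exact sub_eq_zero.2 h3

variable [MetricSpace M] [CompactSpace M] {ι : Type} [Fintype ι] {u : M → ι → ℝ}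

lemma te_local (hiso : ∀ (g : G) (x y : M), dist (g • x) (g • y) = dist x y)
    (hu : Continuous u) (hug : ∀ (g : G) x, u (g • x) = u x)
    (hsep : ∀ x y, u x = u y → ∃ g : G, y = g • x) (z : M) {η : ℝ} (hη : 0 < η) :
    ∃ O : Set (ι → ℝ), IsOpen O ∧ u z ∈ O ∧ ∃ δ > 0, ∃ φ : M → M,
      (∀ x, u x ∈ O → dist x (φ x) < η ∧ ∀ g : G, φ (g • x) = g • φ x) ∧
      ∀ x y, u x ∈ O → u y ∈ O → dist x y < δ → φ x = φ y := by
  classical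
  have := Fintype.ofFinite G
  obtain ⟨σ, hσ, hσz⟩ : ∃ σ > 0, ∀ g h : G, dist (g • z) (h • z) < σ → g • z = h • z := by
    have : ∀ᶠ σ in 𝓝[>] (0 : ℝ), ∀ g h : G, dist (g • z) (h • z) < σ → g • z = h • z := by
      rw [eventually_all]; intro g
      rw [eventually_all]; intro h
      by_cases e : g • z = h • z
      · simp [e]
      · filter_upwards [Ioo_mem_nhdsGT (dist_pos.2 e)] with σ hσ h'
        exact absurd h' (not_lt.2 hσ.2.le)
    obtain ⟨σ, h1, h2⟩ := (this.and self_mem_nhdsWithin).exists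
    exact ⟨σ, h2, h1⟩
  let ρ := min η (σ / 3)
  have hρ : 0 < ρ := lt_min hη (by positivity)
  let K : Set M := {x | ∀ g : G, ρ ≤ dist x (g • z)}
  have hK : IsClosed K := by
    have : K = ⋂ g : G, {x | ρ ≤ dist x (g • z)} := by ext; simp [K]
    rw [this]
    exact isClosed_iInter fun g => isClosed_le continuous_const (continuous_id.dist continuous_const)
  have hO : ∀ x, u x ∈ (u '' K)ᶜ → ∃ g : G, dist x (g • z) < ρ := by
    intro x hx
    by_contra! h
    exact hx ⟨x, h, rfl⟩
  have huniq : ∀ x (g h : G), dist x (g • z) < ρ → dist x (h • z) < ρ → g • z = h • z := by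
    intro x g h h1 h2
    refine hσz _ _ ?_
    have h3 : ρ ≤ σ / 3 := min_le_right _ _
    have := dist_triangle_left (g • z) (h • z) x
    linarith
  choose! a ha using hO
  have hgO : ∀ (g : G) x, u x ∈ (u '' K)ᶜ → u (g • x) ∈ (u '' K)ᶜ := by
    intro g x h; rwa [hug]
  refine ⟨(u '' K)ᶜ, (hK.isCompact.image hu).isClosed.isOpen_compl, ?_, σ / 3, by positivity,
    fun x => a x • z, fun x hx => ⟨(ha x hx).trans_le (min_le_left _ _), fun g => ?_⟩, ?_⟩
  · rintro ⟨x, hx, hxz⟩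
    obtain ⟨g, hg⟩ := hsep x z hxz
    have := hx g⁻¹
    rw [hg, inv_smul_smul, dist_self] at this
    linarith
  · rw [smul_smul]
    refine huniq (g • x) _ _ (ha _ (hgO g x hx)) ?_
    rw [mul_smul, hiso]; exact ha x hx
  · intro x y hx hy hxy
    refine hσz _ _ ?_
    have h3 : ρ ≤ σ / 3 := min_le_right _ _
    have h1 := ha x hx
    have h2 := ha y hy
    have h4 := dist_triangle_left (a x • z) (a y • z) x
    have h5 := dist_triangle x y (a y • z)
    linarith

/-- At every scale there are an equivariant discretisation `φ` of the identity and a colouring `β`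
such that `φ` is determined by the colour on small sets, and small sets have few colours. -/
lemma te_scale [Nonempty M] (hiso : ∀ (g : G) (x y : M), dist (g • x) (g • y) = dist x y)
    (hu : Continuous u) (hug : ∀ (g : G) x, u (g • x) = u x)
    (hsep : ∀ x y, u x = u y → ∃ g : G, y = g • x) {η : ℝ} (hη : 0 < η) :
    ∃ δ > 0, ∃ (φ : M → M) (β : M → ℕ), (∀ (g : G) x, φ (g • x) = g • φ x ∧ β (g • x) = β x) ∧
      (∀ x, dist x (φ x) < η) ∧ (∀ x y, dist x y < δ → β x = β y → φ x = φ y) ∧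
      ∀ l : List M, (∀ x ∈ l, ∀ y ∈ l, dist x y < δ) →
        (l.map β).toFinset.card ≤ 3 ^ Fintype.card ι := by
  classical
  choose O hOo hOz δ hδ φ hφ hφ' using fun z => te_local hiso hu hug hsep z hη
  obtain ⟨t, ht⟩ := (isCompact_range hu).elim_finite_subcover O hOo (by
    rintro _ ⟨z, rfl⟩; exact Set.mem_iUnion.2 ⟨z, hOz z⟩)
  obtain ⟨lam, hlam, hleb⟩ := lebesgue_number_lemma_of_metric (c := fun z : t => O z)
    (isCompact_range hu) (fun z => hOo z) (by
      intro q hq; obtain ⟨z, hz, h⟩ := Set.mem_iUnion₂.1 (ht hq)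
      exact Set.mem_iUnion.2 ⟨⟨z, hz⟩, h⟩)
  have huc := CompactSpace.uniformContinuous_of_continuous hu
  obtain ⟨δ₁, hδ₁, huδ⟩ := Metric.uniformContinuous_iff.1 huc lam hlam
  obtain ⟨δ₂, hδ₂, hle⟩ : ∃ δ₂ > 0, ∀ z ∈ t, δ₂ ≤ δ z := by
    have : ∀ᶠ s in 𝓝[>] (0 : ℝ), ∀ z ∈ t, s ≤ δ z := by
      rw [eventually_all_finset]; intro z _
      filter_upwards [Ioo_mem_nhdsGT (hδ z)] with s hs using hs.2.le
    obtain ⟨σ, h1, h2⟩ := (this.and self_mem_nhdsWithin).exists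
    exact ⟨σ, h2, h1⟩
  let b : M → ι → ℤ := fun x i => ⌊u x i / lam⌋
  let enc := Encodable.ofCountable (ι → ℤ)
  have hb : ∀ x y, b x = b y → dist (u y) (u x) < lam := by
    intro x y h
    rw [dist_pi_lt_iff hlam]
    intro i
    have := Int.abs_sub_lt_one_of_floor_eq_floor (congrFun h i)
    rw [← sub_div, abs_div, abs_of_pos hlam, div_lt_one hlam] at this
    rw [dist_comm]; exact this
  -- every brick is contained in one of the chosen open sets
  have hz : ∀ v : ι → ℤ, ∃ z : M, ∀ x, b x = v → z ∈ t ∧ u x ∈ O z := by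
    intro v
    by_cases h : ∃ x, b x = v
    · obtain ⟨x, hx⟩ := h
      obtain ⟨z, hz⟩ := hleb (u x) ⟨x, rfl⟩
      exact ⟨z, fun y hy => ⟨z.2, hz (hb x y (hx.trans hy.symm))⟩⟩
    · exact ⟨Classical.arbitrary M, fun x hx => absurd ⟨x, hx⟩ h⟩
  choose z hz using hz
  have hbg : ∀ (g : G) x, b (g • x) = b x := fun g x => by simp only [b, hug]
  refine ⟨min δ₁ δ₂, lt_min hδ₁ hδ₂, fun x => φ (z (b x)) x, fun x => enc.encode (b x), ?_, ?_, ?_,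
    ?_⟩
  · intro g x
    refine ⟨?_, by dsimp only; rw [hbg]⟩
    dsimp only; rw [hbg]; exact (hφ _ x (hz _ x rfl).2).2 g
  · intro x; exact (hφ _ x (hz _ x rfl).2).1
  · intro x y hxy h
    have h := enc.encode_injective h
    dsimp only
    rw [h]
    refine hφ' _ x y ?_ (hz _ y rfl).2
      (hxy.trans_le ((min_le_right _ _).trans (hle _ (hz _ y rfl).1)))
    rw [← h]; exact (hz _ x rfl).2
  · intro l hl
    rcases l with _ | ⟨x, l⟩
    · simp
    have hsub : ((x :: l).map fun x => enc.encode (b x)).toFinset ⊆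
        (Fintype.piFinset fun i => Finset.Icc (b x i - 1) (b x i + 1)).image enc.encode := by
      intro w hw
      obtain ⟨y, hy, rfl⟩ := List.mem_map.1 (List.mem_toFinset.1 hw)
      refine Finset.mem_image_of_mem _ (Fintype.mem_piFinset.2 fun i => ?_)
      have h1 := (dist_pi_lt_iff hlam).1 (huδ ((hl x (by simp) y hy).trans_le (min_le_left _ _))) i
      rw [Real.dist_eq, abs_lt] at h1
      have e1 : u y i / lam < u x i / lam + 1 := by
        rw [div_add_one hlam.ne', div_lt_div_iff_of_pos_right hlam]; linarith
      have e2 : u x i / lam < u y i / lam + 1 := by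
        rw [div_add_one hlam.ne', div_lt_div_iff_of_pos_right hlam]; linarith
      rw [Finset.mem_Icc]
      constructor
      · have := Int.floor_le_floor e2.le
        rw [Int.floor_add_one] at this
        simp only [b]; omega
      · have := Int.floor_le_floor e1.le
        rw [Int.floor_add_one] at this
        simp only [b]; omega
    refine (Finset.card_le_card hsub).trans (Finset.card_image_le.trans ?_)
    rw [Fintype.card_piFinset]
    simp only [Int.card_Icc]
    have : ∀ i, (b x i + 1 + 1 - (b x i - 1)).toNat = 3 := fun i => by omega
    simp [this]
end orbits

/-- Approximate contraction of chains of large length onto an equivariant discretisation. -/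
theorem te_exists {F : Type*} [CommRing F] {M : Type*} [Nonempty M] [us : UniformSpace M]
    [CompactSpace M] {G : Type*} [Group G] [Finite G] [MulAction G M] [ContinuousConstSMul G M]
    (ms : MetricSpace M) (hms : ms.toUniformSpace = us)
    (hiso : ∀ (g : G) (x y : M), dist (g • x) (g • y) = dist x y)
    {N : ℕ} (f : M → Fin N → ℝ) (hf : Continuous f) (hinj : Function.Injective f) :
    ∃ K : ℕ, ∀ y ∈ small F M, ∃ d : ℕ → Ch F M →ₗ[F] Ch F M,
      (∀ j (g : G) c, d j (mp (g • ·) c) = mp (g • ·) (d j c)) ∧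
      (∀ U ∈ 𝓤 M, ∀ᶠ j in om, ∀ l : List M, d j (single l 1) ∈ sup F
        {l' | l'.length = l.length + 1 ∧
          ∀ y ∈ l', ∃ x ∈ l, (x, y) ∈ U ∧ ∀ g : G, g • x = x → g • y = y}) ∧
      ∀ k > K, y ∈ len F M k → ∀ᶠ j in om, bd (d j (y j)) + d j (bd (y j)) = y j := by
  classical
  subst hms
  obtain ⟨ι, _, u, hu, hug, hsep⟩ := sep_orbits (G := G) f hf hinj
  refine ⟨3 ^ Fintype.card ι, fun y hy => ?_⟩
  choose δ hδ φ β hg hη hc hcard using fun n : ℕ =>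
    te_scale (η := 1 / ((n : ℝ) + 1)) hiso hu hug hsep (by positivity)
  obtain ⟨q, hq, hqy⟩ := diag (P := fun n j => y j ∈ sup F (SmL {p : M × M | dist p.1 p.2 < δ n}))
    (fun n => mem_small.1 hy _ (Metric.dist_mem_uniformity (hδ n)))
  let γ : ℕ → M → M × ℕ := fun j x => (φ (q j) x, β (q j) x)
  let E : ℕ → Ch F M →ₗ[F] Ch F M := fun j => mp Prod.fst ∘ₗ Hh Prod.snd ∘ₗ mp (γ j)
  refine ⟨fun j => E j - pr id (φ (q j)), ?_, ?_, ?_⟩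
  · intro j g c
    have hE : E j (mp (g • ·) c) = mp (g • ·) (E j c) := by
      have e1 : mp (γ j) (mp (g • ·) c) = mp (fun z : M × ℕ => (g • z.1, z.2)) (mp (γ j) c) := by
        rw [mp_mp, mp_mp]; congr 2
        funext x; simp [γ, hg]
      simp only [E, LinearMap.comp_apply]
      rw [e1, Hh_nat (a := fun z : M × ℕ => (g • z.1, z.2)) (β := Prod.snd) (fun _ => rfl),
        mp_mp, mp_mp]
      rfl
    have hP : pr id (φ (q j)) (mp (g • ·) c) = mp (g • ·) (pr id (φ (q j)) c) :=
      pr_nat id _ id _ (g • ·) (g • ·) (fun _ => rfl) (fun x => (hg (q j) g x).1) c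
    rw [LinearMap.sub_apply, LinearMap.sub_apply, map_sub, hE, hP]
  · intro U hU
    obtain ⟨ε, hε, hεU⟩ := Metric.mem_uniformity_dist.1 hU
    obtain ⟨n, hn⟩ := exists_nat_one_div_lt hε
    filter_upwards [hq n] with j hj l
    have hφU : ∀ x, (x, φ (q j) x) ∈ U ∧ ∀ g : G, g • x = x → g • φ (q j) x = φ (q j) x := by
      refine fun x => ⟨hεU ((hη (q j) x).trans (lt_of_le_of_lt ?_ hn)), fun g h => ?_⟩
      · exact one_div_le_one_div_of_le (by positivity) (by exact_mod_cast Nat.succ_le_succ hj)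
      · rw [← (hg (q j) g x).1, h]
    refine sub_mem ?_ ?_
    · simp only [E, LinearMap.comp_apply, mp_single]
      refine mp_sup ?_ (Hh_single_sup _)
      rintro l' ⟨h1, h2⟩
      refine ⟨by simpa using h2, ?_⟩
      intro y hy
      obtain ⟨z, hz, rfl⟩ := List.mem_map.1 hy
      obtain ⟨x, hx, rfl⟩ := List.mem_map.1 (h1 z hz)
      exact ⟨x, hx, hφU x⟩
    · refine pr_sup (P := {l}) (fun l hl l' h1 h2 => ?_) (single_mem_sup rfl)
      subst hl
      refine ⟨h2, fun y hy => ?_⟩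
      obtain ⟨x, hx, h3 | rfl⟩ := h1 y hy
      · obtain rfl : y = x := h3
        exact ⟨y, hx, refl_mem_uniformity hU, fun _ h => h⟩
      · exact ⟨x, hx, hφU x⟩
  · intro k hk hyk
    filter_upwards [hqy, hyk] with j h1 h2
    have h3 : y j ∈ sup F (SmL {p : M × M | dist p.1 p.2 < δ (q j)} ∩ {l | l.length = k}) := by
      rw [sup, supported_inter]; exact ⟨h1, h2⟩
    refine eq_on_sup (f := bd ∘ₗ (E j - pr id (φ (q j))) + (E j - pr id (φ (q j))) ∘ₗ bd)
      (g := LinearMap.id) (fun l hl => ?_) h3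
    have hE : bd (E j (single l 1)) + E j (bd (single l 1)) = mp (φ (q j)) (single l 1) := by
      have hG : l.map (γ j) ∈ GLi (Prod.snd : M × ℕ → ℕ) := by
        intro a ha b hb hab
        obtain ⟨x, hx, rfl⟩ := List.mem_map.1 ha
        obtain ⟨x', hx', rfl⟩ := List.mem_map.1 hb
        exact Prod.ext (hc (q j) x x' (hl.1 x hx x' hx') hab) hab
      have e1 := Hh_bd_single (F := F) hG
      rw [srt_long, sub_zero] at e1
      · have e2 := congrArg (mp (F := F) Prod.fst) e1
        rw [map_add, mp_bd, ← mp_single, mp_mp, ← mp_bd (γ j)] at e2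
        exact e2
      · have := hcard (q j) l hl.1
        rw [List.map_map, List.length_map, show l.length = k from hl.2]
        exact lt_of_le_of_lt this hk
    have hP := pr_bd id (φ (q j)) (single l (1 : F))
    rw [mp_id] at hP
    simp only [LinearMap.add_apply, LinearMap.comp_apply, LinearMap.sub_apply, map_sub,
      LinearMap.id_apply]
    rw [sub_add_sub_comm, hE, hP]
    abel

/-- A compact manifold embeds in a Euclidean space. -/
lemma exists_separating {n : ℕ} {M : Type*} [TopologicalSpace M] [CompactSpace M] [T2Space M]
    [ChartedSpace (EuclideanSpace ℝ (Fin n)) M] :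
    ∃ (N : ℕ) (f : M → Fin N → ℝ), Continuous f ∧ Function.Injective f := by
  classical
  let e := fun x : M => chartAt (EuclideanSpace ℝ (Fin n)) x
  have h1 : ∀ x : M, ∃ ρ : C(M, ℝ), ρ x = 1 ∧ tsupport ρ ⊆ (e x).source := by
    intro x
    obtain ⟨D, hD, hDc, hDs⟩ := exists_mem_nhds_isClosed_subset
      ((e x).open_source.mem_nhds (mem_chart_source _ x))
    obtain ⟨ρ, h0, h1, -⟩ := exists_continuous_zero_one_of_isClosed
      (isOpen_interior (s := D)).isClosed_compl (isClosed_singleton (x := x))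
      (Set.disjoint_singleton_right.2 fun h => h (mem_interior_iff_mem_nhds.2 hD))
    refine ⟨ρ, h1 rfl, (closure_minimal ?_ hDc).trans hDs⟩
    intro y hy
    by_contra h
    exact hy (h0 fun h' => h (interior_subset h'))
  choose ρ hρ hs using h1
  have hc : ∀ x, Continuous fun y => ρ x y • e x y := by
    intro x
    refine ContinuousOn.continuous_of_tsupport_subset (s := (e x).source) ?_ (e x).open_source ?_
    · exact (ρ x).continuous.continuousOn.smul (e x).continuousOn
    · exact (tsupport_smul_subset_left _ _).trans (hs x)
  obtain ⟨t, ht⟩ := isCompact_univ.elim_finite_subcover (fun x : M => {y | ρ x y ≠ 0})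
    (fun x => isOpen_ne_fun (ρ x).continuous continuous_const) (by
      intro x _; exact Set.mem_iUnion.2 ⟨x, by simp [hρ]⟩)
  let ε := Fintype.equivFin (t × Option (Fin n))
  let f : M → t × Option (Fin n) → ℝ := fun y a =>
    match a with
    | (x, none) => ρ x y
    | (x, Option.some m) => (ρ x y • e x y) m
  have hfc : Continuous f := by
    refine continuous_pi fun a => ?_
    rcases a with ⟨x, _ | m⟩
    · exact (ρ x).continuous
    · exact (PiLp.continuous_apply 2 _ m).comp (hc x)
  refine ⟨_, fun y i => f y (ε.symm i), continuous_pi fun i => (continuous_apply _).comp hfc, ?_⟩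
  intro y z hyz
  have h : ∀ a, f y a = f z a := fun a => by simpa using congrFun hyz (ε a)
  obtain ⟨x, hx, hxy⟩ := Set.mem_iUnion₂.1 (ht (Set.mem_univ y))
  have h2 : ρ x y = ρ x z := h (⟨x, hx⟩, none)
  have h3 : ρ x y • e x y = ρ x z • e x z := by
    ext m; exact h (⟨x, hx⟩, some m)
  rw [← h2] at h3
  have h4 := smul_right_injective _ (show ρ x y ≠ 0 from hxy) h3
  refine (e x).injOn (hs x (subset_tsupport _ hxy)) (hs x (subset_tsupport _ ?_)) h4
  rw [Function.mem_support, ← h2]; exact hxy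
end MannSu

/-! ### Half spaces at the origin -/

namespace MannSu
universe u v
open Finsupp Filter Uniformity Topology
set_option linter.unusedSectionVars false

section
variable {F : Type*} [CommRing F] {M : Type*} [UniformSpace M]

/-- Chains along a homotopy through small steps differ by boundaries. -/
lemma htpy {𝓕 : Filter M} {ℓ : ℕ} {Y : Set M} {f : ℕ → ℕ → M → M} {q : ℕ → ℕ}
    (h0 : ∀ j, ∀ x ∈ Y, f j 0 x = x) (hY : ∀ᶠ j in om, ∀ i ≤ q j, ∀ x ∈ Y, f j i x ∈ Y)
    (hs : ∀ U ∈ 𝓤 M, ∃ V ∈ 𝓤 M, ∀ᶠ j in om, ∀ i ≤ q j, ∀ x ∈ Y, ∀ y ∈ Y,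
      (x, y) ∈ V → (f j i x, f j i y) ∈ U)
    (hs' : ∀ U ∈ 𝓤 M, ∀ᶠ j in om, ∀ i < q j, ∀ x ∈ Y, (f j i x, f j (i + 1) x) ∈ U)
    {c : Sq F M} (hc : c ∈ Ac F ℓ Y) (hn : Hq f q (bdq c) ∈ null F 𝓕) :
    c - mq (fun j => f j (q j)) c ∈ Bc F 𝓕 ℓ Y := by
  obtain ⟨h1, h2, h3⟩ := mem_Ac.1 hc
  refine mem_Bc.2 ⟨- Hq f q c, neg_mem (mem_Ac.2 ⟨Hq_small hs hs' h1 h2, Hq_LS hY h2, Hq_len h3⟩), ?_⟩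
  have e4 : c - mq (fun j => f j 0) c ∈ null F 𝓕 := null_zero (by
    filter_upwards [mq_id_on h0 h2] with j h
    rw [Pi.sub_apply, h, sub_self])
  have : c - mq (fun j => f j (q j)) c - bdq (- Hq f q c) =
      (c - mq (fun j => f j 0) c) - Hq f q (bdq c) := by
    rw [map_neg, eq_sub_of_add_eq (Hq_bd f q c)]; abel
  rw [this]
  exact sub_mem e4 hn

lemma null_mono_set {𝓕 : Filter M} {A : Set M} (hA : Aᶜ ∈ 𝓕) {c : Sq F M} (hc : c ∈ ev F (LS A)) :
    c ∈ null F 𝓕 := ⟨Aᶜ, hA, by simpa using hc⟩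

lemma null_le_Bc {𝓕 : Filter M} {ℓ : ℕ} {Y : Set M} {c : Sq F M} (h : c ∈ null F 𝓕) :
    c ∈ Bc F 𝓕 ℓ Y := Submodule.mem_sup_right h

lemma bd_mem_Bc {𝓕 : Filter M} {ℓ : ℕ} {Y : Set M} {b : Sq F M} (h : b ∈ Ac F (ℓ + 1) Y) :
    bdq b ∈ Bc F 𝓕 ℓ Y := Submodule.mem_sup_left ⟨b, h, rfl⟩

lemma bdq_Ac {ℓ : ℕ} {Y : Set M} {b : Sq F M} (h : b ∈ Ac F (ℓ + 1) Y) : bdq b ∈ Ac F ℓ Y := by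
  obtain ⟨h1, h2, h3⟩ := mem_Ac.1 h
  exact mem_Ac.2 ⟨bdq_small h1, bdq_LS h2, bdq_len h3⟩

lemma rsq_Ac {ℓ : ℕ} {Y X : Set M} {b : Sq F M} (h : b ∈ Ac F ℓ Y) :
    rsq (LS X) b ∈ Ac F ℓ (Y ∩ X) := by
  obtain ⟨h1, h2, h3⟩ := mem_Ac.1 h
  exact mem_Ac.2 ⟨rsq_small _ h1, rsq_ev h2 fun l hl hl' => fun x hx => ⟨hl x hx, hl' x hx⟩,
    rsq_ev h3 fun _ h _ => h⟩
end

section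
variable {F : Type*} [CommRing F] {n : ℕ}

/-- The coordinate subspace spanned by the first `m` coordinates. -/
def Em (n m : ℕ) : Set (Fin n → ℝ) := {x | ∀ i : Fin n, m ≤ i → x i = 0}

/-- The half space of `Em n (m + 1)` where the coordinate `m` has the sign of `s`. -/
def Hm {n : ℕ} (m : Fin n) (s : ℝ) : Set (Fin n → ℝ) := {x | x ∈ Em n (m + 1) ∧ 0 ≤ s * x m}

lemma norm_le_of_Wc {A : Set (Fin n → ℝ)} (r : ℝ) (hr : 0 < r) (h : ∀ x ∈ A, r ≤ ‖x‖) :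
    Aᶜ ∈ 𝓝 (0 : Fin n → ℝ) := by
  filter_upwards [Metric.ball_mem_nhds (0 : Fin n → ℝ) hr] with x hx hxA
  rw [mem_ball_zero_iff] at hx
  exact absurd (h x hxA) (not_le.2 hx)

lemma null_norm {E : Type*} [SeminormedAddCommGroup E] {c : Sq F E} (hc : c ∈ null F (𝓝 (0 : E))) :
    ∃ r > 0, c ∈ ev F (LS {x : E | r ≤ ‖x‖}) := by
  obtain ⟨W, hW, h⟩ := hc
  obtain ⟨r, hr, hb⟩ := Metric.mem_nhds_iff.1 hW
  refine ⟨r, hr, ev_mono (LS_mono fun x hx => ?_) h⟩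
  by_contra h'
  exact hx (hb (by simpa using h'))

lemma half_acyclic (m : Fin n) {s : ℝ} (hs : |s| = 1) (ℓ : ℕ) :
    Zc F (𝓝 0) ℓ (Hm m s) ≤ Bc F (𝓝 0) ℓ (Hm m s) := by
  intro c hc
  obtain ⟨hA, hn⟩ := mem_Zc.1 hc
  obtain ⟨r, hr, hcr⟩ := null_norm hn
  have hss : s * s = 1 := by rw [← abs_mul_abs_self, hs, one_mul]
  let f : ℕ → ℕ → (Fin n → ℝ) → Fin n → ℝ := fun j i x =>
    x + ((i : ℝ) / (j + 1) * (r / 2) * s) • Pi.single m 1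
  have hco : ∀ j i : ℕ, i ≤ j + 1 → 0 ≤ (i : ℝ) / (j + 1) ∧ (i : ℝ) / (j + 1) ≤ 1 := by
    intro j i hi
    exact ⟨by positivity, by rw [div_le_one (by positivity)]; exact_mod_cast hi⟩
  have hnorm : ∀ a : ℝ, ‖(a • Pi.single m 1 : Fin n → ℝ)‖ = |a| := by
    intro a; rw [norm_smul, Pi.norm_single]; simp
  have hd : c - mq (fun j => f j (j + 1)) c ∈ Bc F (𝓝 0) ℓ (Hm m s) := by
    refine htpy (f := f) (q := fun j => j + 1) ?_ ?_ ?_ ?_ hA ?_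
    · intro j x _; simp [f]
    · refine Eventually.of_forall fun j i hi x hx => ⟨fun k hk => ?_, ?_⟩
      · have : k ≠ m := by rintro rfl; omega
        simp [f, hx.1 k hk, this]
      · have := hx.2
        have e : s * f j i x m = s * x m + (i : ℝ) / (j + 1) * (r / 2) := by
          simp only [f, Pi.add_apply, Pi.smul_apply, Pi.single_eq_same, smul_eq_mul, mul_one, mul_add]
          linear_combination ((i : ℝ) / (j + 1) * (r / 2)) * hss
        rw [e]; have := (hco j i hi).1; positivity
    · intro U hU
      obtain ⟨ε, hε, hεU⟩ := Metric.mem_uniformity_dist.1 hU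
      refine ⟨_, Metric.dist_mem_uniformity hε, Eventually.of_forall fun j i _ x _ y _ h => hεU ?_⟩
      simp only [f, dist_add_right]; exact h
    · intro U hU
      obtain ⟨ε, hε, hεU⟩ := Metric.mem_uniformity_dist.1 hU
      obtain ⟨N, hN⟩ := exists_nat_gt (r / ε)
      filter_upwards [ev_ge N] with j hj i _ x _
      refine hεU ?_
      have hpos : (0 : ℝ) < j + 1 := by positivity
      simp only [f, dist_add_left]
      rw [dist_eq_norm, ← sub_smul, hnorm, ← sub_mul, ← sub_mul, abs_mul, hs, mul_one]
      have : (i : ℝ) / (j + 1) * (r / 2) = i * (r / 2) / (j + 1) := by ring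
      have e : ((i : ℝ) / (j + 1) - ((i + 1 : ℕ) : ℝ) / (j + 1)) * (r / 2) = -((r / 2) / (j + 1)) := by
        push_cast; field_simp; ring
      rw [e, abs_neg, abs_of_nonneg (by positivity), div_lt_iff₀ hpos]
      have h5 : (N : ℝ) ≤ j := by exact_mod_cast hj
      rw [div_lt_iff₀ hε] at hN
      nlinarith
    · refine null_mono_set (norm_le_of_Wc (A := {x | r / 2 ≤ ‖x‖}) (r / 2) (by positivity)
        fun _ h => h) (Hq_LS (Eventually.of_forall fun j i hi x hx => ?_) hcr)
      obtain ⟨h1, h2⟩ := hco j i hi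
      have h3 : ‖x‖ ≤ ‖f j i x‖ + |(i : ℝ) / (j + 1) * (r / 2) * s| := by
        have e : x = f j i x - ((i : ℝ) / (j + 1) * (r / 2) * s) • Pi.single m 1 := by simp [f]
        conv_lhs => rw [e]
        refine (norm_sub_le _ _).trans ?_
        rw [hnorm]
      rw [abs_mul, hs, mul_one, abs_of_nonneg (by positivity)] at h3
      have hx : r ≤ ‖x‖ := hx
      change r / 2 ≤ _
      nlinarith
  have hend : mq (fun j => f j (j + 1)) c ∈ null F (𝓝 0) := by
    refine null_mono_set (norm_le_of_Wc (A := {x | r / 2 ≤ ‖x‖}) (r / 2) (by positivity)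
        fun _ h => h) (mq_LS (Eventually.of_forall fun j x hx => ?_) (mem_Ac.1 hA).2.1)
    have hpos : (0 : ℝ) < j + 1 := by positivity
    have e : s * f j (j + 1) x m = s * x m + (r / 2) := by
      simp only [f, Pi.add_apply, Pi.smul_apply, Pi.single_eq_same, smul_eq_mul, mul_one, mul_add]
      push_cast
      rw [div_self hpos.ne']
      linear_combination (r / 2) * hss
    have h1 : |s * f j (j + 1) x m| ≤ ‖f j (j + 1) x‖ := by
      rw [abs_mul, hs, one_mul]; exact norm_le_pi_norm (f j (j + 1) x) m
    have h2 := le_abs_self (s * f j (j + 1) x m)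
    have := hx.2
    change r / 2 ≤ _
    linarith
  have := add_mem hd (null_le_Bc (ℓ := ℓ) (Y := Hm m s) hend)
  rwa [sub_add_cancel] at this

/-- The map squeezing a thin slab onto a coordinate hyperplane. -/
noncomputable def squ (m : Fin n) (η : ℝ) (x : Fin n → ℝ) : Fin n → ℝ :=
  if |x m| < η then Function.update x m 0 else x

lemma squ_dist (m : Fin n) {η : ℝ} (hη : 0 < η) (x : Fin n → ℝ) : dist x (squ m η x) ≤ η := by
  rw [squ]; split_ifs with h
  · refine (dist_pi_le_iff hη.le).2 fun i => ?_
    by_cases hi : i = m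
    · subst hi; simpa [Real.dist_eq] using h.le
    · simpa [Function.update_of_ne hi] using hη.le
  · simpa using hη.le

lemma squ_Em (m : Fin n) (η : ℝ) {x : Fin n → ℝ} (k : ℕ) (hx : x ∈ Em n k) : squ m η x ∈ Em n k := by
  rw [squ]; split_ifs with h
  · intro i hi
    by_cases hi' : i = m
    · subst hi'; simp
    · rw [Function.update_of_ne hi']; exact hx i hi
  · exact hx

lemma squ_Hm (m : Fin n) (η : ℝ) {s : ℝ} {x : Fin n → ℝ} (hx : x ∈ Hm m s) : squ m η x ∈ Hm m s := by
  refine ⟨squ_Em m η _ hx.1, ?_⟩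
  rw [squ]; split_ifs with h
  · simp
  · exact hx.2

/-- Pushing a chain off a thin slab splits it along the hyperplane, up to homotopy. -/
lemma fold (m : Fin n) {ℓ : ℕ} {c : Sq F (Fin n → ℝ)} (hc : c ∈ Ac F ℓ (Em n (m + 1))) :
    ∃ Φ : Sq F (Fin n → ℝ) →ₗ[F] Sq F (Fin n → ℝ),
      (∀ c, Φ (bdq c) = bdq (Φ c)) ∧ (∀ s ℓ, ∀ c ∈ Ac F ℓ (Hm m s), Φ c ∈ Ac F ℓ (Hm m s)) ∧
      (∀ c ∈ null F (𝓝 0), Φ c ∈ null F (𝓝 0)) ∧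
      (∀ c ∈ ev F (LS (Em n m)), Φ c - c ∈ null F (𝓝 0)) ∧
      (∀ ℓ, ∀ c ∈ Zc F (𝓝 0) ℓ (Em n (m + 1)), c - Φ c ∈ Bc F (𝓝 0) ℓ (Em n (m + 1))) ∧
      ∃ a ∈ Ac F ℓ (Hm m 1), ∃ b ∈ Ac F ℓ (Hm m (-1)), Φ c = a + b := by
  obtain ⟨hc1, hc2, hc3⟩ := mem_Ac.1 hc
  obtain ⟨q, hq, hqc⟩ := diag (P := fun k j => c j ∈ sup F (SmL
    {p : (Fin n → ℝ) × (Fin n → ℝ) | dist p.1 p.2 < 1 / ((k : ℝ) + 1)}))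
    (fun k => mem_small.1 hc1 _ (Metric.dist_mem_uniformity (by positivity)))
  let η : ℕ → ℝ := fun j => 1 / ((q j : ℝ) + 1)
  have hη : ∀ j, 0 < η j := fun j => by positivity
  have hη0 : ∀ ε > 0, ∀ᶠ j in om, η j < ε := by
    intro ε hε
    obtain ⟨k, hk⟩ := exists_nat_one_div_lt hε
    filter_upwards [hq k] with j hj
    refine lt_of_le_of_lt ?_ hk
    exact one_div_le_one_div_of_le (by positivity) (by exact_mod_cast Nat.succ_le_succ hj)
  -- the squeezing maps as homotopies with one step
  let f : ℕ → ℕ → (Fin n → ℝ) → Fin n → ℝ := fun j i => if i = 0 then id else squ m (η j)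
  have hfd : ∀ j i x, dist x (f j i x) ≤ η j := by
    intro j i x
    by_cases hi : i = 0
    · simpa [f, hi] using (hη j).le
    · simpa [f, hi] using squ_dist m (hη j) x
  have hs : ∀ (Y : Set (Fin n → ℝ)), ∀ U ∈ 𝓤 (Fin n → ℝ), ∃ V ∈ 𝓤 (Fin n → ℝ), ∀ᶠ j in om, ∀ i ≤ 1, ∀ x ∈ Y, ∀ y ∈ Y,
      (x, y) ∈ V → (f j i x, f j i y) ∈ U := by
    intro Y U hU
    obtain ⟨ε, hε, hεU⟩ := Metric.mem_uniformity_dist.1 hU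
    refine ⟨_, Metric.dist_mem_uniformity (show 0 < ε / 3 by positivity), ?_⟩
    filter_upwards [hη0 (ε / 3) (by positivity)] with j hj i _ x _ y _ hxy
    refine hεU ?_
    have h1 := hfd j i x
    have h2 := hfd j i y
    have h3 : dist x y < ε / 3 := hxy
    have h4 := dist_triangle4 (f j i x) x y (f j i y)
    rw [dist_comm (f j i x) x] at h4
    linarith
  have hs' : ∀ (Y : Set (Fin n → ℝ)), ∀ U ∈ 𝓤 (Fin n → ℝ), ∀ᶠ j in om, ∀ i < 1, ∀ x ∈ Y, (f j i x, f j (i + 1) x) ∈ U := by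
    intro Y U hU
    obtain ⟨ε, hε, hεU⟩ := Metric.mem_uniformity_dist.1 hU
    filter_upwards [hη0 ε hε] with j hj i hi x _
    obtain rfl : i = 0 := by omega
    exact hεU ((hfd j 1 x).trans_lt hj)
  have hnn : ∀ A ∈ 𝓝 (0 : Fin n → ℝ), ∃ B ∈ 𝓝 (0 : Fin n → ℝ), ∀ᶠ j in om, ∀ i ≤ 1, ∀ x ∈ Aᶜ, f j i x ∈ Bᶜ := by
    intro A hA
    obtain ⟨r, hr, hrA⟩ := Metric.mem_nhds_iff.1 hA
    refine ⟨_, Metric.ball_mem_nhds 0 (half_pos hr), ?_⟩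
    filter_upwards [hη0 (r / 2) (by positivity)] with j hj i _ x hx hx'
    refine hx (hrA ?_)
    rw [Metric.mem_ball] at hx' ⊢
    have h1 := hfd j i x
    have := dist_triangle x (f j i x) 0
    linarith
  let Φ : Sq F (Fin n → ℝ) →ₗ[F] Sq F (Fin n → ℝ) := mq fun j => f j 1
  have hΦc : Φ c ∈ Ac F ℓ (Em n (m + 1)) := by
    refine mem_Ac.2 ⟨mq_small (fun U hU => ?_) hc1 hc2,
      mq_LS (Eventually.of_forall fun j x hx => ?_) hc2, mq_len hc3⟩
    · obtain ⟨V, hV, h⟩ := hs (Em n (m + 1)) U hU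
      exact ⟨V, hV, h.mono fun j h => h 1 le_rfl⟩
    · exact squ_Em m _ _ hx
  refine ⟨Φ, fun c => mq_bdq _ c, ?_, ?_, ?_, ?_, rsq (LS (Hm m 1)) (Φ c), ?_,
    Φ c - rsq (LS (Hm m 1)) (Φ c), ?_, by abel⟩
  · intro s ℓ c hc
    obtain ⟨hc1, hc2, hc3⟩ := mem_Ac.1 hc
    refine mem_Ac.2 ⟨mq_small (fun U hU => ?_) hc1 hc2,
      mq_LS (Eventually.of_forall fun j x hx => ?_) hc2, mq_len hc3⟩
    · obtain ⟨V, hV, h⟩ := hs (Hm m s) U hU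
      exact ⟨V, hV, h.mono fun j h => h 1 le_rfl⟩
    · exact squ_Hm m _ hx
  · rintro c ⟨A, hA, hc⟩
    obtain ⟨B, hB, h⟩ := hnn A hA
    exact ⟨B, hB, mq_LS (h.mono fun j h => h 1 le_rfl) hc⟩
  · intro c hc
    refine null_zero ?_
    have hid : ∀ j, ∀ x ∈ Em n m, f j 1 x = x := by
      intro j x hx
      have h0 : x m = 0 := hx m le_rfl
      simp only [f, one_ne_zero, if_false, squ]
      split_ifs
      · rw [← h0, Function.update_eq_self]
      · rfl
    filter_upwards [mq_id_on (f := fun j => f j 1) hid hc] with j hj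
    rw [Pi.sub_apply, hj, sub_self]
  · intro ℓ c hc
    obtain ⟨hA, hn⟩ := mem_Zc.1 hc
    refine htpy (f := f) (q := fun _ => 1) (fun j x _ => rfl) ?_ (hs _) (hs' _) hA ?_
    · refine Eventually.of_forall fun j i hi x hx => ?_
      by_cases hi : i = 0
      · simpa [f, hi] using hx
      · simpa [f, hi] using squ_Em m _ _ hx
    · obtain ⟨A, hA, hn⟩ := hn
      obtain ⟨B, hB, h⟩ := hnn A hA
      exact ⟨B, hB, Hq_LS h hn⟩
  · exact Ac_mono Set.inter_subset_right (rsq_Ac hΦc)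
  · refine mem_Ac.2 ⟨sub_mem (mem_Ac.1 hΦc).1 (rsq_small _ (mem_Ac.1 hΦc).1), ?_,
      sub_mem (mem_Ac.1 hΦc).2.2 (rsq_ev (mem_Ac.1 hΦc).2.2 fun _ h _ => h)⟩
    filter_upwards [hqc, hc2] with j h1 h2
    have h3 : c j ∈ sup F (SmL {p : (Fin n → ℝ) × (Fin n → ℝ) | dist p.1 p.2 < η j} ∩
        LS (Em n (m + 1))) := by
      rw [sup, supported_inter]; exact ⟨h1, h2⟩
    refine sub_rs_sup (mp_sup (Q := LS (Hm m 1) ∪ LS (Hm m (-1))) (fun l hl => ?_) h3) ?_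
    · by_contra hcon
      simp only [Set.mem_union, not_or] at hcon
      have key : ∀ s : ℝ, |s| = 1 → l.map (squ m (η j)) ∉ LS (Hm m s) → ∃ x ∈ l, s * x m ≤ -η j := by
        intro s hs h
        simp only [LS, Set.mem_ofPred_eq, not_forall] at h
        obtain ⟨y, hy, hyn⟩ := h
        obtain ⟨x, hx, rfl⟩ := List.mem_map.1 hy
        refine ⟨x, hx, ?_⟩
        by_contra! h'
        refine hyn ⟨squ_Em m _ _ (hl.2 x hx), ?_⟩
        rw [squ]; split_ifs with h3
        · simp
        · have h3 : η j ≤ |s * x m| := by rw [abs_mul, hs, one_mul]; exact not_lt.1 h3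
          rcases le_abs.1 h3 with h | h
          · linarith [hη j]
          · linarith
      obtain ⟨x, hx, hx'⟩ := key 1 (by simp) hcon.1
      obtain ⟨y, hy, hy'⟩ := key (-1) (by simp) hcon.2
      have h4 : dist x y < η j := hl.1 x hx y hy
      have h5 := dist_le_pi_dist x y m
      rw [Real.dist_eq] at h5
      have h6 := neg_abs_le (x m - y m)
      linarith [hη j]
    · intro l hl hl'
      exact hl.resolve_left hl'
end
end MannSu

/-! ### Local homology of Euclidean space -/

namespace MannSu
universe u v
open Finsupp Filter Uniformity Topology
set_option linter.unusedSectionVars false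

/-- The homology of `Y` at the filter `𝓕` is one-dimensional, concentrated in length `ℓ₀`. -/
def Loc (F : Type*) [CommRing F] {M : Type*} [UniformSpace M] (𝓕 : Filter M) (ℓ₀ : ℕ) (Y : Set M) : Prop :=
  (∀ ℓ, ℓ ≠ ℓ₀ → Zc F 𝓕 ℓ Y ≤ Bc F 𝓕 ℓ Y) ∧
    ∃ z ∈ Zc F 𝓕 ℓ₀ Y, z ∉ Bc F 𝓕 ℓ₀ Y ∧ ∀ c ∈ Zc F 𝓕 ℓ₀ Y, ∃ a : F, c - a • z ∈ Bc F 𝓕 ℓ₀ Y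

section
variable {F : Type*} [CommRing F] {n : ℕ}

lemma Hm_sub_Em (m : Fin n) (s : ℝ) : Hm m s ⊆ Em n (m + 1) := fun _ h => h.1

lemma Em_sub_Hm (m : Fin n) (s : ℝ) : Em n m ⊆ Hm m s := fun x h =>
  ⟨fun i hi => h i (by omega), by rw [h m le_rfl]; simp⟩

lemma Hm_inter (m : Fin n) : Hm m 1 ∩ Hm m (-1) ⊆ Em n m := by
  rintro x ⟨h1, h2⟩ i hi
  rcases hi.lt_or_eq with h | h
  · exact h1.1 i h
  · obtain rfl : m = i := Fin.ext h
    have a1 := h1.2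
    have a2 := h2.2
    linarith

lemma join (m : Fin n) {ℓ : ℕ} {a b : Sq F (Fin n → ℝ)} (ha : a ∈ Ac F ℓ (Hm m 1))
    (hb : b ∈ Ac F ℓ (Hm m (-1))) (hab : a - b ∈ null F (𝓝 0)) :
    ∃ e ∈ Ac F ℓ (Em n m), a - e ∈ null F (𝓝 0) := by
  refine ⟨rsq (LS (Hm m (-1))) a, Ac_mono (Hm_inter m) (rsq_Ac ha), ?_⟩
  have h1 : b - rsq (LS (Hm m (-1))) b ∈ null F (𝓝 (0 : Fin n → ℝ)) := null_zero (by
    filter_upwards [(mem_Ac.1 hb).2.1] with j hj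
    rw [Pi.sub_apply, sub_eq_zero]; exact (rs_eq_self hj).symm)
  have : a - rsq (LS (Hm m (-1))) a =
      (a - b) - rsq (LS (Hm m (-1))) (a - b) + (b - rsq (LS (Hm m (-1))) b) := by
    rw [map_sub]; abel
  rw [this]
  exact add_mem (sub_mem hab (rsq_null _ hab)) h1

lemma split (m : Fin n) {ℓ : ℕ} {c : Sq F (Fin n → ℝ)} (hc : c ∈ Zc F (𝓝 0) (ℓ + 1) (Em n (m + 1))) :
    ∃ a ∈ Ac F (ℓ + 1) (Hm m 1), ∃ b ∈ Ac F (ℓ + 1) (Hm m (-1)), ∃ e ∈ Zc F (𝓝 0) ℓ (Em n m),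
      c - (a + b) ∈ Bc F (𝓝 0) (ℓ + 1) (Em n (m + 1)) ∧ bdq a - e ∈ null F (𝓝 0) ∧
      bdq b + e ∈ null F (𝓝 0) := by
  obtain ⟨hA, hn⟩ := mem_Zc.1 hc
  obtain ⟨Φ, h1, h2, h3, h4, h5, a, ha, b, hb, hab⟩ := fold m hA
  have h6 := h3 _ hn
  rw [h1, hab, map_add] at h6
  obtain ⟨e, he, hae⟩ := join m (bdq_Ac ha) (neg_mem (bdq_Ac hb)) (by rwa [sub_neg_eq_add])
  refine ⟨a, ha, b, hb, e, mem_Zc.2 ⟨he, ?_⟩, hab ▸ h5 _ _ hc, hae, ?_⟩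
  · have := neg_mem (bdq_null hae)
    rwa [map_sub, bdq_bdq, zero_sub, neg_neg] at this
  · have := sub_mem h6 hae
    convert this using 1; abel

lemma Loc_step (m : Fin n) (h : Loc F (𝓝 0) (m + 1) (Em n m)) :
    Loc F (𝓝 0) (m + 2) (Em n (m + 1)) := by
  obtain ⟨h1, z, hz, hzB, hsp⟩ := h
  have hP : ∀ ℓ, Bc F (𝓝 0) ℓ (Hm m 1) ≤ Bc F (𝓝 0) ℓ (Em n (m + 1)) :=
    fun ℓ => Bc_mono (Hm_sub_Em m _)
  have hN : ∀ ℓ, Bc F (𝓝 0) ℓ (Hm m (-1)) ≤ Bc F (𝓝 0) ℓ (Em n (m + 1)) :=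
    fun ℓ => Bc_mono (Hm_sub_Em m _)
  have aP : ∀ ℓ, Zc F (𝓝 0) ℓ (Hm m 1) ≤ Bc F (𝓝 0) ℓ (Em n (m + 1)) :=
    fun ℓ => (half_acyclic m (by simp) ℓ).trans (hP ℓ)
  have aN : ∀ ℓ, Zc F (𝓝 0) ℓ (Hm m (-1)) ≤ Bc F (𝓝 0) ℓ (Em n (m + 1)) :=
    fun ℓ => (half_acyclic m (by simp) ℓ).trans (hN ℓ)
  have eP : ∀ ℓ, Ac F ℓ (Em n m) ≤ Ac F ℓ (Hm m 1) := fun ℓ => Ac_mono (Em_sub_Hm m _)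
  have eN : ∀ ℓ, Ac F ℓ (Em n m) ≤ Ac F ℓ (Hm m (-1)) := fun ℓ => Ac_mono (Em_sub_Hm m _)
  obtain ⟨wP, hwP, hzP⟩ := mem_Bc.1 (half_acyclic m (s := 1) (by simp) _ (Zc_mono (Em_sub_Hm m 1) hz))
  obtain ⟨wN, hwN, hzN⟩ :=
    mem_Bc.1 (half_acyclic m (s := -1) (by simp) _ (Zc_mono (Em_sub_Hm m (-1)) hz))
  refine ⟨fun ℓ hℓ c hc => ?_, wP - wN, mem_Zc.2 ⟨sub_mem (Ac_mono (Hm_sub_Em m _) hwP)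
    (Ac_mono (Hm_sub_Em m _) hwN), ?_⟩, fun hB => ?_, fun c hc => ?_⟩
  · rcases ℓ with _ | ℓ
    · exact null_le_Bc (null_len_zero (mem_Ac.1 (mem_Zc.1 hc).1).2.2)
    obtain ⟨a, ha, b, hb, e, he, hB, hae, hbe⟩ := split m hc
    obtain ⟨f, hf, hef⟩ := mem_Bc.1 (h1 ℓ (by omega) he)
    have k1 := aP (ℓ + 1) (mem_Zc.2 ⟨sub_mem ha (eP _ hf), by
      rw [map_sub]; convert add_mem hae hef using 1; abel⟩)
    have k2 := aN (ℓ + 1) (mem_Zc.2 ⟨add_mem hb (eN _ hf), by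
      rw [map_add]; convert sub_mem hbe hef using 1; abel⟩)
    convert add_mem hB (add_mem k1 k2) using 1; abel
  · rw [map_sub]; convert sub_mem hzN hzP using 1; abel
  · obtain ⟨w, hw, hzw⟩ := mem_Bc.1 hB
    obtain ⟨Φ, g1, g2, g3, g4, g5, p, hp, q, hq, hpq⟩ := fold m hw
    obtain ⟨f, hf, hff⟩ := join m (sub_mem (g2 _ _ _ hwP) (bdq_Ac hp))
      (add_mem (g2 _ _ _ hwN) (bdq_Ac hq)) (by
        have := g3 _ hzw
        rw [map_sub, map_sub, g1, hpq, map_add] at this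
        convert this using 1; abel)
    refine hzB (mem_Bc.2 ⟨f, hf, ?_⟩)
    have k1 := bdq_null hff
    rw [map_sub, map_sub, bdq_bdq, sub_zero, ← g1] at k1
    have k2 := g3 _ hzP
    rw [map_sub] at k2
    have k3 := g4 _ (mem_Ac.1 (mem_Zc.1 hz).1).2.1
    convert sub_mem (add_mem k1 k2) k3 using 1; abel
  · obtain ⟨a, ha, b, hb, e, he, hB, hae, hbe⟩ := split m hc
    obtain ⟨α, hα⟩ := hsp e he
    obtain ⟨f, hf, hef⟩ := mem_Bc.1 hα
    refine ⟨α, ?_⟩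
    have s1 := Submodule.smul_mem _ α hzP
    have s2 := Submodule.smul_mem _ α hzN
    rw [smul_sub] at s1 s2
    have k1 := aP (m + 2) (mem_Zc.2 ⟨sub_mem (sub_mem ha (Submodule.smul_mem _ α hwP)) (eP _ hf), by
      rw [map_sub, map_sub, map_smul]; convert add_mem (add_mem hae hef) s1 using 1; abel⟩)
    have k2 := aN (m + 2) (mem_Zc.2 ⟨add_mem (add_mem hb (Submodule.smul_mem _ α hwN)) (eN _ hf), by
      rw [map_add, map_add, map_smul]; convert sub_mem (sub_mem hbe hef) s2 using 1; abel⟩)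
    convert add_mem hB (add_mem k1 k2) using 1
    rw [smul_sub]; abel

lemma Loc_base [Finite F] [Nontrivial F] : Loc F (𝓝 0) 1 (Em n 0) := by
  have hE : Em n 0 = {0} := by
    ext x; simp [Em, funext_iff]
  have key : ∀ ℓ, ∀ c ∈ Ac F (ℓ + 1) (Em n 0), c ∈ null F (𝓝 (0 : Fin n → ℝ)) → ∀ᶠ j in om, c j = 0 := by
    rintro ℓ c hc ⟨W, hW, hcW⟩
    obtain ⟨_, h2, h3⟩ := mem_Ac.1 hc
    filter_upwards [ev_inter hcW (ev_inter h2 h3)] with j hj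
    have : LS Wᶜ ∩ (LS (Em n 0) ∩ {l | l.length = ℓ + 1}) = ∅ := by
      ext l
      simp only [Set.mem_inter_iff, Set.mem_empty_iff_false, iff_false]
      rintro ⟨k1, k2, k3⟩
      rcases l with _ | ⟨x, l⟩
      · simp at k3
      have h0 : x = 0 := by simpa [hE] using k2 x (by simp)
      exact k1 x (by simp) (h0 ▸ mem_of_mem_nhds hW)
    rw [this, sup, supported_empty] at hj
    simpa using hj
  have hsm : ∀ c : Sq F (Fin n → ℝ), c ∈ ev F (LS (Em n 0)) → c ∈ small F (Fin n → ℝ) := by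
    intro c hc
    refine mem_small.2 fun U hU => ev_mono (fun l hl => ?_) hc
    intro x hx y hy
    have h1 : x = 0 := by simpa [hE] using hl x hx
    have h2 : y = 0 := by simpa [hE] using hl y hy
    rw [h1, h2]; exact refl_mem_uniformity hU
  have h0E : (0 : Fin n → ℝ) ∈ Em n 0 := by simp [hE]
  have hzA : (fun _ => single [0] 1 : Sq F (Fin n → ℝ)) ∈ Ac F 1 (Em n 0) := by
    have h2 : (fun _ => single [0] 1 : Sq F (Fin n → ℝ)) ∈ ev F (LS (Em n 0)) :=
      Eventually.of_forall fun j => single_mem_sup (by intro x hx; simp at hx; subst hx; exact h0E)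
    exact mem_Ac.2 ⟨hsm _ h2, h2, Eventually.of_forall fun j => single_mem_sup (by simp)⟩
  have form : ∀ ℓ, ∀ c ∈ Ac F ℓ (Em n 0), ∀ᶠ j in om, ∃ a : F, c j = a • single (List.replicate ℓ 0) 1 := by
    intro ℓ c hc
    obtain ⟨_, h2, h3⟩ := mem_Ac.1 hc
    filter_upwards [ev_inter h2 h3] with j hj
    have : LS (Em n 0) ∩ {l | l.length = ℓ} = {List.replicate ℓ 0} := by
      ext l
      simp only [Set.mem_inter_iff, Set.mem_singleton_iff, List.eq_replicate_iff, LS, hE,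
        Set.mem_ofPred_eq]
      tauto
    rw [this, sup, supported_eq_span_single, Set.image_singleton, Submodule.mem_span_singleton] at hj
    obtain ⟨a, ha⟩ := hj
    exact ⟨a, ha.symm⟩
  refine ⟨fun ℓ hℓ c hc => ?_, fun _ => single [0] 1, mem_Zc.2 ⟨hzA, null_len_zero (bdq_len (mem_Ac.1 hzA).2.2)⟩,
    fun hB => ?_, fun c hc => ?_⟩
  · obtain ⟨hA, hn⟩ := mem_Zc.1 hc
    obtain ⟨h1, h2, h3⟩ := mem_Ac.1 hA
    rcases ℓ with _ | _ | ℓ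
    · exact null_le_Bc (null_len_zero h3)
    · exact absurd rfl hℓ
    have hz := key ℓ _ (bdq_Ac hA) hn
    have hb2 : (fun j => cone 0 (c j) : Sq F (Fin n → ℝ)) ∈ ev F (LS (Em n 0)) := by
      filter_upwards [h2] with j hj
      refine cone_sup (fun l hl => ?_) hj
      intro x hx
      rcases List.mem_cons.1 hx with rfl | hx
      exacts [h0E, hl x hx]
    refine mem_Bc.2 ⟨fun j => cone 0 (c j), mem_Ac.2 ⟨hsm _ hb2, hb2, ?_⟩, null_zero ?_⟩
    · filter_upwards [h3] with j hj
      exact cone_sup (fun l hl => by simpa using hl) hj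
    · filter_upwards [hz] with j hj
      have hj : bd (c j) = 0 := hj
      change c j - bd (cone 0 (c j)) = 0
      rw [bd_cone, hj]; simp
  · obtain ⟨b, hb, hzb⟩ := mem_Bc.1 hB
    have := key 0 _ (sub_mem hzA (bdq_Ac hb)) hzb
    obtain ⟨j, hj, a, ha⟩ := (this.and (form _ b hb)).exists
    change single [0] 1 - bd (b j) = 0 at hj
    rw [ha, map_smul] at hj
    simp only [List.replicate, bd_cons] at hj
    simp at hj
  · choose a ha using fun j => (show ∃ a : F, (∃ a : F, c j = a • single (List.replicate 1 0) 1) →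
      c j = a • single (List.replicate 1 0) 1 by
        by_cases h : ∃ a : F, c j = a • single (List.replicate 1 0) 1
        · exact h.imp fun a ha _ => ha
        · exact ⟨0, fun h' => absurd h' h⟩)
    obtain ⟨α, hα⟩ := om_const a
    refine ⟨α, null_le_Bc (null_zero ?_)⟩
    filter_upwards [hα, form 1 c (mem_Zc.1 hc).1] with j h1 h2
    have := ha j h2
    rw [h1] at this
    rw [Pi.sub_apply, this]; simp

lemma Loc_E [Finite F] [Nontrivial F] : Loc F (𝓝 (0 : Fin n → ℝ)) (n + 1) Set.univ := by
  have : ∀ m ≤ n, Loc F (𝓝 (0 : Fin n → ℝ)) (m + 1) (Em n m) := by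
    intro m
    induction m with
    | zero => exact fun _ => Loc_base
    | succ m ih => exact fun h => Loc_step ⟨m, h⟩ (ih (by omega))
  have h := this n le_rfl
  have e : Em n n = Set.univ := by
    ext x; simp only [Em, Set.mem_ofPred_eq, Set.mem_univ, iff_true]
    intro i hi; omega
  rwa [e] at h
end
end MannSu

/-! ### Local homology of manifolds -/

namespace MannSu
universe u v
open Finsupp Filter Uniformity Topology
set_option linter.unusedSectionVars false

section
variable {F : Type*} [CommRing F] {M : Type*} [UniformSpace M]

/-- A filter is regular when each of its sets contains a uniform neighbourhood of another one. -/
def Reg (𝓕 : Filter M) : Prop :=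
  ∀ W ∈ 𝓕, ∃ W' ∈ 𝓕, ∃ U ∈ 𝓤 M, ∀ a b, a ∈ W' → (a, b) ∈ U → b ∈ W

lemma Reg_top : Reg (⊤ : Filter M) := fun W hW =>
  ⟨W, hW, Set.univ, univ_mem, fun a b _ _ => by rw [mem_top] at hW; rw [hW]; trivial⟩

lemma Reg_nhds (x : M) : Reg (𝓝 x) := by
  intro W hW
  obtain ⟨U, hU, hUW⟩ := UniformSpace.mem_nhds_iff.1 hW
  obtain ⟨V, hV, hVU⟩ := comp_mem_uniformity_sets hU
  exact ⟨UniformSpace.ball x V, UniformSpace.ball_mem_nhds x hV, V, hV,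
    fun a b ha hb => hUW (hVU ⟨a, ha, hb⟩)⟩

lemma sm_null {𝓕 : Filter M} (hR : Reg 𝓕) {D : Set M} (hD : D ∈ 𝓕) {P : Set (List M)} (hP : LS D ⊆ P)
    {c : Sq F M} (hc : c ∈ small F M) : c - rsq P c ∈ null F 𝓕 := by
  obtain ⟨W', hW', U, hU, h⟩ := hR D hD
  refine ⟨W', hW', sub_rsq_ev (mem_small.1 hc U hU) fun l hl hl' => ?_⟩
  intro a ha haW
  exact hl' (hP fun b hb => h a b haW (hl a ha b hb))

end

section
variable {F : Type*} [CommRing F] {n : ℕ}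

lemma near_E {ℓ : ℕ} {z : Sq F (Fin n → ℝ)} (hz : z ∈ Zc F (𝓝 0) ℓ Set.univ)
    (hzB : z ∉ Bc F (𝓝 0) ℓ Set.univ) :
    ∀ᶠ y in 𝓝 (0 : Fin n → ℝ), z ∈ Zc F (𝓝 y) ℓ Set.univ ∧ z ∉ Bc F (𝓝 y) ℓ Set.univ := by
  obtain ⟨hA, hn⟩ := mem_Zc.1 hz
  obtain ⟨R, hR, hzR⟩ := null_norm hn
  obtain ⟨ρ, hρ⟩ : ∃ ρ, ρ = R / 3 := ⟨_, rfl⟩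
  have hρ0 : 0 < ρ := by rw [hρ]; positivity
  have hR3 : R = 3 * ρ := by rw [hρ]; ring
  rw [hR3] at hzR
  filter_upwards [Metric.ball_mem_nhds (0 : Fin n → ℝ) hρ0] with y hy
  have hy : ‖y‖ < ρ := by simpa using hy
  have far : ∀ x : Fin n → ℝ, 3 * ρ ≤ ‖x‖ → 2 * ρ ≤ ‖x - y‖ := by
    intro x hx
    have := norm_sub_norm_le x y
    linarith
  refine ⟨mem_Zc.2 ⟨hA, null_mono_set ?_ hzR⟩, fun hB => hzB ?_⟩
  · filter_upwards [Metric.ball_mem_nhds y hρ0] with x hx hx'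
    rw [Metric.mem_ball, dist_eq_norm] at hx
    have := far x hx'
    linarith
  obtain ⟨b, hb, W, hW, hbW⟩ := mem_Bc.1 hB
  obtain ⟨ε', hε', hεW⟩ := Metric.mem_nhds_iff.1 hW
  obtain ⟨ε, hε, hle, hle2⟩ : ∃ ε > 0, ε ≤ ε' ∧ ε ≤ 2 * ρ :=
    ⟨min ε' (2 * ρ), by positivity, min_le_left _ _, min_le_right _ _⟩
  have hνε : z - bdq b ∈ ev F (LS {x | ε ≤ ‖x - y‖}) := by
    refine ev_mono (LS_mono fun x hx => ?_) hbW
    by_contra hx'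
    refine hx (hεW ?_)
    rw [Metric.mem_ball, dist_eq_norm]
    have : ‖x - y‖ < ε := not_le.1 hx'
    linarith
  let D : Set (Fin n → ℝ) := Metric.closedBall 0 (4 * ρ)
  have trunc : ∀ c ∈ small F (Fin n → ℝ), c - rsq (LS D) c ∈ ev F (LS {x | 3 * ρ ≤ ‖x‖}) := by
    intro c hc
    refine sub_rsq_ev (mem_small.1 hc _ (Metric.dist_mem_uniformity hρ0)) fun l hl hl' => ?_
    intro a ha
    change 3 * ρ ≤ ‖a‖
    by_contra! h
    refine hl' fun b hb => ?_
    have h1 : dist a b < ρ := hl a ha b hb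
    rw [dist_comm, dist_eq_norm] at h1
    change b ∈ Metric.closedBall 0 (4 * ρ)
    rw [mem_closedBall_zero_iff]
    have := norm_sub_norm_le b a
    linarith
  have tz := trunc z (mem_Ac.1 hA).1
  have tb := trunc b (mem_Ac.1 hb).1
  set z' := rsq (LS D) z
  set b' := rsq (LS D) b
  have hz'D : z' ∈ Ac F ℓ D := Ac_mono Set.inter_subset_right (rsq_Ac hA)
  have hb'D : b' ∈ Ac F (ℓ + 1) D := Ac_mono Set.inter_subset_right (rsq_Ac hb)
  have n0 : ∀ c : Sq F (Fin n → ℝ), c ∈ ev F (LS {x | 3 * ρ ≤ ‖x‖}) → c ∈ null F (𝓝 0) :=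
    fun c hc => null_mono_set (norm_le_of_Wc (3 * ρ) (by positivity) fun _ h => h) hc
  have hbz' : bdq z' ∈ ev F (LS {x | 3 * ρ ≤ ‖x‖}) := by
    have := sub_mem hzR (bdq_LS tz)
    rwa [map_sub, sub_sub_cancel] at this
  have hν' : z' - bdq b' ∈ ev F (LS {x | ε ≤ ‖x - y‖}) := by
    have sub : LS {x : Fin n → ℝ | 3 * ρ ≤ ‖x‖} ⊆ LS {x | ε ≤ ‖x - y‖} :=
      LS_mono fun x hx => hle2.trans (far x hx)
    have := add_mem (sub_mem hνε (ev_mono sub tz)) (ev_mono sub (bdq_LS tb))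
    rw [map_sub] at this
    convert this using 1; abel
  obtain ⟨A, hA1, hAε⟩ : ∃ A : ℝ, 1 ≤ A ∧ 4 * ρ ≤ A * ε := by
    refine ⟨max 1 (4 * ρ / ε), le_max_left _ _, ?_⟩
    calc 4 * ρ = 4 * ρ / ε * ε := by field_simp
      _ ≤ _ := by gcongr; exact le_max_right _ _
  let κ : ℕ → ℕ → ℝ := fun j i => 1 + (i : ℝ) / (j + 1) * (A - 1)
  let f : ℕ → ℕ → (Fin n → ℝ) → Fin n → ℝ := fun j i x => y + κ j i • (x - y)
  have hκ : ∀ j i, i ≤ j + 1 → 1 ≤ κ j i ∧ κ j i ≤ A := by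
    intro j i hi
    have h1 : (i : ℝ) / (j + 1) ≤ 1 := by
      rw [div_le_one (by positivity)]; exact_mod_cast hi
    have h2 : 0 ≤ (i : ℝ) / (j + 1) := by positivity
    constructor <;> simp only [κ] <;> nlinarith
  have hfs : ∀ j i x, f j i x - y = κ j i • (x - y) := fun j i x => by simp [f]
  have hsm : ∀ U ∈ 𝓤 (Fin n → ℝ), ∃ V ∈ 𝓤 (Fin n → ℝ), ∀ᶠ j in om, ∀ i ≤ j + 1, ∀ x ∈ D, ∀ y ∈ D,
      (x, y) ∈ V → (f j i x, f j i y) ∈ U := by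
    intro U hU
    obtain ⟨δ, hδ, hδU⟩ := Metric.mem_uniformity_dist.1 hU
    refine ⟨_, Metric.dist_mem_uniformity (show 0 < δ / A by positivity),
      Eventually.of_forall fun j i hi x _ x' _ h => hδU ?_⟩
    have h : dist x x' < δ / A := h
    obtain ⟨k1, k2⟩ := hκ j i hi
    rw [lt_div_iff₀ (by positivity)] at h
    simp only [f, dist_add_left]
    rw [dist_smul₀, dist_sub_right, Real.norm_eq_abs, abs_of_nonneg (by linarith)]
    nlinarith [dist_nonneg (x := x) (y := x')]
  have hst : ∀ U ∈ 𝓤 (Fin n → ℝ), ∀ᶠ j in om, ∀ i < j + 1, ∀ x ∈ D, (f j i x, f j (i + 1) x) ∈ U := by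
    intro U hU
    obtain ⟨δ, hδ, hδU⟩ := Metric.mem_uniformity_dist.1 hU
    obtain ⟨N, hN⟩ := exists_nat_gt (A * (5 * ρ) / δ)
    filter_upwards [ev_ge N] with j hj i _ x hx
    refine hδU ?_
    have hpos : (0 : ℝ) < j + 1 := by positivity
    simp only [f, dist_add_left]
    have e : κ j i - κ j (i + 1) = -((A - 1) / (j + 1)) := by
      simp only [κ]; push_cast; field_simp; ring
    rw [dist_eq_norm, ← sub_smul, norm_smul, e, norm_neg, Real.norm_eq_abs,
      abs_of_nonneg (div_nonneg (by linarith) hpos.le), div_mul_eq_mul_div, div_lt_iff₀ hpos]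
    have h5 : (N : ℝ) ≤ j := by exact_mod_cast hj
    rw [div_lt_iff₀ hδ] at hN
    have hx : ‖x‖ ≤ 4 * ρ := by simpa [D] using hx
    have h6 : ‖x - y‖ ≤ 5 * ρ := (norm_sub_le _ _).trans (by linarith)
    nlinarith [norm_nonneg (x - y)]
  -- expanding away from `y` pushes `z' - ∂b'` off a neighbourhood of the origin
  have hend : mq (fun j => f j (j + 1)) (z' - bdq b') ∈ null F (𝓝 0) := by
    refine n0 _ (mq_LS (Eventually.of_forall fun j x hx => ?_) hν')
    have hx : ε ≤ ‖x - y‖ := hx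
    have e : κ j (j + 1) = A := by
      have hpos : (0 : ℝ) < j + 1 := by positivity
      simp only [κ]; push_cast; rw [div_self hpos.ne']; ring
    have h1 : ‖f j (j + 1) x - y‖ = A * ‖x - y‖ := by
      rw [hfs, e, norm_smul, Real.norm_eq_abs, abs_of_nonneg (by linarith)]
    have h2 := norm_sub_le (f j (j + 1) x) y
    change 3 * ρ ≤ _
    nlinarith
  have hH : Hq f (fun j => j + 1) (bdq z') ∈ null F (𝓝 0) := by
    refine null_mono_set (A := {x | ρ ≤ ‖x‖}) (norm_le_of_Wc ρ hρ0 fun _ h => h)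
      (Hq_LS (Eventually.of_forall fun j i hi x hx => ?_) hbz')
    have h0 := far x hx
    obtain ⟨k1, k2⟩ := hκ j i hi
    have h1 : ‖f j i x - y‖ = κ j i * ‖x - y‖ := by
      rw [hfs, norm_smul, Real.norm_eq_abs, abs_of_nonneg (by linarith)]
    have h2 := norm_sub_le (f j i x) y
    change ρ ≤ _
    nlinarith
  have b1 : mq (fun j => f j (j + 1)) b' - Hq f (fun j => j + 1) z' ∈ Ac F (ℓ + 1) Set.univ := by
    have lsu : ∀ c : Sq F (Fin n → ℝ), c ∈ ev F (LS Set.univ) := fun c =>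
      ev_mono (fun l _ => fun x _ => trivial) (ev_univ c)
    obtain ⟨p1, p2, p3⟩ := mem_Ac.1 hz'D
    obtain ⟨q1, q2, q3⟩ := mem_Ac.1 hb'D
    refine sub_mem (mem_Ac.2 ⟨mq_small (fun U hU => ?_) q1 q2, lsu _, mq_len q3⟩)
      (mem_Ac.2 ⟨Hq_small hsm hst p1 p2, lsu _, Hq_len p3⟩)
    obtain ⟨V, hV, h⟩ := hsm U hU
    exact ⟨V, hV, h.mono fun j h => h (j + 1) le_rfl⟩
  refine mem_Bc.2 ⟨_, b1, ?_⟩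
  have e0 : mq (fun j => f j 0) z' = z' := by
    ext1 j
    have : f j 0 = id := by ext1 x; simp [f, κ]
    change mp (f j 0) (z' j) = _
    rw [this, mp_id]
  have e1 := eq_sub_of_add_eq (Hq_bd f (fun j => j + 1) z')
  rw [e0] at e1
  rw [map_sub, e1, ← mq_bdq]
  have := add_mem (sub_mem hend hH) (n0 _ tz)
  rw [map_sub] at this
  convert this using 1; abel
end

section transport
variable {F : Type*} [CommRing F] {X Y : Type*} [UniformSpace X] [UniformSpace Y]

/-- Mutually inverse uniformly continuous maps between `D` and `D'`. -/
structure LM (D : Set X) (D' : Set Y) (h : X → Y) (h' : Y → X) : Prop where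
  uc : UniformContinuousOn h D
  uc' : UniformContinuousOn h' D'
  mp : ∀ a ∈ D, h a ∈ D'
  mp' : ∀ a ∈ D', h' a ∈ D
  inv : ∀ a ∈ D, h' (h a) = a
  inv' : ∀ a ∈ D', h (h' a) = a

lemma LM.symm {D : Set X} {D' : Set Y} {h : X → Y} {h' : Y → X} (L : LM D D' h h') : LM D' D h' h :=
  ⟨L.uc', L.uc, L.mp', L.mp, L.inv', L.inv⟩

/-- Transport of sequences of chains along a map defined on `D`. -/
noncomputable def tr (F : Type*) [CommRing F] {X Y : Type*} (D : Set X) (h : X → Y) :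
    Sq F X →ₗ[F] Sq F Y := mq (fun _ => h) ∘ₗ rsq (LS D)

variable {D : Set X} {D' : Set Y} {h : X → Y} {h' : Y → X}

lemma mem_LS_univ (c : Sq F X) : c ∈ ev F (LS (Set.univ : Set X)) :=
  ev_mono (fun _ _ => fun _ _ => trivial) (ev_univ c)

lemma LM.small (L : LM D D' h h') {c : Sq F X} (hc : c ∈ small F X) (hD : c ∈ ev F (LS D)) :
    mq (fun _ => h) c ∈ small F Y := by
  refine mq_small (fun U hU => ?_) hc hD
  obtain ⟨V, hV, k⟩ := uc_mem L.uc hU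
  exact ⟨V, hV, Eventually.of_forall fun _ => k⟩

lemma LM.tr_Ac (L : LM D D' h h') {ℓ : ℕ} {c : Sq F X} (hc : c ∈ Ac F ℓ Set.univ) :
    tr F D h c ∈ Ac F ℓ Set.univ := by
  obtain ⟨h1, _, h3⟩ := mem_Ac.1 hc
  exact mem_Ac.2 ⟨L.small (rsq_small _ h1) (rsq_self _ _), mem_LS_univ _,
    mq_len (rsq_ev h3 fun _ h _ => h)⟩

lemma LM.null (L : LM D D' h h') {x : X} (hD : D ∈ 𝓝 x) (hD' : D' ∈ 𝓝 (h x)) {c : Sq F X}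
    (hc : c ∈ null F (𝓝 x)) (hcD : c ∈ ev F (LS D)) : mq (fun _ => h) c ∈ null F (𝓝 (h x)) := by
  obtain ⟨W, hW, hc⟩ := hc
  have hx := mem_of_mem_nhds hD
  have hcont : ContinuousAt h' (h x) := L.uc'.continuousOn.continuousAt hD'
  refine ⟨D' ∩ h' ⁻¹' W, inter_mem hD' (hcont.preimage_mem_nhds (by rwa [L.inv x hx])), ?_⟩
  have hcW : c ∈ ev F (LS (Wᶜ ∩ D)) :=
    ev_mono (fun l hl => fun a ha => ⟨hl.1 a ha, hl.2 a ha⟩) (ev_inter hc hcD)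
  refine mq_LS (Eventually.of_forall fun _ a ha => ?_) hcW
  · intro hab
    refine ha.1 ?_
    have := hab.2
    rwa [Set.mem_preimage, L.inv a ha.2] at this

lemma LM.tr_null (L : LM D D' h h') {x : X} (hD : D ∈ 𝓝 x) (hD' : D' ∈ 𝓝 (h x)) {c : Sq F X}
    (hc : c ∈ MannSu.null F (𝓝 x)) : tr F D h c ∈ MannSu.null F (𝓝 (h x)) :=
  L.null hD hD' (rsq_null _ hc) (rsq_self _ _)

lemma LM.tr_bdq (L : LM D D' h h') {x : X} (hD : D ∈ 𝓝 x) (hD' : D' ∈ 𝓝 (h x)) {c : Sq F X}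
    (hc : c ∈ MannSu.small F X) : tr F D h (bdq c) - bdq (tr F D h c) ∈ MannSu.null F (𝓝 (h x)) := by
  simp only [tr, LinearMap.comp_apply]
  rw [← mq_bdq, ← map_sub]
  refine L.null hD hD' ?_ (sub_mem (rsq_self _ _) (bdq_LS (rsq_self _ _)))
  have h1 := sm_null (Reg_nhds x) hD subset_rfl (bdq_small hc)
  have h2 := bdq_null (sm_null (Reg_nhds x) hD subset_rfl hc)
  rw [map_sub] at h2
  convert sub_mem h2 h1 using 1; abel

lemma LM.tr_tr (L : LM D D' h h') {x : X} (hD : D ∈ 𝓝 x) {c : Sq F X}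
    (hc : c ∈ MannSu.small F X) : tr F D' h' (tr F D h c) - c ∈ MannSu.null F (𝓝 x) := by
  have h1 := sm_null (Reg_nhds x) hD subset_rfl hc
  refine null_congr ?_ (neg_mem h1)
  have h2 := rsq_self (LS D) c
  filter_upwards [mq_LS (f := fun _ => h) (Eventually.of_forall fun _ => L.mp) h2,
    mq_id_on (f := fun _ => h' ∘ h) (fun _ => L.inv) h2] with j h3 h4
  simp only [Pi.neg_apply, Pi.sub_apply, neg_sub]
  congr 1
  change _ = MannSu.mp h' (rs F (LS D') (MannSu.mp h (rs F (LS D) (c j))))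
  have h3' : rs F (LS D') (MannSu.mp h (rs F (LS D) (c j))) = MannSu.mp h (rs F (LS D) (c j)) :=
    rs_eq_self h3
  rw [h3', mp_mp]
  exact h4.symm

lemma LM.tr_Zc (L : LM D D' h h') {x : X} (hD : D ∈ 𝓝 x) (hD' : D' ∈ 𝓝 (h x)) {ℓ : ℕ} {c : Sq F X}
    (hc : c ∈ Zc F (𝓝 x) ℓ Set.univ) : tr F D h c ∈ Zc F (𝓝 (h x)) ℓ Set.univ := by
  obtain ⟨h1, h2⟩ := mem_Zc.1 hc
  refine mem_Zc.2 ⟨L.tr_Ac h1, ?_⟩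
  have := sub_mem (L.tr_null hD hD' h2) (L.tr_bdq hD hD' (mem_Ac.1 h1).1)
  rwa [sub_sub_cancel] at this

lemma LM.tr_Bc (L : LM D D' h h') {x : X} (hD : D ∈ 𝓝 x) (hD' : D' ∈ 𝓝 (h x)) {ℓ : ℕ} {c : Sq F X}
    (hc : c ∈ Bc F (𝓝 x) ℓ Set.univ) : tr F D h c ∈ Bc F (𝓝 (h x)) ℓ Set.univ := by
  obtain ⟨b, h1, h2⟩ := mem_Bc.1 hc
  refine mem_Bc.2 ⟨_, L.tr_Ac h1, ?_⟩
  have := add_mem (L.tr_null hD hD' h2) (L.tr_bdq hD hD' (mem_Ac.1 h1).1)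
  rw [map_sub] at this
  convert this using 1; abel

lemma LM.Bc_of_tr (L : LM D D' h h') {x : X} (hD : D ∈ 𝓝 x) (hD' : D' ∈ 𝓝 (h x)) {ℓ : ℕ} {c : Sq F X}
    (hs : c ∈ MannSu.small F X)
    (hc : tr F D h c ∈ Bc F (𝓝 (h x)) ℓ Set.univ) : c ∈ Bc F (𝓝 x) ℓ Set.univ := by
  have hx := mem_of_mem_nhds hD
  have := L.symm.tr_Bc hD' (by rwa [L.inv x hx]) hc
  rw [L.inv x hx] at this
  have h2 := sub_mem this (null_le_Bc (ℓ := ℓ) (Y := Set.univ) (L.tr_tr hD hs))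
  rwa [sub_sub_cancel] at h2

end transport

/-- Local homology of a manifold at a point: it is one-dimensional, and its generator also generates
nontrivial local homology at all nearby points. -/
theorem loc_manifold {F : Type*} [Field F] [Finite F] {n : ℕ} {M : Type*} [UniformSpace M]
    [T2Space M] [ChartedSpace (EuclideanSpace ℝ (Fin n)) M] (x : M) :
    (∀ ℓ, ℓ ≠ n + 1 → Zc F (𝓝 x) ℓ Set.univ ≤ Bc F (𝓝 x) ℓ Set.univ) ∧
    ∃ z ∈ Zc F (𝓝 x) (n + 1) Set.univ, (∀ᶠ y in 𝓝 x, z ∈ Zc F (𝓝 y) (n + 1) Set.univ ∧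
      z ∉ Bc F (𝓝 y) (n + 1) Set.univ) ∧
      ∀ c ∈ Zc F (𝓝 x) (n + 1) Set.univ, ∃ a : F, c - a • z ∈ Bc F (𝓝 x) (n + 1) Set.univ := by
  let e₀ := chartAt (EuclideanSpace ℝ (Fin n)) x
  let φ : EuclideanSpace ℝ (Fin n) ≃ₜ (Fin n → ℝ) := (EuclideanSpace.equiv (Fin n) ℝ).toHomeomorph
  let e := e₀.transHomeomorph (φ.trans (Homeomorph.addRight (-(φ (e₀ x)))))
  have hx : x ∈ e.source := mem_chart_source _ x
  have he0 : e x = 0 := by simp [e]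
  have h1 : e.target ∈ 𝓝 (0 : Fin n → ℝ) := he0 ▸ e.open_target.mem_nhds (e.map_source hx)
  obtain ⟨r, hr, hball⟩ := Metric.nhds_basis_closedBall.mem_iff.1 h1
  let D' := Metric.closedBall (0 : Fin n → ℝ) r
  have hcD : IsCompact D' := isCompact_closedBall _ _
  have hcont : ContinuousOn e.symm D' := e.symm.continuousOn.mono hball
  let D := e.symm '' D'
  have hW : D ∈ 𝓝 x := by
    have : D = e.source ∩ e ⁻¹' D' := e.symm_image_eq_source_inter_preimage hball
    rw [this]
    exact inter_mem (e.open_source.mem_nhds hx)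
      ((e.continuousAt hx).preimage_mem_nhds (he0 ▸ Metric.closedBall_mem_nhds _ hr))
  have hcW : IsCompact D := hcD.image_of_continuousOn hcont
  have hWs : D ⊆ e.source := by
    rintro _ ⟨y, hy, rfl⟩; exact e.map_target (hball hy)
  have L : LM D D' e e.symm :=
    ⟨hcW.uniformContinuousOn_of_continuous (e.continuousOn.mono hWs),
      hcD.uniformContinuousOn_of_continuous hcont, by
        rintro _ ⟨y, hy, rfl⟩; rwa [e.right_inv (hball hy)], fun a ha => ⟨a, ha, rfl⟩,
      fun a ha => e.left_inv (hWs ha), fun a ha => e.right_inv (hball ha)⟩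
  have hD' : D' ∈ 𝓝 (e x) := he0 ▸ Metric.closedBall_mem_nhds _ hr
  obtain ⟨l1, z, hz, hzB, hsp⟩ := Loc_E (F := F) (n := n)
  have hnear : ∀ᶠ y in 𝓝 x, tr F D' e.symm z ∈ Zc F (𝓝 y) (n + 1) Set.univ ∧
      tr F D' e.symm z ∉ Bc F (𝓝 y) (n + 1) Set.univ := by
    have k1 := (e.continuousAt hx).eventually (he0.symm ▸ near_E hz hzB)
    have k2 := (e.continuousAt hx).eventually (eventually_mem_nhds_iff.2 hD')
    filter_upwards [k1, k2, eventually_mem_nhds_iff.2 hW] with y q1 q2 q3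
    have hy := L.inv y (mem_of_mem_nhds q3)
    constructor
    · have := L.symm.tr_Zc q2 (by rwa [hy]) q1.1
      rwa [hy] at this
    · intro hB
      exact q1.2 (L.symm.Bc_of_tr q2 (by rwa [hy]) (mem_Ac.1 (mem_Zc.1 q1.1).1).1 (by rwa [hy]))
  refine ⟨fun ℓ hℓ c hc => ?_, tr F D' e.symm z, (hnear.self_of_nhds).1, hnear, fun c hc => ?_⟩
  · refine L.Bc_of_tr hW hD' (mem_Ac.1 (mem_Zc.1 hc).1).1 ?_
    have := L.tr_Zc hW hD' hc
    rw [he0] at this ⊢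
    exact l1 ℓ hℓ this
  · have h2 := L.tr_Zc hW hD' hc
    rw [he0] at h2
    obtain ⟨a, ha⟩ := hsp _ h2
    refine ⟨a, L.Bc_of_tr hW hD' (sub_mem (mem_Ac.1 (mem_Zc.1 hc).1).1
      (Submodule.smul_mem _ a (mem_Ac.1 (mem_Zc.1 hnear.self_of_nhds.1).1).1)) ?_⟩
    have h3 := L.symm.tr_tr (F := F) hD' (c := z) (mem_Ac.1 (mem_Zc.1 hz).1).1
    rw [he0] at h3 ⊢
    rw [map_sub, map_smul]
    have h4 := sub_mem ha (Submodule.smul_mem _ a (null_le_Bc (ℓ := n + 1) (Y := Set.univ) h3))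
    convert h4 using 1
    rw [smul_sub]; abel
end MannSu

/-! ### Chains over the group algebra -/

namespace MannSu
universe u v
open Finsupp Filter Uniformity Topology
set_option linter.unusedSectionVars false
set_option linter.unusedVariables false

section ns
variable {F : Type*} [CommRing F] {M : Type*} {G : Type*} [CommGroup G] [MulAction G M]

/-- Translation of sequences of chains by a group element. -/
noncomputable abbrev gq (g : G) : Sq F M →ₗ[F] Sq F M := mq fun _ => (g • · : M → M)

lemma mp_one_smul (c : Ch F M) : mp ((1 : G) • · : M → M) c = c := by
  have : ((1 : G) • · : M → M) = id := by ext x; simp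
  rw [this, mp_id]

lemma mp_mul_smul (g h : G) (c : Ch F M) :
    mp ((g * h) • · : M → M) c = mp (g • · : M → M) (mp (h • · : M → M) c) := by
  rw [mp_mp]; congr 2; ext1 x; simp [mul_smul]

/-- The representation of `G` on sequences of chains. -/
noncomputable def rho (F : Type*) [CommRing F] (M G : Type*) [CommGroup G] [MulAction G M] :
    G →* Module.End F (Sq F M) where
  toFun g := gq g
  map_one' := by ext1 c; ext1 j; exact mp_one_smul (G := G) (c j)
  map_mul' g h := by ext1 c; ext1 j; exact mp_mul_smul g h (c j)

/-- Sequences of chains form a module over the group algebra. -/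
noncomputable instance sqModule : Module (MonoidAlgebra F G) (Sq F M) :=
  Module.compHom _ (MonoidAlgebra.lift F (Module.End F (Sq F M)) G (rho F M G)).toRingHom

lemma of_smul (g : G) (c : Sq F M) : MonoidAlgebra.of F G g • c = gq g c := by
  change (MonoidAlgebra.lift F (Module.End F (Sq F M)) G (rho F M G)) (MonoidAlgebra.of F G g) c = _
  rw [MonoidAlgebra.lift_of]; rfl

instance sqTower : IsScalarTower F (MonoidAlgebra F G) (Sq F M) where
  smul_assoc a r c := by
    change (MonoidAlgebra.lift F (Module.End F (Sq F M)) G (rho F M G)) (a • r) c =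
      a • (MonoidAlgebra.lift F (Module.End F (Sq F M)) G (rho F M G)) r c
    rw [map_smul]; rfl

/-- A `G`-stable `F`-submodule is a submodule over the group algebra. -/
def stab (S : Submodule F (Sq F M)) (h : ∀ g : G, ∀ c ∈ S, gq g c ∈ S) :
    Submodule (MonoidAlgebra F G) (Sq F M) where
  carrier := S
  add_mem' := S.add_mem
  zero_mem' := S.zero_mem
  smul_mem' r c hc := by
    induction r using MonoidAlgebra.induction_on with
    | of m => rw [of_smul]; exact h m c hc
    | add x y hx hy => rw [add_smul]; exact S.add_mem hx hy
    | smul a x hx => rw [smul_assoc]; exact S.smul_mem a hx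

lemma mem_stab {S : Submodule F (Sq F M)} {h : ∀ g : G, ∀ c ∈ S, gq g c ∈ S} {c : Sq F M} :
    c ∈ stab S h ↔ c ∈ S := Iff.rfl

variable [UniformSpace M]

/-- A filter at which chains are localized: it is `G`-invariant and regular. -/
structure GF (G M : Type*) [CommGroup G] [MulAction G M] [UniformSpace M] where
  fil : Filter M
  inv : ∀ g : G, ∀ W ∈ fil, {x | g • x ∈ W} ∈ fil
  reg : Reg fil

lemma gq_null (Φ : GF G M) (g : G) (c : Sq F M) (hc : c ∈ null F Φ.fil) : gq g c ∈ null F Φ.fil := by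
  obtain ⟨W, hW, hc⟩ := hc
  refine ⟨_, Φ.inv g⁻¹ W hW, mq_LS (Eventually.of_forall fun _ x hx => ?_) hc⟩
  intro h
  exact hx (by simpa using h)

/-- Null sequences as a submodule over the group algebra. -/
def nl (F : Type*) [CommRing F] (Φ : GF G M) : Submodule (MonoidAlgebra F G) (Sq F M) :=
  stab (null F Φ.fil) (gq_null Φ)

lemma mem_nl {Φ : GF G M} {c : Sq F M} : c ∈ nl F Φ ↔ c ∈ null F Φ.fil := Iff.rfl

/-- Sequences of chains modulo null sequences. -/
abbrev Qt (F : Type*) [CommRing F] (Φ : GF G M) := Sq F M ⧸ nl F Φ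

/-- The class of a sequence of chains. -/
noncomputable abbrev qk (Φ : GF G M) : Sq F M →ₗ[MonoidAlgebra F G] Qt F Φ := (nl F Φ).mkQ

lemma qk_surj (Φ : GF G M) : Function.Surjective (qk (F := F) Φ) := Submodule.mkQ_surjective _

lemma qk_zero {Φ : GF G M} {c : Sq F M} : qk Φ c = 0 ↔ c ∈ null F Φ.fil := by
  rw [Submodule.mkQ_apply, Submodule.Quotient.mk_eq_zero, mem_nl]

lemma qk_eq {Φ : GF G M} {c d : Sq F M} : qk Φ c = qk Φ d ↔ c - d ∈ null F Φ.fil := by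
  rw [← sub_eq_zero, ← map_sub, qk_zero]

lemma qk_congr {Φ : GF G M} {c d : Sq F M} (h : ∀ᶠ j in om, c j = d j) : qk Φ c = qk Φ d := by
  rw [qk_eq]; exact null_zero (by filter_upwards [h] with j h; simp [h])

/-- An additive operator on the quotient induced by one on sequences. -/
noncomputable def qmap (Φ : GF G M) (f : Sq F M →ₗ[F] Sq F M)
    (h : ∀ c ∈ null F Φ.fil, f c ∈ null F Φ.fil) : Qt F Φ →+ Qt F Φ :=
  QuotientAddGroup.map (nl F Φ).toAddSubgroup (nl F Φ).toAddSubgroup f.toAddMonoidHom h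

lemma qmap_qk (Φ : GF G M) (f : Sq F M →ₗ[F] Sq F M) (h) (c : Sq F M) :
    qmap Φ f h (qk Φ c) = qk Φ (f c) := rfl

/-- An equivariant operator on sequences induces a linear operator on the quotient. -/
noncomputable def qlin (Φ : GF G M) (f : Sq F M →ₗ[F] Sq F M)
    (h : ∀ c ∈ null F Φ.fil, f c ∈ null F Φ.fil) (hg : ∀ (g : G) c, f (gq g c) = gq g (f c)) :
    Qt F Φ →ₗ[MonoidAlgebra F G] Qt F Φ where
  toFun := qmap Φ f h
  map_add' := map_add _
  map_smul' r x := by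
    obtain ⟨c, rfl⟩ := qk_surj Φ x
    rw [← map_smul, qmap_qk, RingHom.id_apply, qmap_qk, ← map_smul]
    congr 1
    induction r using MonoidAlgebra.induction_on with
    | of m => rw [of_smul, of_smul, hg]
    | add x y hx hy => rw [add_smul, map_add, hx, hy, add_smul]
    | smul a x hx => rw [smul_assoc, map_smul, hx, smul_assoc]

lemma qlin_qk (Φ : GF G M) (f : Sq F M →ₗ[F] Sq F M) (h) (hg) (c : Sq F M) :
    qlin Φ f h hg (qk Φ c) = qk Φ (f c) := rfl

/-- Boundary operator on the quotient. -/
noncomputable def qb (F : Type*) [CommRing F] (Φ : GF G M) : Qt F Φ →ₗ[MonoidAlgebra F G] Qt F Φ :=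
  qlin Φ bdq (fun _ => bdq_null) fun g c => (mq_bdq _ c).symm

lemma qb_qk (Φ : GF G M) (c : Sq F M) : qb F Φ (qk Φ c) = qk Φ (bdq c) := rfl

lemma qb_qb (Φ : GF G M) (x : Qt F Φ) : qb F Φ (qb F Φ x) = 0 := by
  obtain ⟨c, rfl⟩ := qk_surj Φ x
  rw [qb_qk, qb_qk, bdq_bdq, map_zero]

/-- Translation of a list. -/
abbrev gl (g : G) (l : List M) : List M := l.map (g • ·)

lemma gl_mul (g h : G) (l : List M) : gl (g * h) l = gl g (gl h l) := by
  simp [gl, mul_smul, Function.comp_def]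

lemma gl_one (l : List M) : gl (1 : G) l = l := by simp [gl]

lemma mp_rs {P P' : Set (List M)} {g : G} (h : ∀ l, gl g l ∈ P ↔ l ∈ P') (c : Ch F M) :
    rs F P (mp (g • · : M → M) c) = mp (g • · : M → M) (rs F P' c) := by
  have := eq_on_sup (P := Set.univ) (f := rs F P ∘ₗ mp (g • · : M → M))
    (g := mp (g • · : M → M) ∘ₗ rs F P') (c := c) (fun l _ => ?_) (by simp [sup])
  · exact this
  · simp only [LinearMap.comp_apply, mp_single]
    by_cases hl : l ∈ P'
    · rw [rs_single_of_mem hl, rs_single_of_mem ((h l).2 hl), mp_single]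
    · rw [rs_single_of_notMem hl, rs_single_of_notMem (mt (h l).1 hl), map_zero]

/-- Restriction to a set of lists, on the quotient. -/
noncomputable def qr (Φ : GF G M) (P : Set (List M)) : Qt F Φ →+ Qt F Φ :=
  qmap Φ (rsq P) fun _ => rsq_null P

lemma qr_qk (Φ : GF G M) (P : Set (List M)) (c : Sq F M) : qr Φ P (qk Φ c) = qk Φ (rsq P c) := rfl

/-- Pointwise stabilizer of a list. -/
def St (G : Type*) [CommGroup G] [MulAction G M] (l : List M) : Subgroup G where
  carrier := {g | ∀ x ∈ l, g • x = x}
  mul_mem' ha hb := fun x hx => by rw [mul_smul, hb x hx, ha x hx]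
  one_mem' := fun x _ => one_smul _ x
  inv_mem' ha := fun x hx => by rw [inv_smul_eq_iff, ha x hx]

lemma mem_St {g : G} {l : List M} : g ∈ St G l ↔ ∀ x ∈ l, g • x = x := Iff.rfl

lemma mem_St_iff {g : G} {l : List M} : g ∈ St G l ↔ gl g l = l := by
  rw [mem_St, gl]
  conv_rhs => rhs; rw [← List.map_id l]
  simp only [List.map_inj_left, id]

lemma St_gl (g : G) (l : List M) : St G (gl g l) = St G l := by
  ext h
  simp only [mem_St, gl, List.mem_map, forall_exists_index, and_imp, forall_apply_eq_imp_iff₂]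
  refine forall₂_congr fun x _ => ?_
  rw [← mul_smul, mul_comm, mul_smul, smul_left_cancel_iff]

/-- Lists with stabilizer in `𝒞`. -/
def PC (M : Type*) [MulAction G M] (𝒞 : Set (Subgroup G)) : Set (List M) := {l | St G l ∈ 𝒞}

lemma mem_PC {𝒞 : Set (Subgroup G)} {l : List M} : l ∈ PC M 𝒞 ↔ St G l ∈ 𝒞 := Iff.rfl

lemma PC_gl (𝒞 : Set (Subgroup G)) (g : G) (l : List M) : gl g l ∈ PC M 𝒞 ↔ l ∈ PC M 𝒞 := by
  rw [mem_PC, mem_PC, St_gl]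

/-- Restriction to the lists with stabilizer in `𝒞`, on the quotient. -/
noncomputable def qc (F : Type*) [CommRing F] (Φ : GF G M) (𝒞 : Set (Subgroup G)) :
    Qt F Φ →ₗ[MonoidAlgebra F G] Qt F Φ :=
  qlin Φ (rsq (PC M 𝒞)) (fun _ => rsq_null _) fun g c => by
    ext1 j; exact mp_rs (PC_gl 𝒞 g) _

lemma qc_qk (Φ : GF G M) (𝒞 : Set (Subgroup G)) (c : Sq F M) :
    qc F Φ 𝒞 (qk Φ c) = qk Φ (rsq (PC M 𝒞) c) := rfl

lemma rs_rs (P Q : Set (List M)) (c : Ch F M) : rs F P (rs F Q c) = rs F (P ∩ Q) c := by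
  refine eq_on_sup (P := Set.univ) (f := rs F P ∘ₗ rs F Q) (fun l _ => ?_) (by simp [sup])
  rw [LinearMap.comp_apply]
  by_cases h : l ∈ Q
  · rw [rs_single_of_mem h]
    by_cases h' : l ∈ P
    · rw [rs_single_of_mem h', rs_single_of_mem (Set.mem_inter h' h)]
    · rw [rs_single_of_notMem h', rs_single_of_notMem fun h => h' h.1]
  · rw [rs_single_of_notMem h, rs_single_of_notMem (fun h' => h h'.2), map_zero]

lemma qc_qc (Φ : GF G M) (𝒞 𝒟 : Set (Subgroup G)) (x : Qt F Φ) :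
    qc F Φ 𝒞 (qc F Φ 𝒟 x) = qc F Φ (𝒞 ∩ 𝒟) x := by
  obtain ⟨c, rfl⟩ := qk_surj Φ x
  rw [qc_qk, qc_qk, qc_qk]; congr 1; ext1 j; exact rs_rs _ _ _

lemma rs_add_rs (P Q : Set (List M)) (h : Disjoint P Q) (c : Ch F M) :
    rs F P c + rs F Q c = rs F (P ∪ Q) c := by
  refine eq_on_sup (P := Set.univ) (f := rs F P + rs F Q) (fun l _ => ?_) (by simp [sup])
  rw [LinearMap.add_apply]
  by_cases h1 : l ∈ P
  · rw [rs_single_of_mem h1, rs_single_of_notMem (Set.disjoint_left.1 h h1),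
      rs_single_of_mem (Or.inl h1), add_zero]
  · rw [rs_single_of_notMem h1, zero_add]
    by_cases h2 : l ∈ Q
    · rw [rs_single_of_mem h2, rs_single_of_mem (Or.inr h2)]
    · rw [rs_single_of_notMem h2, rs_single_of_notMem fun h => h.elim h1 h2]

lemma qc_add (Φ : GF G M) {𝒞 𝒟 : Set (Subgroup G)} (h : Disjoint 𝒞 𝒟) (x : Qt F Φ) :
    qc F Φ 𝒞 x + qc F Φ 𝒟 x = qc F Φ (𝒞 ∪ 𝒟) x := by
  obtain ⟨c, rfl⟩ := qk_surj Φ x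
  rw [qc_qk, qc_qk, qc_qk, ← map_add]; congr 1; ext1 j
  exact rs_add_rs (PC M 𝒞) (PC M 𝒟)
    (Set.disjoint_left.2 fun l hl hl' => Set.disjoint_left.1 h hl hl') _

/-- Operators which do not decrease stabilizers. -/
def MonoOp (G : Type*) [CommGroup G] [MulAction G M] (T : ℕ → Ch F M →ₗ[F] Ch F M) : Prop :=
  ∀ᶠ j in om, ∀ l, T j (single l 1) ∈ sup F {l' | St G l ≤ St G l'}

lemma mono_bd : MonoOp G fun _ => (bd : Ch F M →ₗ[F] Ch F M) :=
  Eventually.of_forall fun _ l =>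
    supported_mono (fun l' h => fun g hg x hx => hg x (h.1.subset hx)) (bd_single_sup l)

/-- For order-convex `𝒞`, truncating between two monotone operators does not change the truncated
composition. -/
lemma mono_comp {𝒞 : Set (Subgroup G)} (h𝒞 : 𝒞.OrdConnected) {T₁ T₂ : ℕ → Ch F M →ₗ[F] Ch F M}
    (h₁ : MonoOp G T₁) (h₂ : MonoOp G T₂) {c : Sq F M} (hc : c ∈ ev F (PC M 𝒞)) :
    ∀ᶠ j in om, rsq (PC M 𝒞) (sq T₂ (rsq (PC M 𝒞) (sq T₁ c))) j =
      rsq (PC M 𝒞) (sq T₂ (sq T₁ c)) j := by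
  filter_upwards [h₁, h₂, hc] with j h₁ h₂ hc
  simp only [sq_apply]
  refine eq_on_sup (f := rs F (PC M 𝒞) ∘ₗ T₂ j ∘ₗ rs F (PC M 𝒞) ∘ₗ T₁ j)
    (g := rs F (PC M 𝒞) ∘ₗ T₂ j ∘ₗ T₁ j) (fun l hl => ?_) hc
  simp only [LinearMap.comp_apply]
  rw [eq_comm, ← sub_eq_zero, ← map_sub, ← map_sub]
  have := sub_rs_sup (P := PC M 𝒞) (R := {l' | St G l ≤ St G l' ∧ l' ∉ PC M 𝒞}) (h₁ l)
    fun l' h h' => ⟨h, h'⟩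
  refine rs_eq_zero (Q := {l' | l' ∉ PC M 𝒞}) (Set.disjoint_left.2 fun _ h h' => h' h) ?_
  refine sup_le (fun l' hl' => ?_) this
  refine supported_mono (fun l'' h => fun hP => hl'.2 ?_) (h₂ l')
  exact h𝒞.out hl hP ⟨hl'.1, h⟩

end ns
end MannSu

/-! ### Complexes indexed by stabilizers -/

namespace MannSu
universe u v
open Finsupp Filter Uniformity Topology
set_option linter.unusedSectionVars false
set_option linter.unusedVariables false

section ns2
variable {F : Type*} [CommRing F] {M : Type*} {G : Type*} [CommGroup G] [MulAction G M]
  [UniformSpace M] [CompactSpace M] [ContinuousConstSMul G M]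

lemma gq_small (g : G) {c : Sq F M} (hc : c ∈ small F M) : gq g c ∈ small F M := by
  refine mq_small (A := Set.univ) (fun U hU => ?_) hc
    (ev_mono (fun l _ => fun x _ => trivial) (ev_univ c))
  have := CompactSpace.uniformContinuous_of_continuous (continuous_const_smul g : Continuous (g • · : M → M))
  exact ⟨_, this hU, Eventually.of_forall fun j x _ y _ h => h⟩

lemma gq_len (g : G) {k : ℕ} {c : Sq F M} (hc : c ∈ len F M k) : gq g c ∈ len F M k := mq_len hc

/-- Classes of small sequences of chains on lists of length `k`. -/
noncomputable def qA (F : Type*) [CommRing F] (Φ : GF G M) (k : ℕ) :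
    Submodule (MonoidAlgebra F G) (Qt F Φ) :=
  (stab (small F M ⊓ len F M k) fun g _ hc => ⟨gq_small g hc.1, gq_len g hc.2⟩).map (qk Φ)

/-- The degree `k` part of the complex of chains with stabilizers in `𝒞`. -/
noncomputable def nsX (F : Type*) [CommRing F] (Φ : GF G M) (𝒞 : Set (Subgroup G)) (k : ℕ) :
    Submodule (MonoidAlgebra F G) (Qt F Φ) :=
  qA F Φ k ⊓ LinearMap.ker (qc F Φ 𝒞 - LinearMap.id)

lemma mem_nsX {Φ : GF G M} {𝒞 : Set (Subgroup G)} {k : ℕ} {x : Qt F Φ} :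
    x ∈ nsX F Φ 𝒞 k ↔ ∃ c : Sq F M, c ∈ small F M ∧ c ∈ len F M k ∧ c ∈ ev F (PC M 𝒞) ∧ qk Φ c = x := by
  constructor
  · rintro ⟨⟨c, ⟨h1, h2⟩, rfl⟩, h⟩
    refine ⟨rsq (PC M 𝒞) c, rsq_small _ h1, rsq_ev h2 fun _ h _ => h, rsq_self _ _, ?_⟩
    rwa [SetLike.mem_coe, LinearMap.mem_ker, LinearMap.sub_apply, sub_eq_zero] at h
  · rintro ⟨c, h1, h2, h3, rfl⟩
    refine ⟨⟨c, ⟨h1, h2⟩, rfl⟩, ?_⟩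
    rw [SetLike.mem_coe, LinearMap.mem_ker, LinearMap.sub_apply, qc_qk, sub_eq_zero]
    refine qk_congr ?_
    filter_upwards [h3] with j h using rs_eq_self h

lemma nsX_qc {Φ : GF G M} {𝒞 : Set (Subgroup G)} {k : ℕ} {x : Qt F Φ} (h : x ∈ nsX F Φ 𝒞 k) :
    qc F Φ 𝒞 x = x := by
  have := h.2
  rwa [SetLike.mem_coe, LinearMap.mem_ker, LinearMap.sub_apply, sub_eq_zero] at this

lemma qc_nsX {Φ : GF G M} {𝒞 : Set (Subgroup G)} {k : ℕ} {x : Qt F Φ} (h : x ∈ qA F Φ k) :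
    qc F Φ 𝒞 x ∈ nsX F Φ 𝒞 k := by
  obtain ⟨c, ⟨h1, h2⟩, rfl⟩ := h
  exact mem_nsX.2 ⟨_, rsq_small _ h1, rsq_ev h2 fun _ h _ => h, rsq_self _ _, rfl⟩

lemma qb_qA {Φ : GF G M} {k : ℕ} {x : Qt F Φ} (h : x ∈ qA F Φ (k + 1)) : qb F Φ x ∈ qA F Φ k := by
  obtain ⟨c, ⟨h1, h2⟩, rfl⟩ := h
  exact ⟨_, ⟨bdq_small h1, bdq_len h2⟩, rfl⟩

lemma nsX_mono {Φ : GF G M} {𝒞 𝒟 : Set (Subgroup G)} (h : 𝒞 ⊆ 𝒟) {k : ℕ} {x : Qt F Φ}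
    (hx : x ∈ nsX F Φ 𝒞 k) : x ∈ nsX F Φ 𝒟 k := by
  obtain ⟨c, h1, h2, h3, rfl⟩ := mem_nsX.1 hx
  exact mem_nsX.2 ⟨c, h1, h2, ev_mono (fun l hl => h hl) h3, rfl⟩

lemma qc_eq_zero {Φ : GF G M} {𝒞 𝒟 : Set (Subgroup G)} (h : Disjoint 𝒟 𝒞) {c : Sq F M}
    (hc : c ∈ ev F (PC M 𝒞)) : qc F Φ 𝒟 (qk Φ c) = 0 := by
  rw [qc_qk, qk_zero]
  refine null_zero ?_
  filter_upwards [hc] with j hc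
  exact rs_eq_zero (Set.disjoint_left.2 fun l hl hl' => Set.disjoint_left.1 h hl hl') hc

/-- The complex of (sequences of) chains with stabilizers in an order-convex set `𝒞`. -/
noncomputable def NS (F : Type*) [CommRing F] (Φ : GF G M) (𝒞 : Set (Subgroup G))
    (h𝒞 : 𝒞.OrdConnected) : Cx (MonoidAlgebra F G) where
  X k := nsX F Φ 𝒞 k
  d k := (qc F Φ 𝒞 ∘ₗ qb F Φ).restrict fun x hx => qc_nsX (qb_qA hx.1)
  dd k x := by
    obtain ⟨x, hx⟩ := x
    obtain ⟨c, h1, h2, h3, rfl⟩ := mem_nsX.1 hx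
    apply Subtype.ext
    change qc F Φ 𝒞 (qb F Φ (qc F Φ 𝒞 (qb F Φ (qk Φ c)))) = 0
    rw [qb_qk, qc_qk, qb_qk, qc_qk, qk_congr (mono_comp h𝒞 mono_bd mono_bd h3), bdq_bdq, map_zero,
      map_zero]

variable {Φ : GF G M} {𝒞 𝒟 : Set (Subgroup G)} {h𝒞 : 𝒞.OrdConnected} {h𝒟 : 𝒟.OrdConnected}

/-- The underlying class of an element of the complex. -/
noncomputable def nv (k : ℕ) : (NS F Φ 𝒞 h𝒞).X k →ₗ[MonoidAlgebra F G] Qt F Φ :=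
  (nsX F Φ 𝒞 k).subtype

lemma nv_mem {k : ℕ} (x : (NS F Φ 𝒞 h𝒞).X k) : nv k x ∈ nsX F Φ 𝒞 k := Subtype.prop (p := (· ∈ nsX F Φ 𝒞 k)) x

lemma nv_inj {k : ℕ} {x y : (NS F Φ 𝒞 h𝒞).X k} (h : nv k x = nv k y) : x = y :=
  Submodule.subtype_injective (nsX F Φ 𝒞 k) h

/-- An element of the complex from its class. -/
noncomputable def nmk (h𝒞 : 𝒞.OrdConnected) {k : ℕ} (x : Qt F Φ) (hx : x ∈ nsX F Φ 𝒞 k) :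
    (NS F Φ 𝒞 h𝒞).X k := Subtype.mk (p := (· ∈ nsX F Φ 𝒞 k)) x hx

lemma nv_nmk {k : ℕ} (x : Qt F Φ) (hx : x ∈ nsX F Φ 𝒞 k) : nv k (nmk h𝒞 x hx) = x := rfl

lemma nv_d (k : ℕ) (x : (NS F Φ 𝒞 h𝒞).X (k + 1)) :
    nv k ((NS F Φ 𝒞 h𝒞).d k x) = qc F Φ 𝒞 (qb F Φ (nv (k + 1) x)) := rfl

/-- Linear maps between the complexes from linear operators. -/
noncomputable def nlift {k k' : ℕ} (f : Qt F Φ →ₗ[MonoidAlgebra F G] Qt F Φ)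
    (h : ∀ x ∈ nsX F Φ 𝒞 k, f x ∈ nsX F Φ 𝒟 k') :
    (NS F Φ 𝒞 h𝒞).X k →ₗ[MonoidAlgebra F G] (NS F Φ 𝒟 h𝒟).X k' :=
  f.restrict (p := nsX F Φ 𝒞 k) (q := nsX F Φ 𝒟 k') h

lemma nv_nlift {k k' : ℕ} (f : Qt F Φ →ₗ[MonoidAlgebra F G] Qt F Φ)
    (h : ∀ x ∈ nsX F Φ 𝒞 k, f x ∈ nsX F Φ 𝒟 k') (x : (NS F Φ 𝒞 h𝒞).X k) :
    nv k' (nlift (h𝒟 := h𝒟) f h x) = f (nv k x) := rfl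

attribute [irreducible] NS nv nmk nlift

lemma nv_zero {k : ℕ} {x : (NS F Φ 𝒞 h𝒞).X k} : x = 0 ↔ nv k x = 0 :=
  ⟨fun h => by rw [h, map_zero], fun h => nv_inj (by rw [h, map_zero])⟩

lemma NS_X0 : Subsingleton ((NS F Φ 𝒞 h𝒞).X 0) := by
  refine subsingleton_of_forall_eq 0 fun x => nv_zero.2 ?_
  obtain ⟨c, h1, h2, h3, h4⟩ := mem_nsX.1 (nv_mem x)
  rw [← h4, qk_zero]
  refine ⟨Set.univ, univ_mem, ev_mono (fun l hl => ?_) h2⟩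
  intro x hx
  have := List.length_eq_zero_iff.1 hl
  simp [this] at hx

/-- Boundaries only have larger stabilizers. -/
lemma qc_qb_zero (h : ∀ L ∈ 𝒞, ∀ L' ∈ 𝒟, ¬ L ≤ L') {k : ℕ} {x : Qt F Φ} (hx : x ∈ nsX F Φ 𝒞 k) :
    qc F Φ 𝒟 (qb F Φ x) = 0 := by
  obtain ⟨c, h1, h2, h3, rfl⟩ := mem_nsX.1 hx
  rw [qb_qk]
  refine qc_eq_zero (𝒞 := 𝒟ᶜ) (Set.disjoint_left.2 fun _ h h' => h' h) (bdq_ev ?_ h3)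
  intro l hl l' hs _ hl'
  exact h _ hl _ hl' fun g hg x hx => hg x (hs.subset hx)

lemma qc_split {𝒞₁ 𝒞₂ : Set (Subgroup G)} (hd : Disjoint 𝒞₁ 𝒞₂) (hu : 𝒞₁ ∪ 𝒞₂ = 𝒞) {k : ℕ}
    {x : Qt F Φ} (hx : x ∈ nsX F Φ 𝒞 k) : qc F Φ 𝒞₁ x + qc F Φ 𝒞₂ x = x := by
  rw [qc_add Φ hd, hu, nsX_qc hx]

lemma qc_inc {𝒞₁ 𝒞₂ : Set (Subgroup G)} (hd : Disjoint 𝒞₁ 𝒞₂) (hu : 𝒞₁ ∪ 𝒞₂ = 𝒞)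
    (up : ∀ L ∈ 𝒞₁, ∀ L' ∈ 𝒞₂, ¬ L ≤ L') {k : ℕ} {x : Qt F Φ} (hx : x ∈ nsX F Φ 𝒞₁ k) :
    qc F Φ 𝒞₁ (qb F Φ x) = qc F Φ 𝒞 (qb F Φ x) := by
  rw [← hu, ← qc_add Φ hd, qc_qb_zero up hx, add_zero]

lemma qc_res {𝒞₁ 𝒞₂ : Set (Subgroup G)} (hd : Disjoint 𝒞₁ 𝒞₂) (hu : 𝒞₁ ∪ 𝒞₂ = 𝒞)
    (up : ∀ L ∈ 𝒞₁, ∀ L' ∈ 𝒞₂, ¬ L ≤ L') {k : ℕ} {x : Qt F Φ} (hx : x ∈ nsX F Φ 𝒞 k) :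
    qc F Φ 𝒞₂ (qc F Φ 𝒞 (qb F Φ x)) = qc F Φ 𝒞₂ (qb F Φ (qc F Φ 𝒞₂ x)) := by
  have h1 : 𝒞₂ ∩ 𝒞 = 𝒞₂ := by rw [← hu, Set.inter_eq_left.2 Set.subset_union_right]
  rw [qc_qc, h1]
  conv_lhs => rw [← qc_split hd hu hx, map_add, map_add]
  rw [qc_qb_zero up (qc_nsX hx.1), zero_add]

/-- Inclusion of an upper part of `𝒞`. -/
noncomputable def nsInc {𝒞₁ 𝒞₂ : Set (Subgroup G)} (h𝒞 : 𝒞.OrdConnected) (h1 : 𝒞₁.OrdConnected)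
    (hd : Disjoint 𝒞₁ 𝒞₂) (hu : 𝒞₁ ∪ 𝒞₂ = 𝒞) (up : ∀ L ∈ 𝒞₁, ∀ L' ∈ 𝒞₂, ¬ L ≤ L') :
    (NS F Φ 𝒞₁ h1).Hom (NS F Φ 𝒞 h𝒞) where
  f k := nlift LinearMap.id fun x hx => nsX_mono (hu ▸ Set.subset_union_left) hx
  comm k x := nv_inj (by rw [nv_nlift, nv_d, nv_d, nv_nlift]; exact qc_inc hd hu up (nv_mem x))

/-- Restriction to a lower part of `𝒞`. -/
noncomputable def nsRes {𝒞₁ 𝒞₂ : Set (Subgroup G)} (h𝒞 : 𝒞.OrdConnected) (h2 : 𝒞₂.OrdConnected)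
    (hd : Disjoint 𝒞₁ 𝒞₂) (hu : 𝒞₁ ∪ 𝒞₂ = 𝒞) (up : ∀ L ∈ 𝒞₁, ∀ L' ∈ 𝒞₂, ¬ L ≤ L') :
    (NS F Φ 𝒞 h𝒞).Hom (NS F Φ 𝒞₂ h2) where
  f k := nlift (qc F Φ 𝒞₂) fun x hx => qc_nsX hx.1
  comm k x := nv_inj (by rw [nv_nlift, nv_d, nv_d, nv_nlift]; exact qc_res hd hu up (nv_mem x))

/-- The short exact sequence splitting off an upper part of `𝒞`. -/
lemma ns_ses {𝒞₁ 𝒞₂ : Set (Subgroup G)} (h𝒞 : 𝒞.OrdConnected) (h1 : 𝒞₁.OrdConnected)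
    (h2 : 𝒞₂.OrdConnected) (hd : Disjoint 𝒞₁ 𝒞₂) (hu : 𝒞₁ ∪ 𝒞₂ = 𝒞)
    (up : ∀ L ∈ 𝒞₁, ∀ L' ∈ 𝒞₂, ¬ L ≤ L') :
    Cx.SES (nsInc (F := F) (Φ := Φ) h𝒞 h1 hd hu up) (nsRes h𝒞 h2 hd hu up) := by
  refine ⟨fun k x hx => ?_, fun k y => ?_, fun k x => ?_, fun k x hx => ?_⟩
  · rw [nv_zero] at hx ⊢
    rwa [nsInc, nv_nlift] at hx
  · refine ⟨nmk h𝒞 (nv k y) (nsX_mono (hu ▸ Set.subset_union_right) (nv_mem y)), nv_inj ?_⟩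
    rw [nsRes, nv_nlift, nv_nmk]
    exact nsX_qc (nv_mem y)
  · rw [nv_zero, nsRes, nv_nlift, nsInc, nv_nlift]
    obtain ⟨c, _, _, h3, h4⟩ := mem_nsX.1 (nv_mem x)
    rw [← h4]
    exact qc_eq_zero hd.symm h3
  · refine ⟨nmk h1 (qc F Φ 𝒞₁ (nv k x)) (qc_nsX (nv_mem x).1), nv_inj ?_⟩
    rw [nsInc, nv_nlift, nv_nmk]
    rw [nv_zero, nsRes, nv_nlift] at hx
    have h1 := qc_split hd hu (nv_mem x)
    rwa [hx, add_zero] at h1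

/-- The data provided by the finite-dimensionality of `M`: in degrees above `K`, small cycles bound
by an equivariant operator not decreasing stabilizers. -/
def TEp (F : Type*) [CommRing F] (G M : Type*) [CommGroup G] [MulAction G M] [UniformSpace M]
    (K : ℕ) : Prop :=
  ∀ y ∈ small F M, ∃ d : ℕ → Ch F M →ₗ[F] Ch F M,
    (∀ j (g : G) c, d j (mp (g • · : M → M) c) = mp (g • · : M → M) (d j c)) ∧
    (∀ U ∈ 𝓤 M, ∀ᶠ j in om, ∀ l, d j (single l 1) ∈
      sup F {l' | l'.length = l.length + 1 ∧ ∀ y ∈ l', ∃ x ∈ l, (x, y) ∈ U ∧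
        ∀ g : G, g • x = x → g • y = y}) ∧
    ∀ k > K, y ∈ len F M k → ∀ᶠ j in om, bd (d j (y j)) + d j (bd (y j)) = y j

lemma te_cx {K : ℕ} (hK : TEp F G M K) (k : ℕ) (hk : K ≤ k) (x : (NS F Φ 𝒞 h𝒞).X (k + 1))
    (hx : (NS F Φ 𝒞 h𝒞).d k x = 0) :
    ∃ E : (NS F Φ 𝒞 h𝒞).X (k + 1) →ₗ[MonoidAlgebra F G] (NS F Φ 𝒞 h𝒞).X (k + 2),
      (NS F Φ 𝒞 h𝒞).d (k + 1) (E x) = x := by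
  obtain ⟨c, h1, h2, h3, h4⟩ := mem_nsX.1 (nv_mem x)
  obtain ⟨d, dg, dU, db⟩ := hK c h1
  have hmono : MonoOp G d := by
    filter_upwards [dU _ univ_mem] with j hj l
    refine supported_mono (fun l' h => ?_) (hj l)
    intro g hg y hy
    obtain ⟨x, hx, -, h'⟩ := h.2 y hy
    exact h' g (hg x hx)
  have hnull : ∀ c ∈ null F Φ.fil, sq d c ∈ null F Φ.fil := by
    rintro c ⟨W, hW, hc⟩
    obtain ⟨W', hW', U, hU, h⟩ := Φ.reg W hW
    refine ⟨W', hW', sq_ev ?_ hc⟩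
    filter_upwards [dU _ (symm_le_uniformity hU)] with j hj l hl
    refine supported_mono (fun l' h' => ?_) (hj l)
    intro y hy hyW
    obtain ⟨x, hx, hxy, -⟩ := h'.2 y hy
    exact hl x hx (h y x hyW hxy)
  have heq : ∀ (g : G) (c : Sq F M), sq d (gq g c) = gq g (sq d c) := fun g c => by
    ext1 j; exact dg j g _
  have hA : ∀ {k} {x : Qt F Φ}, x ∈ qA F Φ k → qlin Φ (sq d) hnull heq x ∈ qA F Φ (k + 1) := by
    rintro k _ ⟨c, ⟨h1, h2⟩, rfl⟩
    refine ⟨sq d c, ⟨sq_small (P := Set.univ) (fun U hU => ?_) h1 (ev_univ c), sq_ev ?_ h2⟩, rfl⟩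
    · obtain ⟨V, hV, hVs, hVU⟩ := comp_symm_mem_uniformity_sets hU
      obtain ⟨V', hV', hVs', hVU'⟩ := comp_symm_mem_uniformity_sets hV
      refine ⟨V', hV', ?_⟩
      filter_upwards [dU _ hV'] with j hj l _ hl
      refine supported_mono (fun l' h' => ?_) (hj l)
      intro y hy y' hy'
      obtain ⟨x, hx, hxy, -⟩ := h'.2 y hy
      obtain ⟨x', hx', hxy', -⟩ := h'.2 y' hy'
      have ha : (y, x') ∈ V := hVU' ⟨x, hVs'.symm _ _ hxy, hl x hx x' hx'⟩
      have hb : (x', y') ∈ V := hVU' ⟨x', refl_mem_uniformity hV', hxy'⟩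
      exact hVU ⟨x', ha, hb⟩
    · filter_upwards [dU _ univ_mem] with j hj l hl
      refine supported_mono (fun l' h' => ?_) (hj l)
      have := h'.1
      simp only [Set.mem_ofPred_eq] at hl ⊢
      omega
  refine ⟨nlift (qc F Φ 𝒞 ∘ₗ qlin Φ (sq d) hnull heq) fun x hx => qc_nsX (hA hx.1), nv_inj ?_⟩
  rw [nv_d, nv_nlift, ← h4, LinearMap.comp_apply]
  have hx0 : qk Φ (rsq (PC M 𝒞) (bdq c)) = 0 := by
    rwa [nv_zero, nv_d, ← h4, qb_qk, qc_qk] at hx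
  rw [qlin_qk, qc_qk, qb_qk, qc_qk, qk_congr (mono_comp h𝒞 hmono mono_bd h3)]
  have e1 : ∀ᶠ j in om, rsq (PC M 𝒞) (bdq (sq d c)) j =
      (c - rsq (PC M 𝒞) (sq d (bdq c))) j := by
    filter_upwards [db (k + 1) (by omega) h2, h3] with j hj h3
    simp only [sq_apply, Pi.sub_apply]
    rw [eq_sub_of_add_eq hj, map_sub, rs_eq_self h3]
  rw [qk_congr e1, map_sub, ← qk_congr (mono_comp h𝒞 mono_bd hmono h3), sub_eq_self, qk_zero]
  exact rsq_null _ (hnull _ (qk_zero.1 hx0))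

lemma te_h {K : ℕ} (hK : TEp F G M K) (k : ℕ) (hk : K ≤ k) : (NS F Φ 𝒞 h𝒞).h k = 0 := by
  rw [Cx.h_eq_zero_iff]
  intro z hz
  obtain ⟨E, hE⟩ := te_cx hK k hk z hz
  exact ⟨_, hE⟩

lemma te_im {K : ℕ} (hK : TEp F G M K) (a : MonoidAlgebra F G) (k : ℕ) (hk : K ≤ k) :
    (imCx (NS F Φ 𝒞 h𝒞) a).h k = 0 := by
  refine Cx.sub_h_zero' ?_
  rintro z ⟨y, rfl⟩ hz
  obtain ⟨E, hE⟩ := te_cx hK k hk _ hz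
  refine ⟨_, ⟨E y, rfl⟩, ?_⟩
  rw [← hE]; simp

end ns2
end MannSu

/-! ### Freeness and Smith data -/

namespace MannSu
universe u v
open Finsupp Filter Uniformity Topology
set_option linter.unusedSectionVars false
set_option linter.unusedVariables false

section fr
variable {R : Type*} [CommRing R] {X : Type*} [AddCommGroup X] [Module R X] {p : ℕ}

/-- A module which is induced from a fundamental domain (up to the submodule `T` on which the
projection `e` to the fundamental domain vanishes) satisfies the exactness properties of a free
module over the group algebra of a cyclic group. -/
lemma fr (s : El R p) (e : X →+ X) (T J : Submodule R X) (hT : ∀ t ∈ T, e t = 0)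
    (hJ : ∀ x ∈ J, e x ∈ J)
    (hs : ∀ x ∈ J, x - ∑ i ∈ Finset.range p, s.1 ^ i • e (s.1 ^ (p - i) • x) ∈ T) :
    ∀ x ∈ J, (nm s • x ∈ T → ∃ y ∈ J, x - ta s • y ∈ T) ∧
      (ta s • x ∈ T → ∃ y ∈ J, x - nm s • y ∈ T) := by
  intro x hx
  constructor
  · intro h
    have h0 : ∑ i ∈ Finset.range p, e (s.1 ^ (p - i) • x) = 0 := by
      rw [← map_sum, ← Finset.sum_smul]
      have : ∑ i ∈ Finset.range p, s.1 ^ (p - i) = nm s := by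
        rw [← Finset.sum_range_reflect, nm]
        rcases p with _ | p
        · simp
        rw [Finset.sum_range_succ, Finset.sum_range_succ' (fun j => s.1 ^ j)]
        congr 1
        · refine Finset.sum_congr rfl fun i hi => ?_
          rw [Finset.mem_range] at hi
          congr 1; omega
        · have := s.2
          simp only [pow_zero]
          have e : p + 1 - (p + 1 - 1 - p) = p + 1 := by omega
          rw [e, this]
      rw [this]; exact hT _ h
    refine ⟨∑ i ∈ Finset.range p, (∑ j ∈ Finset.range i, s.1 ^ j) • e (s.1 ^ (p - i) • x),
      J.sum_mem fun i _ => J.smul_mem _ (hJ _ (J.smul_mem _ hx)), ?_⟩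
    convert hs x hx using 2
    rw [Finset.smul_sum, ← sub_zero (∑ i ∈ Finset.range p, s.1 ^ i • e (s.1 ^ (p - i) • x)), ← h0,
      ← Finset.sum_sub_distrib]
    refine Finset.sum_congr rfl fun i _ => ?_
    rw [smul_smul, ta, mul_geom_sum, sub_smul, one_smul]
  · intro h
    have hm : ∀ m : ℕ, e (s.1 ^ m • x) = e x := by
      intro m
      rw [← sub_eq_zero, ← map_sub]
      refine hT _ ?_
      have : s.1 ^ m • x - x = (∑ j ∈ Finset.range m, s.1 ^ j) • ta s • x := by
        rw [smul_smul, ta, geom_sum_mul, sub_smul, one_smul]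
      rw [this]; exact T.smul_mem _ h
    refine ⟨e x, hJ x hx, ?_⟩
    have := hs x hx
    simp only [hm] at this
    rwa [← Finset.sum_smul] at this

end fr

section dom
variable {F : Type*} [CommRing F] {M : Type*} {G : Type*} [CommGroup G] [MulAction G M] {p : ℕ}
  [UniformSpace M]

/-- Decomposition of a chain into the translates of a fundamental domain `S`. -/
lemma trans_sum {g : G} (hg : g ^ p = 1) {S P : Set (List M)} (hSP : S ⊆ P)
    (hP : ∀ (h : G) l, gl h l ∈ P ↔ l ∈ P)
    (hS : ∀ l ∈ P, ∃! i, i ∈ Finset.range p ∧ gl (g ^ (p - i)) l ∈ S) (c : Ch F M) :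
    ∑ i ∈ Finset.range p, mp (g ^ i • · : M → M) (rs F S (mp (g ^ (p - i) • · : M → M) c)) =
      rs F P c := by
  have := eq_on_sup (P := Set.univ) (c := c) (g := rs F P)
    (f := ∑ i ∈ Finset.range p,
      mp (g ^ i • · : M → M) ∘ₗ rs F S ∘ₗ mp (g ^ (p - i) • · : M → M)) (fun l _ => ?_)
    (by simp [sup])
  · simpa [LinearMap.sum_apply] using this
  · simp only [LinearMap.sum_apply, LinearMap.comp_apply, mp_single]
    by_cases hl : l ∈ P
    · obtain ⟨i, ⟨hi, hiS⟩, hu⟩ := hS l hl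
      rw [rs_single_of_mem hl, Finset.sum_eq_single_of_mem i hi]
      · rw [rs_single_of_mem hiS, mp_single]
        congr 1
        have := gl_mul (g ^ i) (g ^ (p - i)) l
        rw [← pow_add, Nat.add_sub_cancel' (Finset.mem_range.1 hi).le, hg, gl_one] at this
        exact this.symm
      · intro j hj hji
        rw [rs_single_of_notMem fun h => hji (hu j ⟨hj, h⟩), map_zero]
    · rw [rs_single_of_notMem hl]
      refine Finset.sum_eq_zero fun i _ => ?_
      rw [rs_single_of_notMem fun h => hl ((hP (g ^ (p - i)) l).1 (hSP h)), map_zero]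

/-- Existence of fundamental domains for a cyclic group acting freely modulo `H`. -/
lemma exists_dom (hp : 0 < p) {g : G} (hg : g ^ p = 1) (H : Subgroup G) {P : Set (List M)}
    (hP : ∀ (h : G) l, gl h l ∈ P ↔ l ∈ P)
    (hf : ∀ l ∈ P, ∀ i, 0 < i → i < p → ∀ h ∈ H, gl (g ^ i) l ≠ gl h l) :
    ∃ S : Set (List M), S ⊆ P ∧ (∀ h ∈ H, ∀ l, gl h l ∈ S ↔ l ∈ S) ∧
      ∀ l ∈ P, ∃! i, i ∈ Finset.range p ∧ gl (g ^ (p - i)) l ∈ S := by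
  let r : Setoid (List M) :=
    { r := fun a b => ∃ h ∈ H ⊔ Subgroup.zpowers g, gl h a = b
      iseqv :=
        { refl := fun a => ⟨1, one_mem _, gl_one a⟩
          symm := fun {a b} ⟨h, hh, e⟩ => ⟨h⁻¹, inv_mem hh, by rw [← e, ← gl_mul]; simp [gl_one]⟩
          trans := fun {a b c} ⟨h, hh, e⟩ ⟨h', hh', e'⟩ =>
            ⟨h' * h, mul_mem hh' hh, by rw [gl_mul, e, e']⟩ } }
  let ρ : List M → List M := fun l => (Quotient.mk r l).out
  have hρ1 : ∀ a, ∃ h ∈ H ⊔ Subgroup.zpowers g, gl h a = ρ a := fun a =>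
    r.symm (Quotient.mk_out (s := r) a)
  have hρ2 : ∀ a, ∀ h ∈ H ⊔ Subgroup.zpowers g, ρ (gl h a) = ρ a := fun a h hh => by
    have : Quotient.mk r (gl h a) = Quotient.mk r a := Quotient.sound (r.symm ⟨h, hh, rfl⟩)
    simp only [ρ, this]
  refine ⟨{a | a ∈ P ∧ ∃ h ∈ H, a = gl h (ρ a)}, fun a h => h.1, fun h hh l => ?_, fun l hl => ?_⟩
  · have hh' : h ∈ H ⊔ Subgroup.zpowers g := Subgroup.mem_sup_left hh
    simp only [Set.mem_ofPred_eq, hP, hρ2 l h hh']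
    refine and_congr_right fun _ => ⟨?_, ?_⟩
    · rintro ⟨k, hk, e⟩
      refine ⟨h⁻¹ * k, mul_mem (inv_mem hh) hk, ?_⟩
      rw [gl_mul, ← e, ← gl_mul]; simp [gl_one]
    · rintro ⟨k, hk, e⟩
      refine ⟨h * k, mul_mem hh hk, ?_⟩
      rw [gl_mul, ← e]
  · refine existsUnique_of_exists_of_unique ?_ ?_
    · obtain ⟨k, hk, e⟩ := hρ1 l
      obtain ⟨h, hh, z, hz, rfl⟩ := Subgroup.mem_sup.1 hk
      obtain ⟨m, rfl⟩ := Subgroup.mem_zpowers_iff.1 hz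
      have hfin : IsOfFinOrder g := isOfFinOrder_iff_pow_eq_one.2 ⟨p, hp, hg⟩
      obtain ⟨n, hn⟩ : ∃ n : ℕ, n < p ∧ g ^ n = g ^ m := by
        refine ⟨(m % p).toNat, ?_, ?_⟩
        · have := Int.emod_lt_of_pos m (by exact_mod_cast hp : (0 : ℤ) < p)
          have := Int.emod_nonneg m (by exact_mod_cast hp.ne' : (p : ℤ) ≠ 0)
          omega
        · have := Int.emod_nonneg m (by exact_mod_cast hp.ne' : (p : ℤ) ≠ 0)
          rw [← zpow_natCast, Int.toNat_of_nonneg this]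
          conv_rhs => rw [← Int.emod_add_mul_ediv m p, zpow_add, zpow_mul, zpow_natCast, hg]
          simp
      have key : ∀ i, g ^ (p - i) = g ^ m →
          gl (g ^ (p - i)) l ∈ {a | a ∈ P ∧ ∃ h ∈ H, a = gl h (ρ a)} := by
        intro i hi
        refine ⟨(hP _ l).2 hl, h⁻¹, inv_mem hh, ?_⟩
        rw [hi, hρ2 l (g ^ m) (Subgroup.mem_sup_right hz), ← e, ← gl_mul]
        simp
      by_cases h0 : n = 0
      · refine ⟨0, Finset.mem_range.2 hp, key 0 ?_⟩
        rw [← hn.2, h0, Nat.sub_zero, hg, pow_zero]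
      · refine ⟨p - n, Finset.mem_range.2 (by omega), key _ ?_⟩
        rw [Nat.sub_sub_self hn.1.le, hn.2]
    · have key : ∀ i j, i < j → j < p → gl (g ^ (p - i)) l ∈ {a | a ∈ P ∧ ∃ h ∈ H, a = gl h (ρ a)} →
          gl (g ^ (p - j)) l ∈ {a | a ∈ P ∧ ∃ h ∈ H, a = gl h (ρ a)} → False := by
        rintro i j hij hj ⟨hi1, h, hh, e⟩ ⟨hj1, h', hh', e'⟩
        have hz : ∀ n : ℕ, g ^ n ∈ H ⊔ Subgroup.zpowers g := fun n =>
          Subgroup.mem_sup_right ⟨n, by simp⟩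
        rw [hρ2 l _ (hz _)] at e e'
        refine hf _ hj1 (j - i) (by omega) (by omega) (h * h'⁻¹) (mul_mem hh (inv_mem hh')) ?_
        have e2 : gl (g ^ (j - i)) (gl (g ^ (p - j)) l) = gl (g ^ (p - i)) l := by
          rw [← gl_mul, ← pow_add]; congr 2; omega
        rw [e2, e, gl_mul, e', ← gl_mul h'⁻¹]; simp [gl_one]
      rintro i j ⟨hi, hiS⟩ ⟨hj, hjS⟩
      rw [Finset.mem_range] at hi hj
      rcases lt_trichotomy i j with h | h | h
      · exact (key i j h hj hiS hjS).elim
      · exact h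
      · exact (key j i h hi hjS hiS).elim

/-- The element of the group algebra defined by an element of order dividing `p`. -/
noncomputable def el (F : Type*) [CommRing F] {g : G} (hg : g ^ p = 1) : El (MonoidAlgebra F G) p :=
  ⟨MonoidAlgebra.of F G g, by rw [← map_pow, hg, map_one]⟩

variable {Φ : GF G M}

lemma el_pow_qk {g : G} (hg : g ^ p = 1) (n : ℕ) (c : Sq F M) :
    (el F hg).1 ^ n • qk Φ c = qk Φ (gq (g ^ n) c) := by
  rw [el, ← map_pow, ← map_smul, of_smul]

lemma qr_sum {g : G} (hg : g ^ p = 1) {S P : Set (List M)} (hSP : S ⊆ P)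
    (hP : ∀ (h : G) l, gl h l ∈ P ↔ l ∈ P)
    (hS : ∀ l ∈ P, ∃! i, i ∈ Finset.range p ∧ gl (g ^ (p - i)) l ∈ S) (c : Sq F M) :
    ∑ i ∈ Finset.range p, (el F hg).1 ^ i • qr Φ S ((el F hg).1 ^ (p - i) • qk Φ c) =
      qk Φ (rsq P c) := by
  simp only [el_pow_qk, qr_qk]
  rw [← map_sum]
  congr 1
  ext1 j
  rw [Finset.sum_apply]
  exact trans_sum hg hSP hP hS (c j)

lemma qr_comm {g : G} (hg : g ^ p = 1) {S : Set (List M)} (hS : ∀ l, gl g l ∈ S ↔ l ∈ S)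
    (x : Qt F Φ) : (el F hg).1 • qr Φ S x = qr Φ S ((el F hg).1 • x) := by
  obtain ⟨c, rfl⟩ := qk_surj Φ x
  rw [qr_qk, ← pow_one (el F hg).1, el_pow_qk, el_pow_qk, qr_qk]
  congr 1
  ext1 j
  simp only [pow_one]
  exact (mp_rs hS (c j)).symm

variable [CompactSpace M] [ContinuousConstSMul G M]

lemma qr_nsX (S : Set (List M)) {𝒞 : Set (Subgroup G)} {k : ℕ} {x : Qt F Φ}
    (hx : x ∈ nsX F Φ 𝒞 k) : qr Φ S x ∈ nsX F Φ 𝒞 k := by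
  obtain ⟨c, h1, h2, h3, rfl⟩ := mem_nsX.1 hx
  exact mem_nsX.2 ⟨rsq S c, rsq_small _ h1, rsq_ev h2 fun _ h _ => h, rsq_ev h3 fun _ h _ => h, rfl⟩

/-- Independence of a list of group elements over a subgroup. -/
def IndO (K : Subgroup G) : List G → Prop
  | [] => True
  | g :: t => g ∉ K ⊔ Subgroup.closure {x | x ∈ t} ∧ IndO K t

lemma IndO.suffix {K : Subgroup G} : ∀ {l₁ l₂ : List G}, IndO K (l₁ ++ l₂) → IndO K l₂
  | [], _, h => h
  | _ :: l₁, _, h => IndO.suffix (l₁ := l₁) h.2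

lemma closure_cons (g : G) (t : List G) : Subgroup.closure {x | x ∈ g :: t} =
    Subgroup.zpowers g ⊔ Subgroup.closure {x | x ∈ t} := by
  rw [Subgroup.zpowers_eq_closure, ← Subgroup.closure_union]
  congr 1
  ext x; simp

lemma pow_mem_prime [hp : Fact p.Prime] {g : G} (hg : g ^ p = 1) {H : Subgroup G} {n : ℤ}
    (h : g ^ n ∈ H) (hn : ¬ (p : ℤ) ∣ n) : g ∈ H := by
  have : IsCoprime (p : ℤ) n := (Nat.prime_iff_prime_int.1 hp.out).coprime_iff_not_dvd.2 hn
  obtain ⟨a, b, e⟩ := this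
  have : g = (g ^ n) ^ b := by
    rw [← zpow_mul, mul_comm]
    conv_lhs => rw [← zpow_one g, ← e, zpow_add, mul_comm a, zpow_mul, zpow_natCast, hg]
    simp
  rw [this]; exact H.zpow_mem h b

lemma IndO.inter [hp : Fact p.Prime] (hg : ∀ g : G, g ^ p = 1) {K : Subgroup G} :
    ∀ {l : List G}, IndO K l → ∀ w ∈ Subgroup.closure {x | x ∈ l}, w ∈ K → w = 1
  | [], _, w, hw, _ => by simpa using hw
  | g :: t, h, w, hw, hK => by
    rw [closure_cons] at hw
    obtain ⟨z, ⟨n, rfl⟩, y, hy, rfl⟩ := Subgroup.mem_sup.1 hw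
    by_cases hn : (p : ℤ) ∣ n
    · have : g ^ n = 1 := by
        obtain ⟨m, rfl⟩ := hn
        rw [zpow_mul, zpow_natCast, hg, one_zpow]
      simp only [this, one_mul] at hK ⊢
      exact IndO.inter hg h.2 y hy hK
    · refine (h.1 (pow_mem_prime (hg g) (n := n) ?_ hn)).elim
      have : g ^ n = (g ^ n * y) * y⁻¹ := by group
      rw [this]
      exact mul_mem (Subgroup.mem_sup_left hK) (Subgroup.mem_sup_right (inv_mem hy))

/-- Vanishing of the homology of a complex on which a group acts freely, when the homology is small
compared with the rank of the group. -/
theorem ns_free [CharP (MonoidAlgebra F G) p] [hp : Fact p.Prime] (hg : ∀ g : G, g ^ p = 1)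
    {𝒞 : Set (Subgroup G)} {h𝒞 : 𝒞.OrdConnected} {K : ℕ} (hK : TEp F G M K) (gs : List G)
    (hi : IndO ⊥ gs)
    (hf : ∀ l : List M, l ≠ [] → St G l ∈ 𝒞 → ∀ w ∈ Subgroup.closure {x | x ∈ gs}, w ∈ St G l → w = 1)
    (hlen : ∀ N, ∑ k ∈ Finset.range N, (NS F Φ 𝒞 h𝒞).h k ≤ gs.length) (k : ℕ) :
    (NS F Φ 𝒞 h𝒞).h k = 0 := by
  refine free_acyclic (p := p) (NS F Φ 𝒞 h𝒞) NS_X0 (gs.map fun g => el F (hg g)) ?_ K ?_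
    (by simpa using hlen K) k
  · intro l₁ s l₂ hl k
    obtain ⟨g₁, g₂', rfl, h1, h2⟩ := List.map_eq_append_iff.1 hl
    obtain ⟨g, g₂, rfl, rfl, rfl⟩ := List.map_eq_cons_iff.1 h2
    have hfr := hi.suffix.1
    rw [bot_sup_eq] at hfr
    let P : Set (List M) := PC M 𝒞 \ {[]}
    have hP : ∀ (h : G) l, gl h l ∈ P ↔ l ∈ P := fun h l => by
      simp only [P, Set.mem_sdiff, PC_gl, Set.mem_singleton_iff, gl, List.map_eq_nil_iff]
    obtain ⟨S, hSP, hSH, hS⟩ := exists_dom hp.out.pos (hg g) (Subgroup.closure {x | x ∈ g₂}) hP (by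
      intro l hl i hi0 hip h hh e
      have hst : h⁻¹ * g ^ i ∈ St G l := by
        rw [mem_St_iff, gl_mul, e, ← gl_mul]; simp [gl_one]
      have hsub : ∀ x ∈ g :: g₂, x ∈ Subgroup.closure {x | x ∈ g₁ ++ g :: g₂} := fun x hx =>
        Subgroup.subset_closure (List.mem_append_right _ hx)
      have h1 := hf l hl.2 hl.1 _ (mul_mem (inv_mem (Subgroup.closure_mono (fun x hx => by
        exact List.mem_append_right _ (List.mem_cons_of_mem _ hx)) hh))
        (pow_mem (hsub g List.mem_cons_self) i)) hst
      refine hfr (pow_mem_prime (hg g) (n := i) ?_ ?_)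
      · rw [zpow_natCast, ← inv_mul_eq_one.1 h1]; exact hh
      · intro hd
        have := Nat.le_of_dvd hi0 (Int.natCast_dvd_natCast.1 hd)
        omega)
    have key := fr (el F (hg g)) (qr Φ S) ⊥
      ((inv (NS F Φ 𝒞 h𝒞) (g₂.map fun g => el F (hg g)) k).map (nv k)) (by
        intro t ht; rw [(Submodule.mem_bot _).1 ht, map_zero])
      (by
        rintro _ ⟨x, hx, rfl⟩
        refine ⟨nmk h𝒞 (qr Φ S (nv k x)) (qr_nsX S (nv_mem x)), ?_, nv_nmk _ _⟩
        intro r hr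
        have hrx := hx r hr
        obtain ⟨h, hh, rfl⟩ := List.mem_map.1 hr
        rw [nv_zero] at hrx ⊢
        rw [map_smul, ta, sub_smul, one_smul, sub_eq_zero] at hrx ⊢
        rw [nv_nmk, qr_comm (hg h) (hSH h (Subgroup.subset_closure hh)), hrx])
      (by
        rintro _ ⟨x, hx, rfl⟩
        obtain ⟨c, h1, h2, h3, h4⟩ := mem_nsX.1 (nv_mem x)
        rw [← h4, qr_sum (hg g) hSP hP hS, Submodule.mem_bot, ← map_sub, qk_zero]
        refine ⟨Set.univ, univ_mem, sub_rsq_ev h3 fun l hl hl' => ?_⟩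
        have : l = [] := by by_contra hne; exact hl' ⟨hl, hne⟩
        subst this
        intro x hx; simp at hx)
    intro x hx
    obtain ⟨k1, k2⟩ := key (nv k x) ⟨x, hx, rfl⟩
    constructor
    · intro h
      obtain ⟨_, ⟨y, hy, rfl⟩, e⟩ := k1 (by rw [← map_smul, h, map_zero]; exact zero_mem _)
      refine ⟨y, hy, nv_inj ?_⟩
      rwa [Submodule.mem_bot, sub_eq_zero, ← map_smul] at e
    · intro h
      obtain ⟨_, ⟨y, hy, rfl⟩, e⟩ := k2 (by rw [← map_smul, h, map_zero]; exact zero_mem _)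
      refine ⟨y, hy, nv_inj ?_⟩
      rwa [Submodule.mem_bot, sub_eq_zero, ← map_smul] at e
  · intro l₁ l₂ _ k hk c hc hdc
    obtain ⟨E, hE⟩ := te_cx hK k hk c hdc
    refine ⟨E c, fun r hr => ?_, hE⟩
    rw [← map_smul, hc r hr, map_zero]

/-- The subcomplex of chains on lists fixed by `K` and `g`, inside those fixed by `K`. -/
noncomputable def smT (F : Type*) [CommRing F] (Φ : GF G M) (K L : Subgroup G) (k : ℕ) :
    Submodule (MonoidAlgebra F G) ((NS F Φ (Set.Ici K) Set.ordConnected_Ici).X k) :=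
  (nsX F Φ (Set.Ici L) k).comap (nv k)

lemma mem_smT {K L : Subgroup G} {k : ℕ} {x : (NS F Φ (Set.Ici K) Set.ordConnected_Ici).X k} :
    x ∈ smT F Φ K L k ↔ nv k x ∈ nsX F Φ (Set.Ici L) k := Iff.rfl

lemma Ici_d {K L : Subgroup G} (h : K ≤ L) {k : ℕ} {x : Qt F Φ}
    (hx : x ∈ nsX F Φ (Set.Ici L) k) :
    qc F Φ (Set.Ici L) (qb F Φ x) = qc F Φ (Set.Ici K) (qb F Φ x) :=
  qc_inc (𝒞₂ := Set.Ici K \ Set.Ici L) Set.disjoint_sdiff_right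
    (Set.union_sdiff_cancel (Set.Ici_subset_Ici.2 h)) (fun A hA B hB hAB => hB.2 (le_trans hA hAB)) hx

/-- Smith data for a single element `g`: the distinguished subcomplex of the chains fixed by `K` consists
of the chains fixed by `K` and `g`. -/
lemma smith [CharP (MonoidAlgebra F G) p] [hp : Fact p.Prime] (K : Subgroup G) {g : G}
    (hg : g ^ p = 1) :
    Sm (NS F Φ (Set.Ici K) Set.ordConnected_Ici) (smT F Φ K (K ⊔ Subgroup.zpowers g))
      (ta (el F hg)) (nm (el F hg)) := by
  have hT : ∀ {k} {t : Qt F Φ}, t ∈ nsX F Φ (Set.Ici (K ⊔ Subgroup.zpowers g)) k →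
      (el F hg).1 • t = t := by
    intro k t ht
    obtain ⟨c, h1, h2, h3, rfl⟩ := mem_nsX.1 ht
    rw [← pow_one (el F hg).1, el_pow_qk]
    refine qk_congr ?_
    filter_upwards [h3] with j h3
    simp only [sq_apply, pow_one]
    refine eq_on_sup (g := LinearMap.id) (fun l hl => ?_) h3
    rw [mp_single, LinearMap.id_apply]
    have : g ∈ St G l := hl (Subgroup.mem_sup_right (Subgroup.mem_zpowers g))
    rw [mem_St_iff] at this
    rw [← gl, this]
  let P : Set (List M) := {l | g ∉ St G l}
  have hP : ∀ (h : G) l, gl h l ∈ P ↔ l ∈ P := fun h l => by simp only [P, Set.mem_ofPred_eq, St_gl]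
  obtain ⟨S, hSP, -, hS⟩ := exists_dom hp.out.pos hg ⊥ hP (by
    intro l hl i hi0 hip h hh e
    rw [Subgroup.mem_bot.1 hh, gl_one, ← mem_St_iff] at e
    refine hl (pow_mem_prime hg (n := i) (by rwa [zpow_natCast]) fun hd => ?_)
    have := Nat.le_of_dvd hi0 (Int.natCast_dvd_natCast.1 hd)
    omega)
  have key : ∀ k, _ := fun k => fr (el F hg) (qr Φ S) (nsX F Φ (Set.Ici (K ⊔ Subgroup.zpowers g)) k)
    (nsX F Φ (Set.Ici K) k) (by
      intro t ht
      obtain ⟨c, h1, h2, h3, rfl⟩ := mem_nsX.1 ht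
      rw [qr_qk, qk_zero]
      refine null_zero ?_
      filter_upwards [h3] with j h3
      refine rs_eq_zero (Set.disjoint_left.2 fun l hl hl' => hSP hl ?_) h3
      exact hl' (Subgroup.mem_sup_right (Subgroup.mem_zpowers g)))
    (fun x hx => qr_nsX S hx)
    (by
      intro x hx
      obtain ⟨c, h1, h2, h3, rfl⟩ := mem_nsX.1 hx
      rw [qr_sum hg hSP hP hS, ← map_sub]
      refine mem_nsX.2 ⟨c - rsq P c, sub_mem h1 (rsq_small _ h1), sub_rsq_ev h2 fun _ h _ => h,
        sub_rsq_ev h3 fun l hl hl' => ?_, rfl⟩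
      have : g ∈ St G l := by by_contra h; exact hl' h
      exact _root_.sup_le hl ((Subgroup.zpowers_le).2 this))
  refine ⟨fun k x hx => ?_, ta_mul_nm _, fun k x hx => ?_, fun k x hx => ?_, fun k x hx => ?_,
    fun k x hx => ?_⟩
  · rw [mem_smT] at hx ⊢
    rw [nv_d, ← Ici_d le_sup_left hx]
    exact qc_nsX (qb_qA hx.1)
  · rw [nv_zero, map_smul, ta, sub_smul, one_smul, hT hx, sub_self]
  · have : ∀ j : ℕ, (el F hg).1 ^ j • nv k x = nv k x := by
      intro j
      induction j with
      | zero => simp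
      | succ j ih => rw [pow_succ, mul_smul, hT hx, ih]
    rw [nv_zero, map_smul, nm, Finset.sum_smul, Finset.sum_congr rfl fun j _ => this j,
      Finset.sum_const, Finset.card_range, ← Nat.cast_smul_eq_nsmul (MonoidAlgebra F G),
      CharP.cast_eq_zero, zero_smul]
  · rw [mem_smT, map_smul] at hx
    obtain ⟨y, hy, e⟩ := (key k (nv k x) (nv_mem x)).2 hx
    refine ⟨nmk _ y hy, ?_⟩
    rwa [mem_smT, map_sub, map_smul, nv_nmk]
  · rw [mem_smT, map_smul] at hx
    obtain ⟨y, hy, e⟩ := (key k (nv k x) (nv_mem x)).1 hx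
    refine ⟨nmk _ y hy, ?_⟩
    rwa [mem_smT, map_sub, map_smul, nv_nmk]

end dom
end MannSu

/-! ### One-dimensional homology and vanishing in high degrees -/

namespace MannSu
universe u v
open Finsupp Filter Uniformity Topology
set_option linter.unusedSectionVars false
set_option linter.unusedVariables false

section alg
variable {R : Type v} [CommRing R]

lemma Cx.SES.h_right0 {A B C : Cx.{u} R} {f : A.Hom B} {g : B.Hom C} (S : Cx.SES f g)
    (hB : Subsingleton (B.X 0)) : C.h 0 ≤ B.h 0 := by
  have := len_rel (R := R) (W' := PUnit.{1}) (Q := PUnit.{1}) (C.cls 0 ∘ₗ g.mapZ 0) (B.cls 0) 0 0 ?_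
    (fun _ _ => rfl) ?_
  · simpa [Cx.h] using this
  · intro c
    obtain ⟨c, rfl⟩ := C.cls_surj _ c
    obtain ⟨b, hb⟩ := S.surj _ c.1
    exact ⟨⟨b, Subsingleton.elim _ _⟩, by
      rw [LinearMap.comp_apply]; congr 1; apply Subtype.ext; rw [g.mapZ_coe]; exact hb⟩
  · intro x hx
    obtain ⟨w, hw⟩ := (B.cls_eq_zero _ _).1 hx
    refine ⟨0, ?_⟩
    symm
    refine (C.cls_eq_zero _ _).2 ⟨g.f _ w, ?_⟩
    rw [← g.comm, hw, g.mapZ_coe]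

lemma Cx.SES.sum_right {A B C : Cx.{u} R} {f : A.Hom B} {g : B.Hom C} (S : Cx.SES f g)
    (hB : Subsingleton (B.X 0)) (N : ℕ) : ∑ k ∈ Finset.range N, C.h k ≤
      ∑ k ∈ Finset.range N, B.h k + ∑ k ∈ Finset.range N, A.h k := by
  rcases N with _ | N
  · simp
  rw [Finset.sum_range_succ' C.h, Finset.sum_range_succ' B.h, Finset.sum_range_succ A.h, add_right_comm]
  calc _ ≤ ∑ k ∈ Finset.range N, (B.h (k + 1) + A.h k) + B.h 0 :=
        add_le_add (Finset.sum_le_sum fun k _ => S.h_right k) (S.h_right0 hB)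
    _ ≤ _ := by rw [Finset.sum_add_distrib]; gcongr; exact le_self_add

lemma Cx.SES.sum_mid {A B C : Cx.{u} R} {f : A.Hom B} {g : B.Hom C} (S : Cx.SES f g)
    (N : ℕ) : ∑ k ∈ Finset.range N, B.h k ≤
      ∑ k ∈ Finset.range N, A.h k + ∑ k ∈ Finset.range N, C.h k := by
  rw [← Finset.sum_add_distrib]
  exact Finset.sum_le_sum fun k _ => S.h_mid k

/-- A complex has one-dimensional homology, concentrated in degree `m`. -/
def HS (C : Cx.{u} R) (m : ℕ) : Prop := (∀ k, k ≠ m → C.h k = 0) ∧ C.h m = 1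

lemma HS.uniq {C : Cx.{u} R} {m m' : ℕ} (h : HS C m) (h' : HS C m') : m = m' := by
  by_contra hne
  have := h'.1 m hne
  rw [h.2] at this
  exact one_ne_zero this

lemma HS.sum {C : Cx.{u} R} {m : ℕ} (h : HS C m) (N : ℕ) : ∑ k ∈ Finset.range N, C.h k ≤ 1 := by
  by_cases hm : m ∈ Finset.range N
  · rw [Finset.sum_eq_single_of_mem m hm fun k _ hk => h.1 k hk, h.2]
  · rw [Finset.sum_eq_zero fun k hk => h.1 k fun e => hm (e ▸ hk)]
    exact zero_le

lemma HS.of_sum {C : Cx.{u} R} {m : ℕ} (h : ∀ N, ∑ k ∈ Finset.range N, C.h k ≤ 1) (hm : C.h m ≠ 0) :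
    HS C m := by
  have h1 : 1 ≤ C.h m := Order.one_le_iff_ne_zero.2 hm
  refine ⟨fun k hk => ?_, le_antisymm ?_ h1⟩
  · have : C.h m + C.h k ≤ 1 := by
      refine le_trans ?_ (h (m + k + 1))
      have hs : ({m, k} : Finset ℕ) ⊆ Finset.range (m + k + 1) := by
        intro i hi
        rw [Finset.mem_insert, Finset.mem_singleton] at hi
        rw [Finset.mem_range]; omega
      refine le_trans ?_ (Finset.sum_le_sum_of_subset hs)
      rw [Finset.sum_pair hk.symm]
    have h2 : 1 + C.h k ≤ 1 + 0 := by rw [add_zero]; exact le_trans (add_le_add_left h1 _) this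
    exact le_zero_iff.1 ((ENat.add_le_add_iff_left ENat.one_ne_top).1 h2)
  · refine le_trans ?_ (h (m + 1))
    exact Finset.single_le_sum (f := C.h) (fun _ _ => zero_le) (Finset.self_mem_range_succ m)

/-- Bounding the homology by the number of generators over a field. -/
lemma Cx.h_le_card {F : Type*} [Field F] [Algebra F R] (C : Cx.{u} R) (k N : ℕ) (v : Fin N → C.X (k + 1))
    (hv : ∀ i, C.d k (v i) = 0)
    (hs : ∀ z, C.d k z = 0 → ∃ a : Fin N → F, ∃ y, C.d (k + 1) y = z - ∑ i, algebraMap F R (a i) • v i) :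
    C.h k ≤ N := by
  let _ : Module F (C.H k) := Module.compHom (C.H k) (algebraMap F R)
  have hsm : ∀ (a : F) (x : C.H k), a • x = algebraMap F R a • x := fun _ _ => rfl
  have : IsScalarTower F R (C.H k) := ⟨fun a r x => by rw [hsm, Algebra.smul_def, mul_smul]⟩
  have h1 : Module.length R (C.H k) ≤ Module.length F (C.H k) := by
    have := Submodule.length_le_length_restrictScalars F (⊤ : Submodule R (C.H k))
    rw [Submodule.restrictScalars_top] at this
    rwa [Module.length_top, Module.length_top] at this
  let w : Fin N → C.H k := fun i => C.cls k ⟨v i, hv i⟩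
  have hspan : ⊤ ≤ Submodule.span F (Set.range w) := by
    rintro x -
    obtain ⟨z, rfl⟩ := C.cls_surj _ x
    obtain ⟨a, y, e⟩ := hs z.1 z.2
    have : C.cls k z = ∑ i, a i • w i := by
      rw [← sub_eq_zero]
      have e2 : C.cls k z - ∑ i, a i • w i =
          C.cls k (z - ∑ i, algebraMap F R (a i) • ⟨v i, hv i⟩) := by
        rw [map_sub, map_sum]
        simp only [hsm, map_smul, w]
      rw [e2, C.cls_eq_zero]
      refine ⟨y, ?_⟩
      rw [e]; simp
    rw [this]
    exact Submodule.sum_mem _ fun i _ => Submodule.smul_mem _ _ (Submodule.subset_span ⟨i, rfl⟩)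
  refine h1.trans ?_
  have hsurj : Function.Surjective (Fintype.linearCombination F w) := by
    rw [← LinearMap.range_eq_top, Fintype.range_linearCombination]; exact top_le_iff.1 hspan
  refine (Module.length_le_of_surjective _ hsurj).trans ?_
  rw [Module.length_eq_finrank]; simp

lemma exists_span {F V : Type*} [Field F] [AddCommGroup V] [Module F V] {Z B S : Submodule F V}
    (h : Z ≤ B ⊔ S) (hS : S.FG) : ∃ (N : ℕ) (v : Fin N → V), (∀ i, v i ∈ Z) ∧
      ∀ z ∈ Z, ∃ a : Fin N → F, z - ∑ i, a i • v i ∈ B := by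
  have hle : Z.map B.mkQ ≤ S.map B.mkQ := by
    refine (Submodule.map_mono h).trans ?_
    rw [Submodule.map_sup, Submodule.mkQ_map_self, bot_sup_eq]
  have hfg : (Z.map B.mkQ).FG := by
    have : IsNoetherian F (S.map B.mkQ) := by
      have := Module.Finite.iff_fg.2 (hS.map B.mkQ)
      infer_instance
    have := IsNoetherian.noetherian (Submodule.comap (S.map B.mkQ).subtype (Z.map B.mkQ))
    have := this.map (S.map B.mkQ).subtype
    rwa [Submodule.map_comap_eq, Submodule.range_subtype, inf_eq_right.2 hle] at this
  obtain ⟨N, w, hw⟩ := Submodule.fg_iff_exists_fin_generating_family.1 hfg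
  have hw' : ∀ i, ∃ v ∈ Z, B.mkQ v = w i := fun i => by
    have : w i ∈ Z.map B.mkQ := hw ▸ Submodule.subset_span ⟨i, rfl⟩
    simpa using this
  choose v hv hvw using hw'
  refine ⟨N, v, hv, fun z hz => ?_⟩
  have : B.mkQ z ∈ Submodule.span F (Set.range w) := hw ▸ Submodule.mem_map_of_mem hz
  rw [Submodule.mem_span_range_iff_exists_fun] at this
  obtain ⟨a, ha⟩ := this
  refine ⟨a, ?_⟩
  rw [← Submodule.Quotient.mk_eq_zero, ← Submodule.mkQ_apply, map_sub, map_sum, ← ha, sub_eq_zero]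
  simp only [map_smul, hvw]

end alg

/-- Equivariant contractions above some degree exist on compact manifolds. -/
lemma te_ok (F : Type*) [CommRing F] (G M : Type*) [CommGroup G] [Finite G] [MulAction G M]
    [us : UniformSpace M] [CompactSpace M] [T2Space M] [Nonempty M] {n : ℕ}
    [ChartedSpace (EuclideanSpace ℝ (Fin n)) M] [ContinuousConstSMul G M] : ∃ K, TEp F G M K := by
  classical
  obtain ⟨N, f, hf, hinj⟩ := exists_separating (n := n) (M := M)
  have := Fintype.ofFinite G
  let φ : M → G → Fin N → ℝ := fun x g => f (g • x)
  have hφ : Continuous φ := continuous_pi fun g => hf.comp (continuous_const_smul g)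
  have hφi : Function.Injective φ := fun x y h => by
    have := congrFun h 1
    simp only [φ, one_smul] at this
    exact hinj this
  have hemb : IsEmbedding φ := (hφ.isClosedEmbedding hφi).isEmbedding
  let ms0 : MetricSpace M := MetricSpace.induced φ hφi inferInstance
  have hu : us = ms0.toUniformSpace := by
    refine unique_uniformity_of_compact (t := us.toTopologicalSpace) rfl ?_
    exact hemb.eq_induced.symm
  refine te_exists (F := F) ms0 hu.symm (fun g x y => ?_) f hf hinj
  change dist (φ (g • x)) (φ (g • y)) = dist (φ x) (φ y)
  have hle : ∀ (g : G) x y, dist (φ (g • x)) (φ (g • y)) ≤ dist (φ x) (φ y) := by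
    intro g x y
    refine (dist_pi_le_iff dist_nonneg).2 fun h => ?_
    have := dist_le_pi_dist (φ x) (φ y) (h * g)
    simpa only [φ, mul_smul] using this
  refine le_antisymm (hle g x y) ?_
  simpa using hle g⁻¹ (g • x) (g • y)

end MannSu

/-! ### Fixed sets have one-dimensional local homology -/

namespace MannSu
universe u v
open Finsupp Filter Uniformity Topology
set_option linter.unusedSectionVars false
set_option linter.unusedVariables false

section lo
variable {p : ℕ} [hp : Fact p.Prime] {F : Type*} [CommRing F]
  {M : Type*} {G : Type*} [CommGroup G] [MulAction G M]
  [UniformSpace M] [CompactSpace M] [ContinuousConstSMul G M] {Φ : GF G M}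

instance charP_alg (G : Type*) [CommGroup G] : CharP (MonoidAlgebra (ZMod p) G) p :=
  charP_of_injective_algebraMap (R := ZMod p) (algebraMap (ZMod p) (MonoidAlgebra (ZMod p) G)).injective p

/-- The complex of chains on lists fixed by `L`. -/
noncomputable abbrev CI (F : Type*) [CommRing F] (Φ : GF G M) (L : Subgroup G) :
    Cx (MonoidAlgebra F G) := NS F Φ (Set.Ici L) Set.ordConnected_Ici

lemma PC_bot : PC M (Set.Ici (⊥ : Subgroup G)) = Set.univ := by
  ext l; simp [mem_PC]

lemma qc_bot (x : Qt F Φ) : qc F Φ (Set.Ici ⊥) x = x := by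
  obtain ⟨c, rfl⟩ := qk_surj Φ x
  rw [qc_qk, PC_bot]
  congr 1
  ext1 j
  exact rs_eq_self (by simp [sup])

/-- The element of the complex represented by a sequence of chains. -/
noncomputable def rep (Φ : GF G M) (k : ℕ) (c : Sq F M) (hc : c ∈ Ac F k Set.univ) :
    (CI F Φ ⊥).X k :=
  nmk _ (qk Φ c) (mem_nsX.2 ⟨c, (mem_Ac.1 hc).1, (mem_Ac.1 hc).2.2,
    by rw [PC_bot]; exact ev_univ c, rfl⟩)

lemma nv_rep {k : ℕ} {c : Sq F M} (hc : c ∈ Ac F k Set.univ) : nv k (rep Φ k c hc) = qk Φ c := nv_nmk _ _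

lemma exists_rep {k : ℕ} (x : (CI F Φ ⊥).X k) : ∃ c, ∃ hc : c ∈ Ac F k Set.univ, rep Φ k c hc = x := by
  obtain ⟨c, h1, h2, h3, h4⟩ := mem_nsX.1 (nv_mem x)
  exact ⟨c, mem_Ac.2 ⟨h1, mem_LS_univ c, h2⟩, nv_inj (by rw [nv_rep, h4])⟩

lemma nv_d_bot {k : ℕ} (x : (CI F Φ ⊥).X (k + 1)) :
    nv k ((CI F Φ ⊥).d k x) = qb F Φ (nv (k + 1) x) := by
  rw [nv_d, qc_bot]

lemma d_rep {k : ℕ} {c : Sq F M} (hc : c ∈ Ac F (k + 1) Set.univ) :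
    (CI F Φ ⊥).d k (rep Φ (k + 1) c hc) = 0 ↔ c ∈ Zc F Φ.fil (k + 1) Set.univ := by
  rw [nv_zero, nv_d_bot, nv_rep, qb_qk, qk_zero, mem_Zc, and_iff_right hc]

lemma bd_rep {k : ℕ} {c : Sq F M} {x : (CI F Φ ⊥).X k} (hx : nv k x = qk Φ c) :
    (∃ y, (CI F Φ ⊥).d k y = x) ↔ c ∈ Bc F Φ.fil k Set.univ := by
  rw [mem_Bc]
  constructor
  · rintro ⟨y, e⟩
    obtain ⟨b, hb, rfl⟩ := exists_rep y
    refine ⟨b, hb, ?_⟩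
    rw [← qk_eq, ← hx, ← e, nv_d_bot, nv_rep, qb_qk]
  · rintro ⟨b, hb, h⟩
    refine ⟨rep Φ _ b hb, nv_inj ?_⟩
    rw [nv_d_bot, nv_rep, hx, qb_qk, ← qk_eq.2 h]

lemma alg_qk (a : F) (c : Sq F M) :
    algebraMap F (MonoidAlgebra F G) a • qk Φ c = qk Φ (a • c) := by
  rw [← map_smul, algebraMap_smul]

lemma h_span {F : Type*} [Field F] {Φ : GF G M} {k N : ℕ} (v : Fin N → Sq F M)
    (hv : ∀ i, v i ∈ Zc F Φ.fil (k + 1) Set.univ)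
    (hs : ∀ z ∈ Zc F Φ.fil (k + 1) Set.univ, ∃ a : Fin N → F,
      z - ∑ i, a i • v i ∈ Bc F Φ.fil (k + 1) Set.univ) : (CI F Φ ⊥).h k ≤ N := by
  refine Cx.h_le_card (F := F) _ k N (fun i => rep Φ (k + 1) (v i) (mem_Zc.1 (hv i)).1)
    (fun i => (d_rep _).2 (hv i)) fun z hz => ?_
  obtain ⟨c, hc, rfl⟩ := exists_rep z
  obtain ⟨a, ha⟩ := hs c ((d_rep hc).1 hz)
  refine ⟨a, (bd_rep ?_).2 ha⟩
  simp only [map_sub, map_sum, map_smul, nv_rep, alg_qk]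

lemma sub_h {J L : Subgroup G} (h : J ≤ L) (hd) (k : ℕ) :
    ((CI F Φ J).sub (smT F Φ J L) hd).h k = (CI F Φ L).h k := by
  let ι : ∀ k, (CI F Φ L).X k →ₗ[MonoidAlgebra F G] (CI F Φ J).X k := fun k =>
    nlift LinearMap.id fun x hx => nsX_mono (Set.Ici_subset_Ici.2 h) hx
  have hι : ∀ k x, nv k (ι k x) = nv k x := fun k x => nv_nlift _ _ _
  let f : (CI F Φ L).Hom ((CI F Φ J).sub (smT F Φ J L) hd) :=
    { f := fun k => (ι k).codRestrict _ fun x => by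
            rw [mem_smT, hι]; exact nv_mem x
      comm := fun k x => by
        apply Subtype.ext
        change ι k ((CI F Φ L).d k x) = (CI F Φ J).d k (ι (k + 1) x)
        apply nv_inj
        rw [hι, nv_d, nv_d, hι]
        exact Ici_d h (nv_mem x) }
  have := Cx.h_le_of_iso f (fun k x hx => ?_) (fun k y => ?_) k
  · exact le_antisymm this.2 this.1
  · have h0 : ι k x = 0 := congrArg (Subtype.val (p := (· ∈ smT F Φ J L k))) hx
    rw [nv_zero, hι] at h0
    exact nv_zero.2 h0
  · refine ⟨nmk _ (nv k y.1) (mem_smT.1 y.2), ?_⟩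
    apply Subtype.ext
    change ι k _ = y.1
    apply nv_inj
    rw [hι, nv_nmk]

/-- The order-connected set of subgroups containing `J` but not `L`. -/
def Dif (J L : Subgroup G) : Set (Subgroup G) := Set.Ici J \ Set.Ici L

lemma Dif_oc (J L : Subgroup G) : (Dif J L).OrdConnected :=
  ⟨fun A hA B hB C hC => ⟨le_trans hA.1 hC.1, fun h => hB.2 (le_trans h hC.2)⟩⟩

lemma dif_ses {J L : Subgroup G} (h : J ≤ L) :
    Cx.SES (nsInc (F := F) (Φ := Φ) Set.ordConnected_Ici Set.ordConnected_Ici Set.disjoint_sdiff_right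
      (Set.union_sdiff_cancel (Set.Ici_subset_Ici.2 h)) (fun A hA B hB hAB => hB.2 (le_trans hA hAB)))
      (nsRes Set.ordConnected_Ici (Dif_oc J L) Set.disjoint_sdiff_right
      (Set.union_sdiff_cancel (Set.Ici_subset_Ici.2 h)) (fun A hA B hB hAB => hB.2 (le_trans hA hAB))) :=
  ns_ses _ _ _ _ _ _

variable {Φ : GF G M}

lemma hs_step (hg : ∀ g : G, g ^ p = 1) {K : ℕ} (hK : TEp (ZMod p) G M K) {J : Subgroup G} {m : ℕ}
    (h : HS (CI (ZMod p) Φ J) m) (g : G) :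
    ∃ m' ≤ m, HS (CI (ZMod p) Φ (J ⊔ Subgroup.zpowers g)) m' := by
  by_cases hgJ : g ∈ J
  · rw [sup_eq_left.2 ((Subgroup.zpowers_le).2 hgJ)]; exact ⟨m, le_rfl, h⟩
  set L := J ⊔ Subgroup.zpowers g with hL
  have hJL : J ≤ L := le_sup_left
  have S := smith (F := ZMod p) (Φ := Φ) J (hg g)
  have hv := S.vanish (K := K) (m := m + 1) (fun k hk => te_im hK _ k hk)
    fun k hk => h.1 k (by omega)
  have hz : ∀ k ≥ m + 1, (CI (ZMod p) Φ L).h k = 0 := fun k hk => by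
    rw [← sub_h hJL S.dT]; exact (hv k hk).2.2
  have hsum0 : ∑ k ∈ Finset.range (m + 1), (CI (ZMod p) Φ L).h k ≤ 1 := by
    have := S.sum_le (hv _ le_rfl).1 (hv _ le_rfl).2.1
    refine le_trans (le_of_eq (Finset.sum_congr rfl fun k _ => ?_)) (this.trans (h.sum _))
    rw [← sub_h hJL S.dT]
  have hsum : ∀ N, ∑ k ∈ Finset.range N, (CI (ZMod p) Φ L).h k ≤ 1 := by
    intro N
    refine le_trans ?_ hsum0
    rw [← Finset.sum_filter_add_sum_filter_not (Finset.range N) (· < m + 1)]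
    rw [Finset.sum_eq_zero (s := Finset.filter (fun k => ¬ k < m + 1) _) fun k hk =>
      hz k (not_lt.1 (Finset.mem_filter.1 hk).2), add_zero]
    exact Finset.sum_le_sum_of_subset fun k hk => Finset.mem_range.2 (Finset.mem_filter.1 hk).2
  by_cases hne : ∃ m', (CI (ZMod p) Φ L).h m' ≠ 0
  · obtain ⟨m', hm'⟩ := hne
    refine ⟨m', ?_, HS.of_sum hsum hm'⟩
    by_contra hlt
    exact hm' (hz m' (by omega))
  · push Not at hne
    exfalso
    have ses := dif_ses (F := ZMod p) (Φ := Φ) hJL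
    have hfree := ns_free (F := ZMod p) (Φ := Φ) (h𝒞 := Dif_oc J L) hg hK [g] (by
      refine ⟨fun h => hgJ ?_, trivial⟩
      simp only [List.not_mem_nil, bot_sup_eq] at h
      have h1 : g = 1 := by simpa using h
      rw [h1]; exact one_mem J) (by
      intro l _ hl w hw hwl
      have hw : w ∈ Subgroup.zpowers g := by
        rw [Subgroup.zpowers_eq_closure]
        convert hw using 2
        ext; simp
      obtain ⟨n, rfl⟩ := hw
      by_cases hn : (p : ℤ) ∣ n
      · obtain ⟨n, rfl⟩ := hn
        simp [zpow_mul, hg]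
      · refine (hl.2 ?_).elim
        exact _root_.sup_le hl.1 ((Subgroup.zpowers_le).2 (pow_mem_prime (hg g) hwl hn))) (by
      intro N
      refine (ses.sum_right NS_X0 N).trans ?_
      rw [Finset.sum_eq_zero (f := (CI (ZMod p) Φ L).h) fun k _ => hne k, add_zero]
      simpa using h.sum N)
    have := ses.h_mid m
    rw [h.2, hne, hfree, add_zero] at this
    simp at this

lemma hs_list (hg : ∀ g : G, g ^ p = 1) {K : ℕ} (hK : TEp (ZMod p) G M K) {J : Subgroup G} {m : ℕ}
    (h : HS (CI (ZMod p) Φ J) m) : ∀ l : List G,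
    ∃ m' ≤ m, HS (CI (ZMod p) Φ (J ⊔ Subgroup.closure {x | x ∈ l})) m'
  | [] => ⟨m, le_rfl, by simpa using h⟩
  | g :: l => by
    obtain ⟨m', hm', h'⟩ := hs_list hg hK h l
    obtain ⟨m'', hm'', h''⟩ := hs_step hg hK h' g
    refine ⟨m'', hm''.trans hm', ?_⟩
    rwa [closure_cons, sup_comm (Subgroup.zpowers g), ← sup_assoc]

/-- Passing to a larger subgroup keeps the homology of the fixed chains one-dimensional and does not
raise its degree. -/
lemma hs_le [Finite G] (hg : ∀ g : G, g ^ p = 1) {K : ℕ} (hK : TEp (ZMod p) G M K) {J L : Subgroup G}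
    (hJL : J ≤ L) {m : ℕ} (h : HS (CI (ZMod p) Φ J) m) : ∃ m' ≤ m, HS (CI (ZMod p) Φ L) m' := by
  obtain ⟨l, hl⟩ := (Set.toFinite (L : Set G)).exists_finset_coe
  obtain ⟨m', hm, h'⟩ := hs_list hg hK h l.toList
  refine ⟨m', hm, ?_⟩
  have e : {x | x ∈ l.toList} = (L : Set G) := by rw [← hl]; ext; simp
  rwa [e, Subgroup.closure_eq, sup_eq_right.2 hJL] at h'

end lo
end MannSu

/-! ### Interior of fixed sets -/

namespace MannSu
universe u v
open Finsupp Filter Uniformity Topology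
set_option linter.unusedSectionVars false
set_option linter.unusedVariables false

section lo3
variable {p : ℕ} [hp : Fact p.Prime]
  {M : Type*} {G : Type*} [CommGroup G] [MulAction G M]
  [UniformSpace M] [CompactSpace M] [T2Space M] [ContinuousConstSMul G M]
  {n : ℕ} [ChartedSpace (EuclideanSpace ℝ (Fin n)) M]

/-- The neighbourhood filter of a fixed point. -/
def gfx (x : M) (hx : ∀ g : G, g • x = x) : GF G M where
  fil := 𝓝 x
  inv g W hW := (continuous_const_smul g).continuousAt.preimage_mem_nhds (by rwa [hx g])
  reg := Reg_nhds x

variable {x : M} {hx : ∀ g : G, g • x = x}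

lemma gfx_fil : (gfx x hx).fil = 𝓝 x := rfl

lemma loc_base : HS (CI (ZMod p) (gfx x hx) ⊥) n := by
  obtain ⟨h0, z, hz, hz1, hz2⟩ := loc_manifold (F := ZMod p) (n := n) x
  refine ⟨fun k hk => ?_, le_antisymm ?_ ?_⟩
  · have := h_span (F := ZMod p) (Φ := gfx x hx) (k := k) (N := 0) Fin.elim0 (fun i => i.elim0)
      fun c hc => ⟨Fin.elim0, by simpa [gfx_fil] using h0 (k + 1) (by omega) hc⟩
    simpa using this
  · have := h_span (F := ZMod p) (Φ := gfx x hx) (k := n) (N := 1) (fun _ => z) (fun i => hz)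
      fun c hc => by
        obtain ⟨a, ha⟩ := hz2 c hc
        exact ⟨fun _ => a, by simpa [gfx_fil] using ha⟩
    simpa using this
  · rw [Order.one_le_iff_ne_zero, Ne, Cx.h_eq_zero_iff]
    intro h
    have hb := h _ ((d_rep (Φ := gfx x hx) (mem_Zc.1 hz).1).2 hz)
    exact hz1.self_of_nhds.2 ((bd_rep (Φ := gfx x hx) (nv_rep (mem_Zc.1 hz).1)).1 hb)

lemma Bc_ev {F : Type*} [CommRing F] {c : Sq F M} {k : ℕ} (h : c ∈ Bc F (𝓝 x) k Set.univ) :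
    ∀ᶠ y in 𝓝 x, c ∈ Bc F (𝓝 y) k Set.univ := by
  obtain ⟨b, hb, W, hW, h⟩ := mem_Bc.1 h
  filter_upwards [eventually_mem_nhds_iff.2 hW] with y hy
  exact mem_Bc.2 ⟨b, hb, W, hy, h⟩

lemma isClosed_fix (g : G) : IsClosed {y : M | g • y = y} :=
  isClosed_eq (continuous_const_smul g) continuous_id

/-- If the local dimension of the fixed set of `g` is full, `g` is locally trivial. -/
lemma newman_full (hg : ∀ g : G, g ^ p = 1) {K : ℕ} (hK : TEp (ZMod p) G M K) (g : G)
    (h : HS (CI (ZMod p) (gfx x hx) (Subgroup.zpowers g)) n) : {y : M | g • y = y} ∈ 𝓝 x := by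
  obtain ⟨h0, z, hz, hz1, hz2⟩ := loc_manifold (F := ZMod p) (n := n) x
  have hb := loc_base (p := p) (n := n) (x := x) (hx := hx)
  have S := smith (F := ZMod p) (Φ := gfx x hx) ⊥ (hg g)
  rw [bot_sup_eq] at S
  have hv := S.vanish (K := K) (m := n + 1) (fun k hk => te_im hK _ k hk)
    fun k hk => hb.1 k (by omega)
  have hne : (CI (ZMod p) (gfx x hx) (Subgroup.zpowers g)).h n ≠ 0 := by rw [h.2]; exact one_ne_zero
  rw [← sub_h (bot_le) S.dT, Ne, Cx.h_eq_zero_iff] at hne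
  push Not at hne
  obtain ⟨t, ht, hnt⟩ := hne
  obtain ⟨t, htm⟩ := t
  have ht' : (CI (ZMod p) (gfx x hx) ⊥).d n t = 0 := congrArg Subtype.val ht
  obtain ⟨c, c1, c2, c3, c4⟩ := mem_nsX.1 (mem_smT.1 htm)
  have hcA : c ∈ Ac (ZMod p) (n + 1) (Set.univ : Set M) := mem_Ac.2 ⟨c1, mem_LS_univ c, c2⟩
  have hct : t = rep (gfx x hx) (n + 1) c hcA := nv_inj (by rw [nv_rep, c4])
  have hcZ : c ∈ Zc (ZMod p) (𝓝 x) (n + 1) Set.univ := (d_rep (Φ := gfx x hx) hcA).1 (hct ▸ ht')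
  have hcB : c ∉ Bc (ZMod p) (𝓝 x) (n + 1) Set.univ := by
    intro hc
    obtain ⟨y, hy⟩ := (bd_rep (Φ := gfx x hx) (nv_rep hcA)).2 hc
    obtain ⟨v, t', ht', -, e⟩ := S.inj (m := n) (u := 0) (hv _ le_rfl).2.1 htm
      (x := y) (by rw [smul_zero, zero_add, hy, hct])
    exact hnt ⟨t', ht'⟩ (Subtype.ext e.symm)
  obtain ⟨a, ha⟩ := hz2 c hcZ
  have ha0 : a ≠ 0 := by
    rintro rfl
    rw [zero_smul, sub_zero] at ha
    exact hcB ha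
  have hcT : c ∈ ev (ZMod p) (LS {y : M | g • y = y}) := by
    refine ev_mono (fun l hl => fun y hy => ?_) c3
    exact (hl (Subgroup.mem_zpowers g) : g ∈ St G l) y hy
  have hall : ∀ᶠ y in 𝓝 x, g • y = y := by
    filter_upwards [hz1, Bc_ev ha] with y hy1 hy2
    by_contra hne
    refine hy1.2 ?_
    have hcn : c ∈ null (ZMod p) (𝓝 y) := null_mono_set ((isClosed_fix g).isOpen_compl.mem_nhds hne) hcT
    have h2 : a • z ∈ Bc (ZMod p) (𝓝 y) (n + 1) Set.univ := by
      convert sub_mem (null_le_Bc hcn) hy2 using 1; abel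
    have := Submodule.smul_mem _ a⁻¹ h2
    rwa [smul_smul, inv_mul_cancel₀ ha0, one_smul] at this
  exact hall

/-- If the local dimension of the fixed set of `g` is not full, the fixed set has no interior. -/
lemma newman_thin (hg : ∀ g : G, g ^ p = 1) {K : ℕ} (hK : TEp (ZMod p) G M K) (g : G) {m : ℕ}
    (hm : m ≠ n) (h : HS (CI (ZMod p) (gfx x hx) (Subgroup.zpowers g)) m) :
    ∀ᶠ y in 𝓝 x, y ∉ interior {y : M | g • y = y} := by
  obtain ⟨h0, z, hz, hz1, hz2⟩ := loc_manifold (F := ZMod p) (n := n) x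
  have hb := loc_base (p := p) (n := n) (x := x) (hx := hx)
  have S := smith (F := ZMod p) (Φ := gfx x hx) ⊥ (hg g)
  rw [bot_sup_eq] at S
  have hv := S.vanish (K := K) (m := n + 1) (fun k hk => te_im hK _ k hk)
    fun k hk => hb.1 k (by omega)
  have hzA := (mem_Zc.1 hz).1
  let Z := rep (gfx x hx) (n + 1) z hzA
  have dZ : (CI (ZMod p) (gfx x hx) ⊥).d n Z = 0 := (d_rep hzA).2 hz
  have nZ : ¬ ∃ y, (CI (ZMod p) (gfx x hx) ⊥).d (n + 1) y = Z := fun hy =>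
    hz1.self_of_nhds.2 ((bd_rep (Φ := gfx x hx) (nv_rep hzA)).1 hy)
  let s := el (ZMod p) (hg g)
  have hsA : gq g z ∈ Ac (ZMod p) (n + 1) (Set.univ : Set M) := by
    obtain ⟨a1, a2, a3⟩ := mem_Ac.1 hzA
    exact mem_Ac.2 ⟨gq_small g a1, mem_LS_univ _, gq_len g a3⟩
  have hsZ : s.1 • Z = rep (gfx x hx) (n + 1) (gq g z) hsA := by
    apply nv_inj
    rw [map_smul, nv_rep, nv_rep, ← pow_one s.1, el_pow_qk, pow_one]
  have hsz : gq g z ∈ Zc (ZMod p) (𝓝 x) (n + 1) Set.univ :=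
    (d_rep (Φ := gfx x hx) hsA).1 (by rw [← hsZ, map_smul, dZ, smul_zero])
  obtain ⟨a, ha⟩ := hz2 _ hsz
  obtain ⟨w, hw⟩ := (bd_rep (Φ := gfx x hx)
    (x := (s.1 - algebraMap (ZMod p) (MonoidAlgebra (ZMod p) G) a) • Z)
    (by rw [sub_smul, hsZ, map_sub, map_smul, nv_rep, nv_rep, alg_qk, map_sub])).2 ha
  have ha1 : a = 1 := by
    by_contra hne
    apply nZ
    obtain ⟨r, hr⟩ := sub_dvd_pow_sub_pow s.1 (algebraMap (ZMod p) (MonoidAlgebra (ZMod p) G) a) p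
    have hs1 : s.1 ^ p - (algebraMap (ZMod p) (MonoidAlgebra (ZMod p) G) a) ^ p =
        algebraMap (ZMod p) (MonoidAlgebra (ZMod p) G) (1 - a) := by
      rw [map_sub, map_one, s.2, ← map_pow, ZMod.pow_card]
    rw [hs1] at hr
    refine ⟨algebraMap (ZMod p) (MonoidAlgebra (ZMod p) G) (1 - a)⁻¹ • r • w, ?_⟩
    rw [map_smul, map_smul, hw, smul_smul r, mul_comm r, ← hr, smul_smul, ← map_mul,
      inv_mul_cancel₀ (sub_ne_zero.2 (Ne.symm hne)), map_one, one_smul]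
  rw [ha1, map_one] at hw
  have hT : ((CI (ZMod p) (gfx x hx) ⊥).sub (smT (ZMod p) (gfx x hx) ⊥ (Subgroup.zpowers g)) S.symm.dT).h n
      = 0 := by
    rw [sub_h bot_le]; exact h.1 n hm.symm
  obtain ⟨Y, W, e, -⟩ := S.symm.newman (hv _ le_rfl).2.1 hT dZ (x := w) hw.symm
  obtain ⟨c, hc, rfl⟩ := exists_rep Y
  obtain ⟨b, hb', rfl⟩ := exists_rep W
  have e2 : z - ∑ j ∈ Finset.range p, gq (g ^ j) c ∈ Bc (ZMod p) (𝓝 x) (n + 1) Set.univ := by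
    refine mem_Bc.2 ⟨b, hb', ?_⟩
    have := congrArg (nv (n + 1)) e
    rw [map_add, map_smul, nv_rep, nv_d_bot, nv_rep, nv_rep, qb_qk, nm, Finset.sum_smul,
      Finset.sum_congr rfl fun j _ => el_pow_qk (Φ := gfx x hx) (hg g) j c, ← map_sum, ← map_add,
      qk_eq] at this
    rw [sub_sub]; exact this
  filter_upwards [hz1, Bc_ev e2] with y hy1 hy2 hyT
  refine hy1.2 ?_
  have hgf : ∀ (j : ℕ) (y : M), g • y = y → g ^ j • y = y := by
    intro j y hy
    induction j with
    | zero => simp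
    | succ j ih => rw [pow_succ, mul_smul, hy, ih]
  let T : Set M := {y : M | g • y = y}
  have hinv : ∀ j l, gl (g ^ j) l ∈ LS T ↔ l ∈ LS T := by
    intro j l
    have key : ∀ u : M, g ^ j • u ∈ T ↔ u ∈ T := by
      intro u
      simp only [T, Set.mem_ofPred_eq, smul_smul, mul_comm g]
      rw [mul_smul, smul_left_cancel_iff]
    constructor
    · intro h u hu
      apply (key u).1; exact (h _ (List.mem_map_of_mem hu))
    · intro h u hu
      obtain ⟨u, hu', rfl⟩ := List.mem_map.1 hu
      exact (key u).2 (h u hu')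
  have hsm : ∑ j ∈ Finset.range p, gq (g ^ j) c ∈ small (ZMod p) M :=
    Submodule.sum_mem _ fun j _ => gq_small _ (mem_Ac.1 hc).1
  have hn := sm_null (P := LS T) (Reg_nhds y) (mem_interior_iff_mem_nhds.1 hyT) (subset_refl _) hsm
  have hr0 : rsq (LS T) (∑ j ∈ Finset.range p, gq (g ^ j) c) = 0 := by
    rw [map_sum]
    have : ∀ j ∈ Finset.range p, rsq (LS T) (gq (g ^ j) c) = rsq (LS T) c := by
      intro j _
      ext1 i
      refine (mp_rs (hinv j) (c i)).trans ?_
      refine eq_on_sup (F := ZMod p) (P := LS T) (g := LinearMap.id) (fun l hl => ?_) (rs_mem _ (c i))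
      rw [mp_single, LinearMap.id_apply]
      congr 1
      conv_rhs => rw [← List.map_id l]
      exact List.map_congr_left fun u hu => hgf j u (hl u hu)
    rw [Finset.sum_congr rfl this, Finset.sum_const, Finset.card_range,
      ← Nat.cast_smul_eq_nsmul (ZMod p), CharP.cast_eq_zero, zero_smul]
  rw [hr0, sub_zero] at hn
  convert add_mem hy2 (null_le_Bc hn) using 1; abel

end lo3
end MannSu

/-! ### Groups of rank two -/

namespace MannSu
universe u v
open Finsupp Filter Uniformity Topology
set_option linter.unusedSectionVars false
set_option linter.unusedVariables false

/-- If the subcomplex and the complex both have one-dimensional homology in the same degree and the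
inclusion is injective in homology, the quotient is acyclic. -/
lemma Cx.SES.acyclic {R : Type v} [CommRing R] {A B C : Cx.{u} R} {f : A.Hom B} {g : B.Hom C}
    (S : Cx.SES f g) (hB0 : Subsingleton (B.X 0)) {d : ℕ} (hA : HS A d) (hB : HS B d)
    (inj : ∀ a : A.X (d + 1), A.d d a = 0 → (∃ b, B.d (d + 1) b = f.f (d + 1) a) →
      ∃ a', A.d (d + 1) a' = a) (k : ℕ) : C.h k = 0 := by
  have surj : ∀ b, B.d d b = 0 → ∃ a w, A.d d a = 0 ∧ b = f.f (d + 1) a + B.d (d + 1) w := by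
    have hs : IsSimpleModule R (B.H d) := Module.length_eq_one_iff.1 hB.2
    have hne : A.h d ≠ 0 := by rw [hA.2]; exact one_ne_zero
    rw [Ne, Cx.h_eq_zero_iff] at hne
    push Not at hne
    obtain ⟨a, ha, hna⟩ := hne
    have htop : LinearMap.range (B.cls d ∘ₗ f.mapZ d) = ⊤ := by
      refine (eq_bot_or_eq_top _).resolve_left fun h => ?_
      have h0 : (B.cls d ∘ₗ f.mapZ d) ⟨a, ha⟩ = 0 := by
        rw [← Submodule.mem_bot R, ← h]; exact ⟨_, rfl⟩
      obtain ⟨w, hw⟩ := (B.cls_eq_zero _ _).1 h0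
      rw [f.mapZ_coe] at hw
      obtain ⟨a', ha'⟩ := inj a ha ⟨w, hw⟩
      exact hna a' ha'
    intro b hb
    obtain ⟨a, ha⟩ := LinearMap.range_eq_top.1 htop (B.cls d ⟨b, hb⟩)
    rw [LinearMap.comp_apply, eq_comm, ← sub_eq_zero, ← map_sub, B.cls_eq_zero] at ha
    obtain ⟨w, hw⟩ := ha
    refine ⟨a.1, w, a.2, ?_⟩
    rw [hw]
    simp [f.mapZ_coe]
  -- a cycle of `B` is homologous to a cycle of `A`
  have main : ∀ k b, B.d k b = 0 → ∃ w, C.d (k + 1) w = g.f (k + 1) b := by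
    intro k b hb
    by_cases hk : k = d
    · subst hk
      obtain ⟨a, w, -, rfl⟩ := surj b hb
      exact ⟨g.f _ w, by rw [map_add, S.zero, zero_add, g.comm]⟩
    · obtain ⟨w, rfl⟩ := (B.h_eq_zero_iff k).1 (hB.1 k hk) b hb
      exact ⟨g.f _ w, by rw [g.comm]⟩
  rw [Cx.h_eq_zero_iff]
  intro z hz
  obtain ⟨b, rfl⟩ := S.surj _ z
  rcases k with _ | k
  · exact main 0 b (Subsingleton.elim _ _)
  · obtain ⟨a, ha⟩ := S.exact _ (B.d _ b) (by rw [g.comm, hz])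
    have haz : A.d k a = 0 := by apply S.inj; rw [f.comm, ha, B.dd]
    have : ∃ a', A.d (k + 1) a' = a := by
      by_cases hk : k = d
      · subst hk; exact inj a haz ⟨b, ha.symm⟩
      · exact (A.h_eq_zero_iff k).1 (hA.1 k hk) a haz
    obtain ⟨a', rfl⟩ := this
    obtain ⟨w, hw⟩ := main (k + 1) (b - f.f _ a') (by rw [map_sub, ← ha, f.comm, sub_self])
    refine ⟨w, ?_⟩
    rw [hw, map_sub, S.zero, sub_zero]

section grp
variable {p : ℕ} [hp : Fact p.Prime] {G : Type*} [CommGroup G] [Finite G]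

lemma card_sup_zpowers (hg : ∀ g : G, g ^ p = 1) (A : Subgroup G) {g : G} (h : g ∉ A) :
    Nat.card (A ⊔ Subgroup.zpowers g : Subgroup G) = p * Nat.card A := by
  have hmem : ∀ i : ℕ, g ^ i ∈ Subgroup.zpowers g := fun i => ⟨i, by simp⟩
  let f : Fin p × A → (A ⊔ Subgroup.zpowers g : Subgroup G) := fun q =>
    ⟨q.2.1 * g ^ (q.1 : ℕ), mul_mem (Subgroup.mem_sup_left q.2.2) (Subgroup.mem_sup_right (hmem _))⟩
  have hlt : ∀ (i j : Fin p) (a b : A), (i : ℕ) < j → a.1 * g ^ (i : ℕ) ≠ b.1 * g ^ (j : ℕ) := by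
    intro i j a b hij e
    refine h (pow_mem_prime (hg g) (n := ((j - i : ℕ) : ℤ)) ?_ ?_)
    · have : g ^ ((j : ℕ) - (i : ℕ)) = a.1 * b.1⁻¹ := by
        rw [pow_sub _ hij.le, eq_mul_inv_iff_mul_eq, mul_right_comm, mul_inv_eq_iff_eq_mul, mul_comm _ b.1, e]
      rw [zpow_natCast, this]
      exact mul_mem a.2 (inv_mem b.2)
    · intro hd
      have := Nat.le_of_dvd (by omega) (Int.natCast_dvd_natCast.1 hd)
      omega
  have hf : Function.Bijective f := by
    constructor
    · rintro ⟨i, a⟩ ⟨j, b⟩ e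
      have e : a.1 * g ^ (i : ℕ) = b.1 * g ^ (j : ℕ) := congrArg Subtype.val e
      rcases lt_trichotomy (i : ℕ) j with hij | hij | hij
      · exact (hlt i j a b hij e).elim
      · have hij := Fin.ext hij
        subst hij
        have := mul_right_cancel e
        rw [Subtype.ext this]
      · exact (hlt j i b a hij e.symm).elim
    · rintro ⟨x, hx⟩
      obtain ⟨a, ha, _, ⟨n, rfl⟩, rfl⟩ := Subgroup.mem_sup.1 hx
      have hp0 : (0 : ℤ) < p := by exact_mod_cast hp.out.pos
      have h1 := Int.emod_nonneg n hp0.ne'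
      have h2 := Int.emod_lt_of_pos n hp0
      refine ⟨(⟨(n % p).toNat, by omega⟩, ⟨a, ha⟩), Subtype.ext ?_⟩
      change a * g ^ (n % p).toNat = a * g ^ n
      congr 1
      rw [← zpow_natCast, Int.toNat_of_nonneg h1]
      conv_rhs => rw [← Int.emod_add_mul_ediv n p, zpow_add, zpow_mul, zpow_natCast, hg]
      simp
  rw [← Nat.card_eq_of_bijective f hf, Nat.card_prod, Nat.card_fin]

lemma sup_two (hg : ∀ g : G, g ^ p = 1) {J K' : Subgroup G} (hJK : J ≤ K')
    (hc : Nat.card K' ≤ p * (p * Nat.card J)) {h h' : G} (hh : h ∉ J) (hh' : h' ∉ J ⊔ Subgroup.zpowers h)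
    (hK : h ∈ K') (hK' : h' ∈ K') : J ⊔ Subgroup.zpowers h ⊔ Subgroup.zpowers h' = K' := by
  refine Subgroup.eq_of_le_of_card_ge ?_ ?_
  · exact _root_.sup_le (_root_.sup_le hJK ((Subgroup.zpowers_le).2 hK)) ((Subgroup.zpowers_le).2 hK')
  · rw [card_sup_zpowers hg _ hh', card_sup_zpowers hg _ hh]; exact hc

end grp

section st1
variable {p : ℕ} [hp : Fact p.Prime]
  {M : Type*} {G : Type*} [CommGroup G] [Finite G] [MulAction G M]
  [UniformSpace M] [CompactSpace M] [T2Space M] [ContinuousConstSMul G M] {Φ : GF G M}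

/-- If the fixed sets of two nested subgroups, of index `p`, have the same dimension, the chains on the
difference form an acyclic complex. -/
lemma dif_acyclic (hg : ∀ g : G, g ^ p = 1) {K : ℕ} (hK : TEp (ZMod p) G M K) {A : Subgroup G}
    {g : G} {d : ℕ} (hA : HS (CI (ZMod p) Φ A) d) (hL : HS (CI (ZMod p) Φ (A ⊔ Subgroup.zpowers g)) d)
    (k : ℕ) : (NS (ZMod p) Φ (Dif A (A ⊔ Subgroup.zpowers g)) (Dif_oc _ _)).h k = 0 := by
  have S := smith (F := ZMod p) (Φ := Φ) A (hg g)
  have hv := S.vanish (K := K) (m := d + 1) (fun k hk => te_im hK _ k hk) fun k hk => hA.1 k (by omega)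
  refine (dif_ses (F := ZMod p) (Φ := Φ) le_sup_left).acyclic NS_X0 hL hA ?_ k
  rintro a ha ⟨b, hb⟩
  have e : ∀ k (a : (CI (ZMod p) Φ (A ⊔ Subgroup.zpowers g)).X k),
      nv k ((nsInc (F := ZMod p) (Φ := Φ) Set.ordConnected_Ici Set.ordConnected_Ici Set.disjoint_sdiff_right
      (Set.union_sdiff_cancel (Set.Ici_subset_Ici.2 (le_sup_left : A ≤ A ⊔ Subgroup.zpowers g)))
      (fun A hA B hB hAB => hB.2 (le_trans hA hAB))).f k a) = nv k a := fun k a => nv_nlift _ _ _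
  obtain ⟨v, t', ht', -, e'⟩ := S.inj (m := d) (u := 0) (t := _) (hv _ le_rfl).2.1
    (by rw [mem_smT, e]; exact nv_mem a) (x := b) (by rw [smul_zero, zero_add]; exact hb.symm)
  refine ⟨nmk _ (nv _ t') (mem_smT.1 ht'), nv_inj ?_⟩
  rw [nv_d, nv_nmk, Ici_d le_sup_left (mem_smT.1 ht'), ← nv_d, ← e', e]

/-- Subgroups above `J`, not above `K'`, meeting `Λ`. -/
def DL (J K' : Subgroup G) (Λ : Finset G) : Set (Subgroup G) := {L | J ≤ L ∧ ¬ K' ≤ L ∧ ∃ h ∈ Λ, h ∈ L}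

lemma DL_oc (J K' : Subgroup G) (Λ : Finset G) : (DL J K' Λ).OrdConnected :=
  ⟨fun A hA B hB C hC => ⟨le_trans hA.1 hC.1, fun h => hB.2.1 (le_trans h hC.2), by
    obtain ⟨h, hh, hh'⟩ := hA.2.2
    exact ⟨h, hh, hC.1 hh'⟩⟩⟩

lemma NS_congr {F : Type*} [CommRing F] {𝒞 𝒟 : Set (Subgroup G)} {h𝒞 : 𝒞.OrdConnected}
    (h𝒟 : 𝒟.OrdConnected) (e : 𝒞 = 𝒟) (k : ℕ) : (NS F Φ 𝒞 h𝒞).h k = (NS F Φ 𝒟 h𝒟).h k := by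
  subst e; rfl

lemma DL_acyclic (hg : ∀ g : G, g ^ p = 1) {K : ℕ} (hK : TEp (ZMod p) G M K) {J K' : Subgroup G}
    (hJK : J ≤ K') (hc : Nat.card K' = p * (p * Nat.card J)) {d : ℕ}
    (hd : HS (CI (ZMod p) Φ K') d) (Λ : Finset G)
    (hΛ : ∀ h ∈ Λ, h ∈ K' ∧ h ∉ J ∧ HS (CI (ZMod p) Φ (J ⊔ Subgroup.zpowers h)) d) (k : ℕ) :
    (NS (ZMod p) Φ (DL J K' Λ) (DL_oc _ _ _)).h k = 0 := by
  classical
  induction Λ using Finset.induction_on generalizing k with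
  | empty =>
    rw [Cx.h_eq_zero_iff]
    intro z _
    refine ⟨0, ?_⟩
    rw [map_zero, eq_comm, nv_zero]
    obtain ⟨c, h1, h2, h3, h4⟩ := mem_nsX.1 (nv_mem z)
    rw [← h4, qk_zero]
    refine ⟨Set.univ, univ_mem, ev_mono (fun l hl => ?_) h3⟩
    obtain ⟨h, hh, -⟩ := (mem_PC.1 hl).2.2
    simp at hh
  | insert h Λ hhΛ ih =>
    have ih := ih fun h hh => hΛ h (Finset.mem_insert_of_mem hh)
    obtain ⟨hK', hJ, hs⟩ := hΛ h (Finset.mem_insert_self _ _)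
    by_cases hex : ∃ h' ∈ Λ, h' ∈ J ⊔ Subgroup.zpowers h
    · obtain ⟨h', hh', hm⟩ := hex
      have hJ' := (hΛ h' (Finset.mem_insert_of_mem hh')).2.1
      obtain ⟨a, ha, _, ⟨i, rfl⟩, e⟩ := Subgroup.mem_sup.1 hm
      have hi : ¬ (p : ℤ) ∣ i := by
        rintro ⟨i, rfl⟩
        refine hJ' ?_
        rw [← e]
        simpa [zpow_mul, hg] using ha
      rw [NS_congr (DL_oc J K' Λ) _ k]
      · exact ih k
      ext L
      refine and_congr_right fun hJL => and_congr_right fun _ => ?_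
      constructor
      · rintro ⟨x, hx, hxL⟩
        rcases Finset.mem_insert.1 hx with rfl | hx
        · exact ⟨h', hh', by rw [← e]; exact mul_mem (hJL ha) (L.zpow_mem hxL i)⟩
        · exact ⟨x, hx, hxL⟩
      · rintro ⟨x, hx, hxL⟩
        exact ⟨x, Finset.mem_insert_of_mem hx, hxL⟩
    · push Not at hex
      have hno : ∀ L, J ≤ L → ¬ K' ≤ L → h ∈ L → ∀ h' ∈ Λ, h' ∉ L := by
        intro L hJL hKL hhL h' hh' hh'L
        refine hKL ?_
        rw [← sup_two hg hJK hc.le hJ (hex h' hh') hK' (hΛ h' (Finset.mem_insert_of_mem hh')).1]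
        exact _root_.sup_le (_root_.sup_le hJL ((Subgroup.zpowers_le).2 hhL)) ((Subgroup.zpowers_le).2 hh'L)
      have hmemD : ∀ L, L ∈ Dif (J ⊔ Subgroup.zpowers h) K' ↔ J ≤ L ∧ ¬ K' ≤ L ∧ h ∈ L := by
        intro L
        rw [Dif, Set.mem_sdiff, Set.mem_Ici, Set.mem_Ici, sup_le_iff, Subgroup.zpowers_le]
        tauto
      have hD : (NS (ZMod p) Φ (Dif (J ⊔ Subgroup.zpowers h) K') (Dif_oc _ _)).h k = 0 := by
        obtain ⟨g', hg', hgn⟩ : ∃ g' ∈ K', g' ∉ J ⊔ Subgroup.zpowers h := by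
          by_contra hcon
          push Not at hcon
          have : Nat.card K' ≤ Nat.card (J ⊔ Subgroup.zpowers h : Subgroup G) :=
            Subgroup.card_le_of_le hcon
          rw [card_sup_zpowers hg _ hJ, hc] at this
          have h2 := hp.out.two_le
          have h3 : 0 < p * Nat.card J := Nat.mul_pos hp.out.pos Nat.card_pos
          nlinarith
        have e := sup_two hg hJK hc.le hJ hgn hK' hg'
        have := dif_acyclic (Φ := Φ) hg hK hs (g := g') (by rwa [e]) k
        rwa [NS_congr (Dif_oc _ _) (by rw [e]) k] at this
      have ses := ns_ses (F := ZMod p) (Φ := Φ) (DL_oc J K' (insert h Λ))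
        (Dif_oc (J ⊔ Subgroup.zpowers h) K') (DL_oc J K' Λ) (by
          rw [Set.disjoint_left]
          intro L hL hL'
          obtain ⟨h1, h2, h3⟩ := (hmemD L).1 hL
          obtain ⟨h', hh', hL'⟩ := hL'.2.2
          exact hno L h1 h2 h3 h' hh' hL') (by
          ext L
          rw [Set.mem_union, hmemD]
          simp only [DL, Set.mem_ofPred_eq, Finset.exists_mem_insert]
          tauto) (by
          intro L hL L' hL' hLL
          obtain ⟨h1, h2, h3⟩ := (hmemD L).1 hL
          obtain ⟨h', hh', hx⟩ := hL'.2.2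
          exact hno L' hL'.1 hL'.2.1 (hLL h3) h' hh' hx)
      have := ses.h_mid k
      rw [hD, ih k, add_zero] at this
      exact le_zero_iff.1 this

/-- Two independent elements over `J` cannot have all their combinations lower the dimension to the same
value unless the dimension did not drop. -/
lemma stage1_key (hg : ∀ g : G, g ^ p = 1) {K : ℕ} (hK : TEp (ZMod p) G M K) {J K' : Subgroup G}
    {g₁ g₂ : G} (h1 : g₁ ∉ J) (h2 : g₂ ∉ J ⊔ Subgroup.zpowers g₁)
    (hK' : K' = J ⊔ Subgroup.zpowers g₁ ⊔ Subgroup.zpowers g₂) {d e : ℕ}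
    (hd : HS (CI (ZMod p) Φ K') d) (he : HS (CI (ZMod p) Φ J) e)
    (hall : ∀ h ∈ K', h ∉ J → HS (CI (ZMod p) Φ (J ⊔ Subgroup.zpowers h)) d) : d = e := by
  classical
  have hJK : J ≤ K' := hK' ▸ le_sup_left.trans le_sup_left
  have hc : Nat.card K' = p * (p * Nat.card J) := by
    rw [hK', card_sup_zpowers hg _ h2, card_sup_zpowers hg _ h1]
  have hcl : Subgroup.closure {x | x ∈ [g₂, g₁]} = Subgroup.zpowers g₂ ⊔ Subgroup.zpowers g₁ := by
    rw [closure_cons, closure_cons]; simp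
  have hind : IndO J [g₂, g₁] := by
    refine ⟨?_, ?_, trivial⟩
    · rw [closure_cons]; simpa using h2
    · simpa using h1
  have hind0 : IndO ⊥ [g₂, g₁] := by
    refine ⟨?_, ?_, trivial⟩
    · rw [closure_cons]
      intro h
      refine h2 (Subgroup.mem_sup_right ?_)
      simpa using h
    · intro h
      have : g₁ = 1 := by simpa using h
      exact h1 (this ▸ one_mem J)
  set W := Subgroup.closure {x | x ∈ [g₂, g₁]} with hW
  have hJW : J ⊔ W = K' := by rw [hcl, hK', sup_assoc, sup_comm (Subgroup.zpowers g₂)]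
  have hWK : W ≤ K' := hJW ▸ le_sup_right
  haveI := Fintype.ofFinite G
  let Λ : Finset G := Finset.univ.filter fun h => h ∈ W ∧ h ≠ 1
  have hΛ : ∀ h ∈ Λ, h ∈ K' ∧ h ∉ J ∧ HS (CI (ZMod p) Φ (J ⊔ Subgroup.zpowers h)) d := by
    intro h hh
    obtain ⟨hw, h1⟩ := (Finset.mem_filter.1 hh).2
    have hJ : h ∉ J := fun hJ => h1 (hind.inter hg h hw hJ)
    exact ⟨hWK hw, hJ, hall h (hWK hw) hJ⟩
  have hΛi : ∀ L : Subgroup G, (∃ h ∈ Λ, h ∈ L) ↔ ¬ ∀ w ∈ W, w ∈ L → w = 1 := by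
    intro L
    push Not
    constructor
    · rintro ⟨h, hh, hL⟩
      obtain ⟨hw, h1⟩ := (Finset.mem_filter.1 hh).2
      exact ⟨h, hw, hL, h1⟩
    · rintro ⟨h, hw, hL, h1⟩
      exact ⟨h, Finset.mem_filter.2 ⟨Finset.mem_univ _, hw, h1⟩, hL⟩
  have hDL := DL_acyclic (Φ := Φ) hg hK hJK hc hd Λ hΛ
  let 𝒮 : Set (Subgroup G) := {L | J ≤ L ∧ ∃ h ∈ Λ, h ∈ L}
  have h𝒮 : 𝒮.OrdConnected := ⟨fun A hA B hB C hC => ⟨le_trans hA.1 hC.1, by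
    obtain ⟨h, hh, hh'⟩ := hA.2
    exact ⟨h, hh, hC.1 hh'⟩⟩⟩
  let 𝒬 : Set (Subgroup G) := {L | J ≤ L ∧ ∀ w ∈ W, w ∈ L → w = 1}
  have h𝒬 : 𝒬.OrdConnected := ⟨fun A hA B hB C hC => ⟨le_trans hA.1 hC.1, fun w hw hwC =>
    hB.2 w hw (hC.2 hwC)⟩⟩
  have hg1 : g₁ ∈ Λ := by
    refine Finset.mem_filter.2 ⟨Finset.mem_univ _, Subgroup.subset_closure (by simp), ?_⟩
    rintro rfl
    exact h1 (one_mem J)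
  have ses1 := ns_ses (F := ZMod p) (Φ := Φ) h𝒮 (Set.ordConnected_Ici (a := K')) (DL_oc J K' Λ) (by
      rw [Set.disjoint_left]
      intro L hL hL'
      exact hL'.2.1 hL) (by
      ext L
      constructor
      · rintro (h | h)
        · exact ⟨le_trans hJK h, g₁, hg1, h ((hΛ g₁ hg1).1)⟩
        · exact ⟨h.1, h.2.2⟩
      · intro h
        by_cases hL : K' ≤ L
        · exact Or.inl hL
        · exact Or.inr ⟨h.1, hL, h.2⟩) (by
      intro L hL L' hL' hLL
      exact hL'.2.1 (le_trans hL hLL))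
  have ses2 := ns_ses (F := ZMod p) (Φ := Φ) (Set.ordConnected_Ici (a := J)) h𝒮 h𝒬 (by
      rw [Set.disjoint_left]
      intro L hL hL'
      exact (hΛi L).1 hL.2 hL'.2) (by
      ext L
      constructor
      · rintro (h | h)
        · exact h.1
        · exact h.1
      · intro h
        by_cases hL : ∃ h ∈ Λ, h ∈ L
        · exact Or.inl ⟨h, hL⟩
        · rw [hΛi, not_not] at hL
          exact Or.inr ⟨h, hL⟩) (by
      intro L hL L' hL' hLL
      obtain ⟨h, hh, hhL⟩ := hL.2
      exact (hΛi L').1 ⟨h, hh, hLL hhL⟩ hL'.2)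
  have hQ := ns_free (F := ZMod p) (Φ := Φ) (h𝒞 := h𝒬) hg hK [g₂, g₁] hind0
    (fun l _ hl w hw hwl => hl.2 w hw hwl) (by
      intro N
      refine (ses2.sum_right NS_X0 N).trans ?_
      have a1 := he.sum N
      have a2 := (ses1.sum_mid N)
      rw [Finset.sum_eq_zero fun k _ => hDL k, add_zero] at a2
      have := add_le_add a1 (a2.trans (hd.sum N))
      refine this.trans (le_of_eq ?_)
      norm_num)
  by_contra hne
  have b1 := ses2.h_mid e
  have b2 := ses1.h_mid e
  rw [hDL, add_zero] at b2
  rw [hQ, add_zero, he.2] at b1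
  have := b1.trans b2
  have h0 : (CI (ZMod p) Φ K').h e = 0 := hd.1 e (Ne.symm hne)
  rw [h0] at this
  simp at this

end st1
end MannSu

/-! ### Groups with a fixed point -/

namespace MannSu
universe u v
open Finsupp Filter Uniformity Topology
set_option linter.unusedSectionVars false
set_option linter.unusedVariables false

section st2
variable {p : ℕ} [hp : Fact p.Prime]
  {M : Type*} {G : Type*} [CommGroup G] [Finite G] [MulAction G M]
  [UniformSpace M] [CompactSpace M] [T2Space M] [ContinuousConstSMul G M]

/-- Near a fixed point of the group, the fixed set of an element is either a neighbourhood or has no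
interior points nearby. -/
lemma int_or {n : ℕ} [ChartedSpace (EuclideanSpace ℝ (Fin n)) M]
    (hg : ∀ g : G, g ^ p = 1) {x : M} (hx : ∀ g : G, g • x = x) (g : G) :
    {y : M | g • y = y} ∈ 𝓝 x ∨ ∀ᶠ y in 𝓝 x, y ∉ interior {y : M | g • y = y} := by
  have : Nonempty M := ⟨x⟩
  obtain ⟨K, hK⟩ := te_ok (ZMod p) G M (n := n)
  obtain ⟨m, hm, h⟩ := hs_le hg hK (bot_le (a := Subgroup.zpowers g))
    (loc_base (p := p) (n := n) (x := x) (hx := hx))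
  by_cases hmn : m = n
  · subst hmn; exact Or.inl (newman_full hg hK g h)
  · exact Or.inr (newman_thin hg hK g hmn h)

/-- Newman's theorem: on a connected manifold the fixed set of a nontrivial element has no
interior. -/
lemma int_empty {n : ℕ} [ChartedSpace (EuclideanSpace ℝ (Fin n)) M]
    [PreconnectedSpace M] [FaithfulSMul G M] (hg : ∀ g : G, g ^ p = 1)
    {g : G} (h1 : g ≠ 1) : interior {y : M | g • y = y} = ∅ := by
  have hcl : IsClosed (interior {y : M | g • y = y}) := by
    rw [← isOpen_compl_iff, isOpen_iff_mem_nhds]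
    intro x hxi
    by_cases hxT : g • x = x
    · let H := Subgroup.zpowers g
      have : ContinuousConstSMul H M := ⟨fun h => continuous_const_smul (h : G)⟩
      have hx : ∀ h : H, h • x = x := by
        rintro ⟨h, k, rfl⟩
        exact (MulAction.mem_stabilizer_iff.1
          (zpow_mem (MulAction.mem_stabilizer_iff.2 hxT) k) : g ^ k • x = x)
      rcases int_or (p := p) (n := n) (G := H) (fun h => Subtype.ext (hg h)) hx
        ⟨g, Subgroup.mem_zpowers g⟩ with h | h
      · exact (hxi (mem_interior_iff_mem_nhds.2 h)).elim
      · exact h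
    · filter_upwards [(isClosed_fix g).isOpen_compl.mem_nhds hxT] with y hy hyi
      exact hy (interior_subset hyi)
  rcases isClopen_iff.1 ⟨hcl, isOpen_interior⟩ with h | h
  · exact h
  · refine (h1 (FaithfulSMul.eq_of_smul_eq_smul (α := M) fun x => ?_)).elim
    rw [one_smul]
    exact (interior_subset (h ▸ Set.mem_univ x) : x ∈ {y : M | g • y = y})

/-- A group fixing a point of a connected `n`-manifold has order at most `p ^ n`. -/
lemma stage1 {n : ℕ} [ChartedSpace (EuclideanSpace ℝ (Fin n)) M]
    [PreconnectedSpace M] [FaithfulSMul G M] (hg : ∀ g : G, g ^ p = 1)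
    {x : M} (hx : ∀ g : G, g • x = x) : Nat.card G ≤ p ^ n := by
  have : Nonempty M := ⟨x⟩
  obtain ⟨K, hK⟩ := te_ok (ZMod p) G M (n := n)
  have hb := loc_base (p := p) (n := n) (x := x) (hx := hx)
  have hex : ∀ L : Subgroup G, ∃ m, HS (CI (ZMod p) (gfx x hx) L) m := fun L => by
    obtain ⟨m, -, h⟩ := hs_le hg hK (bot_le (a := L)) hb
    exact ⟨m, h⟩
  choose dm hdm using hex
  have hanti : ∀ J L : Subgroup G, J ≤ L → dm L ≤ dm J := fun J L h => by
    obtain ⟨m, hm, h'⟩ := hs_le hg hK h (hdm J)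
    rwa [← (hdm L).uniq h'] at hm
  have hbot : dm ⊥ = n := (hdm ⊥).uniq hb
  have hlt : ∀ L : Subgroup G, L ≠ ⊥ → dm L < n := by
    intro L hL
    obtain ⟨⟨g, hgL⟩, hg1⟩ := (Subgroup.ne_bot_iff_exists_ne_one).1 hL
    have hg1 : g ≠ 1 := fun h => hg1 (Subtype.ext h)
    refine lt_of_le_of_lt (hanti _ L ((Subgroup.zpowers_le).2 hgL)) ?_
    refine lt_of_le_of_ne (hbot ▸ hanti _ _ bot_le) fun h => ?_
    have := newman_full hg hK g (h ▸ hdm (Subgroup.zpowers g))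
    rw [← mem_interior_iff_mem_nhds, int_empty (n := n) hg hg1] at this
    exact this
  have key : ∀ N, ∀ L : Subgroup G, Nat.card L = N → p ^ dm L * Nat.card L ≤ p ^ n := by
    intro N
    induction N using Nat.strong_induction_on with
    | _ N ih =>
    rintro L hN
    by_cases hL : L = ⊥
    · subst hL; rw [hbot]; simp
    obtain ⟨J, hJ⟩ := (Set.toFinite {J : Subgroup G | J ≤ L ∧ dm L < dm J}).exists_maximal
      ⟨⊥, bot_le, by rw [hbot]; exact hlt L hL⟩
    have hJL : J < L := lt_of_le_of_ne hJ.prop.1 fun h => by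
      have := hJ.prop.2; rw [h] at this; exact lt_irrefl _ this
    have hmax : ∀ A, J < A → A ≤ L → dm A = dm L := fun A h1 h2 => by
      by_contra hne
      have := hJ.le_of_ge (y := A) ⟨h2, lt_of_le_of_ne (hanti A L h2) (Ne.symm hne)⟩ h1.le
      exact absurd this (not_le_of_gt h1)
    obtain ⟨g₁, hg₁L, hg₁⟩ := SetLike.exists_of_lt hJL
    have hJg : ∀ h, h ∉ J → J < J ⊔ Subgroup.zpowers h := fun h hh =>
      lt_of_le_of_ne le_sup_left fun e => hh (e ▸ (le_sup_right : _ ≤ J ⊔ Subgroup.zpowers h)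
        (Subgroup.mem_zpowers h))
    by_cases hJ1 : J ⊔ Subgroup.zpowers g₁ = L
    · have hc := card_sup_zpowers hg J hg₁
      rw [hJ1] at hc
      have hcJ : Nat.card J < N := by
        rw [← hN, hc]
        have : 0 < Nat.card J := Nat.card_pos
        have := hp.out.two_le
        nlinarith
      have := ih _ hcJ J rfl
      calc p ^ dm L * Nat.card L = p ^ (dm L + 1) * Nat.card J := by rw [hc]; ring
        _ ≤ p ^ dm J * Nat.card J := by
          gcongr
          · exact hp.out.one_le
          · exact hJ.prop.2
        _ ≤ _ := this
    · exfalso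
      have hle : J ⊔ Subgroup.zpowers g₁ ≤ L := _root_.sup_le hJL.le ((Subgroup.zpowers_le).2 hg₁L)
      obtain ⟨g₂, hg₂L, hg₂⟩ := SetLike.exists_of_lt (lt_of_le_of_ne hle hJ1)
      have hK'L : J ⊔ Subgroup.zpowers g₁ ⊔ Subgroup.zpowers g₂ ≤ L :=
        _root_.sup_le hle ((Subgroup.zpowers_le).2 hg₂L)
      have e := stage1_key (Φ := gfx x hx) hg hK hg₁ hg₂ rfl (d := dm L) (e := dm J) (by
          rw [← hmax _ (lt_of_lt_of_le (hJg g₁ hg₁) le_sup_left) hK'L]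
          exact hdm _) (hdm J) (fun h hh hhJ => by
          rw [← hmax _ (hJg h hhJ) (_root_.sup_le hJL.le ((Subgroup.zpowers_le).2 (hK'L hh)))]
          exact hdm _)
      exact absurd hJ.prop.2 (by omega)
  have := key _ (⊤ : Subgroup G) rfl
  rw [Subgroup.card_top] at this
  exact le_trans (Nat.le_mul_of_pos_left _ (pow_pos hp.out.pos _)) this

end st2
end MannSu

/-! ### The bound for connected manifolds -/

namespace MannSu
universe u v
open Finsupp Filter Uniformity Topology
set_option linter.unusedSectionVars false
set_option linter.unusedVariables false

section ind
variable {p : ℕ} [hp : Fact p.Prime] {G : Type*} [CommGroup G] [Finite G]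

/-- A group of exponent `p` of order at least `p ^ N * |K|` has `N` elements independent over `K`. -/
lemma exists_IndO (hg : ∀ g : G, g ^ p = 1) (K : Subgroup G) (N : ℕ)
    (h : p ^ N * Nat.card K ≤ Nat.card G) : ∃ gs : List G, gs.length = N ∧ IndO K gs ∧
      Nat.card (K ⊔ Subgroup.closure {x | x ∈ gs} : Subgroup G) = p ^ N * Nat.card K := by
  induction N with
  | zero => exact ⟨[], rfl, trivial, by simp⟩
  | succ N ih =>
    have hpos : 0 < p ^ N * Nat.card K := Nat.mul_pos (pow_pos hp.out.pos _) Nat.card_pos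
    have h2 := hp.out.two_le
    have hlt : p ^ N * Nat.card K < Nat.card G := by
      refine lt_of_lt_of_le ?_ h
      rw [pow_succ, mul_right_comm]
      nlinarith
    obtain ⟨gs, hl, hi, hc⟩ := ih hlt.le
    have hne : K ⊔ Subgroup.closure {x | x ∈ gs} < ⊤ := lt_top_iff_ne_top.2 fun e => by
      rw [e, Subgroup.card_top] at hc; omega
    obtain ⟨g, -, hgn⟩ := SetLike.exists_of_lt hne
    refine ⟨g :: gs, by simp [hl], ⟨hgn, hi⟩, ?_⟩
    rw [closure_cons, sup_comm (Subgroup.zpowers g), ← sup_assoc, card_sup_zpowers hg _ hgn, hc]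
    ring

lemma IndO.bot {K : Subgroup G} : ∀ {l : List G}, IndO K l → IndO ⊥ l
  | [], _ => trivial
  | g :: t, h => ⟨fun hg => h.1 ((sup_le_sup_right (bot_le (a := K)) _ : _ ≤ K ⊔ _) hg), h.2.bot⟩

end ind

section st3
variable {p : ℕ} [hp : Fact p.Prime] {M : Type*}
  [UniformSpace M] [CompactSpace M] [T2Space M]

/-- The trivial filter, giving global chains. -/
def gft (G : Type*) [CommGroup G] (M : Type*) [MulAction G M] [UniformSpace M] [CompactSpace M] :
    GF G M where
  fil := ⊤
  inv g W hW := by rw [mem_top] at hW ⊢; subst hW; rfl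
  reg := Reg_top

/-- The global homology of a compact manifold is finite, with a bound that does not involve the
group. -/
lemma glob_base (p : ℕ) [hp : Fact p.Prime] (M : Type u) [UniformSpace M] [CompactSpace M] [T2Space M]
    [Nonempty M] {n : ℕ} [ChartedSpace (EuclideanSpace ℝ (Fin n)) M] :
    ∃ K B : ℕ, ∀ (G : Type v) [CommGroup G] [MulAction G M] [ContinuousConstSMul G M],
      (∀ k ≥ K, (CI (ZMod p) (gft G M) ⊥).h k = 0) ∧
      ∑ k ∈ Finset.range K, (CI (ZMod p) (gft G M) ⊥).h k ≤ (B : ℕ∞) := by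
  let _ : MulAction PUnit.{1} M :=
    { smul := fun _ x => x, one_smul := fun _ => rfl, mul_smul := fun _ _ _ => rfl }
  have : ContinuousConstSMul PUnit.{1} M := ⟨fun _ => continuous_id⟩
  obtain ⟨K, hK⟩ := te_ok (ZMod p) PUnit.{1} M (n := n)
  have hfin : ∀ k, ∃ N : ℕ, ∃ v : Fin N → Sq (ZMod p) M, (∀ i, v i ∈ Zc (ZMod p) ⊤ (k + 1) Set.univ) ∧
      ∀ z ∈ Zc (ZMod p) (⊤ : Filter M) (k + 1) Set.univ, ∃ a : Fin N → ZMod p,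
        z - ∑ i, a i • v i ∈ Bc (ZMod p) ⊤ (k + 1) Set.univ := fun k => by
    obtain ⟨S, hS, h⟩ := fin_all (F := ZMod p) (M := M) (fun x O hO => ctr_chart (n := n) x O hO)
      (k + 1) Set.univ Set.univ isClosed_univ (by simp)
    exact exists_span h hS
  choose N v hv hs using hfin
  refine ⟨K, ∑ k ∈ Finset.range K, N k, fun G _ _ _ => ⟨fun k hk => ?_, ?_⟩⟩
  · have := h_span (F := ZMod p) (Φ := gft G M) (k := k) (N := 0) Fin.elim0 (fun i => i.elim0)
      fun z hz => ⟨Fin.elim0, ?_⟩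
    · simpa using this
    · have h0 := (Cx.h_eq_zero_iff _ _).1 (te_h (F := ZMod p) (Φ := gft PUnit.{1} M)
        (h𝒞 := Set.ordConnected_Ici (a := ⊥)) hK k hk)
      have hA := (mem_Zc.1 hz).1
      have := (bd_rep (Φ := gft PUnit.{1} M) (nv_rep hA)).1 (h0 _ ((d_rep hA).2 hz))
      have e : z - ∑ i : Fin 0, (Fin.elim0 i : ZMod p) • (Fin.elim0 i : Sq (ZMod p) M) = z := by simp
      rw [e]
      exact this
  · push_cast
    exact Finset.sum_le_sum fun k _ => h_span (Φ := gft G M) (v k) (hv k) (hs k)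

variable {G : Type*} [CommGroup G] [MulAction G M] [ContinuousConstSMul G M] {Φ : GF G M}

lemma glob_step (hg : ∀ g : G, g ^ p = 1) {K : ℕ} (hK : TEp (ZMod p) G M K) {J : Subgroup G} {m : ℕ}
    {B : ℕ∞} (h0 : ∀ k ≥ m, (CI (ZMod p) Φ J).h k = 0)
    (h : ∑ k ∈ Finset.range m, (CI (ZMod p) Φ J).h k ≤ B) (g : G) :
    (∀ k ≥ m, (CI (ZMod p) Φ (J ⊔ Subgroup.zpowers g)).h k = 0) ∧
    ∑ k ∈ Finset.range m, (CI (ZMod p) Φ (J ⊔ Subgroup.zpowers g)).h k ≤ B := by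
  set L := J ⊔ Subgroup.zpowers g with hL
  have hJL : J ≤ L := le_sup_left
  have S := smith (F := ZMod p) (Φ := Φ) J (hg g)
  have hv := S.vanish (K := K) (m := m) (fun k hk => te_im hK _ k hk) h0
  refine ⟨fun k hk => by rw [← sub_h hJL S.dT]; exact (hv k hk).2.2, ?_⟩
  have := S.sum_le (hv _ le_rfl).1 (hv _ le_rfl).2.1
  refine le_trans (le_of_eq (Finset.sum_congr rfl fun k _ => ?_)) (this.trans h)
  rw [← sub_h hJL S.dT]

lemma glob_list (hg : ∀ g : G, g ^ p = 1) {K : ℕ} (hK : TEp (ZMod p) G M K) {m : ℕ}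
    {B : ℕ∞} (h0 : ∀ k ≥ m, (CI (ZMod p) Φ ⊥).h k = 0)
    (h : ∑ k ∈ Finset.range m, (CI (ZMod p) Φ ⊥).h k ≤ B) : ∀ l : List G,
    (∀ k ≥ m, (CI (ZMod p) Φ (Subgroup.closure {x | x ∈ l})).h k = 0) ∧
    ∑ k ∈ Finset.range m, (CI (ZMod p) Φ (Subgroup.closure {x | x ∈ l})).h k ≤ B
  | [] => by simpa using And.intro h0 h
  | g :: l => by
    obtain ⟨a, b⟩ := glob_list hg hK h0 h l
    have := glob_step hg hK a b g
    rwa [closure_cons, sup_comm (Subgroup.zpowers g)]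

lemma glob_sum [Finite G] (hg : ∀ g : G, g ^ p = 1) {K : ℕ} (hK : TEp (ZMod p) G M K) {m : ℕ}
    {B : ℕ∞} (h0 : ∀ k ≥ m, (CI (ZMod p) Φ ⊥).h k = 0)
    (h : ∑ k ∈ Finset.range m, (CI (ZMod p) Φ ⊥).h k ≤ B) (L : Subgroup G) (N : ℕ) :
    ∑ k ∈ Finset.range N, (CI (ZMod p) Φ L).h k ≤ B := by
  obtain ⟨l, hl⟩ := (Set.toFinite (L : Set G)).exists_finset_coe
  have e : {x | x ∈ l.toList} = (L : Set G) := by rw [← hl]; ext; simp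
  obtain ⟨a, b⟩ := glob_list hg hK h0 h l.toList
  rw [e, Subgroup.closure_eq] at a b
  refine le_trans ?_ b
  rw [← Finset.sum_filter_add_sum_filter_not (Finset.range N) (· < m)]
  rw [Finset.sum_eq_zero (s := Finset.filter (fun k => ¬ k < m) _) fun k hk =>
    a k (not_lt.1 (Finset.mem_filter.1 hk).2), add_zero]
  exact Finset.sum_le_sum_of_subset fun k hk => Finset.mem_range.2 (Finset.mem_filter.1 hk).2

/-- A point fixed by `L` gives a nonzero class in degree zero. -/
lemma h0_ne (L : Subgroup G) {x : M} (hx : ∀ g ∈ L, g • x = x) :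
    (CI (ZMod p) (gft G M) L).h 0 ≠ 0 := by
  rw [Ne, Cx.h_eq_zero_iff]
  intro h
  let c : Sq (ZMod p) M := fun _ => single [x] 1
  have hc : qk (gft G M) c ∈ nsX (ZMod p) (gft G M) (Set.Ici L) 1 := by
    refine mem_nsX.2 ⟨c, mem_small.2 fun U hU => Eventually.of_forall fun j => single_mem_sup ?_,
      Eventually.of_forall fun j => single_mem_sup ?_,
      Eventually.of_forall fun j => single_mem_sup ?_, rfl⟩
    · intro a ha b hb
      rw [List.mem_singleton] at ha hb
      rw [ha, hb]; exact refl_mem_uniformity hU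
    · rfl
    · rw [mem_PC]
      intro g hg
      rw [mem_St]
      simpa using hx g hg
  obtain ⟨y, hy⟩ := h (nmk _ _ hc) ((NS_X0 (Φ := gft G M)).elim _ _)
  have e := congrArg (nv 1) hy
  rw [nv_d, nv_nmk, Ici_d (bot_le (a := L)) (nv_mem y), qc_bot] at e
  obtain ⟨b, -, -, -, hb⟩ := mem_nsX.1 (nv_mem y)
  rw [← hb, qb_qk, qk_eq] at e
  obtain ⟨W, hW, e⟩ := e
  obtain rfl : W = Set.univ := mem_top.1 hW
  obtain ⟨j, hj⟩ := e.exists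
  have : bd ((bdq b - c) j) = 0 := by
    refine eq_on_sup (g := 0) (fun l hl => ?_) hj
    have : l = [] := List.eq_nil_iff_forall_not_mem.2 fun a ha => by simpa using hl a ha
    subst this
    simp [bd, bdL]
  have h2 : bd ((bdq b) j) = 0 := bd_bd _
  rw [Pi.sub_apply, map_sub, h2, zero_sub, neg_eq_zero] at this
  have h3 := DFunLike.congr_fun this []
  simp [c, bd, bdL, cone] at h3

/-- The orders of groups of exponent `p` acting faithfully on a connected compact manifold are
bounded. -/
theorem core (p : ℕ) [hp : Fact p.Prime] (M : Type u) [UniformSpace M] [CompactSpace M] [T2Space M]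
    [Nonempty M] [PreconnectedSpace M] {n : ℕ} [ChartedSpace (EuclideanSpace ℝ (Fin n)) M] :
    ∃ k : ℕ, ∀ (G : Type v) [CommGroup G] [Finite G] [MulAction G M] [ContinuousConstSMul G M]
      [FaithfulSMul G M], (∀ g : G, g ^ p = 1) → Nat.card G ≤ k := by
  obtain ⟨m, B, hB⟩ := glob_base.{u, v} p M (n := n)
  refine ⟨p ^ B * p ^ n, fun G _ _ _ _ _ hg => ?_⟩
  obtain ⟨K, hK⟩ := te_ok (ZMod p) G M (n := n)
  obtain ⟨b0, b1⟩ := hB G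
  obtain ⟨L, hL⟩ := (Set.toFinite {L : Subgroup G | ∃ x : M, ∀ g ∈ L, g • x = x}).exists_maximal
    ⟨⊥, Classical.arbitrary M, by simp⟩
  obtain ⟨x, hx⟩ := hL.prop
  have hcL : Nat.card L ≤ p ^ n := by
    have : ContinuousConstSMul L M := ⟨fun h => continuous_const_smul (h : G)⟩
    have : FaithfulSMul L M := ⟨fun {a b} h => Subtype.ext (FaithfulSMul.eq_of_smul_eq_smul (α := M) h)⟩
    exact stage1 (p := p) (n := n) (G := L) (fun h => Subtype.ext (hg h)) (x := x) fun g => hx g g.2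
  by_contra hcon
  obtain ⟨gs, hlen, hi, -⟩ := exists_IndO hg L B
    (le_trans (Nat.mul_le_mul_left _ hcL) (not_le.1 hcon).le)
  refine h0_ne (p := p) L hx (ns_free (F := ZMod p) (Φ := gft G M) hg hK gs hi.bot ?_ ?_ 0)
  · intro l hl hSt w hw hwl
    obtain ⟨a, l, rfl⟩ := List.exists_cons_of_ne_nil hl
    refine hi.inter hg w hw ?_
    exact hL.le_of_ge ⟨a, fun g hg => mem_St.1 hg a (by simp)⟩ hSt hwl
  · intro N
    rw [hlen]
    exact glob_sum hg hK b0 b1 L N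

end st3
end MannSu

/-! ### Reduction to connected components -/

namespace MannSu
universe u v
open Finsupp Filter Uniformity Topology
set_option linter.unusedSectionVars false
set_option linter.unusedVariables false

section rd

/-- `core` for a topological space (whose uniformity is chosen) and an action given by a homomorphism into
permutations. -/
lemma core_top (p : ℕ) [hp : Fact p.Prime] (M : Type u) [t : TopologicalSpace M] [CompactSpace M]
    [T2Space M] [Nonempty M] [PreconnectedSpace M] {n : ℕ}
    (hc : Nonempty (ChartedSpace (EuclideanSpace ℝ (Fin n)) M)) :
    ∃ k : ℕ, ∀ (G : Type v) [CommGroup G] [Finite G] (f : G →* Equiv.Perm M),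
      (∀ g, Continuous (f g)) → Function.Injective f → (∀ g : G, g ^ p = 1) → Nat.card G ≤ k := by
  obtain ⟨u, rfl⟩ := CompletelyRegularSpace.exists_uniformSpace (t := t)
  obtain ⟨_⟩ := hc
  obtain ⟨k, hk⟩ := core.{u, v} p M (n := n)
  refine ⟨k, fun G _ _ f hf hi hg => ?_⟩
  let _ : MulAction G M := MulAction.compHom M f
  have : ContinuousConstSMul G M := ⟨fun g => hf g⟩
  have : FaithfulSMul G M := ⟨fun {a b} h => hi (Equiv.ext h)⟩
  exact hk G hg

/-- The bound without injectivity: it controls the index of the kernel. -/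
lemma core_index (p : ℕ) [hp : Fact p.Prime] (M : Type u) [t : TopologicalSpace M] [CompactSpace M]
    [T2Space M] [Nonempty M] [PreconnectedSpace M] {n : ℕ}
    (hc : Nonempty (ChartedSpace (EuclideanSpace ℝ (Fin n)) M)) :
    ∃ k : ℕ, ∀ (G : Type v) [CommGroup G] [Finite G] (f : G →* Equiv.Perm M),
      (∀ g, Continuous (f g)) → (∀ g : G, g ^ p = 1) → Nat.card (G ⧸ f.ker) ≤ k := by
  obtain ⟨k, hk⟩ := core_top.{u, v} p M hc
  refine ⟨k, fun G _ _ f hf hg => hk (G ⧸ f.ker) (QuotientGroup.kerLift f) (fun q => ?_)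
    (QuotientGroup.kerLift_injective f) fun q => ?_⟩
  · obtain ⟨g, rfl⟩ := QuotientGroup.mk_surjective q
    exact hf g
  · obtain ⟨g, rfl⟩ := QuotientGroup.mk_surjective q
    rw [← QuotientGroup.mk_pow, hg, QuotientGroup.mk_one]

variable {M : Type u} [TopologicalSpace M] {G : Type v} [CommGroup G]

/-- The induced action on connected components. -/
def compHom (f : G →* Equiv.Perm M) (hf : ∀ g, Continuous (f g)) :
    G →* Equiv.Perm (ConnectedComponents M) :=
  MonoidHom.toHomPerm
    { toFun := fun g => (hf g).connectedComponentsMap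
      map_one' := by
        funext c
        obtain ⟨x, rfl⟩ := ConnectedComponents.surjective_coe c
        change ConnectedComponents.mk (f 1 x) = ConnectedComponents.mk x
        rw [map_one]; rfl
      map_mul' := fun g h => by
        funext c
        obtain ⟨x, rfl⟩ := ConnectedComponents.surjective_coe c
        change ConnectedComponents.mk (f (g * h) x) = ConnectedComponents.mk (f g (f h x))
        rw [map_mul]; rfl }

lemma compHom_mk (f : G →* Equiv.Perm M) (hf : ∀ g, Continuous (f g)) (g : G) (x : M) :
    compHom f hf g (ConnectedComponents.mk x) = ConnectedComponents.mk (f g x) := rfl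

/-- The restriction to a component of the elements preserving all components. -/
def resHom (f : G →* Equiv.Perm M) (hf : ∀ g, Continuous (f g)) (c : ConnectedComponents M) :
    (compHom f hf).ker →* Equiv.Perm {x : M // ConnectedComponents.mk x = c} where
  toFun g := (f g).subtypePerm fun x => by
    rw [← compHom_mk f hf, MonoidHom.mem_ker.1 g.2]; rfl
  map_one' := by ext x; simp
  map_mul' g h := by ext x; simp; rfl

/-- The orders of groups of exponent `p` acting faithfully on a compact manifold are bounded. -/
theorem bound (p : ℕ) [hp : Fact p.Prime] (M : Type u) [TopologicalSpace M] [CompactSpace M]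
    [T2Space M] {n : ℕ} [ChartedSpace (EuclideanSpace ℝ (Fin n)) M] :
    ∃ k : ℕ, ∀ (G : Type v) [CommGroup G] [Finite G] (f : G →* Equiv.Perm M),
      (∀ g, Continuous (f g)) → Function.Injective f → (∀ g : G, g ^ p = 1) → Nat.card G ≤ k := by
  classical
  have : LocallyConnectedSpace M := ChartedSpace.locallyConnectedSpace (EuclideanSpace ℝ (Fin n)) M
  have hopen : ∀ c : ConnectedComponents M, IsOpen {x : M | ConnectedComponents.mk x = c} := fun c => by
    obtain ⟨x, rfl⟩ := ConnectedComponents.surjective_coe c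
    convert isOpen_connectedComponent (x := x) using 1
    exact connectedComponents_preimage_singleton
  have : Finite (ConnectedComponents M) := inferInstance
  have hcore : ∀ c : ConnectedComponents M, ∃ k : ℕ, ∀ (G : Type v) [CommGroup G] [Finite G]
      (f : G →* Equiv.Perm {x : M // ConnectedComponents.mk x = c}),
      (∀ g, Continuous (f g)) → (∀ g : G, g ^ p = 1) → Nat.card (G ⧸ f.ker) ≤ k := by
    intro c
    have hset : ∃ x, {x : M | ConnectedComponents.mk x = c} = connectedComponent x := by
      obtain ⟨x, rfl⟩ := ConnectedComponents.surjective_coe c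
      exact ⟨x, connectedComponents_preimage_singleton⟩
    obtain ⟨x, hx⟩ := hset
    have : CompactSpace {x : M // ConnectedComponents.mk x = c} :=
      isCompact_iff_compactSpace.1 (hx ▸ isClosed_connectedComponent.isCompact :
        IsCompact {x : M | ConnectedComponents.mk x = c})
    have : PreconnectedSpace {x : M // ConnectedComponents.mk x = c} :=
      isPreconnected_iff_preconnectedSpace.1 (hx ▸ isPreconnected_connectedComponent :
        IsPreconnected {x : M | ConnectedComponents.mk x = c})
    have : Nonempty {x : M // ConnectedComponents.mk x = c} := by
      obtain ⟨x, rfl⟩ := ConnectedComponents.surjective_coe c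
      exact ⟨⟨x, rfl⟩⟩
    refine core_index.{u, v} p {x : M // ConnectedComponents.mk x = c} (n := n) ⟨?_⟩
    exact (inferInstance : ChartedSpace (EuclideanSpace ℝ (Fin n))
      (⟨{x : M | ConnectedComponents.mk x = c}, hopen c⟩ : TopologicalSpace.Opens M))
  choose k hk using hcore
  have := Fintype.ofFinite (ConnectedComponents M)
  refine ⟨(∏ c, k c) * Nat.card (Equiv.Perm (ConnectedComponents M)), fun G _ _ f hf hi hg => ?_⟩
  have h1 : Nat.card (compHom f hf).ker ≤ ∏ c, k c := by
    have hle : Nat.card (compHom f hf).ker ≤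
        Nat.card (∀ c, (compHom f hf).ker ⧸ (resHom f hf c).ker) := by
      refine Nat.card_le_card_of_injective (fun g c => (g : _ ⧸ (resHom f hf c).ker)) fun g h e => ?_
      refine Subtype.ext (hi (Equiv.ext fun x => ?_))
      have := congrFun e (ConnectedComponents.mk x)
      have h2 : resHom f hf _ g = resHom f hf _ h :=
        QuotientGroup.kerLift_injective (resHom f hf (ConnectedComponents.mk x)) |>.eq_iff.2 this
      exact congrArg Subtype.val (DFunLike.congr_fun h2 ⟨x, rfl⟩)
    refine hle.trans ?_
    rw [Nat.card_pi]
    refine Finset.prod_le_prod' fun c _ => hk c _ _ (fun g => ?_) fun g => Subtype.ext (hg g)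
    exact ((hf g).comp continuous_subtype_val).subtype_mk _
  have h2 : (compHom f hf).ker.index ≤ Nat.card (Equiv.Perm (ConnectedComponents M)) := by
    rw [Subgroup.index_ker]
    exact Nat.card_le_card_of_injective _ Subtype.val_injective
  rw [← Subgroup.card_mul_index (compHom f hf).ker]
  exact Nat.mul_le_mul h1 h2

end rd
end MannSu

/-- Mann–Su: for a compact topological manifold `M` and a prime `p`, there is a bound `k = k(M)`
such that for `n > k` there is no injective homomorphism of `(ℤ/pℤ)ⁿ` into the homeomorphism
group of `M`. -/
theorem mann_su
    (M : Type*) [TopologicalSpace M] [CompactSpace M] [T2Space M]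
    (hman : ∃ n : ℕ, Nonempty (ChartedSpace (EuclideanSpace ℝ (Fin n)) M))
    (p : ℕ) (hp : p.Prime) :
    ∃ k : ℕ, ∀ n : ℕ, n > k →
      ∀ φ : (Fin n → Multiplicative (ZMod p)) →* (M ≃ₜ M), ¬ Function.Injective φ := by
  have : Fact p.Prime := ⟨hp⟩
  obtain ⟨m, ⟨_⟩⟩ := hman
  obtain ⟨k, hk⟩ := MannSu.bound p M (n := m)
  refine ⟨k, fun n hn φ hφ => ?_⟩
  have h := hk (Fin n → Multiplicative (ZMod p))
    { toFun := fun g => (φ g).toEquiv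
      map_one' := by rw [map_one]; rfl
      map_mul' := fun a b => by rw [map_mul]; rfl }
    (fun g => (φ g).continuous) (fun a b e => hφ (Homeomorph.toEquiv_injective e))
    (fun g => funext fun i => Multiplicative.toAdd.injective (by
      change p • (g i).toAdd = 0
      rw [nsmul_eq_mul, CharP.cast_eq_zero, zero_mul]))
  have hc : Nat.card (Fin n → Multiplicative (ZMod p)) = p ^ n := by
    rw [Nat.card_fun, Nat.card_congr Multiplicative.toAdd, Nat.card_zmod]
    simp
  rw [hc] at h
  have := Nat.lt_pow_self hp.one_lt (n := n)
  omega
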